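/- Suppose f is non-degenerate over ℝ, τ₀ is compact, and s₀ ∉ ℤ. Then there is an open neighbourhood U of 0 in ℝⁿ such that for every C^∞ function φ : ℝⁿ → ℝ with compact support contained in U, and for each choice of sign ±, the following hold: (i) for every real λ with 0 < λ < −1/s₀ the integral K_±(λ) = ∫_{(0,∞)^{n−ρ}} f_{τ₀}(1,…,1,y_{ρ+1},…,y_n)_±^{s₀λ} ∏_{i=ρ+1}^{n} y_i^{λ−1} dy is finite (here h₊ = max(h,0), h₋ = max(−h,0), and 0 raised to any power is 0); (ii) there is a (necessarily unique) analytic function F_± on the connected open set Ω = {λ ∈ ℂ : Re(λ) > 0 and λ·s₀ ∉ ℤ} agreeing with K_± on the real interval (0, min(1, −1/s₀)); (iii) every meromorphic continuation G of Z̄_±(s) = ∫_{(0,∞)ⁿ} f_±(x)^s φ(x) dx satisfies lim_{s→s₀} (s−s₀)^ρ G(s) = n! · Vol(C) · φ(0) · F_±(1). -/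

import Mathlib

/-!
In logarithmic coordinates `x = e^{-u}` the zeta function is
`H₀(s) = ∫ p(u)₊^s e^{-∑ uᵢ} φ(e^{-u}) du` with `p(u) = ±f(e^{-u})`. By Dickson's lemma `f` is near
the origin a finite sum of monomials `x^v`, `v ∈ V`, with smooth coefficients not vanishing at the
origin (`taylor_split`), and `M(u) = ∑_{v ∈ V} e^{-⟨v,u⟩}` measures the size of `f`.

*Raising.* Non-degeneracy gives `|∇p| ≥ c M` near the origin (`lower_bound`), by compactness on the
finitely many toric charts of a subdivision of the orthant. Hence there is a vector field `c`, of
the size of `1/M` together with its derivatives, such that `∑ cᵢ ∂ᵢp = 1` (`exists_phase`), and the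
divergence theorem yields `(s+1)⋯(s+m) H₀(s) = H_m(s)` (`Phase.Test.H_zero`), where `H_m` has the
exponent `s + m` and an amplitude of the size of `M^{-m}`. For large `m` the integral `H_m`
converges absolutely for `Re s > s₀ = -1/t₀`, because `M(u) ≥ e^{-t₀ ∑ uᵢ}` on the positive
orthant.

*The limit at `s₀`.* Let `W` be the span of the normal vectors `ξⱼ` of the facets through `τ₀`. In
`u = w + ι v`, with `w ∈ W` and `v` in the last `n - ρ` coordinates, the substitution `w ↦ w/ε` and
dominated convergence show that `ε^ρ H_m(s₀ + ε)` tends to the product of an exponential integral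
over the normal cone of `τ₀`, and of the integral over `v` in which `p` is replaced by its face part
`±f_{τ₀}` (`Phase.Test.H_limit`). The first factor is `n! Vol(C)`, as the layer-cake formula for the
Minkowski functional of `C` shows (`Geo.volume_C`). The second one is a raised form of `K(1)`:
raising with the parameter `λ` kept free defines the analytic function `F` (`Phase.Fc_analytic`),
and the second factor is `(s₀+1)⋯(s₀+m) φ(0) F(1)` (`Phase.J_Pt`). For real `0 < λ < t₀` the raising
identity, applied to a regularized integrand, bounds the integral `K(λ)` itself, so that `K(λ)`
converges and equals `F(λ)` (`Phase.K_formula`).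

*Arbitrary continuations.* The domain of a meromorphic continuation `G` may wind around the poles,
so `G` is compared with `H_m/((s+1)⋯(s+m))` along a path from `1` to `s₀` (`mero_transfer`). This
needs a continuation of `H_m` to arbitrary half-planes for `m` large (`Phase.Test.H_mero`): on each
chart of a subdivision of the orthant `p` is a monomial times a smooth function, and the integral
becomes a multiple Mellin integral, which is continued by recursion (`Mel_mero`). Finally, a
meromorphic function with a finite limit along a ray has that limit (`mero_limit`).
-/

open MeasureTheory Filter Topology Complex

noncomputable section
open scoped Classical

/-- Inner product `⟨a, y⟩ = ∑ i, a i * y i` on `Fin n → ℝ`. -/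
def dotR {n : ℕ} (a y : Fin n → ℝ) : ℝ := ∑ i, a i * y i

/-- The Newton polyhedron of a support set `S ⊆ ℕⁿ`: the convex hull of `S + [0,∞)ⁿ`. -/
def newtonPolyhedron {n : ℕ} (S : Set (Fin n → ℕ)) : Set (Fin n → ℝ) :=
  convexHull ℝ {x : Fin n → ℝ | ∃ α ∈ S, ∀ i, (α i : ℝ) ≤ x i}

/-- The face of `Γ` cut out by a nonnegative linear functional `u`:
the set of minimizers of `⟨u, ·⟩` on `Γ`. -/
def traceFace {n : ℕ} (Γ : Set (Fin n → ℝ)) (u : Fin n → ℝ) : Set (Fin n → ℝ) :=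
  {y ∈ Γ | ∀ z ∈ Γ, dotR u y ≤ dotR u z}

/-- `τ` is a face of `Γ`: the set of minimizers of some nonnegative linear functional. -/
def IsFaceOf {n : ℕ} (Γ τ : Set (Fin n → ℝ)) : Prop :=
  ∃ u : Fin n → ℝ, (∀ i, 0 ≤ u i) ∧ τ = traceFace Γ u

/-- The dimension of (the affine span of) a subset of `ℝⁿ`. -/
def faceDim {n : ℕ} (τ : Set (Fin n → ℝ)) : ℕ := Module.finrank ℝ (vectorSpan ℝ τ)

/-- Given Taylor coefficients `a : ℕⁿ → ℝ` and a region `γ ⊆ ℝⁿ`, the polynomial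
`f_γ(x) = ∑_{α ∈ γ ∩ ℕⁿ} a_α x^α`. -/
def facePoly {n : ℕ} (a : (Fin n → ℕ) → ℝ) (γ : Set (Fin n → ℝ)) (x : Fin n → ℝ) : ℝ :=
  ∑' α : Fin n → ℕ, if (fun i => (α i : ℝ)) ∈ γ then a α * ∏ i, x i ^ α i else 0

/-- `f` (with Taylor coefficients `a` and Newton polyhedron `Γ`) is non-degenerate over ℝ:
for every compact face `γ` of `Γ`, the polynomial `f_γ` has no critical point in `(ℝ∖{0})ⁿ`. -/
def NonDegenerateR {n : ℕ} (a : (Fin n → ℕ) → ℝ) (Γ : Set (Fin n → ℝ)) : Prop :=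
  ∀ γ : Set (Fin n → ℝ), IsFaceOf Γ γ → IsCompact γ →
    ∀ x : Fin n → ℝ, (∀ i, x i ≠ 0) → fderiv ℝ (facePoly a γ) x ≠ 0

/-- The positive open orthant `(0,∞)^m`. -/
def posOrthant (m : ℕ) : Set (Fin m → ℝ) := {y | ∀ i, 0 < y i}

/-- `pad ρ y = (1,…,1,y_{ρ+1},…,y_n)`: the first `ρ` coordinates are `1`,
the remaining ones come from `y`. -/
def padR {n : ℕ} (ρ : ℕ) (y : Fin (n - ρ) → ℝ) : Fin n → ℝ :=
  fun i => if h : (i : ℕ) < ρ then 1 else y ⟨(i : ℕ) - ρ, by have := i.isLt; omega⟩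

/-- `pPow u s = u^s` for `u > 0`, and `0` otherwise (so in particular `0^s = 0`). -/
def pPow (u s : ℝ) : ℝ := if 0 < u then u ^ s else 0

/-- `G` is a meromorphic continuation of `Z` (defined for `Re s > 0`) to a connected open
set containing the half-plane `{Re s > 0}` and the point `s₀`. -/
def IsMeroCont (Z : ℂ → ℂ) (s₀ : ℂ) (G : ℂ → ℂ) : Prop :=
  ∃ U : Set ℂ, IsOpen U ∧ IsConnected U ∧ ({s : ℂ | 0 < s.re} ∪ {s₀}) ⊆ U ∧
    MeromorphicOn G U ∧ ∀ s : ℂ, 0 < s.re → G s = Z s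

/-- The positive part `max (σ • f) 0`; for `σ = 1` this is `f₊`, for `σ = -1` it is `f₋`. -/
def sgnPart (σ : ℝ) (u : ℝ) : ℝ := max (σ * u) 0

/-! ### Linear forms, partial derivatives and Newton data -/

/-- The pairing `⟨v, u⟩` of an exponent `v ∈ ℕⁿ` with a point `u` of logarithmic space. -/
def dn {n : ℕ} (v : Fin n → ℕ) (u : Fin n → ℝ) : ℝ := ∑ i, (v i : ℝ) * u i

/-- The sum of the coordinates. -/
def sm {n : ℕ} (u : Fin n → ℝ) : ℝ := ∑ i, u i

/-- The `i`-th partial derivative. -/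
def pd {n : ℕ} (i : Fin n) (B : (Fin n → ℝ) → ℝ) (u : Fin n → ℝ) : ℝ :=
  fderiv ℝ B u (Pi.single i 1)

/-- Logarithmic coordinates: `ex u = (e^{-u₁}, …, e^{-uₙ})`. -/
def ex {n : ℕ} (u : Fin n → ℝ) : Fin n → ℝ := fun i => Real.exp (-u i)

section basics
variable {n : ℕ}

lemma dn_add (v : Fin n → ℕ) (u w : Fin n → ℝ) : dn v (u + w) = dn v u + dn v w := by
  simp [dn, mul_add, Finset.sum_add_distrib]

lemma dn_smul (v : Fin n → ℕ) (c : ℝ) (u : Fin n → ℝ) : dn v (c • u) = c * dn v u := by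
  simp only [dn, Finset.mul_sum, Pi.smul_apply, smul_eq_mul]
  exact Finset.sum_congr rfl fun i _ => by ring

lemma sm_add (u w : Fin n → ℝ) : sm (u + w) = sm u + sm w := by
  simp [sm, Finset.sum_add_distrib]

lemma sm_smul (c : ℝ) (u : Fin n → ℝ) : sm (c • u) = c * sm u := by
  simp [sm, Finset.mul_sum]

lemma dn_neg (v : Fin n → ℕ) (u : Fin n → ℝ) : dn v (-u) = - dn v u := by
  have := dn_smul v (-1) u; simpa using this

lemma sm_neg (u : Fin n → ℝ) : sm (-u) = - sm u := by
  have := sm_smul (-1) u; simpa using this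

lemma dn_sum {ι : Type*} (s : Finset ι) (v : Fin n → ℕ) (g : ι → Fin n → ℝ) :
    dn v (∑ k ∈ s, g k) = ∑ k ∈ s, dn v (g k) := by
  simp only [dn, Finset.sum_apply, Finset.mul_sum]
  exact Finset.sum_comm

lemma sm_sum {ι : Type*} (s : Finset ι) (g : ι → Fin n → ℝ) :
    sm (∑ k ∈ s, g k) = ∑ k ∈ s, sm (g k) := by
  simp only [sm, Finset.sum_apply]
  exact Finset.sum_comm

lemma differentiable_dn (v : Fin n → ℕ) : Differentiable ℝ (dn v) := by
  unfold dn; fun_prop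

lemma differentiable_sm : Differentiable ℝ (sm (n := n)) := by
  unfold sm; fun_prop

lemma continuous_dn (v : Fin n → ℕ) : Continuous (dn v) := (differentiable_dn v).continuous
lemma continuous_sm : Continuous (sm (n := n)) := differentiable_sm.continuous

lemma contDiff_ex : ContDiff ℝ (⊤ : ℕ∞) (ex (n := n)) := by
  unfold ex; fun_prop

lemma dn_single (v : Fin n → ℕ) (i : Fin n) : dn v (Pi.single i 1) = v i := by
  simp [dn, Pi.single_apply]

lemma sm_single (i : Fin n) : sm (Pi.single i (1 : ℝ)) = 1 := by
  simp [sm, Pi.single_apply]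

/-- A differentiable additive homogeneous function is its own derivative. -/
lemma fderiv_dn (v : Fin n → ℕ) (u e : Fin n → ℝ) : fderiv ℝ (dn v) u e = dn v e := by
  have h : (dn v) = ⇑(LinearMap.toContinuousLinearMap
      ({ toFun := dn v, map_add' := dn_add v, map_smul' := dn_smul v } :
        (Fin n → ℝ) →ₗ[ℝ] ℝ)) := rfl
  rw [h, ContinuousLinearMap.fderiv]

lemma fderiv_sm (u e : Fin n → ℝ) : fderiv ℝ (sm (n := n)) u e = sm e := by
  have h : (sm (n := n)) = ⇑(LinearMap.toContinuousLinearMap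
      ({ toFun := sm, map_add' := sm_add, map_smul' := sm_smul } :
        (Fin n → ℝ) →ₗ[ℝ] ℝ)) := rfl
  rw [h, ContinuousLinearMap.fderiv]

variable {B B' : (Fin n → ℝ) → ℝ}

lemma pd_add (hB : Differentiable ℝ B) (hB' : Differentiable ℝ B') (i : Fin n) :
    pd i (fun u => B u + B' u) = fun u => pd i B u + pd i B' u := by
  funext u; simp only [pd]; rw [fderiv_fun_add (hB u) (hB' u)]; rfl

lemma pd_mul (hB : Differentiable ℝ B) (hB' : Differentiable ℝ B') (i : Fin n) :
    pd i (fun u => B u * B' u) = fun u => pd i B u * B' u + B u * pd i B' u := by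
  funext u; simp only [pd]; rw [fderiv_fun_mul (hB u) (hB' u)]
  simp; ring

lemma pd_inv (hB : Differentiable ℝ B) (h0 : ∀ u, B u ≠ 0) (i : Fin n) :
    pd i (fun u => (B u)⁻¹) = fun u => -1 * (pd i B u * ((B u)⁻¹ * (B u)⁻¹)) := by
  funext u; simp only [pd]
  have := ((hasDerivAt_inv (h0 u)).comp_hasFDerivAt u (hB u).hasFDerivAt).fderiv
  have h2 : fderiv ℝ (fun u => (B u)⁻¹) u = -((B u) ^ 2)⁻¹ • fderiv ℝ B u := this
  rw [h2]; simp; ring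

lemma pd_const (c : ℝ) (i : Fin n) : pd i (fun _ => c) = fun _ => (0 : ℝ) := by
  funext u; simp [pd]

lemma pd_exp_dn (v : Fin n → ℕ) (i : Fin n) :
    pd i (fun u => Real.exp (-dn v u)) = fun u => (-(v i : ℝ)) * Real.exp (-dn v u) := by
  funext u; simp only [pd]
  have h := ((differentiable_dn v u).hasFDerivAt.neg).exp.fderiv
  have h2 : fderiv ℝ (fun u => Real.exp (-dn v u)) u
    = Real.exp (-dn v u) • -fderiv ℝ (dn v) u := h
  rw [h2]; simp [fderiv_dn, dn_single]; ring

lemma pd_comp_ex {g : (Fin n → ℝ) → ℝ} (hg : Differentiable ℝ g) (i : Fin n) :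
    pd i (fun u => g (ex u)) = fun u => (fun x => -(x i) * fderiv ℝ g x (Pi.single i 1)) (ex u) := by
  funext u; simp only [pd]
  have hex : HasFDerivAt (ex (n := n)) (ContinuousLinearMap.pi fun j =>
      Real.exp (-u j) • -(ContinuousLinearMap.proj (R := ℝ) (φ := fun _ : Fin n => ℝ) j)) u := by
    refine hasFDerivAt_pi.2 fun j => ?_
    exact ((hasFDerivAt_apply (𝕜 := ℝ) j u).neg).exp
  have h := ((hg (ex u)).hasFDerivAt.comp u hex).fderiv
  have h2 : fderiv ℝ (fun u => g (ex u)) u = _ := h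
  rw [h2]
  simp only [ContinuousLinearMap.comp_apply]
  have : (ContinuousLinearMap.pi fun j =>
      Real.exp (-u j) • -(ContinuousLinearMap.proj (R := ℝ) (φ := fun _ : Fin n => ℝ) j))
      (Pi.single i 1) = (-(ex u i)) • (Pi.single i (1 : ℝ)) := by
    ext j
    by_cases hj : j = i
    · subst hj; simp [ex]
    · simp [ex, hj]
  rw [this, map_smul, smul_eq_mul]

end basics

/-- The combinatorial data attached to a Newton polyhedron in logarithmic space: `V` is the
set of minimal exponents, `T ⊆ V` those lying on the face `τ₀`, `t = t₀`, and `W` is the span of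
the normal cone of `τ₀`, with `w0` in the relative interior of that cone. -/
structure Newt (n : ℕ) where
  V : Finset (Fin n → ℕ)
  T : Finset (Fin n → ℕ)
  t : ℝ
  W : Submodule ℝ (Fin n → ℝ)
  w0 : Fin n → ℝ
  T_sub : T ⊆ V
  T_ne : T.Nonempty
  t_pos : 0 < t
  W_T : ∀ w ∈ W, ∀ v ∈ T, dn v w = t * sm w
  w0_mem : w0 ∈ W
  w0_pos : ∀ i, 0 < w0 i
  w0_gap : ∀ v ∈ V, v ∉ T → t * sm w0 < dn v w0

namespace Newt
variable {n : ℕ} (D : Newt n)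

/-- The size `∑_{v ∈ V} x^v` of the principal monomials, at `x = ex u`. -/
def M (u : Fin n → ℝ) : ℝ := ∑ v ∈ D.V, Real.exp (-dn v u)
/-- The part of `M` carried by the face `τ₀`. -/
def Mt (u : Fin n → ℝ) : ℝ := ∑ v ∈ D.T, Real.exp (-dn v u)
/-- The common value on `W` of the exponents of `τ₀`. -/
def ell (w : Fin n → ℝ) : ℝ := D.t * sm w
/-- The relative interior of the normal cone of `τ₀`. -/
def Ki : Set (Fin n → ℝ) :=
  {w | w ∈ D.W ∧ (∀ i, 0 < w i) ∧ ∀ v ∈ D.V, v ∉ D.T → D.t * sm w < dn v w}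

lemma V_ne : D.V.Nonempty := D.T_ne.mono D.T_sub
lemma w0_Ki : D.w0 ∈ D.Ki := ⟨D.w0_mem, D.w0_pos, D.w0_gap⟩
lemma M_pos (u : Fin n → ℝ) : 0 < D.M u := Finset.sum_pos (fun _ _ => Real.exp_pos _) D.V_ne
lemma Mt_pos (u : Fin n → ℝ) : 0 < D.Mt u := Finset.sum_pos (fun _ _ => Real.exp_pos _) D.T_ne
lemma le_M {v : Fin n → ℕ} (hv : v ∈ D.V) (u : Fin n → ℝ) : Real.exp (-dn v u) ≤ D.M u :=
  Finset.single_le_sum (f := fun v => Real.exp (-dn v u)) (fun _ _ => (Real.exp_pos _).le) hv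
lemma le_Mt {v : Fin n → ℕ} (hv : v ∈ D.T) (u : Fin n → ℝ) : Real.exp (-dn v u) ≤ D.Mt u :=
  Finset.single_le_sum (f := fun v => Real.exp (-dn v u)) (fun _ _ => (Real.exp_pos _).le) hv
lemma ell_add (u w : Fin n → ℝ) : D.ell (u + w) = D.ell u + D.ell w := by
  simp [ell, sm_add, mul_add]
lemma ell_smul (c : ℝ) (u : Fin n → ℝ) : D.ell (c • u) = c * D.ell u := by
  simp [ell, sm_smul]; ring

/-! ### The symbol class -/

/-- The zeroth order conditions of the symbol class of weight `q`, for `B` with leading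
part `Bt`. -/
def Base (q : ℤ) (B Bt : (Fin n → ℝ) → ℝ) : Prop :=
  (∃ C, ∀ u, |B u| ≤ C * D.M u ^ q) ∧
  (∀ w ∈ D.Ki, ∀ v, Tendsto (fun R : ℝ => Real.exp (q * (R * D.ell w)) * B (R • w + v)) atTop
    (𝓝 (Bt v))) ∧
  ∀ w ∈ D.W, ∀ v, Bt (v + w) = Real.exp (-(q * D.ell w)) * Bt v

/-- The symbol class up to `k` derivatives. -/
def ClK : ℕ → ℤ → ((Fin n → ℝ) → ℝ) → ((Fin n → ℝ) → ℝ) → Prop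
  | 0, q, B, Bt => D.Base q B Bt
  | k + 1, q, B, Bt => D.Base q B Bt ∧ Differentiable ℝ B ∧ Differentiable ℝ Bt ∧
      ∀ i, ClK k q (pd i B) (pd i Bt)

/-- The symbol class of weight `q`: the function `B` is bounded by a multiple of `M ^ q`, together
with all its derivatives, and has a leading part `Bt` deep inside the normal cone of `τ₀`, which is
quasi-homogeneous along `W`. -/
def Cl (q : ℤ) (B Bt : (Fin n → ℝ) → ℝ) : Prop := ∀ k, D.ClK k q B Bt

variable {D} {q q' : ℤ} {B Bt B' Bt' : (Fin n → ℝ) → ℝ} {k : ℕ}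

lemma ClK.base (h : D.ClK k q B Bt) : D.Base q B Bt := by
  cases k with
  | zero => exact h
  | succ k => exact h.1

lemma ClK.of_succ : ∀ {k : ℕ} {B Bt : (Fin n → ℝ) → ℝ}, D.ClK (k + 1) q B Bt → D.ClK k q B Bt
  | 0, _, _, h => h.1
  | _ + 1, _, _, h => ⟨h.1, h.2.1, h.2.2.1, fun i => ClK.of_succ (h.2.2.2 i)⟩

lemma Base.add (h : D.Base q B Bt) (h' : D.Base q B' Bt') :
    D.Base q (fun u => B u + B' u) (fun u => Bt u + Bt' u) := by
  obtain ⟨⟨C, hC⟩, hl, hh⟩ := h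
  obtain ⟨⟨C', hC'⟩, hl', hh'⟩ := h'
  refine ⟨⟨C + C', fun u => ?_⟩, fun w hw v => ?_, fun w hw v => ?_⟩
  · rw [add_mul]; exact (abs_add_le _ _).trans (add_le_add (hC u) (hC' u))
  · simpa only [mul_add] using (hl w hw v).add (hl' w hw v)
  · simp only []; rw [hh w hw, hh' w hw, mul_add]

lemma Base.mul (h : D.Base q B Bt) (h' : D.Base q' B' Bt') :
    D.Base (q + q') (fun u => B u * B' u) (fun u => Bt u * Bt' u) := by
  obtain ⟨⟨C, hC⟩, hl, hh⟩ := h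
  obtain ⟨⟨C', hC'⟩, hl', hh'⟩ := h'
  refine ⟨⟨C * C', fun u => ?_⟩, fun w hw v => ?_, fun w hw v => ?_⟩
  · rw [abs_mul, zpow_add₀ (D.M_pos u).ne']
    calc |B u| * |B' u| ≤ (C * D.M u ^ q) * (C' * D.M u ^ q') :=
          mul_le_mul (hC u) (hC' u) (abs_nonneg _) ((abs_nonneg _).trans (hC u))
      _ = _ := by ring
  · refine ((hl w hw v).mul (hl' w hw v)).congr fun R => ?_
    push_cast; rw [add_mul, Real.exp_add]; ring
  · simp only []; rw [hh w hw, hh' w hw]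
    push_cast; rw [add_mul, neg_add, Real.exp_add]; ring

lemma Base.inv {c : ℝ} (h : D.Base q B Bt) (hc : 0 < c) (hB : ∀ u, c * D.M u ^ q ≤ B u)
    (hBt : ∀ u, Bt u ≠ 0) :
    D.Base (-q) (fun u => (B u)⁻¹) (fun u => (Bt u)⁻¹) := by
  obtain ⟨⟨C, hC⟩, hl, hh⟩ := h
  refine ⟨⟨c⁻¹, fun u => ?_⟩, fun w hw v => ?_, fun w hw v => ?_⟩
  · have h0 : 0 < c * D.M u ^ q := mul_pos hc (zpow_pos (D.M_pos u) _)
    rw [abs_inv, abs_of_pos (h0.trans_le (hB u)), zpow_neg, ← mul_inv]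
    exact inv_anti₀ h0 (hB u)
  · refine ((hl w hw v).inv₀ (hBt v)).congr fun R => ?_
    rw [mul_inv, ← Real.exp_neg]; push_cast; rw [neg_mul]
  · simp only []; rw [hh w hw, mul_inv, ← Real.exp_neg]; push_cast; rw [neg_mul]

lemma ClK.add : ∀ {k : ℕ} {B Bt B' Bt' : (Fin n → ℝ) → ℝ}, D.ClK k q B Bt → D.ClK k q B' Bt' →
    D.ClK k q (fun u => B u + B' u) (fun u => Bt u + Bt' u)
  | 0, _, _, _, _, h, h' => Base.add h h'
  | k + 1, _, _, _, _, h, h' => ⟨Base.add h.1 h'.1, h.2.1.add h'.2.1, h.2.2.1.add h'.2.2.1,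
      fun i => by
        rw [pd_add h.2.1 h'.2.1, pd_add h.2.2.1 h'.2.2.1]
        exact ClK.add (h.2.2.2 i) (h'.2.2.2 i)⟩

lemma ClK.mul : ∀ {k : ℕ} {B Bt B' Bt' : (Fin n → ℝ) → ℝ}, D.ClK k q B Bt → D.ClK k q' B' Bt' →
    D.ClK k (q + q') (fun u => B u * B' u) (fun u => Bt u * Bt' u)
  | 0, _, _, _, _, h, h' => Base.mul h h'
  | k + 1, _, _, _, _, h, h' => ⟨Base.mul h.1 h'.1, h.2.1.mul h'.2.1, h.2.2.1.mul h'.2.2.1,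
      fun i => by
        rw [pd_mul h.2.1 h'.2.1, pd_mul h.2.2.1 h'.2.2.1]
        exact ClK.add (ClK.mul (h.2.2.2 i) h'.of_succ) (ClK.mul h.of_succ (h'.2.2.2 i))⟩

lemma Base.const (c : ℝ) : D.Base 0 (fun _ => c) (fun _ => c) :=
  ⟨⟨|c|, fun u => by simp⟩, fun w _ v => by simp, fun w _ v => by simp⟩

lemma Cl.const (c : ℝ) : D.Cl 0 (fun _ => c) (fun _ => c) := by
  intro k
  induction k generalizing c with
  | zero => exact Base.const c
  | succ k ih => exact ⟨Base.const c, differentiable_const _, differentiable_const _,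
      fun i => by rw [pd_const]; exact ih 0⟩

lemma Cl.base (h : D.Cl q B Bt) : D.Base q B Bt := h 0
lemma Cl.diff (h : D.Cl q B Bt) : Differentiable ℝ B := (h 1).2.1
lemma Cl.diff_t (h : D.Cl q B Bt) : Differentiable ℝ Bt := (h 1).2.2.1
lemma Cl.pd (h : D.Cl q B Bt) (i : Fin n) : D.Cl q (pd i B) (pd i Bt) :=
  fun k => (h (k + 1)).2.2.2 i
lemma Cl.add (h : D.Cl q B Bt) (h' : D.Cl q B' Bt') :
    D.Cl q (fun u => B u + B' u) (fun u => Bt u + Bt' u) := fun k => ClK.add (h k) (h' k)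
lemma Cl.mul (h : D.Cl q B Bt) (h' : D.Cl q' B' Bt') :
    D.Cl (q + q') (fun u => B u * B' u) (fun u => Bt u * Bt' u) := fun k => ClK.mul (h k) (h' k)
lemma Cl.const_mul (c : ℝ) (h : D.Cl q B Bt) :
    D.Cl q (fun u => c * B u) (fun u => c * Bt u) := by
  simpa using (Cl.const c).mul h

lemma Cl.sum {ι : Type*} (s : Finset ι) {F Ft : ι → (Fin n → ℝ) → ℝ} (q : ℤ)
    (h0 : D.Cl q (fun _ => 0) (fun _ => 0)) (h : ∀ i ∈ s, D.Cl q (F i) (Ft i)) :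
    D.Cl q (fun u => ∑ i ∈ s, F i u) (fun u => ∑ i ∈ s, Ft i u) := by
  induction s using Finset.induction_on with
  | empty => simpa using h0
  | insert a s ha ih =>
    simp only [Finset.sum_insert ha]
    exact (h a (by simp)).add (ih fun i hi => h i (by simp [hi]))

lemma Cl.zero (q : ℤ) : D.Cl q (fun _ => 0) (fun _ => 0) := by
  intro k
  have hb : D.Base q (fun _ => 0) (fun _ => 0) := ⟨⟨0, by simp⟩, by simp, by simp⟩
  induction k with
  | zero => exact hb
  | succ k ih => exact ⟨hb, differentiable_const _, differentiable_const _,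
      fun i => by rw [pd_const]; exact ih⟩

lemma Cl.inv {c : ℝ} (h : D.Cl q B Bt) (hc : 0 < c) (hB : ∀ u, c * D.M u ^ q ≤ B u)
    (hBt : ∀ u, Bt u ≠ 0) : D.Cl (-q) (fun u => (B u)⁻¹) (fun u => (Bt u)⁻¹) := by
  have hB0 : ∀ u, B u ≠ 0 := fun u =>
    ((mul_pos hc (zpow_pos (D.M_pos u) _)).trans_le (hB u)).ne'
  intro k
  induction k with
  | zero => exact Base.inv h.base hc hB hBt
  | succ k ih =>
    refine ⟨Base.inv h.base hc hB hBt, h.diff.inv hB0, h.diff_t.inv hBt, fun i => ?_⟩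
    rw [pd_inv h.diff hB0, pd_inv h.diff_t hBt]
    have := ClK.mul (Cl.const (D := D) (-1) k) (ClK.mul (h.pd i k) (ClK.mul ih ih))
    rw [show 0 + (q + (-q + -q)) = -q by ring] at this
    exact this

/-- The principal monomials are symbols of weight one. -/
lemma Cl.exp_dn {v : Fin n → ℕ} (hv : v ∈ D.V) :
    D.Cl 1 (fun u => Real.exp (-dn v u))
      (fun u => (if v ∈ D.T then 1 else 0) * Real.exp (-dn v u)) := by
  have hb : D.Base 1 (fun u => Real.exp (-dn v u))
      (fun u => (if v ∈ D.T then 1 else 0) * Real.exp (-dn v u)) := by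
    refine ⟨⟨1, fun u => ?_⟩, fun w hw z => ?_, fun w hw z => ?_⟩
    · rw [abs_of_pos (Real.exp_pos _)]; simpa using D.le_M hv u
    · beta_reduce; split_ifs with hT
      · refine tendsto_const_nhds.congr fun R => ?_
        beta_reduce; rw [dn_add, dn_smul, D.W_T w hw.1 v hT, ← Real.exp_add, one_mul, ell]
        congr 1; push_cast; ring
      · rw [zero_mul]
        have hg : 0 < dn v w - D.t * sm w := sub_pos.2 (hw.2.2 v hv hT)
        have : Tendsto (fun R : ℝ => Real.exp (-(R * (dn v w - D.t * sm w))) *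
            Real.exp (-dn v z)) atTop (𝓝 (0 * Real.exp (-dn v z))) := by
          refine Tendsto.mul_const _ (Real.tendsto_exp_neg_atTop_nhds_zero.comp ?_)
          exact tendsto_id.atTop_mul_const hg
        rw [zero_mul] at this
        refine this.congr fun R => ?_
        beta_reduce; rw [dn_add, dn_smul, ← Real.exp_add, ← Real.exp_add, ell]
        congr 1; push_cast; ring
    · beta_reduce; split_ifs with hT
      · rw [dn_add, D.W_T w hw v hT, one_mul, one_mul, ← Real.exp_add, ell]
        congr 1; push_cast; ring
      · simp
  have hd : Differentiable ℝ (fun u => Real.exp (-dn v u)) := (differentiable_dn v).neg.exp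
  intro k
  induction k with
  | zero => exact hb
  | succ k ih =>
    refine ⟨hb, hd, hd.const_mul _, fun i => ?_⟩
    rw [pd_mul (differentiable_const _) hd, pd_exp_dn, pd_const]
    have := ClK.mul (Cl.const (D := D) (-(v i : ℝ)) k) ih
    rw [zero_add] at this
    convert this using 2
    ring

/-- Smooth compactly supported functions of `x` are symbols of weight zero. -/
lemma Cl.comp_ex {g : (Fin n → ℝ) → ℝ} (hg : ContDiff ℝ (⊤ : ℕ∞) g) (hc : HasCompactSupport g) :
    D.Cl 0 (fun u => g (ex u)) (fun _ => g 0) := by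
  intro k
  induction k generalizing g with
  | zero =>
    refine ⟨?_, fun w hw v => ?_, fun w _ v => by simp⟩
    · obtain ⟨C, hC⟩ := hc.exists_bound_of_continuous hg.continuous
      exact ⟨C, fun u => by simpa using hC (ex u)⟩
    · have h0 : Tendsto (fun R : ℝ => ex (R • w + v)) atTop (𝓝 0) := by
        refine tendsto_pi_nhds.2 fun i => ?_
        refine Real.tendsto_exp_neg_atTop_nhds_zero.comp ?_
        exact tendsto_atTop_add_const_right _ _ (tendsto_id.atTop_mul_const (hw.2.1 i))
      have := (hg.continuous.tendsto 0).comp h0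
      simpa [Function.comp_def] using this
  | succ k ih =>
    have hgd : Differentiable ℝ g := hg.differentiable (by simp)
    refine ⟨(ih hg hc).base, hgd.comp (contDiff_ex.differentiable (by simp)),
      differentiable_const _, fun i => ?_⟩
    rw [pd_comp_ex hgd, pd_const]
    have h1 : ContDiff ℝ (⊤ : ℕ∞) (fun x : Fin n → ℝ => -(x i) * fderiv ℝ g x (Pi.single i 1)) := by
      refine ContDiff.mul (by fun_prop) ?_
      exact (hg.fderiv_right (by simp)).clm_apply contDiff_const
    have h2 : HasCompactSupport (fun x : Fin n → ℝ => -(x i) * fderiv ℝ g x (Pi.single i 1)) := by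
      refine HasCompactSupport.mul_left ?_
      exact (hc.fderiv ℝ).comp_left (g := fun L => L (Pi.single i 1)) (by simp)
    have := ih h1 h2
    simpa using this

/-- The leading part of a symbol of weight `q` is bounded by `Mt ^ q`. -/
lemma M_lim {w : Fin n → ℝ} (hw : w ∈ D.Ki) (v : Fin n → ℝ) :
    Tendsto (fun R : ℝ => Real.exp (R * D.ell w) * D.M (R • w + v)) atTop (𝓝 (D.Mt v)) := by
  have h := (Cl.sum (D := D) D.V 1 (Cl.zero 1) fun v hv => Cl.exp_dn hv).base.2.1 w hw v
  have h2 : ∑ x ∈ D.V, (if x ∈ D.T then (1:ℝ) else 0) * Real.exp (-dn x v) = D.Mt v := by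
    simp only [ite_mul, one_mul, zero_mul, Newt.Mt]
    rw [← Finset.sum_filter, Finset.filter_mem_eq_inter, Finset.inter_eq_right.2 D.T_sub]
  beta_reduce at h
  rw [h2] at h
  simpa [Newt.M] using h

lemma Cl.M_cl : D.Cl 1 D.M D.Mt := by
  have h := (Cl.sum (D := D) D.V 1 (Cl.zero 1) fun v hv => Cl.exp_dn hv)
  have h2 : (fun v => ∑ x ∈ D.V, (if x ∈ D.T then (1:ℝ) else 0) * Real.exp (-dn x v)) = D.Mt := by
    funext v
    simp only [ite_mul, one_mul, zero_mul, Newt.Mt]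
    rw [← Finset.sum_filter, Finset.filter_mem_eq_inter, Finset.inter_eq_right.2 D.T_sub]
  rw [h2] at h
  exact h

lemma Base.bound_t (h : D.Base q B Bt) : ∃ C, ∀ v, |Bt v| ≤ C * D.Mt v ^ q := by
  obtain ⟨⟨C, hC⟩, hl, -⟩ := h
  refine ⟨C, fun v => ?_⟩
  have h1 := (hl _ D.w0_Ki v).abs
  have h2 := ((M_lim D.w0_Ki v).zpow₀ q (Or.inl (D.Mt_pos v).ne')).const_mul C
  refine le_of_tendsto_of_tendsto' h1 h2 fun R => ?_
  rw [abs_mul, abs_of_pos (Real.exp_pos _), mul_zpow, ← Real.rpow_intCast (Real.exp _),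
    ← Real.exp_mul, mul_comm _ (q : ℝ)]
  calc _ ≤ Real.exp (q * (R * D.ell D.w0)) * (C * D.M (R • D.w0 + v) ^ q) := by
        gcongr; exact hC _
    _ = _ := by ring

end Newt

/-! ### Holomorphic parameter integrals and complex powers of positive parts -/

/-- An integral of holomorphic functions, locally dominated in the parameter, is holomorphic. -/
lemma holo_integral {α : Type*} [MeasurableSpace α] {μ : Measure α} {F : ℂ → α → ℂ} {S : Set ℂ}
    (hS : IsOpen S) (hm : ∀ z ∈ S, AEStronglyMeasurable (F z) μ)
    (hd : ∀ a, DifferentiableOn ℂ (fun z => F z a) S)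
    (hb : ∀ z ∈ S, ∃ ε > 0, ∃ g : α → ℝ, Integrable g μ ∧
      ∀ᵐ a ∂μ, ∀ z' ∈ Metric.ball z ε, z' ∈ S → ‖F z' a‖ ≤ g a) :
    DifferentiableOn ℂ (fun z => ∫ a, F z a ∂μ) S := by
  intro z hz
  obtain ⟨ε, hε, g, hg, hgb⟩ := hb z hz
  obtain ⟨r, hr, hrS⟩ := Metric.isOpen_iff.1 hS z hz
  set δ := min ε r / 2 with hδ
  have hδ0 : 0 < δ := by positivity
  have hδε : 2 * δ ≤ ε := by rw [hδ]; linarith [min_le_left ε r]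
  have hδr : 2 * δ ≤ r := by rw [hδ]; linarith [min_le_right ε r]
  have hin : ∀ z' ∈ Metric.ball z δ, ∀ y ∈ Metric.closedBall z' (δ / 2),
      y ∈ Metric.ball z ε ∧ y ∈ S := by
    intro z' hz' y hy
    have h1 : dist y z < 2 * δ := by
      have := dist_triangle y z' z
      have h2 := Metric.mem_closedBall.1 hy
      have h3 := Metric.mem_ball.1 hz'
      linarith
    exact ⟨by rw [Metric.mem_ball]; linarith, hrS (by rw [Metric.mem_ball]; linarith)⟩
  have hderiv_bound : ∀ᵐ a ∂μ, ∀ z' ∈ Metric.ball z δ,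
      ‖deriv (fun z => F z a) z'‖ ≤ g a / (δ / 2) := by
    filter_upwards [hgb] with a ha z' hz'
    refine Complex.norm_deriv_le_of_forall_mem_sphere_norm_le (by positivity) ?_ ?_
    · refine DifferentiableOn.diffContOnCl ?_
      refine (hd a).mono fun y hy => ?_
      rw [closure_ball _ (by positivity)] at hy
      exact (hin z' hz' y hy).2
    · intro y hy
      have := hin z' hz' y (Metric.sphere_subset_closedBall hy)
      exact ha y this.1 this.2
  have hmeas : AEStronglyMeasurable (fun a => deriv (fun z => F z a) z) μ := by
    have hseq : ∀ k : ℕ, z + ((δ / 2 / (k + 1) : ℝ) : ℂ) ∈ S := by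
      intro k
      refine (hin z (Metric.mem_ball_self hδ0) _ ?_).2
      rw [Metric.mem_closedBall, dist_eq_norm, add_sub_cancel_left, Complex.norm_real,
        Real.norm_eq_abs, abs_of_pos (by positivity)]
      exact div_le_self (by positivity) (by linarith [(Nat.cast_nonneg k : (0:ℝ) ≤ k)])
    have hne : ∀ k : ℕ, ((δ / 2 / (k + 1) : ℝ) : ℂ) ≠ 0 := fun k => by
      rw [Complex.ofReal_ne_zero]; positivity
    refine aestronglyMeasurable_of_tendsto_ae (u := atTop)
      (f := fun (k : ℕ) a => (((δ / 2 / (k + 1) : ℝ) : ℂ))⁻¹ • 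
        (F (z + ((δ / 2 / (k + 1) : ℝ) : ℂ)) a - F z a)) ?_ ?_
    · intro k
      exact AEStronglyMeasurable.const_smul ((hm _ (hseq k)).sub (hm z hz)) (_ : ℂ)
    · refine Eventually.of_forall fun a => ?_
      have h1 := ((hd a).differentiableAt (hS.mem_nhds hz)).hasDerivAt
      rw [hasDerivAt_iff_tendsto_slope_zero] at h1
      refine h1.comp (tendsto_nhdsWithin_iff.2 ⟨?_, Eventually.of_forall fun k => hne k⟩)
      rw [← Complex.ofReal_zero]
      refine (Complex.continuous_ofReal.tendsto 0).comp ?_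
      have := (tendsto_one_div_add_atTop_nhds_zero_nat (𝕜 := ℝ)).const_mul (δ / 2)
      rw [mul_zero] at this
      exact this.congr fun k => by ring
  have h := hasDerivAt_integral_of_dominated_loc_of_deriv_le (μ := μ) (𝕜 := ℂ)
    (F := F) (F' := fun z a => deriv (fun z => F z a) z) (x₀ := z) (bound := fun a => g a / (δ / 2))
    (s := Metric.ball z δ) (Metric.ball_mem_nhds z hδ0) ?_ ?_ hmeas hderiv_bound (hg.div_const _) ?_
  · exact h.2.differentiableAt.differentiableWithinAt
  · filter_upwards [hS.mem_nhds hz] with y hy using hm y hy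
  · refine hg.mono' (hm z hz) ?_
    filter_upwards [hgb] with a ha using ha z (Metric.mem_ball_self hε) hz
  · refine Eventually.of_forall fun a y hy => ?_
    have hyS := (hin y hy y (Metric.mem_closedBall_self (by positivity))).2
    exact ((hd a).differentiableAt (hS.mem_nhds hyS)).hasDerivAt

/-- The complex power `x₊ ^ s` of the positive part of `x`. -/
def pcp (x : ℝ) (s : ℂ) : ℂ := ((max x 0 : ℝ) : ℂ) ^ s

lemma pcp_of_pos {x : ℝ} (hx : 0 < x) (s : ℂ) : pcp x s = (x : ℂ) ^ s := by
  rw [pcp, max_eq_left hx.le]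

lemma pcp_of_nonpos {x : ℝ} (hx : x ≤ 0) {s : ℂ} (hs : s ≠ 0) : pcp x s = 0 := by
  rw [pcp, max_eq_right hx]; simp [hs]

lemma norm_pcp {s : ℂ} (hs : 0 < s.re) (x : ℝ) : ‖pcp x s‖ = (max x 0) ^ s.re := by
  rcases le_or_gt x 0 with hx | hx
  · rw [pcp_of_nonpos hx (ne_zero_of_re_pos hs), max_eq_right hx, Real.zero_rpow hs.ne', norm_zero]
  · rw [pcp_of_pos hx, max_eq_left hx.le, Complex.norm_cpow_eq_rpow_re_of_pos hx]

lemma norm_pcp_le {s : ℂ} (hs : 0 < s.re) {x C : ℝ} (h : |x| ≤ C) : ‖pcp x s‖ ≤ C ^ s.re := by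
  rw [norm_pcp hs]
  exact Real.rpow_le_rpow (le_max_right _ _)
    (max_le ((le_abs_self x).trans h) ((abs_nonneg x).trans h)) hs.le

lemma pcp_mul {a : ℝ} (ha : 0 < a) (x : ℝ) (s : ℂ) : pcp (a * x) s = (a : ℂ) ^ s * pcp x s := by
  have : max (a * x) 0 = a * max x 0 := by rw [mul_max_of_nonneg _ _ ha.le, mul_zero]
  rw [pcp, this, Complex.ofReal_mul, Complex.mul_cpow_ofReal_nonneg ha.le (le_max_right _ _), pcp]

lemma continuous_pcp {s : ℂ} (hs : 0 < s.re) : Continuous (fun x => pcp x s) := by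
  have h : Continuous fun x : ℝ => ((x : ℂ)) ^ s := by
    exact Complex.continuous_ofReal_cpow_const hs
  exact h.comp (continuous_id.max continuous_const)

lemma differentiableOn_pcp (x : ℝ) : DifferentiableOn ℂ (pcp x) {s | 0 < s.re} := by
  intro s hs
  have hs' : s ≠ 0 := ne_zero_of_re_pos hs
  exact (DifferentiableAt.const_cpow differentiableAt_id (Or.inr hs')).differentiableWithinAt

lemma pcp_add_one {s : ℂ} (hs : 0 < s.re) (x : ℝ) : pcp x (s + 1) = pcp x s * (x : ℂ) := by
  have h1 : s + 1 ≠ 0 := ne_zero_of_re_pos (by simp; linarith)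
  rcases le_or_gt x 0 with hx | hx
  · rw [pcp_of_nonpos hx h1, pcp_of_nonpos hx (ne_zero_of_re_pos hs), zero_mul]
  · rw [pcp_of_pos hx, pcp_of_pos hx, Complex.cpow_add _ _ (by exact_mod_cast hx.ne'),
      Complex.cpow_one]

lemma hasDerivAt_pcp {s : ℂ} (hs : 0 < s.re) (x : ℝ) :
    HasDerivAt (fun x => pcp x (s + 1)) ((s + 1) * pcp x s) x := by
  have h1 : s + 1 ≠ 0 := ne_zero_of_re_pos (by simp; linarith)
  rcases lt_trichotomy x 0 with hx | hx | hx
  · rw [pcp_of_nonpos hx.le (ne_zero_of_re_pos hs), mul_zero]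
    refine (hasDerivAt_const x (0:ℂ)).congr_of_eventuallyEq ?_
    filter_upwards [Iio_mem_nhds hx] with y hy using pcp_of_nonpos (le_of_lt hy) h1
  · subst hx
    rw [pcp_of_nonpos le_rfl (ne_zero_of_re_pos hs), mul_zero, hasDerivAt_iff_tendsto_slope_zero]
    have hc : Tendsto (fun t : ℝ => pcp t s) (𝓝[≠] 0) (𝓝 0) := by
      have := ((continuous_pcp hs).tendsto 0).mono_left (nhdsWithin_le_nhds (s := {0}ᶜ))
      rwa [pcp_of_nonpos le_rfl (ne_zero_of_re_pos hs)] at this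
    refine hc.congr' ?_
    filter_upwards [self_mem_nhdsWithin] with t ht
    have ht' : (t : ℂ) ≠ 0 := by simpa using ht
    rw [zero_add, pcp_of_nonpos le_rfl h1, sub_zero, pcp_add_one hs, Complex.real_smul,
      Complex.ofReal_inv]
    field_simp
  · rw [pcp_of_pos hx]
    have h2 : HasDerivAt (fun y : ℝ => (y : ℂ) ^ (s + 1)) ((s + 1) * (x : ℂ) ^ s) x := by
      have h3 := (hasDerivAt_id (x : ℂ)).cpow_const (c := s + 1) (Or.inl (by simpa using hx))
      have h4 := h3.comp_ofReal
      simpa using h4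
    refine h2.congr_of_eventuallyEq ?_
    filter_upwards [Ioi_mem_nhds hx] with y hy using pcp_of_pos hy _

/-! ### The raising operator -/

section raising
variable {n : ℕ}

/-- The divergence part `Q ↦ -∑ᵢ ∂ᵢ(cᵢ Q)` of the raising operator. -/
def L0 (c : Fin n → (Fin n → ℝ) → ℝ) (Q : (Fin n → ℝ) → ℝ) (u : Fin n → ℝ) : ℝ :=
  -∑ i, pd i (fun u => c i u * Q u) u

/-- The multiplication part `Q ↦ (∑ᵢ cᵢ) Q` of the raising operator. -/
def L1 (c : Fin n → (Fin n → ℝ) → ℝ) (Q : (Fin n → ℝ) → ℝ) (u : Fin n → ℝ) : ℝ :=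
  ∑ i, c i u * Q u

/-- The raising operator `Q ↦ -∑ᵢ ∂ᵢ(cᵢ Q) + (∑ᵢ cᵢ) Q`. -/
def Lr (c : Fin n → (Fin n → ℝ) → ℝ) (Q : (Fin n → ℝ) → ℝ) (u : Fin n → ℝ) : ℝ :=
  L0 c Q u + L1 c Q u

lemma Newt.Cl.L0 {D : Newt n} {q : ℤ} {c ct : Fin n → (Fin n → ℝ) → ℝ} {Q Qt : (Fin n → ℝ) → ℝ}
    (hc : ∀ i, D.Cl (-1) (c i) (ct i)) (hQ : D.Cl q Q Qt) :
    D.Cl (-1 + q) (_root_.L0 c Q) (_root_.L0 ct Qt) := by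
  have := (Newt.Cl.sum (D := D) Finset.univ (-1 + q) (Newt.Cl.zero _)
    (fun i _ => ((hc i).mul hQ).pd i)).const_mul (-1)
  convert this using 2 <;> simp [_root_.L0]

lemma Newt.Cl.L1 {D : Newt n} {q : ℤ} {c ct : Fin n → (Fin n → ℝ) → ℝ} {Q Qt : (Fin n → ℝ) → ℝ}
    (hc : ∀ i, D.Cl (-1) (c i) (ct i)) (hQ : D.Cl q Q Qt) :
    D.Cl (-1 + q) (_root_.L1 c Q) (_root_.L1 ct Qt) :=
  Newt.Cl.sum (D := D) Finset.univ (-1 + q) (Newt.Cl.zero _) (fun i _ => (hc i).mul hQ)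

lemma Newt.Cl.Lr {D : Newt n} {q : ℤ} {c ct : Fin n → (Fin n → ℝ) → ℝ} {Q Qt : (Fin n → ℝ) → ℝ}
    (hc : ∀ i, D.Cl (-1) (c i) (ct i)) (hQ : D.Cl q Q Qt) :
    D.Cl (-1 + q) (_root_.Lr c Q) (_root_.Lr ct Qt) :=
  (Newt.Cl.L0 hc hQ).add (Newt.Cl.L1 hc hQ)

/-- The integrand `p₊ ^ s e^{-λ ∑ uᵢ} Q`. -/
def Jg (p : (Fin n → ℝ) → ℝ) (s lam : ℂ) (Q : (Fin n → ℝ) → ℝ) (u : Fin n → ℝ) : ℂ :=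
  pcp (p u) s * cexp (-(lam * (sm u : ℂ))) * (Q u : ℂ)

lemma Jg_fderiv {p Q : (Fin n → ℝ) → ℝ} {s : ℂ} (lam : ℂ) (hs : 0 < s.re) (hp : Differentiable ℝ p)
    (hQ : Differentiable ℝ Q) (u : Fin n → ℝ) :
    DifferentiableAt ℝ (Jg p (s + 1) lam Q) u ∧ ∀ i,
    fderiv ℝ (Jg p (s + 1) lam Q) u (Pi.single i 1) =
      (s + 1) * Jg p s lam (fun u => pd i p u * Q u) u - lam * Jg p (s + 1) lam Q u
      + Jg p (s + 1) lam (pd i Q) u := by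
  have h1 := (hasDerivAt_pcp hs (p u)).hasFDerivAt.comp u (hp u).hasFDerivAt
  have h2 : HasFDerivAt (fun u : Fin n → ℝ => (sm u : ℂ)) _ u :=
    Complex.ofRealCLM.hasFDerivAt.comp u (differentiable_sm u).hasFDerivAt
  have h3 := ((h2.const_mul lam).neg).cexp
  have h4 : HasFDerivAt (fun u : Fin n → ℝ => (Q u : ℂ)) _ u :=
    Complex.ofRealCLM.hasFDerivAt.comp u (hQ u).hasFDerivAt
  have h5 := (h1.mul h3).mul h4
  have h6 : HasFDerivAt (Jg p (s + 1) lam Q) _ u := h5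
  refine ⟨h6.differentiableAt, fun i => ?_⟩
  rw [h6.fderiv]
  simp [Jg, pd, fderiv_sm, sm_single]
  ring

/-- Abstract form of the raising identity: if the vector field `c` differentiates `p` to one on
the support of `Q`, the divergence theorem raises the exponent of `p₊` by one. The map `ι`
parametrizes the space over which the integral is taken, and `b i` represents the `i`-th
coordinate direction in it. -/
lemma raise_core {k : ℕ} (ι : (Fin k → ℝ) →L[ℝ] (Fin n → ℝ)) (b : Fin n → Fin k → ℝ)
    {p Q : (Fin n → ℝ) → ℝ} {c : Fin n → (Fin n → ℝ) → ℝ} {s lam : ℂ} (hs : 0 < s.re)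
    (hp : Differentiable ℝ p) (hQ : Differentiable ℝ Q) (hc : ∀ i, Differentiable ℝ (c i))
    (heq : ∀ v, Q (ι v) ≠ 0 → ∑ i, c i (ι v) * pd i p (ι v) = 1)
    (hG : ∀ i v, fderiv ℝ (Jg p (s + 1) lam (fun u => c i u * Q u)) (ι v) (Pi.single i 1) =
      fderiv ℝ (Jg p (s + 1) lam (fun u => c i u * Q u)) (ι v) (ι (b i)))
    (i1 : ∀ i, Integrable fun v => Jg p s lam (fun u => pd i p u * (c i u * Q u)) (ι v))
    (i2 : ∀ i, Integrable fun v => Jg p (s + 1) lam (fun u => c i u * Q u) (ι v))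
    (i3 : ∀ i, Integrable fun v => Jg p (s + 1) lam (pd i (fun u => c i u * Q u)) (ι v)) :
    (s + 1) * ∫ v, Jg p s lam Q (ι v) =
      (∫ v, Jg p (s + 1) lam (L0 c Q) (ι v)) + lam * ∫ v, Jg p (s + 1) lam (L1 c Q) (ι v) := by
  have hz : ∀ i, ∫ v, ((s + 1) * Jg p s lam (fun u => pd i p u * (c i u * Q u)) (ι v)
      - lam * Jg p (s + 1) lam (fun u => c i u * Q u) (ι v)
      + Jg p (s + 1) lam (pd i (fun u => c i u * Q u)) (ι v)) = 0 := by
    intro i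
    have hd := fun u => Jg_fderiv (p := p) (Q := fun u => c i u * Q u) lam hs hp ((hc i).mul hQ) u
    have e1 : ∀ v, fderiv ℝ (fun v => Jg p (s + 1) lam (fun u => c i u * Q u) (ι v)) v (b i) =
        (s + 1) * Jg p s lam (fun u => pd i p u * (c i u * Q u)) (ι v)
      - lam * Jg p (s + 1) lam (fun u => c i u * Q u) (ι v)
      + Jg p (s + 1) lam (pd i (fun u => c i u * Q u)) (ι v) := by
      intro v
      rw [← (hd (ι v)).2 i]
      have := ((hd (ι v)).1.hasFDerivAt.comp v ι.hasFDerivAt).fderiv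
      have h2 : fderiv ℝ (fun v => Jg p (s + 1) lam (fun u => c i u * Q u) (ι v)) v = _ := this
      rw [h2]
      exact (hG i v).symm
    have hi : Integrable fun v => (s + 1) * Jg p s lam (fun u => pd i p u * (c i u * Q u)) (ι v)
      - lam * Jg p (s + 1) lam (fun u => c i u * Q u) (ι v)
      + Jg p (s + 1) lam (pd i (fun u => c i u * Q u)) (ι v) :=
      (((i1 i).const_mul _).sub ((i2 i).const_mul _)).add (i3 i)
    have := integral_mul_fderiv_eq_neg_fderiv_mul_of_integrable (𝕜 := ℂ)
      (μ := (volume : Measure (Fin k → ℝ))) (f := fun _ => (1 : ℂ)) (v := b i)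
      (g := fun v => Jg p (s + 1) lam (fun u => c i u * Q u) (ι v)) (by simp)
      (by simpa only [one_mul, e1] using hi) (by simpa using i2 i) (by fun_prop)
      (fun v _ => ((hd (ι v)).1.comp v ι.differentiableAt))
    simpa only [one_mul, e1, fderiv_fun_const, Pi.zero_apply, zero_apply,
      zero_mul, integral_zero, neg_zero] using this
  have a1 : ∀ v, (s + 1) * Jg p s lam Q (ι v) =
      ∑ i, (s + 1) * Jg p s lam (fun u => pd i p u * (c i u * Q u)) (ι v) := by
    intro v
    rw [← Finset.mul_sum]
    congr 1
    simp only [Jg]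
    rw [← Finset.mul_sum]
    congr 1
    rw [← Complex.ofReal_sum]
    congr 1
    by_cases h : Q (ι v) = 0
    · simp [h]
    · have h2 := congrArg (fun x => x * Q (ι v)) (heq v h)
      simp only [one_mul, Finset.sum_mul] at h2
      exact h2.symm.trans (Finset.sum_congr rfl fun i _ => by ring)
  have a2 : ∀ v, Jg p (s + 1) lam (L1 c Q) (ι v) =
      ∑ i, Jg p (s + 1) lam (fun u => c i u * Q u) (ι v) := by
    intro v; simp only [Jg, L1, Complex.ofReal_sum, Finset.mul_sum]
  have a3 : ∀ v, Jg p (s + 1) lam (L0 c Q) (ι v) =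
      -∑ i, Jg p (s + 1) lam (pd i (fun u => c i u * Q u)) (ι v) := by
    intro v; simp only [Jg, L0, Complex.ofReal_neg, Complex.ofReal_sum, Finset.mul_sum, mul_neg]
  rw [← integral_const_mul, ← integral_const_mul]
  simp only [a1, a2, a3]
  rw [integral_finsetSum _ (fun i _ => (i1 i).const_mul _), integral_neg,
    integral_finsetSum _ (fun i _ => i3 i), integral_const_mul,
    integral_finsetSum _ (fun i _ => i2 i), Finset.mul_sum, ← sub_eq_neg_add, eq_sub_iff_add_eq,
    ← Finset.sum_add_distrib, ← sub_eq_zero, ← Finset.sum_sub_distrib]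
  refine Finset.sum_eq_zero fun i _ => ?_
  have := hz i
  have hsub : Integrable fun v => (s + 1) * Jg p s lam (fun u => pd i p u * (c i u * Q u)) (ι v)
      - lam * Jg p (s + 1) lam (fun u => c i u * Q u) (ι v) :=
    ((i1 i).const_mul _).sub ((i2 i).const_mul _)
  rw [integral_add hsub (i3 i), integral_sub ((i1 i).const_mul _) ((i2 i).const_mul _), integral_const_mul lam] at this
  rw [← this]; ring

end raising

/-! ### Splitting logarithmic space along the normal cone -/

/-- Newton data together with a complement of `W`, parametrized by `ι : ℝᵏ → ℝⁿ` with associated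
projection `pr`, on which the face `τ₀` is coercive. -/
structure Setup (n k : ℕ) extends Newt n where
  ι : (Fin k → ℝ) →L[ℝ] (Fin n → ℝ)
  pr : (Fin n → ℝ) →L[ℝ] (Fin k → ℝ)
  pr_ι : ∀ v, pr (ι v) = v
  pr_W : ∀ w ∈ W, pr w = 0
  sub_mem : ∀ u, u - ι (pr u) ∈ W
  cc : ℝ
  cc_pos : 0 < cc
  coer : ∀ v, ∃ α ∈ T, cc * ‖v‖ ≤ t * sm (ι v) - dn α (ι v)

namespace Setup
variable {n k : ℕ} (D : Setup n k)

/-- The identification of `W × ℝᵏ` with logarithmic space. -/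
def L : (D.W × (Fin k → ℝ)) ≃L[ℝ] (Fin n → ℝ) :=
  LinearEquiv.toContinuousLinearEquiv
  { toFun := fun x => x.1 + D.ι x.2
    map_add' := fun x y => by
      simp only [Prod.fst_add, Prod.snd_add, Submodule.coe_add, map_add]; abel
    map_smul' := fun c x => by simp [smul_add]
    invFun := fun u => (⟨u - D.ι (D.pr u), D.sub_mem u⟩, D.pr u)
    left_inv := fun x => by
      have h : D.pr (x.1 + D.ι x.2) = x.2 := by
        rw [map_add, D.pr_ι, D.pr_W _ x.1.2, zero_add]
      ext i
      · simp [h]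
      · simp [h]
    right_inv := fun u => by simp }

lemma L_apply (x : D.W × (Fin k → ℝ)) : D.L x = x.1 + D.ι x.2 := rfl

/-- Lebesgue measure splits as a product along `W × ℝᵏ`. -/
lemma exists_haar : ∃ ν : Measure D.W, ν.IsAddHaarMeasure ∧
    MeasurePreserving D.L (ν.prod (volume : Measure (Fin k → ℝ))) volume := by
  have h1 : (volume.map D.L.symm : Measure (D.W × (Fin k → ℝ))).IsAddHaarMeasure :=
    D.L.symm.isAddHaarMeasure_map volume
  set μ0 : Measure D.W := Measure.addHaar
  have h2 := Measure.isAddLeftInvariant_eq_smul (volume.map D.L.symm : Measure (D.W × (Fin k → ℝ)))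
    (μ0.prod (volume : Measure (Fin k → ℝ)))
  set c := Measure.addHaarScalarFactor (volume.map D.L.symm : Measure (D.W × (Fin k → ℝ)))
    (μ0.prod (volume : Measure (Fin k → ℝ))) with hc
  have hc0 : 0 < c := Measure.addHaarScalarFactor_pos_of_isAddHaarMeasure _ _
  refine ⟨c • μ0, ?_, ?_⟩
  · exact Measure.IsAddHaarMeasure.nnreal_smul μ0 hc0.ne'
  · refine ⟨D.L.continuous.measurable, ?_⟩
    have h3 : (c • μ0).prod (volume : Measure (Fin k → ℝ)) =
        c • (μ0.prod (volume : Measure (Fin k → ℝ))) := by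
      exact Measure.prod_smul_left (c : ENNReal)
    rw [h3, ← h2, Measure.map_map D.L.continuous.measurable D.L.symm.continuous.measurable]
    have : (D.L : _ → _) ∘ D.L.symm = id := by ext x; simp
    rw [this, Measure.map_id]

/-- Exponential functions of the norm are integrable. -/
lemma integrable_exp_norm {E : Type*} [NormedAddCommGroup E] [NormedSpace ℝ E]
    [FiniteDimensional ℝ E] [MeasurableSpace E] [BorelSpace E] (μ : Measure E) [μ.IsAddHaarMeasure]
    {κ : ℝ} (hκ : 0 < κ) : Integrable (fun x : E => Real.exp (-(κ * ‖x‖))) μ := by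
  have h1 := integrable_one_add_norm (E := E) (μ := μ)
    (r := (Module.finrank ℝ E + 1 : ℕ)) (by push_cast; linarith)
  set d := Module.finrank ℝ E + 1
  refine (h1.const_mul ((d.factorial : ℝ) / κ ^ d * Real.exp κ)).mono'
    (by fun_prop) (Eventually.of_forall fun x => ?_)
  rw [Real.norm_eq_abs, abs_of_pos (Real.exp_pos _), Real.rpow_neg (by positivity),
    Real.rpow_natCast]
  have hx : 0 < 1 + ‖x‖ := by positivity
  have h2 := Real.pow_div_factorial_le_exp (κ * (1 + ‖x‖)) (by positivity) d
  rw [mul_pow, div_le_iff₀ (by positivity), mul_add, mul_one, Real.exp_add] at h2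
  rw [Real.exp_neg, inv_eq_one_div, div_le_iff₀ (Real.exp_pos _)]
  have h3 : 0 < (1 + ‖x‖) ^ d := by positivity
  have h4 : (0:ℝ) < κ ^ d := by positivity
  calc (1 : ℝ) = (κ ^ d * (1 + ‖x‖) ^ d) / (κ ^ d * (1 + ‖x‖) ^ d) := by field_simp
    _ ≤ (Real.exp κ * Real.exp (κ * ‖x‖) * d.factorial) / (κ ^ d * (1 + ‖x‖) ^ d) := by gcongr
    _ = _ := by field_simp

lemma le_coord (u : Fin n → ℝ) {b : ℝ} (hb : 0 ≤ b) (hu : ∀ i, -b ≤ u i) :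
    ‖u‖ - 2 * n * b ≤ sm u := by
  have h1 : ‖u‖ ≤ ∑ i, |u i| := by
    refine (pi_norm_le_iff_of_nonneg (Finset.sum_nonneg fun i _ => abs_nonneg _)).2 fun i => ?_
    exact Finset.single_le_sum (f := fun i => |u i|) (fun i _ => abs_nonneg _) (Finset.mem_univ i)
  have h2 : ∑ i, |u i| ≤ ∑ i, (u i + 2 * b) := by
    refine Finset.sum_le_sum fun i _ => ?_
    have := hu i
    exact abs_le.2 ⟨by linarith, by linarith⟩
  rw [Finset.sum_add_distrib] at h2
  simp at h2
  have : sm u = ∑ i, u i := rfl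
  linarith

lemma abs_dn_le (α : Fin n → ℕ) (u : Fin n → ℝ) : |dn α u| ≤ (∑ i, (α i : ℝ)) * ‖u‖ := by
  rw [dn, Finset.sum_mul]
  refine (Finset.abs_sum_le_sum_abs _ _).trans (Finset.sum_le_sum fun i _ => ?_)
  rw [abs_mul, Nat.abs_cast]
  exact mul_le_mul_of_nonneg_left (norm_le_pi_norm u i) (by positivity)

lemma abs_sm_le (u : Fin n → ℝ) : |sm u| ≤ n * ‖u‖ := by
  have := abs_dn_le (fun _ => 1) u
  simpa [dn, sm] using this

/-- The weight of the integrals: `M ^ σ e^{-∑ uᵢ}`, cut off to `u ≥ -b`. -/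
def dom (b σ : ℝ) (u : Fin n → ℝ) : ℝ :=
  if ∀ i, -b ≤ u i then D.M u ^ σ * Real.exp (-sm u) else 0

lemma dom_nonneg (b σ : ℝ) (u : Fin n → ℝ) : 0 ≤ D.dom b σ u := by
  unfold dom; split_ifs
  · exact mul_nonneg (Real.rpow_nonneg (D.M_pos u).le _) (Real.exp_pos _).le
  · exact le_rfl

/-- Slightly to the right of the abscissa `-1/t`, the weight decays exponentially, slowly along
`W` and at a uniform rate across `W`. -/
lemma dom_bound {b : ℝ} (hb : 0 ≤ b) : ∃ ε₀ > 0, ∃ κ > 0, ∃ C > 0, ∀ ε, 0 < ε → ε ≤ ε₀ →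
    ∀ x : D.W × (Fin k → ℝ),
      D.dom b (-1 / D.t + ε) (D.L x) ≤ C * Real.exp (-(κ * (ε * ‖x.1‖ + ‖x.2‖))) := by
  have ht := D.t_pos
  have hcc := D.cc_pos
  set I := ‖D.ι‖ with hI
  have hI0 : 0 ≤ I := norm_nonneg _
  set A := (∑ α ∈ D.T, ∑ i, (α i : ℝ)) * I with hA
  have hA0 : 0 ≤ A := by positivity
  set B := I + n * I with hB
  have hB0 : 0 ≤ B := by positivity
  have hιn : ∀ v, ‖D.ι v‖ ≤ I * ‖v‖ := D.ι.le_opNorm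
  refine ⟨min (1 / D.t) (D.cc / (2 * D.t) / (D.t * B + A + 1)), by positivity,
    min D.t (D.cc / (2 * D.t)), by positivity, Real.exp (2 * n * b), Real.exp_pos _,
    fun ε hε hε0 x => ?_⟩
  have hε1 : ε * D.t ≤ 1 := (le_div_iff₀ ht).1 (hε0.trans (min_le_left _ _))
  have hε2 : ε * (D.t * B + A) ≤ D.cc / (2 * D.t) := by
    have := (le_div_iff₀ (by positivity)).1 (hε0.trans (min_le_right _ _))
    nlinarith
  set κ := min D.t (D.cc / (2 * D.t)) with hκ
  have hκ1 : κ ≤ D.t := min_le_left _ _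
  have hκ2 : κ ≤ D.cc / (2 * D.t) := min_le_right _ _
  unfold dom
  split_ifs with hu
  swap
  · positivity
  obtain ⟨w, v⟩ := x
  rw [D.L_apply] at hu ⊢
  simp only at hu ⊢
  obtain ⟨α, hα, hco⟩ := D.coer v
  have hσ : -1 / D.t + ε ≤ 0 := by
    rw [div_add' _ _ _ ht.ne']; exact div_nonpos_of_nonpos_of_nonneg (by linarith) ht.le
  have h1 : D.M (w + D.ι v) ^ (-1 / D.t + ε) ≤
      Real.exp (-dn α (w + D.ι v)) ^ (-1 / D.t + ε) :=
    Real.rpow_le_rpow_of_nonpos (Real.exp_pos _) (D.le_M (D.T_sub hα) _) hσ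
  rw [← Real.exp_mul] at h1
  refine (mul_le_mul_of_nonneg_right h1 (Real.exp_pos _).le).trans ?_
  rw [← Real.exp_add, ← Real.exp_add, Real.exp_le_exp, dn_add, sm_add, D.W_T w w.2 α hα]
  have ha : |dn α (D.ι v)| ≤ A * ‖v‖ := by
    refine (abs_dn_le _ _).trans ?_
    rw [hA, mul_assoc]
    refine mul_le_mul ?_ (hιn v) (norm_nonneg _) (by positivity)
    exact Finset.single_le_sum (f := fun α : Fin n → ℕ => ∑ i, (α i : ℝ))
      (fun α _ => by positivity) hα
  have hs : |sm (D.ι v)| ≤ n * (I * ‖v‖) :=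
    (abs_sm_le _).trans (mul_le_mul_of_nonneg_left (hιn v) (by positivity))
  have hu2 := le_coord _ hb hu
  rw [sm_add] at hu2
  have hw : ‖w‖ - I * ‖v‖ ≤ ‖(w : Fin n → ℝ) + D.ι v‖ := by
    have := norm_sub_norm_le (w : Fin n → ℝ) (-D.ι v)
    rw [norm_neg, sub_neg_eq_add] at this
    have h2 := hιn v
    have h3 : ‖w‖ = ‖(w : Fin n → ℝ)‖ := rfl
    linarith
  have hsw : ‖w‖ - B * ‖v‖ - 2 * n * b ≤ sm (w : Fin n → ℝ) := by
    have := (abs_le.1 hs).2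
    rw [hB]; linarith
  have e1 : -(D.t * sm (w : Fin n → ℝ) + dn α (D.ι v)) * (-1 / D.t + ε) +
      -(sm (w : Fin n → ℝ) + sm (D.ι v)) = -(D.t * ε) * sm (w : Fin n → ℝ)
      - (D.t * sm (D.ι v) - dn α (D.ι v)) / D.t - ε * dn α (D.ι v) := by
    field_simp; ring
  rw [e1]
  have e2 : D.cc * ‖v‖ / D.t ≤ (D.t * sm (D.ι v) - dn α (D.ι v)) / D.t := by gcongr
  have e3 : -(ε * dn α (D.ι v)) ≤ ε * (A * ‖v‖) := by
    rw [← mul_neg]; exact mul_le_mul_of_nonneg_left ((neg_le_abs _).trans ha) hε.le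
  have e4 : (D.t * ε) * (‖w‖ - B * ‖v‖ - 2 * n * b) ≤ (D.t * ε) * sm (w : Fin n → ℝ) :=
    mul_le_mul_of_nonneg_left hsw (by positivity)
  have e5 : ε * (D.t * B + A) * ‖v‖ ≤ D.cc / (2 * D.t) * ‖v‖ :=
    mul_le_mul_of_nonneg_right hε2 (norm_nonneg _)
  have e6 : κ * (ε * ‖w‖) ≤ D.t * (ε * ‖w‖) := mul_le_mul_of_nonneg_right hκ1 (by positivity)
  have e7 : κ * ‖v‖ ≤ D.cc / (2 * D.t) * ‖v‖ := mul_le_mul_of_nonneg_right hκ2 (by positivity)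
  have e8 : (ε * D.t) * (2 * n * b) ≤ 1 * (2 * n * b) :=
    mul_le_mul_of_nonneg_right hε1 (by positivity)
  have e9 : D.cc * ‖v‖ / D.t = 2 * (D.cc / (2 * D.t) * ‖v‖) := by field_simp
  nlinarith

lemma M_bound (b : ℝ) : ∃ C > 0, ∀ u : Fin n → ℝ, (∀ i, -b ≤ u i) → D.M u ≤ C := by
  refine ⟨∑ v ∈ D.V, Real.exp (∑ i, (v i : ℝ) * b),
    Finset.sum_pos (fun _ _ => Real.exp_pos _) D.V_ne, fun u hu => ?_⟩
  refine Finset.sum_le_sum fun v _ => ?_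
  rw [Real.exp_le_exp, dn, ← Finset.sum_neg_distrib]
  refine Finset.sum_le_sum fun i _ => ?_
  rw [← mul_neg]
  exact mul_le_mul_of_nonneg_left (by linarith [hu i]) (by positivity)

lemma dom_mono (b : ℝ) {σ₁ σ₂ : ℝ} (h : σ₁ ≤ σ₂) : ∃ C, ∀ u, D.dom b σ₂ u ≤ C * D.dom b σ₁ u := by
  obtain ⟨C, hC, hb⟩ := D.M_bound b
  refine ⟨C ^ (σ₂ - σ₁), fun u => ?_⟩
  unfold dom
  split_ifs with hu
  · have : D.M u ^ σ₂ = D.M u ^ (σ₂ - σ₁) * D.M u ^ σ₁ := by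
      rw [← Real.rpow_add (D.M_pos u)]; simp
    rw [this, ← mul_assoc]
    gcongr
    · exact Real.rpow_nonneg (D.M_pos u).le _
    · exact (D.M_pos u).le
    · exact hb u hu
  · simp

lemma continuous_M : Continuous D.M := by
  unfold Newt.M
  exact continuous_finsetSum _ fun v _ => Real.continuous_exp.comp (continuous_dn v).neg

lemma measurable_dom (b σ : ℝ) : Measurable (D.dom b σ) := by
  unfold dom
  refine Measurable.ite ?_ ?_ measurable_const
  · have : {u : Fin n → ℝ | ∀ i, -b ≤ u i} = ⋂ i, {u | -b ≤ u i} := by ext; simp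
    rw [this]
    exact MeasurableSet.iInter fun i => measurableSet_le measurable_const (measurable_pi_apply i)
  · exact (D.continuous_M.measurable.pow_const _).mul
      (Real.continuous_exp.comp continuous_sm.neg).measurable

lemma dom_integrable {b : ℝ} (hb : 0 ≤ b) {σ : ℝ} (hσ : -1 / D.t < σ) :
    Integrable (D.dom b σ) := by
  obtain ⟨ε₀, hε₀, κ, hκ, C, hC, hbd⟩ := D.dom_bound hb
  obtain ⟨ν, hν, hmp⟩ := D.exists_haar
  set ε := min ε₀ (σ - -1 / D.t) with hε
  have hε0 : 0 < ε := lt_min hε₀ (by linarith)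
  have h1 : Integrable (D.dom b (-1 / D.t + ε)) := by
    rw [← hmp.integrable_comp_emb D.L.toHomeomorph.measurableEmbedding]
    have h2 := ((integrable_exp_norm ν (mul_pos hκ hε0)).mul_prod
      (integrable_exp_norm (volume : Measure (Fin k → ℝ)) hκ)).const_mul C
    refine h2.mono' ((D.measurable_dom _ _).comp D.L.continuous.measurable).aestronglyMeasurable
      (Eventually.of_forall fun x => ?_)
    rw [Function.comp_apply, Real.norm_eq_abs, abs_of_nonneg (D.dom_nonneg _ _ _)]
    refine (hbd ε hε0 (min_le_left _ _) x).trans (le_of_eq ?_)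
    rw [← Real.exp_add]; ring_nf
  obtain ⟨C', hC'⟩ := D.dom_mono b (σ₁ := -1 / D.t + ε) (σ₂ := σ)
    (by linarith [min_le_right ε₀ (σ - -1 / D.t)])
  refine (h1.const_mul C').mono' (D.measurable_dom _ _).aestronglyMeasurable
    (Eventually.of_forall fun u => ?_)
  rw [Real.norm_eq_abs, abs_of_nonneg (D.dom_nonneg _ _ _)]
  exact hC' u

end Setup

/-! ### Raised integrals in logarithmic space -/

/-- A phase `p` of weight one with a vector field `c` of weight `-1` which differentiates `p` to
one on `A`; the same holds everywhere for the leading parts. -/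
structure Phase {n k : ℕ} (D : Setup n k) where
  p : (Fin n → ℝ) → ℝ
  pt : (Fin n → ℝ) → ℝ
  c : Fin n → (Fin n → ℝ) → ℝ
  ct : Fin n → (Fin n → ℝ) → ℝ
  A : Set (Fin n → ℝ)
  hp : D.Cl 1 p pt
  hc : ∀ i, D.Cl (-1) (c i) (ct i)
  heq : ∀ u ∈ A, ∑ i, c i u * pd i p u = 1
  heqt : ∀ u, ∑ i, ct i u * pd i pt u = 1

/-- A symbol of weight zero with constant leading part `a`, supported in a closed set `S` which
is bounded below and contained in `A`. -/
structure Phase.Test {n k : ℕ} {D : Setup n k} (X : Phase D) where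
  P0 : (Fin n → ℝ) → ℝ
  a : ℝ
  S : Set (Fin n → ℝ)
  b : ℝ
  hb : 0 ≤ b
  hS : IsClosed S
  hSA : S ⊆ X.A
  hSb : ∀ u ∈ S, ∀ i, -b ≤ u i
  hP0 : D.Cl 0 P0 (fun _ => a)
  hsupp : ∀ u, P0 u ≠ 0 → u ∈ S

lemma pd_supp {n : ℕ} {S : Set (Fin n → ℝ)} (hS : IsClosed S) {B : (Fin n → ℝ) → ℝ}
    (hB : ∀ u, B u ≠ 0 → u ∈ S) (i : Fin n) (u : Fin n → ℝ) (hu : pd i B u ≠ 0) : u ∈ S := by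
  by_contra h
  apply hu
  have : B =ᶠ[𝓝 u] fun _ => 0 := by
    filter_upwards [hS.isOpen_compl.mem_nhds h] with y hy
    by_contra h2; exact hy (hB y h2)
  rw [pd, this.fderiv_eq]; simp

lemma mul_supp {n : ℕ} {S : Set (Fin n → ℝ)} {B : (Fin n → ℝ) → ℝ}
    (hB : ∀ u, B u ≠ 0 → u ∈ S) (c : (Fin n → ℝ) → ℝ) (u : Fin n → ℝ) (hu : c u * B u ≠ 0) :
    u ∈ S := hB u (right_ne_zero_of_mul hu)

lemma Lr_supp {n : ℕ} {S : Set (Fin n → ℝ)} (hS : IsClosed S) {B : (Fin n → ℝ) → ℝ}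
    (hB : ∀ u, B u ≠ 0 → u ∈ S) (c : Fin n → (Fin n → ℝ) → ℝ) (u : Fin n → ℝ)
    (hu : Lr c B u ≠ 0) : u ∈ S := by
  by_contra h
  apply hu
  have h0 : B u = 0 := by by_contra h2; exact h (hB u h2)
  have h1 : ∀ i, pd i (fun u => c i u * B u) u = 0 := fun i => by
    by_contra h2; exact h (pd_supp hS (mul_supp hB (c i)) i u h2)
  simp [Lr, L0, L1, h0, h1]

namespace Phase
variable {n k : ℕ} {D : Setup n k} (X : Phase D)

lemma Jg_bound : ∃ C, 1 ≤ C ∧ ∀ (m : ℕ) (B Bt : (Fin n → ℝ) → ℝ) (S : Set (Fin n → ℝ)) (b : ℝ),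
    D.Base (-m) B Bt → (∀ u, B u ≠ 0 → u ∈ S) → (∀ u ∈ S, ∀ i, -b ≤ u i) →
    ∃ C', 0 ≤ C' ∧ ∀ s : ℂ, 0 < s.re → ∀ u,
      ‖Jg X.p s 1 B u‖ ≤ C ^ s.re * C' * D.dom b (s.re - m) u := by
  obtain ⟨C, hC⟩ := X.hp.base.1
  refine ⟨max C 1, le_max_right _ _, fun m B Bt S b hB hBS hS => ?_⟩
  obtain ⟨C', hC'⟩ := hB.1
  refine ⟨max C' 0, le_max_right _ _, fun s hs u => ?_⟩
  have hd := D.dom_nonneg b (s.re - m) u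
  by_cases h0 : B u = 0
  · have : Jg X.p s 1 B u = 0 := by simp [Jg, h0]
    rw [this, norm_zero]; positivity
  have hu := hS u (hBS u h0)
  have hM := D.M_pos u
  have h1 : ‖pcp (X.p u) s‖ ≤ (max C 1 * D.M u) ^ s.re := by
    refine norm_pcp_le hs ((hC u).trans ?_)
    rw [zpow_one]
    gcongr
    exact le_max_left _ _
  have h2 : ‖cexp (-(1 * (sm u : ℂ)))‖ = Real.exp (-sm u) := by
    rw [Complex.norm_exp]; simp
  have h3 : ‖(B u : ℂ)‖ ≤ max C' 0 * D.M u ^ (-(m : ℝ)) := by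
    rw [Complex.norm_real, Real.norm_eq_abs]
    refine (hC' u).trans ?_
    have : D.M u ^ (-(m:ℝ)) = D.M u ^ (-(m:ℤ)) := by rw [← Real.rpow_intCast]; simp
    rw [this]
    gcongr
    exact le_max_left _ _
  rw [Jg, norm_mul, norm_mul, h2]
  unfold Setup.dom
  rw [if_pos hu]
  calc _ ≤ (max C 1 * D.M u) ^ s.re * Real.exp (-sm u) * (max C' 0 * D.M u ^ (-(m : ℝ))) := by
        gcongr
    _ = _ := by
        rw [Real.mul_rpow (by positivity) hM.le, sub_eq_add_neg, Real.rpow_add hM]; ring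

lemma continuous_Jg {p Q : (Fin n → ℝ) → ℝ} (hp : Continuous p) (hQ : Continuous Q) {s : ℂ}
    (hs : 0 < s.re) (lam : ℂ) : Continuous (Jg p s lam Q) := by
  unfold Jg
  have h1 := (continuous_pcp hs).comp hp
  have h2 : Continuous fun u : Fin n → ℝ => (sm u : ℂ) :=
    Complex.continuous_ofReal.comp continuous_sm
  exact (h1.mul (Complex.continuous_exp.comp (continuous_const.mul h2).neg)).mul
    (Complex.continuous_ofReal.comp hQ)

lemma Jg_integrable {m : ℕ} {B Bt : (Fin n → ℝ) → ℝ} {S : Set (Fin n → ℝ)} {b : ℝ} (hb : 0 ≤ b)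
    (hB : D.Cl (-m) B Bt) (hBS : ∀ u, B u ≠ 0 → u ∈ S) (hS : ∀ u ∈ S, ∀ i, -b ≤ u i)
    {s : ℂ} (hs : 0 < s.re) (hsm : -1 / D.t < s.re - m) : Integrable (Jg X.p s 1 B) := by
  obtain ⟨C, hC, h⟩ := X.Jg_bound
  obtain ⟨C', hC', h'⟩ := h m B Bt S b hB.base hBS hS
  exact ((D.dom_integrable hb hsm).const_mul (C ^ s.re * C')).mono'
    (continuous_Jg X.hp.diff.continuous hB.diff.continuous hs 1).aestronglyMeasurable
    (Eventually.of_forall (h' s hs))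

namespace Test
variable {X} (Y : X.Test)

/-- The raised test symbols. -/
def P (m : ℕ) : (Fin n → ℝ) → ℝ := (Lr X.c)^[m] Y.P0
/-- The leading parts of the raised test symbols. -/
def Pt (m : ℕ) : (Fin n → ℝ) → ℝ := (Lr X.ct)^[m] (fun _ => Y.a)

lemma P_succ (m : ℕ) : Y.P (m + 1) = Lr X.c (Y.P m) := Function.iterate_succ_apply' _ _ _
lemma Pt_succ (m : ℕ) : Y.Pt (m + 1) = Lr X.ct (Y.Pt m) := Function.iterate_succ_apply' _ _ _

lemma P_cl (m : ℕ) : D.Cl (-m) (Y.P m) (Y.Pt m) := by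
  induction m with
  | zero => simpa [P, Pt] using Y.hP0
  | succ m ih =>
    rw [P_succ, Pt_succ]
    have := Newt.Cl.Lr X.hc ih
    rwa [show (-((m + 1 : ℕ) : ℤ)) = -1 + -(m : ℤ) by push_cast; ring]

lemma P_supp (m : ℕ) : ∀ u, Y.P m u ≠ 0 → u ∈ Y.S := by
  induction m with
  | zero => exact Y.hsupp
  | succ m ih => rw [P_succ]; exact Lr_supp Y.hS ih X.c

/-- The raised integrals `∫ p₊ ^ (s + m) e^{-∑ uᵢ} P_m du`. -/
def H (m : ℕ) (s : ℂ) : ℂ := ∫ u, Jg X.p (s + m) 1 (Y.P m) u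

lemma H_succ {m : ℕ} {s : ℂ} (hs : 0 < s.re + m) (hs0 : -1 / D.t < s.re) :
    (s + m + 1) * Y.H m s = Y.H (m + 1) s := by
  have hs' : 0 < (s + m).re := by simpa using hs
  have hs2 : 0 < (s + m + 1).re := by simp; linarith
  have hcQ : ∀ i, D.Cl (-((m + 1 : ℕ) : ℤ)) (fun u => X.c i u * Y.P m u) _ := fun i => by
    have := (X.hc i).mul (Y.P_cl m)
    rwa [show (-((m + 1 : ℕ) : ℤ)) = -1 + -(m : ℤ) by push_cast; ring]
  have hsup := fun i => mul_supp (Y.P_supp m) (X.c i)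
  have hL1 : Integrable (Jg X.p (s + m + 1) 1 (L1 X.c (Y.P m))) := by
    have h := Newt.Cl.L1 X.hc (Y.P_cl m)
    rw [show -1 + -(m : ℤ) = (-((m + 1 : ℕ) : ℤ)) by push_cast; ring] at h
    refine X.Jg_integrable (S := Y.S) Y.hb h (fun u hu => ?_) Y.hSb hs2 (by simpa using hs0)
    by_contra h2
    have : Y.P m u = 0 := by by_contra h3; exact h2 (Y.P_supp m u h3)
    simp [L1, this] at hu
  have hL0 : Integrable (Jg X.p (s + m + 1) 1 (L0 X.c (Y.P m))) := by
    have h := Newt.Cl.L0 X.hc (Y.P_cl m)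
    rw [show -1 + -(m : ℤ) = (-((m + 1 : ℕ) : ℤ)) by push_cast; ring] at h
    refine X.Jg_integrable (S := Y.S) Y.hb h (fun u hu => ?_) Y.hSb hs2 (by simpa using hs0)
    by_contra h2
    have h1 : ∀ i, pd i (fun u => X.c i u * Y.P m u) u = 0 := fun i => by
      by_contra h4; exact h2 (pd_supp Y.hS (hsup i) i u h4)
    simp [L0, h1] at hu
  have key := raise_core (k := n) (ContinuousLinearMap.id ℝ _) (fun i => Pi.single i 1)
    (p := X.p) (Q := Y.P m) (c := X.c) (s := s + m) (lam := 1) hs' X.hp.diff (Y.P_cl m).diff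
    (fun i => (X.hc i).diff) (fun v hv => X.heq v (Y.hSA (Y.P_supp m v hv))) (fun i v => rfl)
    (fun i => by
      have h := (X.hp.pd i).mul ((X.hc i).mul (Y.P_cl m))
      rw [show 1 + (-1 + -(m : ℤ)) = -m by ring] at h
      exact X.Jg_integrable Y.hb h (mul_supp (hsup i) _) Y.hSb hs' (by simpa using hs0))
    (fun i => X.Jg_integrable Y.hb (hcQ i) (hsup i) Y.hSb hs2 (by simpa using hs0))
    (fun i => X.Jg_integrable Y.hb ((hcQ i).pd i) (pd_supp Y.hS (hsup i) i) Y.hSb hs2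
      (by simpa using hs0))
  simp only [ContinuousLinearMap.id_apply, one_mul] at key
  rw [← integral_add hL0 hL1] at key
  rw [H, H, P_succ, key]
  congr 1
  funext u
  simp only [Jg, Lr, Nat.cast_add, Nat.cast_one, ← add_assoc, Complex.ofReal_add]
  ring

lemma H_zero {s : ℂ} (hs : 0 < s.re) (m : ℕ) :
    (∏ j ∈ Finset.range m, (s + j + 1)) * Y.H 0 s = Y.H m s := by
  have h0 : -1 / D.t < s.re :=
    (div_neg_of_neg_of_pos (by norm_num) D.t_pos).trans hs
  induction m with
  | zero => simp
  | succ m ih =>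
    rw [Finset.prod_range_succ, mul_right_comm, ih, mul_comm]
    exact Y.H_succ (by positivity) h0

lemma H_diff (m : ℕ) :
    DifferentiableOn ℂ (Y.H m) {s : ℂ | -1 / D.t < s.re ∧ 0 < s.re + m} := by
  have hop : IsOpen {s : ℂ | -1 / D.t < s.re ∧ 0 < s.re + m} :=
    (isOpen_lt continuous_const Complex.continuous_re).inter
      (isOpen_lt continuous_const (Complex.continuous_re.add continuous_const))
  obtain ⟨C, hC, h⟩ := X.Jg_bound
  obtain ⟨C', hC', h'⟩ := h m _ _ Y.S Y.b (Y.P_cl m).base (Y.P_supp m) Y.hSb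
  refine holo_integral hop (fun s hs => ?_) (fun u => ?_) (fun s hs => ?_)
  · exact (continuous_Jg X.hp.diff.continuous (Y.P_cl m).diff.continuous (by simpa using hs.2)
      1).aestronglyMeasurable
  · unfold Jg
    refine DifferentiableOn.mul (DifferentiableOn.mul ?_ (differentiableOn_const _))
      (differentiableOn_const _)
    exact (differentiableOn_pcp (X.p u)).comp (f := fun s : ℂ => s + m) (by fun_prop)
      (fun s hs => by simpa using hs.2)
  · set ε := (s.re - -1 / D.t) / 2 with hε
    have hε0 : 0 < ε := by have := hs.1; simp only [hε]; linarith
    obtain ⟨C2, hC2⟩ := D.dom_mono Y.b (σ₁ := s.re - ε) (σ₂ := s.re + ε) (by linarith)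
    have hI := D.dom_integrable Y.hb (σ := s.re - ε) (by simp only [hε]; linarith [hs.1])
    refine ⟨ε, hε0, fun u => C ^ (s.re + ε + m) * C' * (max (C2) 0 * D.dom Y.b (s.re - ε) u +
      D.dom Y.b (s.re - ε) u), (((hI.const_mul _).add hI).const_mul _),
      Eventually.of_forall fun u z hz hzS => ?_⟩
    have hz2 : |z.re - s.re| < ε := by
      have := Complex.abs_re_le_norm (z - s)
      rw [Metric.mem_ball, dist_eq_norm] at hz
      simpa using this.trans_lt hz
    have hz3 := abs_lt.1 hz2
    refine (h' (z + m) (by simpa using hzS.2) u).trans ?_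
    have e1 : (z + (m : ℂ)).re = z.re + m := by simp
    rw [e1, add_sub_cancel_right]
    have hdm : D.dom Y.b z.re u ≤ D.dom Y.b (s.re + ε) u + D.dom Y.b (s.re - ε) u := by
      unfold Setup.dom
      split_ifs
      · rw [← add_mul]
        gcongr
        rcases le_total 1 (D.M u) with h1 | h1
        · refine (Real.rpow_le_rpow_of_exponent_le h1 (by linarith : z.re ≤ s.re + ε)).trans ?_
          linarith [Real.rpow_nonneg (D.M_pos u).le (s.re - ε)]
        · refine (Real.rpow_le_rpow_of_exponent_ge (D.M_pos u) h1
            (by linarith : s.re - ε ≤ z.re)).trans ?_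
          linarith [Real.rpow_nonneg (D.M_pos u).le (s.re + ε)]
      · simp
    have hd1 := D.dom_nonneg Y.b (s.re - ε) u
    refine mul_le_mul ?_ (hdm.trans ?_) (D.dom_nonneg _ _ _) (by positivity)
    · gcongr
      linarith
    · gcongr
      exact (hC2 u).trans (mul_le_mul_of_nonneg_right (le_max_left _ _) hd1)

end Test
end Phase

/-! ### The limit of the raised integrals at the abscissa -/

lemma continuousAt_pcp₂ {x : ℝ} {s : ℂ} (hs : 0 < s.re) :
    ContinuousAt (fun z : ℝ × ℂ => pcp z.1 z.2) (x, s) := by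
  have h1 : ContinuousAt (fun z : ℝ × ℂ => (((max z.1 0 : ℝ) : ℂ), z.2)) (x, s) := by fun_prop
  have h2 : ContinuousAt (fun z : ℂ × ℂ => z.1 ^ z.2) (((max x 0 : ℝ) : ℂ), s) := by
    rcases le_or_gt x 0 with hx | hx
    · rw [max_eq_right hx]; exact continuousAt_cpow_zero_of_re_pos hs
    · rw [max_eq_left hx.le]
      exact continuousAt_cpow (Or.inl (by simpa using hx))
  exact h2.comp_of_eq h1 rfl

namespace Setup
variable {n k : ℕ} (D : Setup n k)

/-- The normal cone of `τ₀`. -/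
def K : Set (Fin n → ℝ) := {w | (∀ i, 0 ≤ w i) ∧ ∀ v ∈ D.V, D.t * sm w ≤ dn v w}

lemma Ki_sub_K : D.Ki ⊆ D.K := by
  rintro w ⟨hW, h0, h1⟩
  refine ⟨fun i => (h0 i).le, fun v hv => ?_⟩
  by_cases hT : v ∈ D.T
  · exact (D.W_T w hW v hT).ge
  · exact (h1 v hv hT).le

/-- The boundary of the normal cone is negligible in its span. -/
lemma ae_Ki (ν : Measure D.W) [ν.IsAddHaarMeasure] :
    ∀ᵐ w : D.W ∂ν, (w : Fin n → ℝ) ∈ D.K → (w : Fin n → ℝ) ∈ D.Ki := by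
  have key : ∀ l : (Fin n → ℝ) →ₗ[ℝ] ℝ, l D.w0 ≠ 0 → ∀ᵐ w : D.W ∂ν, l w ≠ 0 := fun l hl => by
    have h1 : (LinearMap.ker (l.comp D.W.subtype)) ≠ ⊤ := by
      intro h
      apply hl
      have : (⟨D.w0, D.w0_mem⟩ : D.W) ∈ LinearMap.ker (l.comp D.W.subtype) := by rw [h]; trivial
      simpa using this
    have h2 := Measure.addHaar_submodule ν _ h1
    rw [ae_iff]
    convert h2 using 2
    ext w; simp
  have h1 : ∀ᵐ w : D.W ∂ν, ∀ i, (w : Fin n → ℝ) i ≠ 0 :=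
    ae_all_iff.2 fun i => key (LinearMap.proj i) (D.w0_pos i).ne'
  have h2 : ∀ᵐ w : D.W ∂ν, ∀ v ∈ D.V, v ∉ D.T → dn v (w : Fin n → ℝ) - D.t * sm (w : Fin n → ℝ) ≠ 0 := by
    refine (ae_ball_iff D.V.countable_toSet).2 fun v hv => ?_
    by_cases hT : v ∈ D.T
    · exact Eventually.of_forall fun _ h => absurd hT h
    · filter_upwards [key
        ({ toFun := fun w => dn v w - D.t * sm w
           map_add' := fun x y => by rw [dn_add, sm_add]; ring
           map_smul' := fun c x => by simp only [dn_smul, sm_smul, smul_eq_mul, RingHom.id_apply]; ring } :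
          (Fin n → ℝ) →ₗ[ℝ] ℝ) (sub_pos.2 (D.w0_gap v hv hT)).ne'] with w hw _
      exact hw
  filter_upwards [h1, h2] with w hw1 hw2 hK
  exact ⟨w.2, fun i => (hK.1 i).lt_of_ne (hw1 i).symm, fun v hv hT =>
    (hK.2 v hv).lt_of_ne fun h => hw2 v hv hT (by rw [h, sub_self])⟩

/-- Rescaling along `W`. -/
lemma integral_rescale (ν : Measure D.W) [ν.IsAddHaarMeasure] (g : D.W × (Fin k → ℝ) → ℂ) {ε : ℝ}
    (hε : 0 < ε) :
    ∫ x, g (ε⁻¹ • x.1, x.2) ∂(ν.prod volume) =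
      (ε : ℂ) ^ Module.finrank ℝ D.W * ∫ x, g x ∂(ν.prod volume) := by
  let e : D.W × (Fin k → ℝ) ≃ₜ D.W × (Fin k → ℝ) :=
    (Homeomorph.smulOfNeZero ε⁻¹ (inv_pos.2 hε).ne').prodCongr (Homeomorph.refl _)
  have h1 := Measure.map_prod_map (f := fun x : D.W => ε⁻¹ • x) (g := (id : (Fin k → ℝ) → _)) ν
    (volume : Measure (Fin k → ℝ)) (measurable_const_smul _) measurable_id
  rw [Measure.map_addHaar_smul ν (inv_pos.2 hε).ne', Measure.map_id, Measure.prod_smul_left] at h1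
  have h2 := e.measurableEmbedding.integral_map (μ := ν.prod (volume : Measure (Fin k → ℝ))) g
  have h3 : (e : D.W × (Fin k → ℝ) → _) = Prod.map (fun x : D.W => ε⁻¹ • x) id := rfl
  rw [h3, ← h1, integral_smul_measure] at h2
  have h4 : (fun x : D.W × (Fin k → ℝ) => g (ε⁻¹ • x.1, x.2)) =
    fun x => g (Prod.map (fun x : D.W => ε⁻¹ • x) id x) := rfl
  rw [h4, ← h2, ENNReal.toReal_ofReal (abs_nonneg _), inv_pow, inv_inv, abs_of_pos (by positivity)]
  simp

end Setup

namespace Phase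
variable {n k : ℕ} {D : Setup n k} {X : Phase D}
namespace Test
variable (Y : X.Test)

/-- The pointwise limit inside the cone. -/
lemma lim_in {m : ℕ} (hm : 0 < -1 / D.t + m) {w : Fin n → ℝ} (hw : w ∈ D.Ki) (v : Fin n → ℝ) :
    Tendsto (fun ε : ℝ => Jg X.p (((-1 / D.t + ε : ℝ) : ℂ) + m) 1 (Y.P m) (ε⁻¹ • w + v)) (𝓝[>] 0)
      (𝓝 (Real.exp (-D.ell w) * Jg X.pt (((-1 / D.t : ℝ) : ℂ) + m) 1 (Y.Pt m) v)) := by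
  have ht := D.t_pos
  have hp := (X.hp.base.2.1 w hw v).comp tendsto_inv_nhdsGT_zero
  have hP := ((Y.P_cl m).base.2.1 w hw v).comp tendsto_inv_nhdsGT_zero
  have hs : Tendsto (fun ε : ℝ => (((-1 / D.t + ε : ℝ) : ℂ) + m)) (𝓝[>] 0)
      (𝓝 (((-1 / D.t : ℝ) : ℂ) + m)) := by
    have : Continuous (fun ε : ℝ => (((-1 / D.t + ε : ℝ) : ℂ) + m)) := by fun_prop
    have h := this.tendsto 0
    rw [add_zero] at h
    exact h.mono_left nhdsWithin_le_nhds
  have h1 := (continuousAt_pcp₂ (x := X.pt v) (s := ((-1 / D.t : ℝ) : ℂ) + m)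
    (by simpa [-ofReal_div] using hm)).tendsto.comp (hp.prodMk_nhds hs)
  have h2 := (h1.mul_const (cexp (-(1 * (sm v : ℂ))))).mul
    ((Complex.continuous_ofReal.tendsto _).comp hP)
  have h3 := h2.const_mul (Real.exp (-D.ell w) : ℂ)
  refine h3.congr' ?_
  filter_upwards [self_mem_nhdsWithin] with ε hε
  have hε' : (0:ℝ) < ε := hε
  simp only [Function.comp, Jg]
  rw [pcp_mul (Real.exp_pos _)]
  have e1 : ((Real.exp (((1 : ℤ) : ℝ) * (ε⁻¹ * D.ell w)) : ℝ) : ℂ) ^ (((-1 / D.t + ε : ℝ) : ℂ) + m) =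
      cexp ((ε⁻¹ * D.ell w : ℝ) * (((-1 / D.t + ε : ℝ) : ℂ) + m)) := by
    rw [ofReal_exp, cpow_def_of_ne_zero (exp_ne_zero _), ← ofReal_exp, ← ofReal_log (Real.exp_pos _).le,
      Real.log_exp]
    simp
  rw [e1, ofReal_exp, ofReal_mul (Real.exp _), ofReal_exp]
  have e2 : cexp (((-D.ell w : ℝ) : ℂ)) * cexp ((ε⁻¹ * D.ell w : ℝ) * (((-1 / D.t + ε : ℝ) : ℂ) + m)) *
      cexp (-(1 * (sm v : ℂ))) * cexp ((((((-(m:ℤ) : ℤ)) : ℝ) * (ε⁻¹ * D.ell w) : ℝ) : ℂ)) =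
      cexp (-(1 * (sm (ε⁻¹ • w + v) : ℂ))) := by
    rw [← Complex.exp_add, ← Complex.exp_add, ← Complex.exp_add]
    congr 1
    rw [sm_add, sm_smul, Newt.ell]
    have h5 : (ε : ℂ) ≠ 0 := by exact_mod_cast hε'.ne'
    have h6 : (D.t : ℂ) ≠ 0 := by exact_mod_cast ht.ne'
    push_cast
    field_simp
    ring
  rw [← e2]
  ring

/-- Outside the closed cone the integrand tends to zero. -/
lemma lim_out {m : ℕ} (hm : 0 < -1 / D.t + m) {w : Fin n → ℝ} (hw : w ∉ D.K) (v : Fin n → ℝ) :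
    Tendsto (fun ε : ℝ => Jg X.p (((-1 / D.t + ε : ℝ) : ℂ) + m) 1 (Y.P m) (ε⁻¹ • w + v)) (𝓝[>] 0)
      (𝓝 0) := by
  have ht := D.t_pos
  have hinv : Tendsto (fun ε : ℝ => ε⁻¹) (𝓝[>] 0) atTop := tendsto_inv_nhdsGT_zero
  by_cases h0 : ∀ i, 0 ≤ w i
  swap
  · push Not at h0
    obtain ⟨i, hi⟩ := h0
    have h1 : Tendsto (fun ε : ℝ => ε⁻¹ * w i + v i) (𝓝[>] 0) atBot :=
      tendsto_atBot_add_const_right _ _ (hinv.atTop_mul_const_of_neg hi)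
    refine tendsto_const_nhds.congr' ?_
    filter_upwards [h1.eventually_lt_atBot (-Y.b)] with ε hε
    have : Y.P m (ε⁻¹ • w + v) = 0 := by
      by_contra h
      have := Y.hSb _ (Y.P_supp m _ h) i
      simp at this; linarith
    simp [Jg, this]
  have h1 : ∃ α ∈ D.V, dn α w < D.t * sm w := by
    by_contra h; push Not at h; exact hw ⟨h0, h⟩
  obtain ⟨α, hα, hlt⟩ := h1
  obtain ⟨C, hC, h⟩ := X.Jg_bound
  obtain ⟨C', hC', h'⟩ := h m _ _ Y.S Y.b (Y.P_cl m).base (Y.P_supp m) Y.hSb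
  have hlim : Tendsto (fun ε : ℝ => C ^ (-1 / D.t + 1 + m) * C' *
      Real.exp (ε⁻¹ * ((dn α w - D.t * sm w) / D.t) + (|dn α w| + (1 / D.t) * |dn α v| + |sm v|)))
      (𝓝[>] 0) (𝓝 (C ^ (-1 / D.t + 1 + m) * C' * 0)) := by
    refine Tendsto.const_mul _ (Real.tendsto_exp_atBot.comp ?_)
    exact tendsto_atBot_add_const_right _ _ (hinv.atTop_mul_const_of_neg
      (div_neg_of_neg_of_pos (by linarith) ht))
  rw [mul_zero] at hlim
  refine squeeze_zero_norm' ?_ hlim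
  filter_upwards [self_mem_nhdsWithin, Ioo_mem_nhdsGT (show (0:ℝ) < min 1 (1 / D.t) by positivity)]
    with ε hε hε1
  have hε0 : 0 < ε := hε
  have hε2 : ε < 1 := hε1.2.trans_le (min_le_left _ _)
  have hε3 : ε < 1 / D.t := hε1.2.trans_le (min_le_right _ _)
  have e1 : ((((-1 / D.t + ε : ℝ) : ℂ) + m)).re = -1 / D.t + ε + m := by simp [-ofReal_div, -ofReal_add]
  refine (h' _ (by rw [e1]; linarith) _).trans ?_
  rw [e1, add_sub_cancel_right]
  refine mul_le_mul ?_ ?_ (D.dom_nonneg _ _ _) (by positivity)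
  · gcongr
  unfold Setup.dom
  split_ifs
  swap
  · positivity
  set u := ε⁻¹ • w + v
  have hσ : -1 / D.t + ε ≤ 0 := by rw [neg_div]; linarith
  have h2 : D.M u ^ (-1 / D.t + ε) ≤ Real.exp (-dn α u) ^ (-1 / D.t + ε) :=
    Real.rpow_le_rpow_of_nonpos (Real.exp_pos _) (D.le_M hα u) hσ
  refine (mul_le_mul_of_nonneg_right h2 (Real.exp_pos _).le).trans ?_
  rw [← Real.exp_mul, ← Real.exp_add]
  refine Real.exp_le_exp.2 ?_
  simp only [u, dn_add, sm_add, dn_smul, sm_smul]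
  have h3 : ε * -dn α v ≤ (1 / D.t) * |dn α v| - (1 / D.t) * dn α v := by
    have : -dn α v ≤ |dn α v| := neg_le_abs _
    have h4 : dn α v ≤ |dn α v| := le_abs_self _
    have : ε * (-dn α v + |dn α v|) ≤ (1 / D.t) * (-dn α v + |dn α v|) :=
      mul_le_mul_of_nonneg_right hε3.le (by linarith)
    have : 0 ≤ ε * |dn α v| := by positivity
    linarith
  have h5 : -sm v ≤ |sm v| := neg_le_abs _
  have h6 : -dn α w ≤ |dn α w| := neg_le_abs _
  have h7 : -(ε⁻¹ * dn α w + dn α v) * (-1 / D.t + ε) + -(ε⁻¹ * sm w + sm v) =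
    ε⁻¹ * ((dn α w - D.t * sm w) / D.t) + (-dn α w + (1 / D.t) * dn α v + ε * -dn α v - sm v) := by
    field_simp; ring
  rw [h7]
  linarith

/-- The limit of the rescaled raised integrals at the abscissa `-1/t`. -/
lemma H_limit (ν : Measure D.W) [ν.IsAddHaarMeasure]
    (hmp : MeasurePreserving D.L (ν.prod (volume : Measure (Fin k → ℝ))) volume) {m : ℕ}
    (hm : 0 < -1 / D.t + m) :
    Tendsto (fun ε : ℝ => (ε : ℂ) ^ Module.finrank ℝ D.W * Y.H m ((-1 / D.t + ε : ℝ) : ℂ))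
      (𝓝[>] 0) (𝓝 (((∫ w : D.W in {w : D.W | (w : Fin n → ℝ) ∈ D.K}, Real.exp (-D.ell w) ∂ν : ℝ) : ℂ) *
        ∫ v, Jg X.pt (((-1 / D.t : ℝ) : ℂ) + m) 1 (Y.Pt m) (D.ι v))) := by
  have ht := D.t_pos
  have hKm : MeasurableSet {w : D.W | (w : Fin n → ℝ) ∈ D.K} := by
    refine IsClosed.measurableSet ?_
    have : {w : D.W | (w : Fin n → ℝ) ∈ D.K} = (⋂ i, {w : D.W | 0 ≤ (w : Fin n → ℝ) i}) ∩
      ⋂ v ∈ D.V, {w : D.W | D.t * sm (w : Fin n → ℝ) ≤ dn v (w : Fin n → ℝ)} := by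
      ext w; simp [Setup.K]
    rw [this]
    refine (isClosed_iInter fun i => isClosed_le continuous_const
      ((continuous_apply (A := fun _ : Fin n => ℝ) i).comp continuous_subtype_val)).inter
      (isClosed_biInter fun v _ => isClosed_le ?_ ?_)
    · exact continuous_const.mul (continuous_sm.comp continuous_subtype_val)
    · exact (continuous_dn v).comp continuous_subtype_val
  obtain ⟨C, hC, h⟩ := X.Jg_bound
  obtain ⟨C', hC', h'⟩ := h m _ _ Y.S Y.b (Y.P_cl m).base (Y.P_supp m) Y.hSb
  obtain ⟨ε₀, hε₀, κ, hκ, C'', hC'', hdom⟩ := D.dom_bound Y.hb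
  have hrw : (((∫ w : D.W in {w : D.W | (w : Fin n → ℝ) ∈ D.K}, Real.exp (-D.ell w) ∂ν : ℝ) : ℂ) *
        ∫ v, Jg X.pt (((-1 / D.t : ℝ) : ℂ) + m) 1 (Y.Pt m) (D.ι v)) =
      ∫ x : D.W × (Fin k → ℝ), (({w : D.W | (w : Fin n → ℝ) ∈ D.K}.indicator
        (fun w => (Real.exp (-D.ell w) : ℂ))) x.1) *
          Jg X.pt (((-1 / D.t : ℝ) : ℂ) + m) 1 (Y.Pt m) (D.ι x.2) ∂(ν.prod volume) := by
    have h1 := integral_prod_mul (μ := ν) (ν := (volume : Measure (Fin k → ℝ)))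
      ({w : D.W | (w : Fin n → ℝ) ∈ D.K}.indicator fun w => (Real.exp (-D.ell w) : ℂ))
      (fun v => Jg X.pt (((-1 / D.t : ℝ) : ℂ) + m) 1 (Y.Pt m) (D.ι v))
    rw [h1, integral_indicator hKm, integral_complex_ofReal]
  rw [hrw]
  have hcont : ∀ ε : ℝ, 0 < ε → Continuous
      (Jg X.p (((-1 / D.t + ε : ℝ) : ℂ) + m) 1 (Y.P m)) := fun ε hε =>
    continuous_Jg X.hp.diff.continuous (Y.P_cl m).diff.continuous
      (by simp only [add_re, ofReal_re, natCast_re]; linarith) 1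
  have hE : Integrable (fun x : D.W × (Fin k → ℝ) => C ^ (-1 / D.t + 1 + m) * C' * C'' *
      (Real.exp (-(κ * ‖x.1‖)) * Real.exp (-(κ * ‖x.2‖)))) (ν.prod volume) :=
    ((Setup.integrable_exp_norm ν hκ).mul_prod (Setup.integrable_exp_norm volume hκ)).const_mul _
  have main := tendsto_integral_filter_of_dominated_convergence (μ := ν.prod volume)
    (l := 𝓝[>] (0:ℝ)) (F := fun (ε : ℝ) (x : D.W × (Fin k → ℝ)) =>
      Jg X.p (((-1 / D.t + ε : ℝ) : ℂ) + m) 1 (Y.P m) (D.L (ε⁻¹ • x.1, x.2)))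
    (f := fun x => (({w : D.W | (w : Fin n → ℝ) ∈ D.K}.indicator
        (fun w => (Real.exp (-D.ell w) : ℂ))) x.1) *
          Jg X.pt (((-1 / D.t : ℝ) : ℂ) + m) 1 (Y.Pt m) (D.ι x.2)) _ ?_ ?_ hE ?_
  · refine main.congr' ?_
    filter_upwards [self_mem_nhdsWithin] with ε hε
    rw [D.integral_rescale ν (fun x => Jg X.p (((-1 / D.t + ε : ℝ) : ℂ) + m) 1 (Y.P m) (D.L x)) hε]
    congr 1
    exact hmp.integral_comp D.L.toHomeomorph.measurableEmbedding _
  · filter_upwards [self_mem_nhdsWithin] with ε hε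
    exact ((hcont ε hε).comp (D.L.continuous.comp (by fun_prop))).aestronglyMeasurable
  · filter_upwards [self_mem_nhdsWithin, Ioo_mem_nhdsGT (show (0:ℝ) < min 1 ε₀ by positivity)]
      with ε hε hε1
    have hε0 : 0 < ε := hε
    have hε2 : ε ≤ 1 := (hε1.2.trans_le (min_le_left _ _)).le
    refine Eventually.of_forall fun x => ?_
    have e1 : ((((-1 / D.t + ε : ℝ) : ℂ) + m)).re = -1 / D.t + ε + m := by
      simp [-ofReal_div, -ofReal_add]
    refine (h' _ (by rw [e1]; linarith) _).trans ?_
    rw [e1, add_sub_cancel_right, mul_assoc _ C'']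
    have h2 := hdom ε hε0 (hε1.2.trans_le (min_le_right _ _)).le (ε⁻¹ • x.1, x.2)
    refine mul_le_mul ?_ (h2.trans (le_of_eq ?_)) (D.dom_nonneg _ _ _) (by positivity)
    · gcongr
    · rw [← Real.exp_add, norm_smul, norm_inv, Real.norm_eq_abs, abs_of_pos hε0]
      congr 2
      field_simp
      ring
  · have h1 : ∀ᵐ x : D.W × (Fin k → ℝ) ∂(ν.prod volume),
        (x.1 : Fin n → ℝ) ∈ D.K → (x.1 : Fin n → ℝ) ∈ D.Ki :=
      Measure.quasiMeasurePreserving_fst.ae (D.ae_Ki ν)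
    filter_upwards [h1] with x hx
    by_cases hK : (x.1 : Fin n → ℝ) ∈ D.K
    · rw [Set.indicator_of_mem (by exact hK)]
      exact Y.lim_in hm (hx hK) (D.ι x.2)
    · rw [Set.indicator_of_notMem (by exact hK), zero_mul]
      exact Y.lim_out hm hK (D.ι x.2)

end Test
end Phase

/-! ### The integrals attached to the face `τ₀` -/

/-- `Q` is the leading part of a symbol of weight `q`. -/
def Newt.ClT {n : ℕ} (D : Newt n) (q : ℤ) (Q : (Fin n → ℝ) → ℝ) : Prop := ∃ B, D.Cl q B Q

namespace Newt.ClT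
variable {n : ℕ} {D : Newt n} {q q' : ℤ} {Q Q' : (Fin n → ℝ) → ℝ}

lemma diff (h : D.ClT q Q) : Differentiable ℝ Q := h.choose_spec.diff_t
lemma bound (h : D.ClT q Q) : ∃ C, ∀ v, |Q v| ≤ C * D.Mt v ^ q := h.choose_spec.base.bound_t
lemma hom (h : D.ClT q Q) : ∀ w ∈ D.W, ∀ v, Q (v + w) = Real.exp (-(q * D.ell w)) * Q v :=
  h.choose_spec.base.2.2
lemma pd (h : D.ClT q Q) (i : Fin n) : D.ClT q (pd i Q) := ⟨_, h.choose_spec.pd i⟩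
lemma mul (h : D.ClT q Q) (h' : D.ClT q' Q') : D.ClT (q + q') (fun u => Q u * Q' u) :=
  ⟨_, h.choose_spec.mul h'.choose_spec⟩
lemma add (h : D.ClT q Q) (h' : D.ClT q Q') : D.ClT q (fun u => Q u + Q' u) :=
  ⟨_, h.choose_spec.add h'.choose_spec⟩
lemma sum {ι : Type*} (s : Finset ι) {F : ι → (Fin n → ℝ) → ℝ}
    (h : ∀ j, D.ClT q (F j)) : D.ClT q (fun u => ∑ j ∈ s, F j u) := by
  choose B hB using h
  exact ⟨_, Newt.Cl.sum s q (Newt.Cl.zero q) fun j _ => hB j⟩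
lemma L0 {c : Fin n → (Fin n → ℝ) → ℝ} (hc : ∀ i, D.ClT (-1) (c i)) (h : D.ClT q Q) :
    D.ClT (-1 + q) (L0 c Q) := by
  choose B hB using hc
  exact ⟨_, Newt.Cl.L0 hB h.choose_spec⟩
lemma L1 {c : Fin n → (Fin n → ℝ) → ℝ} (hc : ∀ i, D.ClT (-1) (c i)) (h : D.ClT q Q) :
    D.ClT (-1 + q) (L1 c Q) := by
  choose B hB using hc
  exact ⟨_, Newt.Cl.L1 hB h.choose_spec⟩

end Newt.ClT

namespace Phase
variable {n k : ℕ} {D : Setup n k} (X : Phase D)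

/-- The abscissa `s₀ = -1/t₀`. -/
def z0 (_ : Phase D) : ℂ := ((-1 / D.t : ℝ) : ℂ)

lemma z0_re (lam : ℂ) (m : ℕ) : (X.z0 * lam + m).re = -1 / D.t * lam.re + m := by
  simp only [z0, add_re, re_ofReal_mul, natCast_re]

lemma pt_cl : D.ClT 1 X.pt := ⟨_, X.hp⟩
lemma ct_cl (i : Fin n) : D.ClT (-1) (X.ct i) := ⟨_, X.hc i⟩

/-- The integrand is invariant along `W`. -/
lemma Jt_inv {m : ℕ} {Q : (Fin n → ℝ) → ℝ} (hQ : D.ClT (-m) Q) (lam : ℂ) {w : Fin n → ℝ}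
    (hw : w ∈ D.W) (u : Fin n → ℝ) :
    Jg X.pt (X.z0 * lam + m) lam Q (u + w) = Jg X.pt (X.z0 * lam + m) lam Q u := by
  simp only [Jg]
  rw [X.pt_cl.hom w hw, hQ.hom w hw, pcp_mul (Real.exp_pos _), ofReal_exp,
    cpow_def_of_ne_zero (exp_ne_zero _), ← ofReal_exp, ← ofReal_log (Real.exp_pos _).le,
    Real.log_exp, ofReal_mul (Real.exp _), ofReal_exp]
  have e2 : cexp (((-(((1 : ℤ) : ℝ) * D.ell w) : ℝ) : ℂ) * (X.z0 * lam + m)) *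
      cexp (-(lam * (sm (u + w) : ℂ))) * cexp (((-(((-(m : ℤ) : ℤ) : ℝ) * D.ell w) : ℝ) : ℂ)) =
      cexp (-(lam * (sm u : ℂ))) := by
    rw [← Complex.exp_add, ← Complex.exp_add]
    congr 1
    rw [sm_add, Newt.ell, z0]
    have h6 : (D.t : ℂ) ≠ 0 := by exact_mod_cast D.t_pos.ne'
    push_cast
    field_simp
    ring
  rw [← e2]; ring

lemma Jt_bound : ∃ C, 1 ≤ C ∧ ∀ (m : ℕ) (Q : (Fin n → ℝ) → ℝ), D.ClT (-m) Q →
    ∃ C', 0 ≤ C' ∧ ∀ lam : ℂ, 0 < lam.re → 0 < (X.z0 * lam + m).re → ∀ v,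
      ‖Jg X.pt (X.z0 * lam + m) lam Q (D.ι v)‖ ≤
        C ^ (X.z0 * lam + m).re * C' * Real.exp (-(lam.re / D.t * D.cc * ‖v‖)) := by
  obtain ⟨C, hC⟩ := X.pt_cl.bound
  refine ⟨max C 1, le_max_right _ _, fun m Q hQ => ?_⟩
  obtain ⟨C', hC'⟩ := hQ.bound
  refine ⟨max C' 0, le_max_right _ _, fun lam hl hs v => ?_⟩
  have hM := D.Mt_pos (D.ι v)
  have ht := D.t_pos
  have h1 : ‖pcp (X.pt (D.ι v)) (X.z0 * lam + m)‖ ≤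
      (max C 1 * D.Mt (D.ι v)) ^ (X.z0 * lam + m).re := by
    refine norm_pcp_le hs ((hC _).trans ?_)
    rw [zpow_one]
    gcongr
    exact le_max_left _ _
  have h2 : ‖cexp (-(lam * (sm (D.ι v) : ℂ)))‖ = Real.exp (-(lam.re * sm (D.ι v))) := by
    rw [Complex.norm_exp]; simp
  have h3 : ‖(Q (D.ι v) : ℂ)‖ ≤ max C' 0 * D.Mt (D.ι v) ^ (-(m : ℝ)) := by
    rw [Complex.norm_real, Real.norm_eq_abs]
    refine (hC' _).trans ?_
    have : D.Mt (D.ι v) ^ (-(m:ℝ)) = D.Mt (D.ι v) ^ (-(m:ℤ)) := by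
      rw [← Real.rpow_intCast]; simp
    rw [this]
    gcongr
    exact le_max_left _ _
  obtain ⟨α, hα, hco⟩ := D.coer v
  have h4 : D.Mt (D.ι v) ^ (-1 / D.t * lam.re) ≤ Real.exp (-dn α (D.ι v)) ^ (-1 / D.t * lam.re) := by
    refine Real.rpow_le_rpow_of_nonpos (Real.exp_pos _) (D.le_Mt hα _) ?_
    rw [neg_div, neg_mul]
    have : 0 < 1 / D.t * lam.re := by positivity
    linarith
  rw [Jg, norm_mul, norm_mul, h2]
  calc _ ≤ (max C 1 * D.Mt (D.ι v)) ^ (X.z0 * lam + m).re * Real.exp (-(lam.re * sm (D.ι v))) *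
        (max C' 0 * D.Mt (D.ι v) ^ (-(m : ℝ))) := by gcongr
    _ = max C 1 ^ (X.z0 * lam + m).re * max C' 0 *
        (D.Mt (D.ι v) ^ (-1 / D.t * lam.re) * Real.exp (-(lam.re * sm (D.ι v)))) := by
        rw [Real.mul_rpow (by positivity) hM.le, show -1 / D.t * lam.re =
          (X.z0 * lam + m).re + -(m : ℝ) by rw [X.z0_re]; ring, Real.rpow_add hM]
        ring
    _ ≤ _ := by
        gcongr
        refine (mul_le_mul_of_nonneg_right h4 (Real.exp_pos _).le).trans ?_
        rw [← Real.exp_mul, ← Real.exp_add, Real.exp_le_exp]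
        have : 0 < lam.re / D.t := by positivity
        have h5 := mul_le_mul_of_nonneg_left hco this.le
        have h6 : lam.re / D.t * (D.t * sm (D.ι v) - dn α (D.ι v)) =
          lam.re * sm (D.ι v) - lam.re / D.t * dn α (D.ι v) := by field_simp
        have h7 : -dn α (D.ι v) * (-1 / D.t * lam.re) = lam.re / D.t * dn α (D.ι v) := by
          field_simp
        rw [h7]
        linarith

lemma Jt_continuous {m : ℕ} {Q : (Fin n → ℝ) → ℝ} (hQ : Differentiable ℝ Q) {lam : ℂ}
    (hs : 0 < (X.z0 * lam + m).re) :
    Continuous fun v => Jg X.pt (X.z0 * lam + m) lam Q (D.ι v) :=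
  (continuous_Jg X.pt_cl.diff.continuous hQ.continuous hs lam).comp D.ι.continuous

lemma Jt_integrable {m : ℕ} {Q : (Fin n → ℝ) → ℝ} (hQ : D.ClT (-m) Q) {lam : ℂ} (hl : 0 < lam.re)
    (hs : 0 < (X.z0 * lam + m).re) :
    Integrable fun v => Jg X.pt (X.z0 * lam + m) lam Q (D.ι v) := by
  obtain ⟨C, hC, h⟩ := X.Jt_bound
  obtain ⟨C', hC', h'⟩ := h m Q hQ
  have := D.t_pos
  have := D.cc_pos
  exact ((Setup.integrable_exp_norm volume (by positivity)).const_mul _).mono'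
    (X.Jt_continuous hQ.diff hs).aestronglyMeasurable (Eventually.of_forall (h' lam hl hs))

/-- The integral of `p₊ ^ (s₀ λ + m) e^{-λ ∑ uᵢ} Q` over the complement of `W`. -/
def J (lam : ℂ) (m : ℕ) (Q : (Fin n → ℝ) → ℝ) : ℂ :=
  ∫ v, Jg X.pt (X.z0 * lam + m) lam Q (D.ι v)

lemma J_diff {m : ℕ} {Q : (Fin n → ℝ) → ℝ} (hQ : D.ClT (-m) Q) :
    DifferentiableOn ℂ (fun lam => X.J lam m Q) {lam | 0 < lam.re ∧ 0 < (X.z0 * lam + m).re} := by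
  have hop : IsOpen {lam : ℂ | 0 < lam.re ∧ 0 < (X.z0 * lam + m).re} :=
    (isOpen_lt continuous_const Complex.continuous_re).inter
      (isOpen_lt continuous_const (Complex.continuous_re.comp (by fun_prop)))
  obtain ⟨C, hC, h⟩ := X.Jt_bound
  obtain ⟨C', hC', h'⟩ := h m Q hQ
  have ht := D.t_pos
  have hcc := D.cc_pos
  refine holo_integral hop (fun s hs => ?_) (fun v => ?_) (fun s hs => ?_)
  · exact (X.Jt_continuous hQ.diff hs.2).aestronglyMeasurable
  · unfold Jg
    refine DifferentiableOn.mul (DifferentiableOn.mul ?_ ?_) (differentiableOn_const _)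
    · exact (differentiableOn_pcp _).comp (f := fun s : ℂ => X.z0 * s + m) (by fun_prop)
        (fun s hs => hs.2)
    · fun_prop
  · have hl : 0 < s.re := hs.1
    refine ⟨s.re / 2, by positivity, fun v => C ^ (m : ℝ) * C' *
      Real.exp (-(s.re / 2 / D.t * D.cc * ‖v‖)),
      (Setup.integrable_exp_norm volume (by positivity)).const_mul _,
      Eventually.of_forall fun v z hz hzS => ?_⟩
    have hz2 : |z.re - s.re| < s.re / 2 := by
      have := Complex.abs_re_le_norm (z - s)
      rw [Metric.mem_ball, dist_eq_norm] at hz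
      simpa using this.trans_lt hz
    have hz3 := abs_lt.1 hz2
    refine (h' z hzS.1 hzS.2 v).trans ?_
    have h9 : (X.z0 * z + m).re ≤ m := by
      rw [X.z0_re, neg_div, neg_mul]
      have : 0 < z.re := hzS.1
      have : 0 < 1 / D.t * z.re := by positivity
      linarith
    have hd : 0 < D.cc / D.t := by positivity
    have e1 : Real.exp (-(z.re / D.t * D.cc * ‖v‖)) ≤ Real.exp (-(s.re / 2 / D.t * D.cc * ‖v‖)) := by
      rw [Real.exp_le_exp, neg_le_neg_iff]
      have : s.re / 2 * (D.cc / D.t * ‖v‖) ≤ z.re * (D.cc / D.t * ‖v‖) := by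
        gcongr; linarith
      calc _ = s.re / 2 * (D.cc / D.t * ‖v‖) := by ring
        _ ≤ _ := this
        _ = _ := by ring
    exact mul_le_mul (mul_le_mul_of_nonneg_right (Real.rpow_le_rpow_of_exponent_le hC h9) hC')
      e1 (Real.exp_pos _).le (by positivity)

lemma J_raise {m : ℕ} {Q : (Fin n → ℝ) → ℝ} (hQ : D.ClT (-m) Q) {lam : ℂ} (hl : 0 < lam.re)
    (hs : 0 < (X.z0 * lam + m).re) :
    (X.z0 * lam + m + 1) * X.J lam m Q =
      X.J lam (m + 1) (L0 X.ct Q) + lam * X.J lam (m + 1) (L1 X.ct Q) := by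
  have hs2 : 0 < (X.z0 * lam + (m + 1 : ℕ)).re := by
    rw [X.z0_re] at hs ⊢; push_cast; linarith
  have hcQ : ∀ i, D.ClT (-((m + 1 : ℕ) : ℤ)) (fun u => X.ct i u * Q u) := fun i => by
    have := (X.ct_cl i).mul hQ
    rwa [show (-((m + 1 : ℕ) : ℤ)) = -1 + -(m : ℤ) by push_cast; ring]
  have hcast : X.z0 * lam + m + 1 = X.z0 * lam + (m + 1 : ℕ) := by push_cast; ring
  have key := raise_core (k := k) D.ι (fun i => D.pr (Pi.single i 1))
    (p := X.pt) (Q := Q) (c := X.ct) (s := X.z0 * lam + m) (lam := lam) hs X.pt_cl.diff hQ.diff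
    (fun i => (X.ct_cl i).diff) (fun v _ => X.heqt _) (fun i v => by
      set Φ := Jg X.pt (X.z0 * lam + m + 1) lam (fun u => X.ct i u * Q u) with hΦ
      have hd : DifferentiableAt ℝ Φ (D.ι v) :=
        (Jg_fderiv lam hs X.pt_cl.diff (hcQ i).diff (D.ι v)).1
      have hinv : ∀ w ∈ D.W, fderiv ℝ Φ (D.ι v) w = 0 := fun w hw => by
        rw [← hd.lineDeriv_eq_fderiv, lineDeriv]
        have : (fun τ : ℝ => Φ (D.ι v + τ • w)) = fun _ => Φ (D.ι v) := by
          funext τ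
          rw [hΦ, hcast]
          exact X.Jt_inv (hcQ i) lam (D.W.smul_mem τ hw) _
        rw [this]; simp
      have h1 := hinv _ (D.sub_mem (Pi.single i 1))
      rw [map_sub, sub_eq_zero] at h1
      exact h1)
    (fun i => by
      have h := (X.pt_cl.pd i).mul (hcQ i)
      rw [show 1 + -((m + 1 : ℕ) : ℤ) = -m by push_cast; ring] at h
      exact X.Jt_integrable h hl hs)
    (fun i => by rw [hcast]; exact X.Jt_integrable (hcQ i) hl hs2)
    (fun i => by rw [hcast]; exact X.Jt_integrable ((hcQ i).pd i) hl hs2)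
  rw [hcast] at key ⊢
  exact key

/-- The `d`-fold raised form of `J`. -/
def Ev : ℕ → ℕ → ((Fin n → ℝ) → ℝ) → ℂ → ℂ
  | 0, m, Q, lam => X.J lam m Q
  | d + 1, m, Q, lam => Ev d (m + 1) (L0 X.ct Q) lam + lam * Ev d (m + 1) (L1 X.ct Q) lam

variable {X}

lemma ClT_L0 {m : ℕ} {Q : (Fin n → ℝ) → ℝ} (hQ : D.ClT (-m) Q) :
    D.ClT (-(m + 1 : ℕ)) (L0 X.ct Q) := by
  have := Newt.ClT.L0 X.ct_cl hQ
  rwa [show -1 + -(m : ℤ) = (-((m + 1 : ℕ) : ℤ)) by push_cast; ring] at this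

lemma ClT_L1 {m : ℕ} {Q : (Fin n → ℝ) → ℝ} (hQ : D.ClT (-m) Q) :
    D.ClT (-(m + 1 : ℕ)) (L1 X.ct Q) := by
  have := Newt.ClT.L1 X.ct_cl hQ
  rwa [show -1 + -(m : ℤ) = (-((m + 1 : ℕ) : ℤ)) by push_cast; ring] at this

lemma Ev_diff (d : ℕ) : ∀ {m : ℕ} {Q : (Fin n → ℝ) → ℝ}, D.ClT (-m) Q →
    DifferentiableOn ℂ (X.Ev d m Q) {lam | 0 < lam.re ∧ 0 < (X.z0 * lam + (m + d : ℕ)).re} := by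
  induction d with
  | zero => intro m Q hQ; exact X.J_diff hQ
  | succ d ih =>
    intro m Q hQ
    have e : m + (d + 1) = m + 1 + d := by ring
    rw [e]
    exact (ih (ClT_L0 hQ)).add (differentiableOn_id.mul (ih (ClT_L1 hQ)))

lemma Ev_succ (d : ℕ) : ∀ {m : ℕ} {Q : (Fin n → ℝ) → ℝ}, D.ClT (-m) Q → ∀ {lam : ℂ}, 0 < lam.re →
    0 < (X.z0 * lam + (m + d : ℕ)).re →
    X.Ev (d + 1) m Q lam = (X.z0 * lam + (m + d : ℕ) + 1) * X.Ev d m Q lam := by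
  induction d with
  | zero => intro m Q hQ lam hl hs; exact (X.J_raise hQ hl hs).symm
  | succ d ih =>
    intro m Q hQ lam hl hs
    have e : m + (d + 1) = m + 1 + d := by ring
    rw [e] at hs ⊢
    rw [Ev, ih (ClT_L0 hQ) hl hs, ih (ClT_L1 hQ) hl hs, Ev]
    ring

lemma L0_add {c : Fin n → (Fin n → ℝ) → ℝ} {Q Q' : (Fin n → ℝ) → ℝ}
    (hc : ∀ i, Differentiable ℝ (c i)) (hQ : Differentiable ℝ Q) (hQ' : Differentiable ℝ Q') :
    L0 c (fun u => Q u + Q' u) = fun u => L0 c Q u + L0 c Q' u := by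
  funext u
  simp only [L0, mul_add]
  rw [← neg_add, ← Finset.sum_add_distrib]
  congr 1
  refine Finset.sum_congr rfl fun i _ => ?_
  rw [pd_add (B := fun u => c i u * Q u) (B' := fun u => c i u * Q' u) ((hc i).mul hQ) ((hc i).mul hQ')]

lemma L1_add {c : Fin n → (Fin n → ℝ) → ℝ} {Q Q' : (Fin n → ℝ) → ℝ} :
    L1 c (fun u => Q u + Q' u) = fun u => L1 c Q u + L1 c Q' u := by
  funext u
  simp only [L1, mul_add, Finset.sum_add_distrib]

lemma Ev_add (d : ℕ) : ∀ {m : ℕ} {Q Q' : (Fin n → ℝ) → ℝ}, D.ClT (-m) Q → D.ClT (-m) Q' →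
    ∀ {lam : ℂ}, 0 < lam.re → 0 < (X.z0 * lam + (m + d : ℕ)).re →
    X.Ev d m (fun u => Q u + Q' u) lam = X.Ev d m Q lam + X.Ev d m Q' lam := by
  induction d with
  | zero =>
    intro m Q Q' hQ hQ' lam hl hs
    simp only [Ev, J]
    rw [← integral_add (X.Jt_integrable hQ hl hs) (X.Jt_integrable hQ' hl hs)]
    congr 1; funext v; simp only [Jg, ofReal_add]; ring
  | succ d ih =>
    intro m Q Q' hQ hQ' lam hl hs
    have e : m + (d + 1) = m + 1 + d := by ring
    rw [e] at hs
    rw [Ev, Ev, Ev, L0_add (fun i => (X.ct_cl i).diff) hQ.diff hQ'.diff, L1_add,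
      ih (ClT_L0 hQ) (ClT_L0 hQ') hl hs, ih (ClT_L1 hQ) (ClT_L1 hQ') hl hs]
    ring

lemma Ev_one (d : ℕ) : ∀ {m : ℕ} {Q : (Fin n → ℝ) → ℝ}, D.ClT (-m) Q →
    0 < (X.z0 * 1 + (m + d : ℕ)).re →
    X.Ev d m Q 1 = X.J 1 (m + d) ((Lr X.ct)^[d] Q) := by
  induction d with
  | zero => intro m Q hQ _; rfl
  | succ d ih =>
    intro m Q hQ hs
    have e : m + (d + 1) = m + 1 + d := by ring
    rw [e] at hs ⊢
    rw [Ev, one_mul, ← Ev_add d (ClT_L0 hQ) (ClT_L1 hQ) (by simp) hs,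
      ih ((ClT_L0 hQ).add (ClT_L1 hQ)) hs]
    rfl

lemma one_cl : D.ClT (-(0 : ℕ)) (fun _ => 1) := ⟨_, by simpa using Newt.Cl.const 1⟩

variable (X)

/-- The denominators `∏_{j=1}^d (s₀ λ + j)`. -/
def den (d : ℕ) (lam : ℂ) : ℂ := ∏ j ∈ Finset.range d, (X.z0 * lam + j + 1)

/-- The analytic continuation of the integral `K(λ)` attached to `τ₀`. The number of raising
steps is large enough to make the integral converge. -/
def Fc (lam : ℂ) : ℂ :=
  X.Ev (⌊lam.re / D.t⌋₊ + 1) 0 (fun _ => 1) lam / X.den (⌊lam.re / D.t⌋₊ + 1) lam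

variable {X}

lemma Ev_den {d e : ℕ} (hde : d ≤ e) {lam : ℂ} (hl : 0 < lam.re) (hs : 0 < (X.z0 * lam + d).re)
    (h0 : ∀ j : ℕ, X.z0 * lam + j + 1 ≠ 0) :
    X.Ev e 0 (fun _ => 1) lam / X.den e lam = X.Ev d 0 (fun _ => 1) lam / X.den d lam := by
  induction e, hde using Nat.le_induction with
  | base => rfl
  | succ e hde ih =>
    have hs2 : 0 < (X.z0 * lam + (0 + e : ℕ)).re := by
      rw [X.z0_re] at hs ⊢
      have : (d : ℝ) ≤ e := by exact_mod_cast hde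
      push_cast; linarith
    rw [← ih, Ev_succ e one_cl hl hs2, den, Finset.prod_range_succ, ← den, mul_comm (X.den e lam)]
    simp only [zero_add]
    exact mul_div_mul_left _ _ (h0 e)

lemma floor_re (lam : ℂ) : 0 < (X.z0 * lam + (⌊lam.re / D.t⌋₊ + 1 : ℕ)).re := by
  rw [X.z0_re, neg_div, neg_mul, one_div_mul_eq_div]
  push_cast
  linarith [Nat.lt_floor_add_one (lam.re / D.t)]

lemma Fc_eq {d : ℕ} {lam : ℂ} (hl : 0 < lam.re) (hs : 0 < (X.z0 * lam + d).re)
    (h0 : ∀ j : ℕ, X.z0 * lam + j + 1 ≠ 0) :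
    X.Fc lam = X.Ev d 0 (fun _ => 1) lam / X.den d lam := by
  rcases le_total d (⌊lam.re / D.t⌋₊ + 1) with h | h
  · exact Ev_den h hl hs h0
  · exact (Ev_den h hl (floor_re lam) h0).symm

lemma Fc_analytic : AnalyticOnNhd ℂ X.Fc
    {l : ℂ | 0 < l.re ∧ ∀ m : ℤ, l * X.z0 ≠ (m : ℂ)} := by
  rintro l ⟨hl, hm⟩
  have h0 : ∀ j : ℕ, X.z0 * l + j + 1 ≠ 0 := fun j h => by
    refine hm (-(j + 1)) ?_
    rw [mul_comm]; push_cast; linear_combination h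
  set d := ⌊l.re / D.t⌋₊ + 1 with hd
  have hop : IsOpen {lam : ℂ | 0 < lam.re ∧ 0 < (X.z0 * lam + (0 + d : ℕ)).re} :=
    (isOpen_lt continuous_const Complex.continuous_re).inter
      (isOpen_lt continuous_const (Complex.continuous_re.comp (by fun_prop)))
  have hmem : l ∈ {lam : ℂ | 0 < lam.re ∧ 0 < (X.z0 * lam + (0 + d : ℕ)).re} :=
    ⟨hl, by rw [zero_add]; exact floor_re l⟩
  have h1 : AnalyticAt ℂ (X.Ev d 0 (fun _ => 1)) l :=
    (Ev_diff d one_cl).analyticAt (hop.mem_nhds hmem)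
  have h2 : AnalyticAt ℂ (X.den d) l := by
    have : Differentiable ℂ (X.den d) := by unfold den; fun_prop
    exact this.analyticAt l
  have h3 : X.den d l ≠ 0 := Finset.prod_ne_zero_iff.2 fun j _ => h0 j
  refine (h1.div h2 h3).congr ?_
  have h4 : ∀ᶠ lam in 𝓝 l, X.den d lam ≠ 0 := h2.continuousAt.eventually_ne h3
  filter_upwards [hop.mem_nhds hmem, h4] with lam hlam h5
  have hs : 0 < (X.z0 * lam + d).re := by simpa only [zero_add] using hlam.2
  refine (Fc_eq hlam.1 hs fun j => ?_).symm
  rcases lt_or_ge j d with hj | hj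
  · exact Finset.prod_ne_zero_iff.1 h5 j (Finset.mem_range.2 hj)
  · intro h
    have h6 := congrArg Complex.re h
    rw [X.z0_re] at hs
    have : (d : ℝ) ≤ j := by exact_mod_cast hj
    rw [add_re, X.z0_re] at h6
    simp at h6; linarith

lemma Pt_eq (Y : X.Test) (m : ℕ) : Y.Pt m = fun u => Y.a * (Lr X.ct)^[m] (fun _ => 1) u := by
  induction m with
  | zero => simp [Test.Pt]
  | succ m ih =>
    rw [Y.Pt_succ, ih, Function.iterate_succ_apply']
    have hd : Differentiable ℝ ((Lr X.ct)^[m] (fun _ => 1)) := by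
      clear ih
      have : D.ClT (-m) ((Lr X.ct)^[m] (fun _ => 1)) := by
        induction m with
        | zero => exact one_cl
        | succ m ih =>
          rw [Function.iterate_succ_apply']
          exact (ClT_L0 ih).add (ClT_L1 ih)
      exact this.diff
    set R := (Lr X.ct)^[m] (fun _ => 1)
    funext u
    have h1 : ∀ i, pd i (fun u => X.ct i u * (Y.a * R u)) u =
        Y.a * pd i (fun u => X.ct i u * R u) u := fun i => by
      have h2 : (fun u => X.ct i u * (Y.a * R u)) = fun u => Y.a * (X.ct i u * R u) := by
        funext u; ring
      have h3 := pd_mul (B' := fun u => X.ct i u * R u) (differentiable_const Y.a) ((X.ct_cl i).diff.mul hd) i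
      rw [h2]
      rw [pd_const] at h3
      have := congrFun h3 u
      simpa using this
    simp only [Lr, L0, L1, h1, ← Finset.mul_sum]
    have : ∑ i, X.ct i u * (Y.a * R u) = Y.a * ∑ i, X.ct i u * R u := by
      rw [Finset.mul_sum]; exact Finset.sum_congr rfl fun i _ => by ring
    rw [this]; ring

/-- The face integral appearing in the limit, in terms of the continuation of `K`. -/
lemma J_Pt (Y : X.Test) {m : ℕ} (hm : 0 < -1 / D.t + m) (h0 : ∀ j : ℕ, X.z0 + j + 1 ≠ 0) :
    ∫ v, Jg X.pt (((-1 / D.t : ℝ) : ℂ) + m) 1 (Y.Pt m) (D.ι v) =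
      (∏ j ∈ Finset.range m, (X.z0 + j + 1)) * (Y.a * X.Fc 1) := by
  have hs : 0 < (X.z0 * 1 + (0 + m : ℕ)).re := by
    rw [zero_add, X.z0_re]; simpa using hm
  have h1 := Ev_one (X := X) m one_cl hs
  have hs' : 0 < (X.z0 * 1 + m).re := by simpa only [zero_add] using hs
  rw [Fc_eq (d := m) (by simp) hs' (by simpa using h0), h1]
  have h2 : X.den m 1 = ∏ j ∈ Finset.range m, (X.z0 + j + 1) := by simp [den]
  have h3 : X.den m 1 ≠ 0 := by rw [h2]; exact Finset.prod_ne_zero_iff.2 fun j _ => h0 j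
  rw [← h2, zero_add, ← mul_div_assoc, mul_div_cancel₀ _ h3, J, ← integral_const_mul]
  congr 1
  funext v
  rw [Pt_eq]
  simp only [Jg, z0, mul_one, ofReal_mul]
  ring

end Phase

/-! ### Convergence of the integral `K(λ)` -/

/-- A limiting form of the identity `(2 + c) ∫ g = ∫ (2 g + h)`: it forces `g` to be integrable
when it is the increasing limit of integrable functions for which the identity holds up to
dominated errors. -/
lemma integrable_of_raise {α : Type*} [MeasurableSpace α] {μ : Measure α} {c : ℝ} (hc : 0 < c)
    {gA y r : ℕ → α → ℝ} {g Dm h : α → ℝ} (hgA : ∀ j, Integrable (gA j) μ)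
    (hgA0 : ∀ j v, 0 ≤ gA j v) (hgAg : ∀ j v, gA j v ≤ g v)
    (hlim : ∀ v, Tendsto (fun j => gA j v) atTop (𝓝 (g v)))
    (hym : ∀ j, AEStronglyMeasurable (y j) μ) (hy0 : ∀ j v, 0 ≤ y j v) (hy1 : ∀ j v, y j v ≤ 1)
    (hylim : ∀ v, Tendsto (fun j => gA j v * y j v) atTop (𝓝 (g v)))
    (hrm : ∀ j, AEStronglyMeasurable (r j) μ) (hr : ∀ j v, |r j v| ≤ Dm v) (hD : Integrable Dm μ)
    (hrlim : ∀ v, Tendsto (fun j => r j v) atTop (𝓝 (h v)))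
    (hid : ∀ j, (2 + c) * ∫ v, gA j v ∂μ = ∫ v, (2 * (gA j v * y j v) + r j v) ∂μ) :
    Integrable g μ ∧ c * ∫ v, g v ∂μ = ∫ v, h v ∂μ := by
  have hgy : ∀ j, Integrable (fun v => gA j v * y j v) μ := fun j =>
    (hgA j).mono' ((hgA j).1.mul (hym j)) (Eventually.of_forall fun v => by
      rw [Real.norm_eq_abs, abs_of_nonneg (mul_nonneg (hgA0 j v) (hy0 j v))]
      exact mul_le_of_le_one_right (hgA0 j v) (hy1 j v))
  have hri : ∀ j, Integrable (r j) μ := fun j =>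
    hD.mono' (hrm j) (Eventually.of_forall fun v => hr j v)
  have hid2 : ∀ j, (2 + c) * ∫ v, gA j v ∂μ = 2 * ∫ v, gA j v * y j v ∂μ + ∫ v, r j v ∂μ :=
    fun j => by rw [hid, integral_add ((hgy j).const_mul 2) (hri j), integral_const_mul]
  have hb : ∀ j, ∫ v, gA j v ∂μ ≤ (∫ v, Dm v ∂μ) / c := fun j => by
    rw [le_div_iff₀ hc]
    have h1 : ∫ v, gA j v * y j v ∂μ ≤ ∫ v, gA j v ∂μ :=
      integral_mono (hgy j) (hgA j) fun v => mul_le_of_le_one_right (hgA0 j v) (hy1 j v)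
    have h2 : ∫ v, r j v ∂μ ≤ ∫ v, Dm v ∂μ :=
      integral_mono (hri j) hD fun v => (le_abs_self _).trans (hr j v)
    linarith [hid2 j]
  have hg0 : ∀ v, 0 ≤ g v := fun v => (hgA0 0 v).trans (hgAg 0 v)
  have hgi : Integrable g μ := by
    refine ⟨aestronglyMeasurable_of_tendsto_ae _ (fun j => (hgA j).1)
      (Eventually.of_forall hlim), ?_⟩
    have h1 : ∫⁻ v, ‖g v‖ₑ ∂μ ≤ liminf (fun j => ∫⁻ v, ‖gA j v‖ₑ ∂μ) atTop := by
      have : ∀ v, ‖g v‖ₑ = liminf (fun j => ‖gA j v‖ₑ) atTop := fun v =>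
        ((hlim v).enorm.liminf_eq).symm
      simp only [this]
      exact lintegral_liminf_le' fun j => (hgA j).1.enorm
    have h2 : ∀ j, ∫⁻ v, ‖gA j v‖ₑ ∂μ ≤ ENNReal.ofReal ((∫ v, Dm v ∂μ) / c) := fun j => by
      rw [← ofReal_integral_norm_eq_lintegral_enorm (hgA j)]
      refine ENNReal.ofReal_le_ofReal ?_
      simp only [Real.norm_of_nonneg (hgA0 j _)]
      exact hb j
    refine lt_of_le_of_lt h1 (lt_of_le_of_lt (b := ENNReal.ofReal ((∫ v, Dm v ∂μ) / c)) ?_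
      ENNReal.ofReal_lt_top)
    exact (liminf_le_liminf (Eventually.of_forall h2)).trans (by simp)
  refine ⟨hgi, ?_⟩
  have l1 : Tendsto (fun j => ∫ v, gA j v ∂μ) atTop (𝓝 (∫ v, g v ∂μ)) :=
    tendsto_integral_of_dominated_convergence g (fun j => (hgA j).1) hgi
      (fun j => Eventually.of_forall fun v => by
        rw [Real.norm_of_nonneg (hgA0 j v)]; exact hgAg j v) (Eventually.of_forall hlim)
  have l2 : Tendsto (fun j => ∫ v, gA j v * y j v ∂μ) atTop (𝓝 (∫ v, g v ∂μ)) :=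
    tendsto_integral_of_dominated_convergence g (fun j => (hgy j).1) hgi
      (fun j => Eventually.of_forall fun v => by
        rw [Real.norm_of_nonneg (mul_nonneg (hgA0 j v) (hy0 j v))]
        exact (mul_le_of_le_one_right (hgA0 j v) (hy1 j v)).trans (hgAg j v))
      (Eventually.of_forall hylim)
  have l3 : Tendsto (fun j => ∫ v, r j v ∂μ) atTop (𝓝 (∫ v, h v ∂μ)) :=
    tendsto_integral_of_dominated_convergence Dm hrm hD
      (fun j => Eventually.of_forall fun v => hr j v) (Eventually.of_forall hrlim)
  have h4 := tendsto_nhds_unique (l1.const_mul (2 + c))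
    (((l2.const_mul 2).add l3).congr fun j => (hid2 j).symm)
  linarith

lemma pcp_ofReal {b : ℝ} (hb : b ≠ 0) (x : ℝ) : pcp x (b : ℂ) = ((pPow x b : ℝ) : ℂ) := by
  rcases le_or_gt x 0 with hx | hx
  · rw [pcp_of_nonpos hx (by exact_mod_cast hb), pPow, if_neg hx.not_gt, ofReal_zero]
  · rw [pcp_of_pos hx, pPow, if_pos hx, ofReal_cpow hx.le]

lemma pPow_nonneg (x b : ℝ) : 0 ≤ pPow x b := by
  unfold pPow; split_ifs with h
  · exact (Real.rpow_pos_of_pos h _).le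
  · exact le_rfl

lemma pPow_add {x : ℝ} (b : ℝ) (m : ℕ) : pPow x (b + m) = pPow x b * x ^ m := by
  unfold pPow; split_ifs with h
  · rw [Real.rpow_add h, Real.rpow_natCast]
  · simp

namespace Phase
variable {n k : ℕ} {D : Setup n k} {X : Phase D}

/-- The regularisation `1 / (p² + ε² M²)` of `p⁻²`. -/
lemma reg_cl {ε : ℝ} (hε : 0 < ε) :
    D.ClT (-(2 : ℕ)) (fun u => (X.pt u ^ 2 + ε ^ 2 * D.Mt u ^ 2)⁻¹) := by
  have h1 : D.Cl (1 + 1) (fun u => X.p u * X.p u + ε ^ 2 * (D.M u * D.M u))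
      (fun u => X.pt u * X.pt u + ε ^ 2 * (D.Mt u * D.Mt u)) :=
    (X.hp.mul X.hp).add ((Newt.Cl.M_cl.mul Newt.Cl.M_cl).const_mul (ε ^ 2))
  have h2 := h1.inv (c := ε ^ 2) (by positivity) (fun u => by
      rw [show (1 + 1 : ℤ) = (2 : ℕ) by norm_num, zpow_natCast]
      nlinarith [mul_self_nonneg (X.p u)]) (fun u => by
      have := D.Mt_pos u
      have : 0 < ε ^ 2 * (D.Mt u * D.Mt u) := by positivity
      nlinarith [mul_self_nonneg (X.pt u)])
  have e : (fun u => (X.pt u ^ 2 + ε ^ 2 * D.Mt u ^ 2)⁻¹) =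
      fun u => (X.pt u * X.pt u + ε ^ 2 * (D.Mt u * D.Mt u))⁻¹ := by
    funext u; simp only [sq]
  rw [e]
  exact ⟨_, h2⟩

lemma Mt_cl : D.ClT 1 D.Mt := ⟨_, Newt.Cl.M_cl⟩

lemma Mtinv_cl : D.ClT (-(1 : ℕ)) (fun u => (D.Mt u)⁻¹) :=
  ⟨_, Newt.Cl.M_cl.inv one_pos (fun u => by simp) (fun u => (D.Mt_pos u).ne')⟩

/-- The real form of the integrand. -/
lemma Jg_real {m : ℕ} {lam : ℝ} (hm : -lam / D.t + m ≠ 0) (Q : (Fin n → ℝ) → ℝ) (v : Fin k → ℝ) :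
    Jg X.pt (X.z0 * lam + m) lam Q (D.ι v) =
      ((pPow (X.pt (D.ι v)) (-lam / D.t + m) * Real.exp (-(lam * sm (D.ι v))) * Q (D.ι v) : ℝ) : ℂ) := by
  have e : X.z0 * lam + m = ((-lam / D.t + m : ℝ) : ℂ) := by
    rw [z0]; push_cast; ring
  rw [Jg, e, pcp_ofReal hm]
  push_cast; rfl

theorem K_formula {lam : ℝ} (hl : 0 < lam) (hlt : lam < D.t) :
    Integrable (fun v => pPow (X.pt (D.ι v)) (-lam / D.t) * Real.exp (-(lam * sm (D.ι v)))) ∧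
    X.Fc lam = ((∫ v, pPow (X.pt (D.ι v)) (-lam / D.t) * Real.exp (-(lam * sm (D.ι v))) : ℝ) : ℂ) := by
  have ht := D.t_pos
  set b := -lam / D.t with hb
  have hb0 : b < 0 := by rw [hb]; exact div_neg_of_neg_of_pos (by linarith) ht
  have hb1 : -1 < b := by rw [hb, lt_div_iff₀ ht]; linarith
  have hre : ∀ m : ℕ, (X.z0 * lam + m).re = b + m := fun m => by
    rw [X.z0_re, hb, ofReal_re]; ring
  have hl' : 0 < ((lam : ℂ)).re := by simpa using hl
  have hs1 : 0 < (X.z0 * lam + (1 : ℕ)).re := by rw [hre]; push_cast; linarith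
  have hs2 : 0 < (X.z0 * lam + (2 : ℕ)).re := by rw [hre]; push_cast; linarith
  have hs3 : 0 < (X.z0 * lam + (3 : ℕ)).re := by rw [hre]; push_cast; linarith
  -- the real integrand
  set E : (Fin k → ℝ) → ℝ := fun v => Real.exp (-(lam * sm (D.ι v))) with hE
  set g : ℕ → ((Fin n → ℝ) → ℝ) → (Fin k → ℝ) → ℝ := fun m Q v =>
    pPow (X.pt (D.ι v)) (b + m) * E v * Q (D.ι v) with hg
  have hgJ : ∀ m : ℕ, 1 ≤ m → ∀ Q v, Jg X.pt (X.z0 * lam + m) lam Q (D.ι v) = (g m Q v : ℂ) :=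
    fun m hm Q v => Jg_real (by
      have : (1 : ℝ) ≤ m := by exact_mod_cast hm
      rw [← hb]; linarith) Q v
  have hgi : ∀ m : ℕ, 1 ≤ m → ∀ Q, D.ClT (-m) Q → Integrable (g m Q) := fun m hm Q hQ => by
    have h := X.Jt_integrable hQ hl' (by
      rw [hre]
      have : (1 : ℝ) ≤ m := by exact_mod_cast hm
      linarith)
    have h2 := h.re
    refine h2.congr (Eventually.of_forall fun v => ?_)
    simp only [hgJ m hm]
    exact ofReal_re _
  have hgI : ∀ m : ℕ, 1 ≤ m → ∀ Q, X.J lam m Q = ((∫ v, g m Q v : ℝ) : ℂ) := fun m hm Q => by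
    rw [J, ← integral_complex_ofReal]
    exact integral_congr_ae (Eventually.of_forall fun v => hgJ m hm Q v)
  -- constants
  set H : (Fin n → ℝ) → ℝ := fun u => L0 X.ct (fun _ => 1) u + lam * L1 X.ct (fun _ => 1) u with hH
  have hHcl : D.ClT (-1) H := by
    have h1 := ClT_L0 (X := X) one_cl
    obtain ⟨B, hB⟩ := ClT_L1 (X := X) one_cl
    exact h1.add ⟨_, hB.const_mul lam⟩
  set Yf : (Fin n → ℝ) → ℝ := fun u => ∑ i, X.ct i u * pd i D.Mt u with hY
  have hYcl : D.ClT 0 Yf := Newt.ClT.sum _ fun i => (X.ct_cl i).mul (Mt_cl.pd i)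
  obtain ⟨C1, hC1⟩ := hHcl.bound
  obtain ⟨C2, hC2⟩ := hYcl.bound
  set Q : ℕ → (Fin n → ℝ) → ℝ := fun j u =>
    (X.pt u ^ 2 + (1 / ((j : ℝ) + 1)) ^ 2 * D.Mt u ^ 2)⁻¹ with hQ
  have hQcl : ∀ j, D.ClT (-(2 : ℕ)) (Q j) := fun j => reg_cl (by positivity)
  have hden : ∀ (j : ℕ) u, 0 < X.pt u ^ 2 + (1 / ((j : ℝ) + 1)) ^ 2 * D.Mt u ^ 2 := fun j u => by
    have := D.Mt_pos u
    positivity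
  have hQ0 : ∀ j u, 0 < Q j u := fun j u => inv_pos.2 (hden j u)
  have hQ1 : ∀ j u, X.pt u ^ 2 * Q j u + (1 / ((j : ℝ) + 1)) ^ 2 * D.Mt u ^ 2 * Q j u = 1 :=
    fun j u => by rw [← add_mul]; exact mul_inv_cancel₀ (hden j u).ne'
  -- the action of the raising operator on the regularisation
  have hLQ : ∀ j u, L0 X.ct (Q j) u + lam * L1 X.ct (Q j) u =
      H u * Q j u + 2 * X.pt u * Q j u ^ 2 +
        2 * (1 / ((j : ℝ) + 1)) ^ 2 * D.Mt u * Q j u ^ 2 * Yf u := fun j u => by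
    set e := (1 / ((j : ℝ) + 1)) ^ 2 with he
    have hd1 := X.pt_cl.diff
    have hd2 := Mt_cl (D := D).diff
    have hpd : ∀ i, pd i (Q j) u =
        -(2 * X.pt u * pd i X.pt u + e * (2 * D.Mt u * pd i D.Mt u)) * Q j u ^ 2 := fun i => by
      have hB : Differentiable ℝ (fun u => X.pt u * X.pt u + e * (D.Mt u * D.Mt u)) :=
        (hd1.mul hd1).add ((differentiable_const e).mul (hd2.mul hd2))
      have hQe : Q j = fun u => (X.pt u * X.pt u + e * (D.Mt u * D.Mt u))⁻¹ := by
        funext u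
        change (X.pt u ^ 2 + e * D.Mt u ^ 2)⁻¹ = _
        rw [sq, sq]
      have h0 : ∀ u, X.pt u * X.pt u + e * (D.Mt u * D.Mt u) ≠ 0 := fun u => by
        have := hden j u; rw [← he, sq, sq] at this; exact this.ne'
      rw [hQe, pd_inv hB h0,
        pd_add (B := fun u => X.pt u * X.pt u) (B' := fun u => e * (D.Mt u * D.Mt u))
          (hd1.mul hd1) ((differentiable_const e).mul (hd2.mul hd2)),
        pd_mul hd1 hd1, pd_mul (B' := fun u => D.Mt u * D.Mt u) (differentiable_const e)
          (hd2.mul hd2), pd_mul hd2 hd2, pd_const]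
      ring
    have h3 : ∀ i, pd i (fun u => X.ct i u * Q j u) u =
        pd i (fun u => X.ct i u * 1) u * Q j u -
          (2 * X.pt u * (X.ct i u * pd i X.pt u) +
            2 * e * D.Mt u * (X.ct i u * pd i D.Mt u)) * Q j u ^ 2 := fun i => by
      rw [pd_mul (X.ct_cl i).diff (hQcl j).diff]
      simp only [mul_one, hpd]
      ring_nf
    have h4 := X.heqt u
    simp only [hH, hY, L0, L1, h3, Finset.sum_sub_distrib, ← Finset.sum_mul,
      Finset.sum_add_distrib, ← Finset.mul_sum]
    rw [h4]; ring
  set Dm : (Fin k → ℝ) → ℝ := fun v => (|C1| + 2 * |C2|) * g 1 (fun u => (D.Mt u)⁻¹) v with hDm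
  have hDmi : Integrable Dm := (hgi 1 le_rfl _ Mtinv_cl).const_mul _
  set r : ℕ → (Fin k → ℝ) → ℝ := fun j v => pPow (X.pt (D.ι v)) (b + (1 : ℕ)) * E v *
    (H (D.ι v) * (X.pt (D.ι v) ^ 2 * Q j (D.ι v)) +
      2 * (X.pt (D.ι v) ^ 2 * Q j (D.ι v)) *
        ((1 / ((j : ℝ) + 1)) ^ 2 * D.Mt (D.ι v) ^ 2 * Q j (D.ι v)) *
          (Yf (D.ι v) * (D.Mt (D.ι v))⁻¹)) with hr
  set y : ℕ → (Fin k → ℝ) → ℝ := fun j v => X.pt (D.ι v) ^ 2 * Q j (D.ι v) with hy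
  have hy0 : ∀ j v, 0 ≤ y j v := fun j v => mul_nonneg (sq_nonneg _) (hQ0 j _).le
  have hz0 : ∀ (j : ℕ) v, 0 ≤ (1 / ((j : ℝ) + 1)) ^ 2 * D.Mt (D.ι v) ^ 2 * Q j (D.ι v) :=
    fun j v => mul_nonneg (by positivity) (hQ0 j _).le
  have hy1 : ∀ j v, y j v ≤ 1 := fun j v => by linarith [hQ1 j (D.ι v), hz0 j v]
  have hz1 : ∀ (j : ℕ) v, (1 / ((j : ℝ) + 1)) ^ 2 * D.Mt (D.ι v) ^ 2 * Q j (D.ι v) ≤ 1 :=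
    fun j v => by linarith [hQ1 j (D.ι v), hy0 j v]
  have hεlim : Tendsto (fun j : ℕ => (1 / ((j : ℝ) + 1)) ^ 2) atTop (𝓝 0) := by
    have := (tendsto_one_div_add_atTop_nhds_zero_nat (𝕜 := ℝ)).pow 2
    simpa using this
  have hQlim : ∀ u, 0 < X.pt u → Tendsto (fun j => Q j u) atTop (𝓝 ((X.pt u ^ 2)⁻¹)) :=
    fun u hu => by
      have := ((tendsto_const_nhds (x := X.pt u ^ 2)).add (hεlim.mul_const (D.Mt u ^ 2))).inv₀
        (by simpa using hu.ne')
      simp only [zero_mul, add_zero] at this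
      exact this
  have hcι := D.ι.continuous
  have hQc : ∀ j, Continuous fun v => Q j (D.ι v) := fun j => (hQcl j).diff.continuous.comp hcι
  have hptc : Continuous fun v => X.pt (D.ι v) := X.pt_cl.diff.continuous.comp hcι
  have hMc : Continuous fun v => D.Mt (D.ι v) := Mt_cl.diff.continuous.comp hcι
  have hrm : ∀ j, AEStronglyMeasurable (r j) volume := fun j => by
    have h1 : AEStronglyMeasurable (g 1 fun _ => 1) volume := by
      have h := (X.Jt_continuous (m := 1) (Q := fun _ => (1:ℝ)) (differentiable_const _)
        hs1 (lam := lam)).aestronglyMeasurable (μ := volume)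
      refine (h.re).congr (Eventually.of_forall fun v => ?_)
      simp only [hgJ 1 le_rfl]; exact ofReal_re _
    have h1' : AEStronglyMeasurable (fun v => pPow (X.pt (D.ι v)) (b + (1 : ℕ)) * E v) volume :=
      h1.congr (Eventually.of_forall fun v => by simp [hg])
    refine h1'.mul (Continuous.aestronglyMeasurable ?_)
    have c1 : Continuous fun v => H (D.ι v) := hHcl.diff.continuous.comp hcι
    have c2 : Continuous fun v => Yf (D.ι v) := hYcl.diff.continuous.comp hcι
    have c3 : Continuous fun v => (D.Mt (D.ι v))⁻¹ := hMc.inv₀ fun v => (D.Mt_pos _).ne'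
    have c4 := hQc j
    exact (c1.mul ((hptc.pow 2).mul c4)).add
      (((continuous_const.mul ((hptc.pow 2).mul c4)).mul
        ((continuous_const.mul (hMc.pow 2)).mul c4)).mul (c2.mul c3))
  have key := integrable_of_raise (μ := (volume : Measure (Fin k → ℝ))) (c := 1 + b) (by linarith)
    (gA := fun j => g 2 (Q j)) (y := y) (r := r)
    (g := fun v => pPow (X.pt (D.ι v)) b * E v) (Dm := Dm) (h := g 1 H)
    (fun j => hgi 2 (by norm_num) _ (hQcl j))
    (fun j v => mul_nonneg (mul_nonneg (pPow_nonneg _ _) (Real.exp_pos _).le) (hQ0 j _).le)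
    (fun j v => by
      simp only [hg]
      rw [pPow_add, show pPow (X.pt (D.ι v)) b * X.pt (D.ι v) ^ 2 * E v * Q j (D.ι v) =
        pPow (X.pt (D.ι v)) b * E v * y j v by simp only [hy]; ring]
      exact mul_le_of_le_one_right (mul_nonneg (pPow_nonneg _ _) (Real.exp_pos _).le) (hy1 j v))
    (fun v => by
      simp only [hg]
      rcases le_or_gt (X.pt (D.ι v)) 0 with hx | hx
      · simp [pPow, hx.not_gt]
      · have := (hQlim _ hx).const_mul (pPow (X.pt (D.ι v)) (b + (2 : ℕ)) * E v)
        rw [pPow_add] at this ⊢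
        convert this using 2
        field_simp)
    (fun j => by
      exact ((hptc.pow 2).mul (hQc j)).aestronglyMeasurable)
    hy0 hy1
    (fun v => by
      simp only [hg, hy]
      rcases le_or_gt (X.pt (D.ι v)) 0 with hx | hx
      · simp [pPow, hx.not_gt]
      · have := ((hQlim _ hx).const_mul (pPow (X.pt (D.ι v)) (b + (2 : ℕ)) * E v)).mul
          ((hQlim _ hx).const_mul (X.pt (D.ι v) ^ 2))
        rw [pPow_add] at this ⊢
        convert this using 2
        field_simp)
    hrm
    (fun j v => by
      have hM := D.Mt_pos (D.ι v)
      have h1 : |H (D.ι v)| ≤ |C1| * (D.Mt (D.ι v))⁻¹ := by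
        refine (hC1 _).trans ?_
        rw [zpow_neg_one]
        exact mul_le_mul_of_nonneg_right (le_abs_self _) (inv_pos.2 hM).le
      have h2 : |Yf (D.ι v)| ≤ |C2| := by
        refine (hC2 _).trans ?_
        rw [zpow_zero, mul_one]; exact le_abs_self _
      simp only [hr, hDm, hg]
      have hpE : 0 ≤ pPow (X.pt (D.ι v)) (b + (1 : ℕ)) * E v :=
        mul_nonneg (pPow_nonneg _ _) (Real.exp_pos _).le
      rw [abs_mul, abs_of_nonneg hpE]
      have h3 : |H (D.ι v) * y j v| ≤ |C1| * (D.Mt (D.ι v))⁻¹ := by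
        rw [abs_mul, abs_of_nonneg (hy0 j v)]
        exact (mul_le_of_le_one_right (abs_nonneg _) (hy1 j v)).trans h1
      have h4 : |2 * y j v * ((1 / ((j : ℝ) + 1)) ^ 2 * D.Mt (D.ι v) ^ 2 * Q j (D.ι v)) *
          (Yf (D.ι v) * (D.Mt (D.ι v))⁻¹)| ≤ 2 * (|C2| * (D.Mt (D.ι v))⁻¹) := by
        rw [abs_mul, abs_mul (Yf _), abs_of_pos (inv_pos.2 hM),
          abs_of_nonneg (mul_nonneg (mul_nonneg two_pos.le (hy0 j v)) (hz0 j v))]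
        have h5 : y j v * ((1 / ((j : ℝ) + 1)) ^ 2 * D.Mt (D.ι v) ^ 2 * Q j (D.ι v)) ≤ 1 :=
          mul_le_one₀ (hy1 j v) (hz0 j v) (hz1 j v)
        have h6 : |Yf (D.ι v)| * (D.Mt (D.ι v))⁻¹ ≤ |C2| * (D.Mt (D.ι v))⁻¹ :=
          mul_le_mul_of_nonneg_right h2 (inv_pos.2 hM).le
        have h7 : 0 ≤ |Yf (D.ι v)| * (D.Mt (D.ι v))⁻¹ :=
          mul_nonneg (abs_nonneg _) (inv_pos.2 hM).le
        have h8 := mul_le_mul_of_nonneg_right h5 h7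
        linarith
      have h9 := (abs_add_le _ _).trans (add_le_add h3 h4)
      calc _ ≤ pPow (X.pt (D.ι v)) (b + (1 : ℕ)) * E v *
            (|C1| * (D.Mt (D.ι v))⁻¹ + 2 * (|C2| * (D.Mt (D.ι v))⁻¹)) :=
            mul_le_mul_of_nonneg_left h9 hpE
        _ = _ := by ring)
    hDmi
    (fun v => by
      simp only [hr, hg]
      rcases le_or_gt (X.pt (D.ι v)) 0 with hx | hx
      · simp [pPow, hx.not_gt]
      · have l1 := (hQlim _ hx).const_mul (X.pt (D.ι v) ^ 2)
        have l2 := (hεlim.mul_const (D.Mt (D.ι v) ^ 2)).mul (hQlim _ hx)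
        have l3 := ((l1.const_mul (H (D.ι v))).add (((l1.const_mul 2).mul l2).mul_const
          (Yf (D.ι v) * (D.Mt (D.ι v))⁻¹))).const_mul (pPow (X.pt (D.ι v)) (b + (1 : ℕ)) * E v)
        convert l3 using 2
        field_simp
        ring)
    (fun j => by
      have h1 := X.J_raise (hQcl j) hl' hs2
      have hL0 := hgi 3 (by norm_num) _ (ClT_L0 (X := X) (hQcl j))
      have hL1 := hgi 3 (by norm_num) _ (ClT_L1 (X := X) (hQcl j))
      rw [hgI 2 (by norm_num), hgI 3 (by norm_num), hgI 3 (by norm_num),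
        show X.z0 * lam + (2 : ℕ) + 1 = ((2 + (1 + b) : ℝ) : ℂ) by
          rw [z0, hb]; push_cast; ring] at h1
      have h2 : (2 + (1 + b)) * ∫ v, g 2 (Q j) v =
          (∫ v, g 3 (L0 X.ct (Q j)) v) + lam * ∫ v, g 3 (L1 X.ct (Q j)) v := by
        exact_mod_cast h1
      rw [h2, ← integral_const_mul, ← integral_add hL0 (hL1.const_mul lam)]
      refine integral_congr_ae (Eventually.of_forall fun v => ?_)
      have h3 := hLQ j (D.ι v)
      simp only [hg, hy, hr]
      rw [pPow_add b 3, pPow_add b 2, pPow_add b 1]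
      have hM := (D.Mt_pos (D.ι v)).ne'
      have h4 : D.Mt (D.ι v) ^ 2 * (D.Mt (D.ι v))⁻¹ = D.Mt (D.ι v) := by field_simp
      calc _ = pPow (X.pt (D.ι v)) b * X.pt (D.ι v) ^ 3 * E v *
            (L0 X.ct (Q j) (D.ι v) + lam * L1 X.ct (Q j) (D.ι v)) := by ring
        _ = _ := by
          rw [h3]
          linear_combination (-(pPow (X.pt (D.ι v)) b * X.pt (D.ι v) ^ 3 * E v * 2 *
            (1 / ((j : ℝ) + 1)) ^ 2 * Q j (D.ι v) ^ 2 * Yf (D.ι v))) * h4)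
  refine ⟨key.1, ?_⟩
  have h0 : ∀ j : ℕ, X.z0 * lam + j + 1 ≠ 0 := fun j h => by
    have := congrArg Complex.re h
    rw [add_re, hre] at this
    have hj : (0 : ℝ) ≤ j := Nat.cast_nonneg j
    simp at this; linarith
  rw [Fc_eq (d := 1) hl' hs1 h0]
  have hd : X.den 1 lam = ((1 + b : ℝ) : ℂ) := by
    simp [den, z0, hb]; ring
  have hE1 : X.Ev 1 0 (fun _ => 1) lam = ((∫ v, g 1 H v : ℝ) : ℂ) := by
    have i0 := hgi 1 le_rfl _ (ClT_L0 (X := X) one_cl)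
    have i1 := hgi 1 le_rfl _ (ClT_L1 (X := X) one_cl)
    simp only [Ev]
    rw [hgI _ le_rfl, hgI _ le_rfl, ← ofReal_mul, ← ofReal_add, ← integral_const_mul,
      ← integral_add i0 (i1.const_mul lam)]
    congr 2
    funext v
    simp only [hg, hH]; ring
  rw [hE1, hd, ← key.2, ofReal_mul, mul_div_cancel_left₀]
  exact_mod_cast (by linarith : (1 + b : ℝ) ≠ 0)

end Phase

/-! ### Meromorphic continuation of the local integrals in a toric chart -/

/-- The closed unit cube. -/
def cube (n : ℕ) : Set (Fin n → ℝ) := Set.Icc 0 1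

/-- Functions which are smooth near the closed unit cube. -/
def CS {n : ℕ} (B : (Fin n → ℝ) → ℝ) : Prop := ∀ y ∈ cube n, ContDiffAt ℝ (⊤ : ℕ∞) B y

namespace CS
variable {n : ℕ} {B B' : (Fin n → ℝ) → ℝ}

lemma of_contDiff (h : ContDiff ℝ (⊤ : ℕ∞) B) : CS B := fun _ _ => h.contDiffAt
lemma const (c : ℝ) : CS (n := n) (fun _ => c) := fun _ _ => contDiffAt_const
lemma coord (j : Fin n) : CS (fun y : Fin n → ℝ => y j) :=
  fun _ _ => (contDiff_apply ℝ ℝ j).contDiffAt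
lemma add (h : CS B) (h' : CS B') : CS (fun y => B y + B' y) := fun y hy => (h y hy).add (h' y hy)
lemma sub (h : CS B) (h' : CS B') : CS (fun y => B y - B' y) := fun y hy => (h y hy).sub (h' y hy)
lemma mul (h : CS B) (h' : CS B') : CS (fun y => B y * B' y) := fun y hy => (h y hy).mul (h' y hy)
lemma pd (h : CS B) (j : Fin n) : CS (pd j B) := fun y hy =>
  ((h y hy).fderiv_right (m := (⊤ : ℕ∞)) (by simp)).clm_apply contDiffAt_const
lemma sum {ι : Type*} (s : Finset ι) {F : ι → (Fin n → ℝ) → ℝ} (h : ∀ i ∈ s, CS (F i)) :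
    CS (fun y => ∑ i ∈ s, F i y) := fun y hy => ContDiffAt.sum fun i hi => h i hi y hy
lemma continuousOn (h : CS B) : ContinuousOn B (cube n) := fun y hy =>
  (h y hy).continuousAt.continuousWithinAt
lemma diffAt (h : CS B) {y : Fin n → ℝ} (hy : y ∈ cube n) : DifferentiableAt ℝ B y :=
  (h y hy).differentiableAt (by simp)
lemma bound (h : CS B) : ∃ C, ∀ y ∈ cube n, |B y| ≤ C := by
  obtain ⟨C, hC⟩ := isCompact_Icc.exists_bound_of_continuousOn h.continuousOn
  exact ⟨C, fun y hy => hC y hy⟩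
end CS

section mellin
variable {n : ℕ}

lemma ex_cube {t : Fin n → ℝ} (ht : ∀ j, 0 ≤ t j) : ex t ∈ cube n :=
  ⟨fun j => (Real.exp_pos _).le, fun j => Real.exp_le_one_iff.2 (by linarith [ht j])⟩

lemma ex_mem {t : Fin n → ℝ} (ht : t ∈ posOrthant n) : ex t ∈ cube n := ex_cube fun j => (ht j).le

lemma measurable_posOrthant (n : ℕ) : MeasurableSet (posOrthant n) := by
  have : posOrthant n = Set.univ.pi fun _ => Set.Ioi 0 := by
    ext y; simp [posOrthant]
  rw [this]; exact MeasurableSet.univ_pi fun _ => measurableSet_Ioi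

lemma integrable_exp_posOrthant {b : Fin n → ℝ} (hb : ∀ j, 0 < b j) :
    IntegrableOn (fun t : Fin n → ℝ => Real.exp (-∑ j, b j * t j)) (posOrthant n) := by
  rw [← integrable_indicator_iff (measurable_posOrthant n)]
  have h := Integrable.fintype_prod (ι := Fin n) (𝕜 := ℝ) (E := ℝ) (μ := fun _ => volume)
    (f := fun (j : Fin n) (x : ℝ) => (Set.Ioi (0 : ℝ)).indicator
      (fun x => Real.exp (-(b j * x))) x) fun j => by
      change Integrable ((Set.Ioi (0 : ℝ)).indicator fun x => Real.exp (-(b j * x)))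
      rw [integrable_indicator_iff measurableSet_Ioi]
      simpa only [neg_mul] using integrableOn_exp_mul_Ioi (neg_lt_zero.2 (hb j)) 0
  refine h.congr (Eventually.of_forall fun t => ?_)
  beta_reduce
  by_cases ht : t ∈ posOrthant n
  · rw [Set.indicator_of_mem ht, ← Finset.sum_neg_distrib, Real.exp_sum]
    exact Finset.prod_congr rfl fun j _ => Set.indicator_of_mem (ht j) _
  · rw [Set.indicator_of_notMem ht]
    simp only [posOrthant, Set.mem_ofPred_eq, not_forall] at ht
    obtain ⟨j, hj⟩ := ht
    exact Finset.prod_eq_zero (Finset.mem_univ j) (Set.indicator_of_notMem hj _)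

/-- The integrand `∏ yⱼ^{Nⱼ s + νⱼ} f(y)₊^{s+m} B(y)` at `y = ex t`. -/
def mint (N ν : Fin n → ℕ) (f : (Fin n → ℝ) → ℝ) (m : ℕ) (B : (Fin n → ℝ) → ℝ) (s : ℂ)
    (t : Fin n → ℝ) : ℂ :=
  cexp (-∑ i, ((N i : ℂ) * s + ν i) * t i) * pcp (f (ex t)) (s + m) * (B (ex t) : ℂ)

/-- The multiple Mellin integral `∫ ∏ yⱼ^{Nⱼ s + νⱼ} f(y)₊^{s+m} B(y) dy/y` over the unit cube. -/
def Mel (N ν : Fin n → ℕ) (f : (Fin n → ℝ) → ℝ) (m : ℕ) (B : (Fin n → ℝ) → ℝ) (s : ℂ) : ℂ :=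
  ∫ t in posOrthant n, mint N ν f m B s t

/-- The half-plane in which the Mellin integral converges. -/
def melDom (N ν : Fin n → ℕ) (m : ℕ) : Set ℂ :=
  {s | 0 < (s + m).re ∧ ∀ i, 0 < (N i : ℝ) * s.re + ν i}

variable {N ν : Fin n → ℕ} {f : (Fin n → ℝ) → ℝ}

lemma norm_cexp_mel (s : ℂ) (t : Fin n → ℝ) :
    ‖cexp (-∑ i, ((N i : ℂ) * s + ν i) * t i)‖ =
      Real.exp (-∑ i, ((N i : ℝ) * s.re + ν i) * t i) := by
  rw [Complex.norm_exp]; congr 1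
  rw [neg_re, re_sum]; congr 1
  refine Finset.sum_congr rfl fun i _ => ?_
  simp

lemma mint_bound (hf : CS f) : ∃ C, 1 ≤ C ∧ ∀ (B : (Fin n → ℝ) → ℝ), CS B → ∃ C', 0 ≤ C' ∧
    ∀ (ν : Fin n → ℕ) (m : ℕ) (s : ℂ), 0 < (s + m).re → ∀ t ∈ posOrthant n,
      ‖mint N ν f m B s t‖ ≤
        C ^ (s + m).re * C' * Real.exp (-∑ i, ((N i : ℝ) * s.re + ν i) * t i) := by
  obtain ⟨C, hC⟩ := hf.bound
  refine ⟨max C 1, le_max_right _ _, fun B hB => ?_⟩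
  obtain ⟨C', hC'⟩ := hB.bound
  refine ⟨max C' 0, le_max_right _ _, fun ν m s hs t ht => ?_⟩
  have h1 := norm_pcp_le hs ((hC _ (ex_mem ht)).trans (le_max_left C 1))
  have h2 : ‖(B (ex t) : ℂ)‖ ≤ max C' 0 := by
    rw [Complex.norm_real]; exact (hC' _ (ex_mem ht)).trans (le_max_left _ _)
  rw [mint, norm_mul, norm_mul, norm_cexp_mel]
  calc _ ≤ Real.exp (-∑ i, ((N i : ℝ) * s.re + ν i) * t i) * max C 1 ^ (s + m).re * max C' 0 := by
        gcongr
    _ = _ := by ring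

lemma continuous_ex : Continuous (ex (n := n)) := contDiff_ex.continuous

lemma mint_continuousOn {B : (Fin n → ℝ) → ℝ} (hf : CS f) (hB : CS B) {m : ℕ} {s : ℂ}
    (hs : 0 < (s + m).re) : ContinuousOn (mint N ν f m B s) (posOrthant n) := by
  have hc : ContinuousOn (ex (n := n)) (posOrthant n) := continuous_ex.continuousOn
  have hm : Set.MapsTo (ex (n := n)) (posOrthant n) (cube n) := fun t ht => ex_mem ht
  refine ContinuousOn.mul (ContinuousOn.mul ?_ ?_) ?_
  · have : Continuous fun t : Fin n → ℝ => -∑ i, ((N i : ℂ) * s + ν i) * (t i : ℂ) :=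
      (continuous_finsetSum _ fun i _ => continuous_const.mul
        (continuous_ofReal.comp (continuous_apply (A := fun _ : Fin n => ℝ) i))).neg
    exact (Complex.continuous_exp.comp this).continuousOn
  · exact (continuous_pcp hs).comp_continuousOn (hf.continuousOn.comp hc hm)
  · exact continuous_ofReal.comp_continuousOn (hB.continuousOn.comp hc hm)

lemma mint_integrable {B : (Fin n → ℝ) → ℝ} (hf : CS f) (hB : CS B) {m : ℕ} {s : ℂ}
    (hs : s ∈ melDom N ν m) : IntegrableOn (mint N ν f m B s) (posOrthant n) := by
  obtain ⟨C, -, h⟩ := mint_bound (N := N) hf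
  obtain ⟨C', -, h'⟩ := h B hB
  refine Integrable.mono' ((integrable_exp_posOrthant hs.2).const_mul (C ^ (s + m).re * C'))
    ((mint_continuousOn hf hB hs.1).aestronglyMeasurable (measurable_posOrthant n)) ?_
  filter_upwards [ae_restrict_mem (measurable_posOrthant n)] with t ht
  exact h' ν m s hs.1 t ht

lemma isOpen_melDom (N ν : Fin n → ℕ) (m : ℕ) : IsOpen (melDom N ν m) := by
  have h1 : IsOpen {s : ℂ | 0 < (s + m).re} :=
    isOpen_lt continuous_const (continuous_re.comp (continuous_id.add continuous_const))
  have h2 : IsOpen (⋂ i, {s : ℂ | 0 < (N i : ℝ) * s.re + ν i}) :=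
    isOpen_iInter_of_finite fun i => isOpen_lt continuous_const
      ((continuous_const.mul continuous_re).add continuous_const)
  convert h1.inter h2 using 1
  ext s; simp [melDom]

lemma Mel_diff {B : (Fin n → ℝ) → ℝ} (hf : CS f) (hB : CS B) (m : ℕ) :
    DifferentiableOn ℂ (Mel N ν f m B) (melDom N ν m) := by
  obtain ⟨C, hC, h⟩ := mint_bound (N := N) hf
  obtain ⟨C', hC', h'⟩ := h B hB
  refine holo_integral (isOpen_melDom N ν m) (fun s hs => (mint_integrable hf hB hs).1)
    (fun t => ?_) fun s hs => ?_
  · unfold mint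
    refine DifferentiableOn.mul (DifferentiableOn.mul ?_ ?_) (differentiableOn_const _)
    · fun_prop
    · exact (differentiableOn_pcp _).comp (f := fun s : ℂ => s + m) (by fun_prop) fun s hs => hs.1
  · -- a smaller abscissa which is still in the half-plane of convergence
    obtain ⟨ε, hε, hball⟩ := Metric.isOpen_iff.1 (isOpen_melDom N ν m) s hs
    set s1 : ℂ := s - (ε / 2 : ℝ) with hs1
    have hs1m : s1 ∈ melDom N ν m := hball (by
      rw [Metric.mem_ball, dist_eq_norm, hs1, sub_sub_cancel_left, norm_neg, Complex.norm_real,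
        Real.norm_of_nonneg (by positivity)]
      linarith)
    refine ⟨ε / 2, by positivity, fun t => C ^ (s.re + m + ε) * C' *
      Real.exp (-∑ i, ((N i : ℝ) * s1.re + ν i) * t i),
      (integrable_exp_posOrthant hs1m.2).const_mul _, ?_⟩
    filter_upwards [ae_restrict_mem (measurable_posOrthant n)] with t ht z hz hzS
    have hz2 : |z.re - s.re| < ε / 2 := by
      have := Complex.abs_re_le_norm (z - s)
      rw [Metric.mem_ball, dist_eq_norm] at hz
      simpa using this.trans_lt hz
    have hz3 := abs_lt.1 hz2
    refine (h' ν m z hzS.1 t ht).trans ?_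
    have e1 : (z + m).re ≤ s.re + m + ε := by simp; linarith
    have e2 : Real.exp (-∑ i, ((N i : ℝ) * z.re + ν i) * t i) ≤
        Real.exp (-∑ i, ((N i : ℝ) * s1.re + ν i) * t i) := by
      rw [Real.exp_le_exp, neg_le_neg_iff]
      refine Finset.sum_le_sum fun i _ => mul_le_mul_of_nonneg_right ?_ (ht i).le
      have : s1.re ≤ z.re := by simp [hs1]; linarith
      gcongr
    exact mul_le_mul (mul_le_mul_of_nonneg_right (Real.rpow_le_rpow_of_exponent_le hC e1) hC')
      e2 (Real.exp_pos _).le (by positivity)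

lemma line_ex {B : (Fin n → ℝ) → ℝ} {t : Fin n → ℝ} (hB : DifferentiableAt ℝ B (ex t)) (j : Fin n) :
    HasDerivAt (fun τ : ℝ => B (ex (t + τ • Pi.single j 1))) (-(ex t j) * pd j B (ex t)) 0 := by
  have h1 : HasDerivAt (fun τ : ℝ => ex (t + τ • Pi.single j (1 : ℝ)))
      (-(ex t j) • (Pi.single j 1 : Fin n → ℝ)) 0 := by
    rw [hasDerivAt_pi]
    intro i
    have h2 : HasDerivAt (fun τ : ℝ => -(t i + τ * (Pi.single j 1 : Fin n → ℝ) i))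
        (-(1 * (Pi.single j 1 : Fin n → ℝ) i)) 0 :=
      (((hasDerivAt_id (0 : ℝ)).mul_const _).const_add _).neg
    have h3 := h2.exp
    simp only [zero_mul, add_zero, one_mul] at h3
    refine h3.congr_deriv ?_
    by_cases h : i = j
    · subst h; simp [ex]
    · simp [Pi.single_eq_of_ne h]
  have h0 : ex t = ex (t + (0 : ℝ) • Pi.single j (1 : ℝ)) := by simp
  have h4 : HasFDerivAt B (fderiv ℝ B (ex t)) (ex (t + (0 : ℝ) • Pi.single j (1 : ℝ))) := by
    rw [← h0]; exact hB.hasFDerivAt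
  have h5 := h4.comp_hasDerivAt (0 : ℝ) h1
  refine h5.congr_deriv ?_
  rw [map_smul, smul_eq_mul, pd]

/-- The coefficients of the recursion for Mellin integrals. -/
def melB1 (ν : Fin n → ℕ) (f B : (Fin n → ℝ) → ℝ) (m : ℕ) (j : Fin n) (y : Fin n → ℝ) : ℝ :=
  (2 * (ν j + 1) - (ν j + 2) * y j) * (f y * B y) -
    (1 - y j) * (1 - y j) * ((m + 1) * (pd j f y * B y) + f y * pd j B y)

/-- The coefficients of the recursion for Mellin integrals: the part linear in `s`. -/
def melB2 (N : Fin n → ℕ) (f B : (Fin n → ℝ) → ℝ) (j : Fin n) (y : Fin n → ℝ) : ℝ :=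
  (2 * N j - N j * y j) * (f y * B y) - (1 - y j) * (1 - y j) * (pd j f y * B y)

lemma melB1_cs {B : (Fin n → ℝ) → ℝ} (hf : CS f) (hB : CS B) (m : ℕ) (j : Fin n) :
    CS (melB1 ν f B m j) :=
  (((CS.const _).sub ((CS.const _).mul (CS.coord j))).mul (hf.mul hB)).sub
    ((((CS.const 1).sub (CS.coord j)).mul ((CS.const 1).sub (CS.coord j))).mul
      (((CS.const _).mul ((hf.pd j).mul hB)).add (hf.mul (hB.pd j))))

lemma melB2_cs {B : (Fin n → ℝ) → ℝ} (hf : CS f) (hB : CS B) (j : Fin n) :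
    CS (melB2 N f B j) :=
  (((CS.const _).sub ((CS.const _).mul (CS.coord j))).mul (hf.mul hB)).sub
    ((((CS.const 1).sub (CS.coord j)).mul ((CS.const 1).sub (CS.coord j))).mul
      ((hf.pd j).mul hB))

lemma hasDerivAt_maxsq (x : ℝ) :
    HasDerivAt (fun x : ℝ => (max x 0) ^ 2) (2 * max x 0) x := by
  rcases lt_trichotomy x 0 with hx | hx | hx
  · rw [max_eq_right hx.le, mul_zero]
    refine (hasDerivAt_const x (0 : ℝ)).congr_of_eventuallyEq ?_
    filter_upwards [gt_mem_nhds hx] with y hy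
    rw [max_eq_right (le_of_lt hy)]; simp
  · subst hx
    rw [max_self, mul_zero, hasDerivAt_iff_isLittleO_nhds_zero]
    simp only [zero_add, max_self, smul_zero, sub_zero]
    have h1 : (fun h : ℝ => (max h 0) ^ 2) =O[𝓝 0] fun h => h ^ 2 :=
      Asymptotics.IsBigO.of_bound 1 (Eventually.of_forall fun h => by
        rw [norm_pow, norm_pow, one_mul]
        gcongr
        rw [Real.norm_of_nonneg (le_max_right _ _)]
        exact max_le (le_abs_self h) (abs_nonneg h))
    have h2 : (fun h : ℝ => h ^ 2) =o[𝓝 0] fun h => h := by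
      simpa using Asymptotics.isLittleO_pow_id (𝕜 := ℝ) one_lt_two
    simpa using h1.trans_isLittleO h2
  · rw [max_eq_left hx.le]
    have h := hasDerivAt_pow 2 x
    simp only [Nat.cast_ofNat, Nat.add_one_sub_one, pow_one] at h
    refine h.congr_of_eventuallyEq ?_
    filter_upwards [lt_mem_nhds hx] with y hy
    rw [max_eq_left (le_of_lt hy)]

/-- The recursion for Mellin integrals, obtained by integrating the `tⱼ`-derivative of
`(1 - yⱼ)²` times the integrand. -/
lemma Mel_step {B : (Fin n → ℝ) → ℝ} (hf : CS f) (hB : CS B) {m : ℕ} (j : Fin n) {s : ℂ}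
    (hs : s ∈ melDom N ν m) :
    ((N j : ℂ) * s + ν j) * Mel N ν f (m + 1) B s =
      Mel N (Function.update ν j (ν j + 1)) f m (melB1 ν f B m j) s +
      s * Mel N (Function.update ν j (ν j + 1)) f m (melB2 N f B j) s := by
  set ν' := Function.update ν j (ν j + 1) with hν'
  set z : ℂ := (N j : ℂ) * s + ν j with hz
  have hs1 : s ∈ melDom N ν (m + 1) := ⟨by have := hs.1; simp at this ⊢; linarith, hs.2⟩
  have hs' : s ∈ melDom N ν' m := ⟨hs.1, fun i => by
    have := hs.2 i
    by_cases h : i = j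
    · subst h; simp [hν']; linarith
    · simpa [hν', Function.update_of_ne h] using this⟩
  have i1 := mint_integrable (ν := ν) hf hB hs1
  have i2 := mint_integrable (B := melB1 ν f B m j) hf (melB1_cs hf hB m j) hs'
  have i3 := mint_integrable (B := melB2 N f B j) hf (melB2_cs (N := N) hf hB j) hs'
  set g : (Fin n → ℝ) → ℂ := fun t => if ∀ i, i ≠ j → 0 < t i then
    (((max (1 - Real.exp (-t j)) 0) ^ 2 : ℝ) : ℂ) * mint N ν f (m + 1) B s t else 0 with hg
  set g' : (Fin n → ℝ) → ℂ := (posOrthant n).indicator fun t =>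
    -z * mint N ν f (m + 1) B s t + mint N ν' f m (melB1 ν f B m j) s t +
      s * mint N ν' f m (melB2 N f B j) s t with hg'
  have hν'exp : ∀ t : Fin n → ℝ, cexp (-∑ i, ((N i : ℂ) * s + ν' i) * t i) =
      (Real.exp (-t j) : ℂ) * cexp (-∑ i, ((N i : ℂ) * s + ν i) * t i) := fun t => by
    rw [ofReal_exp, ← Complex.exp_add]
    congr 1
    have : ∑ i, ((N i : ℂ) * s + ν' i) * t i = ∑ i, (((N i : ℂ) * s + ν i) * t i +
        (Pi.single j (t j : ℂ) : Fin n → ℂ) i) := by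
      refine Finset.sum_congr rfl fun i _ => ?_
      by_cases h : i = j
      · subst h; simp [hν']; ring
      · simp [hν', Function.update_of_ne h, Pi.single_eq_of_ne h]
    rw [this, Finset.sum_add_distrib, Finset.sum_pi_single']
    simp
  have hder : ∀ t, HasLineDerivAt ℝ g (g' t) t (Pi.single j 1) := fun t => by
    unfold HasLineDerivAt
    have hoff : ∀ (τ : ℝ) i, i ≠ j → (t + τ • (Pi.single j 1 : Fin n → ℝ)) i = t i :=
      fun τ i h => by simp [Pi.single_eq_of_ne h]
    have hon : ∀ τ : ℝ, (t + τ • (Pi.single j 1 : Fin n → ℝ)) j = t j + τ := fun τ => by simp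
    by_cases hpos : ∀ i, i ≠ j → 0 < t i
    swap
    · have h1 : (fun τ : ℝ => g (t + τ • Pi.single j 1)) = fun _ => 0 := by
        funext τ
        simp only [hg]
        rw [if_neg]
        intro h; exact hpos fun i hi => by rw [← hoff τ i hi]; exact h i hi
      rw [h1, hg', Set.indicator_of_notMem fun h : t ∈ posOrthant n => hpos fun i _ => h i]
      exact hasDerivAt_const _ _
    have hgl : (fun τ : ℝ => g (t + τ • Pi.single j 1)) = fun τ =>
        (((max (1 - Real.exp (-(t j + τ))) 0) ^ 2 : ℝ) : ℂ) *
          mint N ν f (m + 1) B s (t + τ • Pi.single j 1) := by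
      funext τ
      simp only [hg]
      rw [if_pos, hon]
      intro i hi; rw [hoff τ i hi]; exact hpos i hi
    rw [hgl]
    rcases lt_or_ge (t j) 0 with hj | hj
    · rw [hg', Set.indicator_of_notMem fun h : t ∈ posOrthant n => hj.not_gt (h j)]
      refine (hasDerivAt_const (0 : ℝ) (0 : ℂ)).congr_of_eventuallyEq ?_
      filter_upwards [gt_mem_nhds (neg_pos.2 hj)] with τ hτ
      have : 1 ≤ Real.exp (-(t j + τ)) := Real.one_le_exp (by linarith)
      rw [max_eq_right (by linarith)]; simp
    have hcube : ex t ∈ cube n := ex_cube fun i => by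
      by_cases h : i = j
      · rw [h]; exact hj
      · exact (hpos i h).le
    have hsm : 0 < (s + m).re := hs.1
    have d1 : HasDerivAt (fun τ : ℝ => (((max (1 - Real.exp (-(t j + τ))) 0) ^ 2 : ℝ) : ℂ))
        ((2 * max (1 - Real.exp (-t j)) 0 * Real.exp (-t j) : ℝ) : ℂ) 0 := by
      have a1 : HasDerivAt (fun τ : ℝ => 1 - Real.exp (-(t j + τ))) (Real.exp (-t j)) 0 := by
        have a2 : HasDerivAt (fun τ : ℝ => -(t j + τ)) (-1) 0 :=
          ((hasDerivAt_id (0 : ℝ)).const_add (t j)).neg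
        have a3 := a2.exp.const_sub 1
        simpa using a3
      have a4 := (hasDerivAt_maxsq (1 - Real.exp (-(t j + 0)))).comp (0 : ℝ) a1
      rw [add_zero] at a4
      exact a4.ofReal_comp
    have d2 : HasDerivAt (fun τ : ℝ => cexp (-∑ i, ((N i : ℂ) * s + ν i) *
        ((t + τ • (Pi.single j (1 : ℝ) : Fin n → ℝ)) i : ℝ))) (-z * cexp (-∑ i, ((N i : ℂ) * s + ν i) * t i)) 0 := by
      have b1 : ∀ τ : ℝ, -∑ i, ((N i : ℂ) * s + ν i) * ((t + τ • (Pi.single j (1 : ℝ) : Fin n → ℝ)) i : ℝ) =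
          -(∑ i, ((N i : ℂ) * s + ν i) * t i) + (τ : ℂ) * (-z) := fun τ => by
        have : ∑ i, ((N i : ℂ) * s + ν i) * ((t + τ • (Pi.single j (1 : ℝ) : Fin n → ℝ)) i : ℝ) =
            ∑ i, (((N i : ℂ) * s + ν i) * t i + (Pi.single j ((τ : ℂ) * z) : Fin n → ℂ) i) := by
          refine Finset.sum_congr rfl fun i _ => ?_
          by_cases h : i = j
          · subst h; simp [hz]; ring
          · rw [hoff τ i h]; simp [Pi.single_eq_of_ne h]
        rw [this, Finset.sum_add_distrib, Finset.sum_pi_single']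
        simp; ring
      simp only [b1]
      have b2 : HasDerivAt (fun τ : ℝ => -(∑ i, ((N i : ℂ) * s + ν i) * t i) + (τ : ℂ) * (-z))
          (-z) 0 := by
        simpa using ((hasDerivAt_id (0 : ℝ)).ofReal_comp.mul_const (-z)).const_add
          (-(∑ i, ((N i : ℂ) * s + ν i) * t i))
      have b3 := b2.cexp
      simpa [mul_comm] using b3
    have d3 : HasDerivAt (fun τ : ℝ => pcp (f (ex (t + τ • Pi.single j 1))) (s + (m + 1 : ℕ)))
        (((-(ex t j) * pd j f (ex t) : ℝ) : ℂ) * ((s + m + 1) * pcp (f (ex t)) (s + m))) 0 := by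
      have c1 := line_ex (hf.diffAt hcube) j
      have c2 := hasDerivAt_pcp hsm (f (ex (t + (0 : ℝ) • Pi.single j (1 : ℝ))))
      have c3 := c2.scomp (0 : ℝ) c1
      have e : s + ((m + 1 : ℕ) : ℂ) = s + m + 1 := by push_cast; ring
      rw [e]
      simpa [Function.comp_def] using c3
    have d4 : HasDerivAt (fun τ : ℝ => (B (ex (t + τ • Pi.single j 1)) : ℂ))
        ((-(ex t j) * pd j B (ex t) : ℝ) : ℂ) 0 := (line_ex (hB.diffAt hcube) j).ofReal_comp
    have d5 := d1.mul ((d2.mul d3).mul d4)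
    refine d5.congr_deriv ?_
    simp only [zero_smul, add_zero, Pi.mul_apply]
    have e2 : pcp (f (ex t)) (s + (m + 1 : ℕ)) = pcp (f (ex t)) (s + m) * (f (ex t) : ℂ) := by
      rw [← pcp_add_one hsm]; congr 1; push_cast; ring
    rw [e2]
    by_cases h : t ∈ posOrthant n
    · have h1 : 0 ≤ 1 - Real.exp (-t j) := by
        have := Real.exp_le_one_iff.2 (neg_nonpos.2 hj); linarith
      rw [hg', Set.indicator_of_mem h, max_eq_left h1]
      simp only [mint, hν'exp, e2, melB1, melB2]
      have e3 : ex t j = Real.exp (-t j) := rfl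
      simp only [e3, hz]
      push_cast
      ring
    · have h1 : t j = 0 := by
        by_contra h0
        refine h fun i => ?_
        by_cases hi : i = j
        · rw [hi]; exact lt_of_le_of_ne hj (Ne.symm h0)
        · exact hpos i hi
      rw [hg', Set.indicator_of_notMem h, h1]; simp
  have hgi : Integrable g := by
    have h0 : g = (posOrthant n).indicator fun t =>
        (((max (1 - Real.exp (-t j)) 0) ^ 2 : ℝ) : ℂ) * mint N ν f (m + 1) B s t := by
      funext t
      by_cases h : t ∈ posOrthant n
      · rw [Set.indicator_of_mem h]; simp only [hg]; rw [if_pos fun i _ => h i]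
      · rw [Set.indicator_of_notMem h]; simp only [hg]
        split_ifs with h2
        · have h3 : t j ≤ 0 := by
            by_contra h0
            refine h fun i => ?_
            by_cases hi : i = j
            · rw [hi]; exact not_le.1 h0
            · exact h2 i hi
          have : 1 ≤ Real.exp (-t j) := Real.one_le_exp (by linarith)
          rw [max_eq_right (by linarith)]; simp
        · rfl
    rw [h0, integrable_indicator_iff (measurable_posOrthant n)]
    refine Integrable.bdd_mul (c := 1) i1 (Continuous.aestronglyMeasurable (by fun_prop)) ?_
    refine Eventually.of_forall fun t => ?_
    rw [Complex.norm_real, norm_pow, Real.norm_of_nonneg (le_max_right _ _)]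
    refine pow_le_one₀ (le_max_right _ _) (max_le ?_ zero_le_one)
    linarith [Real.exp_pos (-t j)]
  have i12 : IntegrableOn (fun t => -z * mint N ν f (m + 1) B s t +
      mint N ν' f m (melB1 ν f B m j) s t) (posOrthant n) := (i1.const_mul (-z)).add i2
  have hg'i : Integrable g' := by
    rw [hg', integrable_indicator_iff (measurable_posOrthant n)]
    exact i12.add (i3.const_mul s)
  have key := integral_bilinear_hasLineDerivAt_right_eq_neg_left_of_integrable
    (μ := (volume : Measure (Fin n → ℝ))) (f := fun _ => (1 : ℂ)) (f' := fun _ => 0) (g := g)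
    (g' := g') (v := Pi.single j 1) (B := ContinuousLinearMap.mul ℝ ℂ) (by simp)
    (by simpa using hg'i) (by simpa using hgi)
    (fun x _ => by unfold HasLineDerivAt; exact hasDerivAt_const _ _) fun x _ => hder x
  simp only [ContinuousLinearMap.mul_apply', one_mul, zero_mul, integral_zero, neg_zero] at key
  rw [hg', integral_indicator (measurable_posOrthant n), integral_add i12 (i3.const_mul s),
    integral_add (i1.const_mul (-z)) i2, integral_const_mul, integral_const_mul] at key
  unfold Mel
  linear_combination -key

/-- The Mellin integral extends meromorphically to `Re s > -R`, if `m` is large. -/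
theorem Mel_mero (hf : CS f) (N : Fin n → ℕ) {R : ℝ} : ∀ (K : ℕ) (ν : Fin n → ℕ) (m : ℕ)
    (B : (Fin n → ℝ) → ℝ), CS B → (∀ i, 1 ≤ ν i) → R + K ≤ m →
    ∑ i, (⌈(N i : ℝ) * R⌉₊ - ν i) ≤ K →
    ∃ E : ℂ → ℂ, MeromorphicOn E {s | -R < s.re} ∧ ∀ s : ℂ, -R < s.re →
      (∀ i, 0 < (N i : ℝ) * s.re + ν i) → E s = Mel N ν f m B s := by
  intro K
  induction K with
  | zero =>
    intro ν m B hB hν hm hsum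
    refine ⟨Mel N ν f m B, ?_, fun _ _ _ => rfl⟩
    have hsub : {s : ℂ | -R < s.re} ⊆ melDom N ν m := fun s hs => by
      simp only [Set.mem_ofPred_eq] at hs
      refine ⟨by simp at hm ⊢; linarith, fun i => ?_⟩
      have h0 : ⌈(N i : ℝ) * R⌉₊ - ν i = 0 :=
        (Finset.sum_eq_zero_iff.1 (Nat.le_zero.1 hsum)) i (Finset.mem_univ i)
      have h1 : (N i : ℝ) * R ≤ ν i :=
        (Nat.le_ceil _).trans (by exact_mod_cast Nat.sub_eq_zero_iff_le.1 h0)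
      have h2 : (1 : ℝ) ≤ ν i := by exact_mod_cast hν i
      rcases Nat.eq_zero_or_pos (N i) with h | h
      · rw [h, Nat.cast_zero, zero_mul, zero_add]; linarith
      · have : (0 : ℝ) < N i := by exact_mod_cast h
        nlinarith
    intro s hs
    exact ((Mel_diff hf hB m).analyticAt
      ((isOpen_melDom N ν m).mem_nhds (hsub hs))).meromorphicAt
  | succ K ih =>
    intro ν m B hB hν hm hsum
    by_cases hK : ∑ i, (⌈(N i : ℝ) * R⌉₊ - ν i) ≤ K
    · exact ih ν m B hB hν (by push_cast at hm; linarith) hK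
    have hex : ∃ j, ⌈(N j : ℝ) * R⌉₊ - ν j ≠ 0 := by
      by_contra! h
      exact hK (by simp [h])
    obtain ⟨j, hj⟩ := hex
    by_cases hm0 : m = 0
    · -- then `R < 0` and nothing has to be shifted
      exfalso; apply hj
      subst hm0
      push_cast at hm
      have hR : R ≤ 0 := by
        have : (0 : ℝ) ≤ K := Nat.cast_nonneg K
        linarith
      have : (N j : ℝ) * R ≤ 0 := mul_nonpos_of_nonneg_of_nonpos (Nat.cast_nonneg _) hR
      rw [Nat.ceil_eq_zero.2 this]; simp
    obtain ⟨m, rfl⟩ := Nat.exists_eq_succ_of_ne_zero hm0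
    set ν' := Function.update ν j (ν j + 1) with hν'
    have hν1 : ∀ i, 1 ≤ ν' i := fun i => by
      by_cases h : i = j
      · subst h; simp [hν']
      · simpa [hν', Function.update_of_ne h] using hν i
    have hm' : R + K ≤ m := by push_cast at hm; linarith
    have hsum' : ∑ i, (⌈(N i : ℝ) * R⌉₊ - ν' i) ≤ K := by
      have : ∑ i, (⌈(N i : ℝ) * R⌉₊ - ν' i) < ∑ i, (⌈(N i : ℝ) * R⌉₊ - ν i) := by
        refine Finset.sum_lt_sum (fun i _ => ?_) ⟨j, Finset.mem_univ j, ?_⟩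
        · by_cases h : i = j
          · subst h; simp only [hν', Function.update_self]; omega
          · simp [hν', Function.update_of_ne h]
        · simp only [hν', Function.update_self]; omega
      omega
    obtain ⟨E1, hE1, h1⟩ := ih ν' m _ (melB1_cs (ν := ν) hf hB m j) hν1 hm' hsum'
    obtain ⟨E2, hE2, h2⟩ := ih ν' m _ (melB2_cs (N := N) hf hB j) hν1 hm' hsum'
    refine ⟨fun s => (E1 s + s * E2 s) / ((N j : ℂ) * s + ν j), ?_, fun s hs hc => ?_⟩
    · intro s hs
      have a1 : MeromorphicAt (fun s : ℂ => s) s := analyticAt_id.meromorphicAt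
      have a2 : MeromorphicAt (fun s : ℂ => (N j : ℂ) * s + ν j) s := by
        have : Differentiable ℂ (fun s : ℂ => (N j : ℂ) * s + ν j) := by fun_prop
        exact (this.analyticAt s).meromorphicAt
      exact ((hE1 s hs).add (a1.mul (hE2 s hs))).div a2
    · have hdom : s ∈ melDom N ν m := ⟨by
        have : (0 : ℝ) ≤ K := Nat.cast_nonneg K
        simp; linarith, hc⟩
      have hc' : ∀ i, 0 < (N i : ℝ) * s.re + ν' i := fun i => by
        have := hc i
        by_cases h : i = j
        · subst h; simp [hν']; linarith
        · simpa [hν', Function.update_of_ne h] using this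
      have hz : (N j : ℂ) * s + ν j ≠ 0 := fun h => by
        have := congrArg Complex.re h
        simp at this
        linarith [hc j]
      beta_reduce
      rw [h1 s hs hc', h2 s hs hc', ← Mel_step hf hB j hdom, mul_div_cancel_left₀ _ hz]

end mellin

/-! ### Subdivision of simplicial cones -/

section cones
variable {n : ℕ}

/-- The real matrix with rows `η j`. -/
def rowM (η : Fin n → Fin n → ℕ) : Matrix (Fin n) (Fin n) ℝ := Matrix.of fun i j => (η i j : ℝ)

/-- The linear parametrization `t ↦ ∑ⱼ tⱼ ηⱼ` of the cone spanned by the vectors `ηⱼ`. -/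
def eu (η : Fin n → Fin n → ℕ) (t : Fin n → ℝ) : Fin n → ℝ := fun i => ∑ j, t j * η j i

/-- `eu η` as a linear map. -/
def euL (η : Fin n → Fin n → ℕ) : (Fin n → ℝ) →ₗ[ℝ] (Fin n → ℝ) := Matrix.toLin' (rowM η).transpose

lemma euL_apply (η : Fin n → Fin n → ℕ) (t : Fin n → ℝ) : euL η t = eu η t := by
  ext i
  simp [euL, eu, Matrix.toLin'_apply, Matrix.mulVec, dotProduct, rowM, mul_comm]

lemma det_euL (η : Fin n → Fin n → ℕ) : LinearMap.det (euL η) = (rowM η).det := by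
  rw [euL, LinearMap.det_toLin', Matrix.det_transpose]

/-- The `i`-th row is replaced by `a ηᵢ + b ηⱼ`. -/
def rowUpd (η : Fin n → Fin n → ℕ) (i j : Fin n) (a b : ℕ) : Fin n → Fin n → ℕ :=
  Function.update η i (a • η i + b • η j)

lemma rowUpd_self (η : Fin n → Fin n → ℕ) (i j : Fin n) (a b : ℕ) :
    rowUpd η i j a b i = a • η i + b • η j := Function.update_self ..

lemma rowUpd_ne (η : Fin n → Fin n → ℕ) (i j : Fin n) (a b : ℕ) {k : Fin n} (h : k ≠ i) :
    rowUpd η i j a b k = η k := Function.update_of_ne h _ _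

lemma det_rowUpd (η : Fin n → Fin n → ℕ) {i j : Fin n} (h : i ≠ j) (a b : ℕ) :
    (rowM (rowUpd η i j a b)).det = a * (rowM η).det := by
  have : rowM (rowUpd η i j a b) =
      (rowM η).updateRow i ((a : ℝ) • (rowM η).row i + (b : ℝ) • (rowM η).row j) := by
    ext k l
    by_cases hk : k = i
    · subst hk
      rw [Matrix.updateRow_self]
      simp [rowM, rowUpd_self]
    · rw [Matrix.updateRow_ne hk]
      simp [rowM, rowUpd_ne _ _ _ _ _ hk]
  rw [this, Matrix.det_updateRow_add, Matrix.det_updateRow_smul, Matrix.det_updateRow_smul,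
    show (rowM η).updateRow i ((rowM η).row i) = rowM η from Matrix.updateRow_eq_self _ _]
  have h0 : ((rowM η).updateRow i ((rowM η).row j)).det = 0 :=
    Matrix.det_zero_of_row_eq h (by rw [Matrix.updateRow_self, Matrix.updateRow_ne h.symm]; rfl)
  rw [h0, mul_zero, add_zero]

/-- The pairing of an integer covector with a row. -/
def zp (d : Fin n → ℤ) (v : Fin n → ℕ) : ℤ := ∑ k, d k * (v k : ℤ)

lemma zp_comb (d : Fin n → ℤ) (v w : Fin n → ℕ) (a b : ℕ) :
    zp d (a • v + b • w) = a * zp d v + b * zp d w := by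
  simp only [zp, Finset.mul_sum, ← Finset.sum_add_distrib]
  refine Finset.sum_congr rfl fun k _ => ?_
  simp; ring

/-- The covector `d` has a constant sign on the cone spanned by the rows of `η`. -/
def ConstSign (d : Fin n → ℤ) (η : Fin n → Fin n → ℕ) : Prop :=
  (∀ i, 0 ≤ zp d (η i)) ∨ ∀ i, zp d (η i) ≤ 0

lemma ConstSign.rowUpd {d : Fin n → ℤ} {η : Fin n → Fin n → ℕ} (h : ConstSign d η) (i j : Fin n)
    (a b : ℕ) : ConstSign d (rowUpd η i j a b) := by
  rcases h with h | h
  · refine Or.inl fun k => ?_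
    by_cases hk : k = i
    · rw [hk, rowUpd_self, zp_comb]
      have := h i; have := h j; positivity
    · rw [rowUpd_ne _ _ _ _ _ hk]; exact h k
  · refine Or.inr fun k => ?_
    by_cases hk : k = i
    · rw [hk, rowUpd_self, zp_comb]
      have h1 := mul_nonpos_of_nonneg_of_nonpos (Int.natCast_nonneg a) (h i)
      have h2 := mul_nonpos_of_nonneg_of_nonpos (Int.natCast_nonneg b) (h j)
      linarith
    · rw [rowUpd_ne _ _ _ _ _ hk]; exact h k

/-- A property of simplicial cones holds for all cones as soon as it holds for cones adapted to
finitely many given covectors and is compatible with star subdivisions of edges. -/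
theorem cone_induction : ∀ (L : List (Fin n → ℤ)) (P : (Fin n → Fin n → ℕ) → Prop),
    (∀ η, (rowM η).det ≠ 0 → (∀ d ∈ L, ConstSign d η) → P η) →
    (∀ η, (rowM η).det ≠ 0 → ∀ i j, i ≠ j → ∀ a b : ℕ, 0 < a → 0 < b →
      P (rowUpd η i j a b) → P (rowUpd η j i b a) → P η) →
    ∀ η, (rowM η).det ≠ 0 → P η := by
  intro L
  induction L with
  | nil => intro P h0 _ η hη; exact h0 η hη (by simp)
  | cons d L ih =>
    intro P h0 hs
    refine ih P ?_ hs
    -- the number of rows on which `d` does not vanish decreases under subdivision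
    suffices H : ∀ N, ∀ η, (rowM η).det ≠ 0 → (∀ d ∈ L, ConstSign d η) →
        (Finset.univ.filter fun i => zp d (η i) ≠ 0).card ≤ N → P η from
      fun η h1 h2 => H _ η h1 h2 le_rfl
    intro N
    induction N with
    | zero =>
      intro η h1 h2 h3
      refine h0 η h1 fun d' hd' => ?_
      rcases List.mem_cons.1 hd' with h | h
      · subst h
        have : ∀ i, zp d' (η i) = 0 := fun i => by
          by_contra h
          have : i ∈ Finset.univ.filter fun i => zp d' (η i) ≠ 0 :=
            Finset.mem_filter.2 ⟨Finset.mem_univ i, h⟩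
          have := Finset.card_pos.2 ⟨i, this⟩
          omega
        exact Or.inl fun i => (this i).ge
      · exact h2 d' h
    | succ N ihN =>
      intro η h1 h2 h3
      by_cases had : ConstSign d η
      · refine h0 η h1 fun d' hd' => ?_
        rcases List.mem_cons.1 hd' with h | h
        · subst h; exact had
        · exact h2 d' h
      simp only [ConstSign, not_or, not_forall, not_le] at had
      obtain ⟨⟨j, hj⟩, ⟨i, hi⟩⟩ := had
      have hij : i ≠ j := fun h => by subst h; omega
      have key : ∀ (i j : Fin n) (a b : ℕ), 0 < a → i ≠ j → zp d (η i) ≠ 0 →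
          (a : ℤ) * zp d (η i) + b * zp d (η j) = 0 → P (rowUpd η i j a b) := by
        intro i j a b ha hij hi h0'
        refine ihN _ ?_ (fun d' hd' => (h2 d' hd').rowUpd i j a b) ?_
        · rw [det_rowUpd η hij]
          exact mul_ne_zero (by exact_mod_cast ha.ne') h1
        · have : (Finset.univ.filter fun k => zp d (rowUpd η i j a b k) ≠ 0) ⊂
              Finset.univ.filter fun k => zp d (η k) ≠ 0 := by
            rw [Finset.ssubset_iff_of_subset]
            · refine ⟨i, by simpa using hi, ?_⟩
              rw [Finset.mem_filter, not_and, not_not]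
              exact fun _ => by rw [rowUpd_self, zp_comb, h0']
            · intro k hk
              simp only [Finset.mem_filter, Finset.mem_univ, true_and] at hk ⊢
              by_cases hki : k = i
              · rw [hki]; exact hi
              · rwa [rowUpd_ne _ _ _ _ _ hki] at hk
          have := Finset.card_lt_card this
          omega
      refine hs η h1 i j hij (zp d (η j)).natAbs (zp d (η i)).natAbs (by omega) (by omega)
        (key i j _ _ (by omega) hij hi.ne' ?_) (key j i _ _ (by omega) hij.symm hj.ne ?_)
      · rw [Int.natCast_natAbs, Int.natCast_natAbs, abs_of_neg hj, abs_of_pos hi]; ring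
      · rw [Int.natCast_natAbs, Int.natCast_natAbs, abs_of_neg hj, abs_of_pos hi]; ring

/-- The open cone spanned by the rows of `η`. -/
def ocone (η : Fin n → Fin n → ℕ) : Set (Fin n → ℝ) := eu η '' posOrthant n

/-- The change of coordinates between a cone and a piece of its subdivision. -/
lemma eu_rowUpd (η : Fin n → Fin n → ℕ) {i j : Fin n} (a b : ℕ) (t : Fin n → ℝ) :
    eu (rowUpd η i j a b) t =
      eu η (t + Pi.single i ((a - 1) * t i) + Pi.single j (b * t i)) := by
  ext k
  simp only [eu, Pi.add_apply, add_mul, Finset.sum_add_distrib]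
  have e1 : ∀ (i : Fin n) (x : ℝ), ∑ l, (Pi.single i x : Fin n → ℝ) l * (η l k : ℝ) = x * η i k := by
    intro i x
    rw [Finset.sum_eq_single i]
    · rw [Pi.single_eq_same]
    · intro l _ hl; rw [Pi.single_eq_of_ne hl, zero_mul]
    · simp
  rw [e1, e1]
  have : ∀ l, t l * (rowUpd η i j a b l k : ℝ) = t l * η l k +
      (Pi.single i (t i * ((a - 1) * η i k + b * η j k)) : Fin n → ℝ) l := by
    intro l
    by_cases hl : l = i
    · rw [hl, rowUpd_self, Pi.single_eq_same]; simp; ring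
    · rw [rowUpd_ne _ _ _ _ _ hl, Pi.single_eq_of_ne hl, add_zero]
  rw [Finset.sum_congr rfl fun l _ => this l, Finset.sum_add_distrib,
    Finset.sum_pi_single']
  simp; ring

lemma eu_preimage (η : Fin n → Fin n → ℕ) {i j : Fin n} (h : i ≠ j) {a b : ℕ} (ha : 0 < a)
    (t : Fin n → ℝ) : eu (rowUpd η i j a b)
      (t + Pi.single i (t i / a - t i) + Pi.single j (-(b * t i / a))) = eu η t := by
  have ha' : (a : ℝ) ≠ 0 := by exact_mod_cast ha.ne'
  rw [eu_rowUpd η]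
  congr 1
  ext k
  by_cases hk : k = i
  · subst hk
    simp [Pi.single_eq_of_ne h]
    field_simp; ring
  · by_cases hk' : k = j
    · subst hk'
      simp [Pi.single_eq_of_ne hk, Pi.single_eq_of_ne h]
      field_simp; ring
    · simp [Pi.single_eq_of_ne hk, Pi.single_eq_of_ne hk']

lemma ocone_rowUpd (η : Fin n → Fin n → ℕ) {i j : Fin n} (h : i ≠ j) {a b : ℕ} (ha : 0 < a) :
    ocone (rowUpd η i j a b) = eu η '' {t | t ∈ posOrthant n ∧ b * t i < a * t j} := by
  have ha' : (0 : ℝ) < a := by exact_mod_cast ha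
  ext u
  constructor
  · rintro ⟨t, ht, rfl⟩
    refine ⟨_, ?_, (eu_rowUpd η a b t).symm⟩
    have hi : (t + Pi.single i ((a - 1) * t i) + Pi.single j (b * t i) : Fin n → ℝ) i = a * t i := by
      simp [Pi.single_eq_of_ne h]; ring
    have hj : (t + Pi.single i ((a - 1) * t i) + Pi.single j (b * t i) : Fin n → ℝ) j =
        t j + b * t i := by
      simp [Pi.single_eq_of_ne h.symm]
    have hb : (0 : ℝ) ≤ b := Nat.cast_nonneg b
    refine ⟨fun k => ?_, ?_⟩
    · by_cases hk : k = i
      · rw [hk, hi]; exact mul_pos ha' (ht i)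
      · by_cases hk' : k = j
        · rw [hk', hj]; have := ht i; have := ht j; positivity
        · simpa [Pi.single_eq_of_ne hk, Pi.single_eq_of_ne hk'] using ht k
    · rw [hi, hj]
      have := mul_pos ha' (ht j)
      nlinarith
  · rintro ⟨t, ⟨ht, hlt⟩, rfl⟩
    refine ⟨_, ?_, eu_preimage η h ha t⟩
    intro k
    by_cases hk : k = i
    · rw [hk]; simp [Pi.single_eq_of_ne h]; exact div_pos (ht i) ha'
    · by_cases hk' : k = j
      · rw [hk']; simp [Pi.single_eq_of_ne h.symm]
        rw [div_lt_iff₀ ha']; linarith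
      · simpa [Pi.single_eq_of_ne hk, Pi.single_eq_of_ne hk'] using ht k

/-- A closed cone is the union of the two pieces of its subdivision. -/
lemma eu_split (η : Fin n → Fin n → ℕ) {i j : Fin n} (h : i ≠ j) {a b : ℕ} (ha : 0 < a)
    (hb : 0 < b) {t : Fin n → ℝ} (ht : ∀ k, 0 ≤ t k) :
    (∃ t', (∀ k, 0 ≤ t' k) ∧ eu (rowUpd η i j a b) t' = eu η t) ∨
      ∃ t', (∀ k, 0 ≤ t' k) ∧ eu (rowUpd η j i b a) t' = eu η t := by
  have key : ∀ (i j : Fin n) (a b : ℕ), i ≠ j → 0 < a → b * t i ≤ a * t j →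
      ∃ t', (∀ k, 0 ≤ t' k) ∧ eu (rowUpd η i j a b) t' = eu η t := by
    intro i j a b h ha hle
    have ha' : (0 : ℝ) < a := by exact_mod_cast ha
    refine ⟨_, fun k => ?_, eu_preimage η h ha t⟩
    by_cases hk : k = i
    · rw [hk]; simp [Pi.single_eq_of_ne h]; exact div_nonneg (ht i) ha'.le
    · by_cases hk' : k = j
      · rw [hk']; simp [Pi.single_eq_of_ne h.symm]
        rw [div_le_iff₀ ha']; linarith
      · simpa [Pi.single_eq_of_ne hk, Pi.single_eq_of_ne hk'] using ht k
  rcases le_total (b * t i) (a * t j) with h1 | h1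
  · exact Or.inl (key i j a b h ha h1)
  · exact Or.inr (key j i b a h.symm hb h1)

lemma eu_injective {η : Fin n → Fin n → ℕ} (hη : (rowM η).det ≠ 0) :
    Function.Injective (eu η) := by
  have h1 : IsUnit (LinearMap.det (euL η)) := by rw [det_euL]; exact hη.isUnit
  have h2 := (LinearEquiv.ofIsUnitDet (v := Pi.basisFun ℝ (Fin n)) (v' := Pi.basisFun ℝ (Fin n))
    (f := euL η) (by rwa [LinearMap.det_toMatrix])).injective
  intro x y hxy
  refine h2 ?_
  simpa [euL_apply] using hxy

lemma measurableSet_image_eu {η : Fin n → Fin n → ℕ} (hη : (rowM η).det ≠ 0)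
    {s : Set (Fin n → ℝ)} (hs : MeasurableSet s) : MeasurableSet (eu η '' s) := by
  have hc : Continuous (eu η) := by
    have : eu η = euL η := funext fun t => (euL_apply η t).symm
    rw [this]; exact LinearMap.continuous_of_finiteDimensional _
  exact hs.image_of_measurable_injOn hc.measurable (eu_injective hη).injOn

lemma measurableSet_ocone {η : Fin n → Fin n → ℕ} (hη : (rowM η).det ≠ 0) :
    MeasurableSet (ocone η) := measurableSet_image_eu hη (measurable_posOrthant n)

/-- The integral over an open cone is the sum of those over the pieces of its subdivision. -/
lemma integral_ocone_split {η : Fin n → Fin n → ℕ} (hη : (rowM η).det ≠ 0) {i j : Fin n}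
    (h : i ≠ j) {a b : ℕ} (ha : 0 < a) (hb : 0 < b) {g : (Fin n → ℝ) → ℂ} (hg : Integrable g) :
    ∫ u in ocone η, g u =
      (∫ u in ocone (rowUpd η i j a b), g u) + ∫ u in ocone (rowUpd η j i b a), g u := by
  have m1 : MeasurableSet (ocone (rowUpd η j i b a)) := measurableSet_ocone (by
    rw [det_rowUpd η h.symm]; exact mul_ne_zero (by exact_mod_cast hb.ne') hη)
  rw [← setIntegral_union _ m1 hg.integrableOn hg.integrableOn]
  · refine setIntegral_congr_set ?_
    -- the two pieces miss only a hyperplane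
    set E : Submodule ℝ (Fin n → ℝ) := LinearMap.ker
      ((b : ℝ) • LinearMap.proj (R := ℝ) (φ := fun _ : Fin n => ℝ) i -
        (a : ℝ) • LinearMap.proj (R := ℝ) (φ := fun _ : Fin n => ℝ) j) with hE
    have hE1 : ∀ t : Fin n → ℝ, t ∈ E ↔ b * t i = a * t j := fun t => by
      rw [hE, LinearMap.mem_ker]; simp [sub_eq_zero]
    have hET : E ≠ ⊤ := fun hT => by
      have : (Pi.single i 1 : Fin n → ℝ) ∈ E := hT ▸ Submodule.mem_top
      rw [hE1] at this
      simp [Pi.single_eq_of_ne h.symm] at this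
      omega
    have hnull : volume (eu η '' (E : Set (Fin n → ℝ))) = 0 := by
      have : eu η = euL η := funext fun t => (euL_apply η t).symm
      rw [this, Measure.addHaar_image_linearMap, Measure.addHaar_submodule _ _ hET, mul_zero]
    rw [ocone_rowUpd η h ha, ocone_rowUpd η h.symm hb, ← Set.image_union, ocone]
    refine (ae_eq_set.2 ⟨measure_mono_null ?_ hnull, measure_mono_null ?_ hnull⟩)
    · rintro _ ⟨⟨t, ht, rfl⟩, hn⟩
      refine ⟨t, ?_, rfl⟩
      rw [SetLike.mem_coe, hE1]
      by_contra hne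
      refine hn ⟨t, ?_, rfl⟩
      rcases lt_or_gt_of_ne hne with h1 | h1
      · exact Or.inl ⟨ht, h1⟩
      · exact Or.inr ⟨ht, h1⟩
    · rintro _ ⟨⟨t, ht, rfl⟩, hn⟩
      refine absurd ⟨t, ?_, rfl⟩ hn
      rcases ht with h1 | h1
      · exact h1.1
      · exact h1.1
  · rw [ocone_rowUpd η h ha, ocone_rowUpd η h.symm hb]
    rw [Set.disjoint_image_iff (eu_injective hη), Set.disjoint_left]
    rintro t ⟨_, h1⟩ ⟨_, h2⟩
    exact lt_asymm h1 h2

lemma integral_ocone {η : Fin n → Fin n → ℕ} (hη : (rowM η).det ≠ 0) (g : (Fin n → ℝ) → ℂ) :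
    ∫ u in ocone η, g u = |(rowM η).det| • ∫ t in posOrthant n, g (eu η t) := by
  have hd : ∀ t ∈ posOrthant n, HasFDerivWithinAt (eu η) (LinearMap.toContinuousLinearMap (euL η))
      (posOrthant n) t := fun t _ => by
    have : eu η = LinearMap.toContinuousLinearMap (euL η) := funext fun t => (euL_apply η t).symm
    rw [this]
    exact (ContinuousLinearMap.hasFDerivAt _).hasFDerivWithinAt
  rw [ocone, integral_image_eq_integral_abs_det_fderiv_smul volume (measurable_posOrthant n) hd
    (eu_injective hη).injOn g, integral_smul]
  congr 1
  rw [← det_euL]; rfl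

end cones

/-! ### Toric charts -/

section charts
variable {n : ℕ}

/-- The pairing of two exponent vectors. -/
def np (v w : Fin n → ℕ) : ℕ := ∑ i, v i * w i

/-- The monomial map `x = y^η`, which is `eu η` in logarithmic coordinates. -/
def xm (η : Fin n → Fin n → ℕ) (y : Fin n → ℝ) : Fin n → ℝ := fun i => ∏ j, y j ^ η j i

lemma dn_eu (η : Fin n → Fin n → ℕ) (v : Fin n → ℕ) (t : Fin n → ℝ) :
    dn v (eu η t) = ∑ j, (np v (η j) : ℝ) * t j := by
  simp only [dn, eu, np, Finset.mul_sum, Nat.cast_sum, Nat.cast_mul, Finset.sum_mul]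
  rw [Finset.sum_comm]
  exact Finset.sum_congr rfl fun j _ => Finset.sum_congr rfl fun i _ => by ring

lemma exp_neg_sum (a : Fin n → ℕ) (t : Fin n → ℝ) :
    Real.exp (-∑ j, (a j : ℝ) * t j) = ∏ j, ex t j ^ a j := by
  rw [← Finset.sum_neg_distrib, Real.exp_sum]
  refine Finset.prod_congr rfl fun j _ => ?_
  rw [ex, ← Real.exp_nat_mul]; congr 1; ring

lemma ex_eu (η : Fin n → Fin n → ℕ) (t : Fin n → ℝ) : ex (eu η t) = xm η (ex t) := by
  funext i
  rw [xm, ← exp_neg_sum (fun j => η j i) t, ex, eu]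
  congr 2
  exact Finset.sum_congr rfl fun j _ => by ring

/-- Sums of monomials with smooth coefficients, in logarithmic coordinates. -/
def ps (V : Finset (Fin n → ℕ)) (h : (Fin n → ℕ) → (Fin n → ℝ) → ℝ) (u : Fin n → ℝ) : ℝ :=
  ∑ v ∈ V, Real.exp (-dn v u) * h v (ex u)

lemma contDiff_dn (v : Fin n → ℕ) : ContDiff ℝ (⊤ : ℕ∞) (dn v) := by
  unfold dn; fun_prop

lemma ps_contDiff {V : Finset (Fin n → ℕ)} {h : (Fin n → ℕ) → (Fin n → ℝ) → ℝ}
    (hh : ∀ v ∈ V, ContDiff ℝ (⊤ : ℕ∞) (h v)) : ContDiff ℝ (⊤ : ℕ∞) (ps V h) :=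
  ContDiff.sum fun v hv => ((contDiff_dn v).neg.exp).mul ((hh v hv).comp contDiff_ex)

/-- The coefficients of the logarithmic derivative of a sum of monomials. -/
def psd (h : (Fin n → ℕ) → (Fin n → ℝ) → ℝ) (i : Fin n) (v : Fin n → ℕ) (x : Fin n → ℝ) : ℝ :=
  -(v i * h v x + x i * pd i (h v) x)

lemma pd_contDiff {B : (Fin n → ℝ) → ℝ} (h : ContDiff ℝ (⊤ : ℕ∞) B) (i : Fin n) :
    ContDiff ℝ (⊤ : ℕ∞) (pd i B) :=
  (h.fderiv_right (m := (⊤ : ℕ∞)) (by simp)).clm_apply contDiff_const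

lemma psd_contDiff {V : Finset (Fin n → ℕ)} {h : (Fin n → ℕ) → (Fin n → ℝ) → ℝ}
    (hh : ∀ v ∈ V, ContDiff ℝ (⊤ : ℕ∞) (h v)) (i : Fin n) :
    ∀ v ∈ V, ContDiff ℝ (⊤ : ℕ∞) (psd h i v) := fun v hv =>
  ((contDiff_const.mul (hh v hv)).add
    ((contDiff_apply ℝ ℝ i).mul (pd_contDiff (hh v hv) i))).neg

lemma pd_ps {V : Finset (Fin n → ℕ)} {h : (Fin n → ℕ) → (Fin n → ℝ) → ℝ}
    (hh : ∀ v ∈ V, ContDiff ℝ (⊤ : ℕ∞) (h v)) (i : Fin n) : pd i (ps V h) = ps V (psd h i) := by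
  funext u
  have d1 : ∀ v ∈ V, Differentiable ℝ (fun u => Real.exp (-dn v u)) := fun v _ =>
    (differentiable_dn v).neg.exp
  have d0 : ∀ v ∈ V, Differentiable ℝ (h v) := fun v hv => (hh v hv).differentiable (by simp)
  have d2 : ∀ v ∈ V, Differentiable ℝ (fun u => h v (ex u)) := fun v hv =>
    (d0 v hv).comp (contDiff_ex.differentiable (by simp))
  have e1 : pd i (ps V h) u = ∑ v ∈ V, pd i (fun u => Real.exp (-dn v u) * h v (ex u)) u := by
    simp only [pd]
    have : ps V h = fun u => ∑ v ∈ V, Real.exp (-dn v u) * h v (ex u) := rfl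
    rw [this, fderiv_fun_sum (A := fun v u => Real.exp (-dn v u) * h v (ex u))
      fun v hv => ((d1 v hv).mul (d2 v hv)) u]
    simp
  rw [e1, ps]
  refine Finset.sum_congr rfl fun v hv => ?_
  rw [pd_mul (B := fun u => Real.exp (-dn v u)) (B' := fun u => h v (ex u)) (d1 v hv) (d2 v hv),
    pd_exp_dn, pd_comp_ex (d0 v hv)]
  simp only [psd, pd]; ring

/-- A simplicial cone on which one monomial `v₀` of `V` is minimal. -/
structure Chart (V : Finset (Fin n → ℕ)) where
  η : Fin n → Fin n → ℕ
  det : (rowM η).det ≠ 0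
  N : Fin n → ℕ
  v0 : Fin n → ℕ
  v0_mem : v0 ∈ V
  N_eq : ∀ j, np v0 (η j) = N j
  N_le : ∀ v ∈ V, ∀ j, N j ≤ np v (η j)

/-- All differences of elements of `V`. -/
def diffs (V : Finset (Fin n → ℕ)) : List (Fin n → ℤ) :=
  ((V ×ˢ V).image fun q => fun k => (q.1 k : ℤ) - q.2 k).toList

lemma zp_diff (v v' w : Fin n → ℕ) :
    zp (fun k => (v k : ℤ) - v' k) w = (np v w : ℤ) - np v' w := by
  simp only [zp, np, Nat.cast_sum, Nat.cast_mul, ← Finset.sum_sub_distrib]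
  exact Finset.sum_congr rfl fun k _ => by ring

lemma exists_chart {V : Finset (Fin n → ℕ)} (hV : V.Nonempty) {η : Fin n → Fin n → ℕ}
    (hη : (rowM η).det ≠ 0) (had : ∀ d ∈ diffs V, ConstSign d η) : ∃ C : Chart V, C.η = η := by
  obtain ⟨v0, hv0, hmin⟩ := V.exists_min_image (fun v => ∑ j, np v (η j)) hV
  refine ⟨⟨η, hη, fun j => np v0 (η j), v0, hv0, fun _ => rfl, fun v hv j => ?_⟩, rfl⟩
  have hd : (fun k => (v k : ℤ) - v0 k) ∈ diffs V := by
    rw [diffs, Finset.mem_toList]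
    exact Finset.mem_image.2 ⟨(v, v0), Finset.mem_product.2 ⟨hv, hv0⟩, rfl⟩
  rcases had _ hd with h | h
  · have := h j; rw [zp_diff] at this; omega
  · have hle : ∀ j, np v (η j) ≤ np v0 (η j) := fun j => by
      have := h j; rw [zp_diff] at this; omega
    by_contra hlt
    have := Finset.sum_lt_sum (fun j (_ : j ∈ Finset.univ) => hle j)
      ⟨j, Finset.mem_univ j, not_le.1 hlt⟩
    exact absurd (hmin v hv) (not_le.2 this)

namespace Chart
variable {V : Finset (Fin n → ℕ)} (C : Chart V)

/-- The exponents of the Jacobian. -/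
def ν (j : Fin n) : ℕ := ∑ i, C.η j i

lemma ν_pos (j : Fin n) : 1 ≤ C.ν j := by
  by_contra h
  have h0 : ∀ i, C.η j i = 0 := fun i => by
    have : ∑ i, C.η j i = 0 := by unfold ν at h; omega
    exact Finset.sum_eq_zero_iff.1 this i (Finset.mem_univ i)
  refine C.det (Matrix.det_eq_zero_of_row_eq_zero j fun i => ?_)
  simp [rowM, h0]

lemma sm_eu (t : Fin n → ℝ) : sm (eu C.η t) = ∑ j, (C.ν j : ℝ) * t j := by
  have := dn_eu C.η (fun _ => 1) t
  have h1 : dn (fun _ => 1) (eu C.η t) = sm (eu C.η t) := by simp [dn, sm]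
  rw [← h1, this]
  simp [np, ν]

/-- A sum of monomials in the chart, divided by the common monomial `y^N`. -/
def tl (h : (Fin n → ℕ) → (Fin n → ℝ) → ℝ) (y : Fin n → ℝ) : ℝ :=
  ∑ v ∈ V, (∏ j, y j ^ (np v (C.η j) - C.N j)) * h v (xm C.η y)

lemma ps_eu (h : (Fin n → ℕ) → (Fin n → ℝ) → ℝ) (t : Fin n → ℝ) :
    ps V h (eu C.η t) = Real.exp (-∑ j, (C.N j : ℝ) * t j) * C.tl h (ex t) := by
  rw [ps, tl, Finset.mul_sum]
  refine Finset.sum_congr rfl fun v hv => ?_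
  rw [dn_eu, exp_neg_sum (fun j => np v (C.η j)), exp_neg_sum, ex_eu, ← mul_assoc,
    ← Finset.prod_mul_distrib]
  congr 1
  refine Finset.prod_congr rfl fun j _ => ?_
  rw [← pow_add, Nat.add_sub_cancel' (C.N_le v hv j)]

lemma contDiff_xm (η : Fin n → Fin n → ℕ) : ContDiff ℝ (⊤ : ℕ∞) (xm η) := by
  unfold xm
  exact contDiff_pi.2 fun i => contDiff_prod fun j _ => (contDiff_apply ℝ ℝ j).pow _

lemma tl_contDiff {h : (Fin n → ℕ) → (Fin n → ℝ) → ℝ}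
    (hh : ∀ v ∈ V, ContDiff ℝ (⊤ : ℕ∞) (h v)) : ContDiff ℝ (⊤ : ℕ∞) (C.tl h) :=
  ContDiff.sum fun v hv => (contDiff_prod fun j _ => (contDiff_apply ℝ ℝ j).pow _).mul
    ((hh v hv).comp (contDiff_xm _))

/-- Smooth functions which in the chart are a smooth function times `y^{q N}`. -/
def Ch (q : ℤ) (B : (Fin n → ℝ) → ℝ) : Prop := ContDiff ℝ (⊤ : ℕ∞) B ∧ ∃ B' : (Fin n → ℝ) → ℝ,
  CS B' ∧ ∀ t ∈ posOrthant n, B (eu C.η t) = Real.exp (-(q * ∑ j, (C.N j : ℝ) * t j)) * B' (ex t)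

variable {C} {q q' : ℤ} {B B' : (Fin n → ℝ) → ℝ}

lemma Ch.add (h : C.Ch q B) (h' : C.Ch q B') : C.Ch q (fun u => B u + B' u) := by
  obtain ⟨h1, b, hb, h2⟩ := h
  obtain ⟨h1', b', hb', h2'⟩ := h'
  exact ⟨h1.add h1', _, hb.add hb', fun t ht => by beta_reduce; rw [h2 t ht, h2' t ht]; ring⟩

lemma Ch.mul (h : C.Ch q B) (h' : C.Ch q' B') : C.Ch (q + q') (fun u => B u * B' u) := by
  obtain ⟨h1, b, hb, h2⟩ := h
  obtain ⟨h1', b', hb', h2'⟩ := h'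
  refine ⟨h1.mul h1', _, hb.mul hb', fun t ht => ?_⟩
  beta_reduce
  rw [h2 t ht, h2' t ht, mul_mul_mul_comm, ← Real.exp_add]
  congr 2; push_cast; ring

lemma Ch.const (c : ℝ) : C.Ch 0 (fun _ => c) :=
  ⟨contDiff_const, _, CS.const c, fun t _ => by simp⟩

lemma Ch.const_mul (c : ℝ) (h : C.Ch q B) : C.Ch q (fun u => c * B u) := by
  have := (Ch.const (C := C) c).mul h
  rwa [zero_add] at this

lemma Ch.zero (q : ℤ) : C.Ch q (fun _ => 0) :=
  ⟨contDiff_const, _, CS.const 0, fun t _ => by simp⟩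

lemma Ch.sum {ι : Type*} (s : Finset ι) {F : ι → (Fin n → ℝ) → ℝ} (q : ℤ)
    (h : ∀ i ∈ s, C.Ch q (F i)) : C.Ch q (fun u => ∑ i ∈ s, F i u) := by
  induction s using Finset.induction_on with
  | empty => simpa using Ch.zero q
  | insert i s hi ih =>
    simp only [Finset.sum_insert hi]
    exact (h i (Finset.mem_insert_self _ _)).add
      (ih fun j hj => h j (Finset.mem_insert_of_mem hj))

lemma Ch.ps {h : (Fin n → ℕ) → (Fin n → ℝ) → ℝ}
    (hh : ∀ v ∈ V, ContDiff ℝ (⊤ : ℕ∞) (h v)) : C.Ch 1 (ps V h) :=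
  ⟨ps_contDiff hh, _, CS.of_contDiff (C.tl_contDiff hh), fun t _ => by rw [C.ps_eu]; simp⟩

lemma Ch.comp_ex {g : (Fin n → ℝ) → ℝ} (hg : ContDiff ℝ (⊤ : ℕ∞) g) :
    C.Ch 0 (fun u => g (ex u)) :=
  ⟨hg.comp contDiff_ex, fun y => g (xm C.η y), CS.of_contDiff (hg.comp (contDiff_xm _)),
    fun t _ => by beta_reduce; rw [ex_eu]; simp⟩

lemma Ch.pd (h : C.Ch q B) (i : Fin n) : C.Ch q (pd i B) := by
  obtain ⟨h1, b, hb, h2⟩ := h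
  have hd : Differentiable ℝ B := h1.differentiable (by simp)
  -- derivatives along the edges of the cone
  set g : Fin n → (Fin n → ℝ) → ℝ := fun j y => -(q * C.N j) * b y - y j * _root_.pd j b y with hg
  have key : ∀ t ∈ posOrthant n, ∀ j, ∑ i, (C.η j i : ℝ) * _root_.pd i B (eu C.η t) =
      Real.exp (-(q * ∑ j, (C.N j : ℝ) * t j)) * g j (ex t) := by
    intro t ht j
    have hlin : ∀ τ : ℝ, eu C.η (t + τ • (Pi.single j 1 : Fin n → ℝ)) =
        eu C.η t + τ • fun i => (C.η j i : ℝ) := fun τ => by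
      rw [← euL_apply, ← euL_apply, map_add, map_smul, euL_apply, euL_apply]
      congr 2
      funext i
      simp [eu, Pi.single_apply]
    have a1 : HasDerivAt (fun τ : ℝ => B (eu C.η t + τ • fun i => (C.η j i : ℝ)))
        (∑ i, (C.η j i : ℝ) * _root_.pd i B (eu C.η t)) 0 := by
      have b1 : HasDerivAt (fun τ : ℝ => eu C.η t + τ • fun i => (C.η j i : ℝ))
          (fun i => (C.η j i : ℝ)) 0 := by
        simpa using ((hasDerivAt_id (0 : ℝ)).smul_const (fun i => (C.η j i : ℝ))).const_add
          (eu C.η t)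
      have b2 : HasFDerivAt B (fderiv ℝ B (eu C.η t))
          (eu C.η t + (0 : ℝ) • fun i => (C.η j i : ℝ)) := by
        rw [zero_smul, add_zero]; exact (hd _).hasFDerivAt
      refine (b2.comp_hasDerivAt (0 : ℝ) b1).congr_deriv ?_
      have b3 : (fun i => (C.η j i : ℝ)) = ∑ i, (C.η j i : ℝ) • (Pi.single i 1 : Fin n → ℝ) := by
        funext k; simp [Finset.sum_apply, Pi.single_apply]
      rw [b3, map_sum]
      simp only [map_smul, smul_eq_mul, _root_.pd]
    have a2 : HasDerivAt (fun τ : ℝ => Real.exp (-(q * (∑ j, (C.N j : ℝ) * t j + τ * C.N j))) *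
        b (ex (t + τ • (Pi.single j 1 : Fin n → ℝ))))
        (Real.exp (-(q * ∑ j, (C.N j : ℝ) * t j)) * g j (ex t)) 0 := by
      have b1 : HasDerivAt (fun τ : ℝ => -(q * (∑ j, (C.N j : ℝ) * t j + τ * C.N j)))
          (-(q * C.N j)) 0 := by
        refine ((((hasDerivAt_id (0 : ℝ)).mul_const (C.N j : ℝ)).const_add
          (∑ j, (C.N j : ℝ) * t j)).const_mul (q : ℝ)).neg.congr_deriv ?_
        ring
      refine (b1.exp.mul (line_ex (hb.diffAt (ex_mem ht)) j)).congr_deriv ?_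
      simp [hg]; ring
    refine a1.unique (a2.congr_of_eventuallyEq ?_)
    have hev : ∀ᶠ τ : ℝ in 𝓝 0, t + τ • (Pi.single j 1 : Fin n → ℝ) ∈ posOrthant n := by
      have hj : ∀ᶠ τ : ℝ in 𝓝 0, 0 < t j + τ := by
        have : Tendsto (fun τ : ℝ => t j + τ) (𝓝 0) (𝓝 (t j + 0)) :=
          tendsto_const_nhds.add tendsto_id
        rw [add_zero] at this
        exact this.eventually (lt_mem_nhds (ht j))
      filter_upwards [hj] with τ hτ i
      by_cases hi : i = j
      · subst hi; simpa using hτ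
      · simpa [Pi.single_eq_of_ne hi] using ht i
    filter_upwards [hev] with τ hτ
    rw [← hlin, h2 _ hτ]
    congr 3
    congr 1
    simp only [Pi.add_apply, mul_add, Finset.sum_add_distrib]
    congr 1
    simp [Pi.single_apply]; ring
  refine ⟨pd_contDiff h1 i, fun y => ∑ j, (rowM C.η)⁻¹ i j * g j y, CS.sum _ fun j _ =>
    (CS.const _).mul (((CS.const _).mul hb).sub ((CS.coord j).mul (hb.pd j))), fun t ht => ?_⟩
  have e1 : (rowM C.η).mulVec (fun i => _root_.pd i B (eu C.η t)) = fun j =>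
      Real.exp (-(q * ∑ j, (C.N j : ℝ) * t j)) * g j (ex t) := by
    funext j
    exact key t ht j
  have e2 := congrArg (fun w => ((rowM C.η)⁻¹.mulVec w) i) e1
  beta_reduce at e2
  rw [Matrix.mulVec_mulVec, Matrix.nonsing_inv_mul _ C.det.isUnit, Matrix.one_mulVec] at e2
  generalize Real.exp (-(q * ∑ j, (C.N j : ℝ) * t j)) = E at e2 ⊢
  rw [e2, Finset.mul_sum, Matrix.mulVec, dotProduct]
  exact Finset.sum_congr rfl fun j _ => by ring

/-- Division by a symbol which is bounded from below by a power of the sum of all monomials. -/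
lemma Ch.inv {c : ℝ} (h : C.Ch q B) (hc : 0 < c) (hq : 0 ≤ q)
    (hB : ∀ u, c * (∑ v ∈ V, Real.exp (-dn v u)) ^ q ≤ B u) : C.Ch (-q) (fun u => (B u)⁻¹) := by
  obtain ⟨h1, b, hb, h2⟩ := h
  have hpos : ∀ u, 0 < ∑ v ∈ V, Real.exp (-dn v u) := fun u =>
    Finset.sum_pos (fun _ _ => Real.exp_pos _) ⟨_, C.v0_mem⟩
  have hB0 : ∀ u, B u ≠ 0 := fun u =>
    ((mul_pos hc (zpow_pos (hpos u) q)).trans_le (hB u)).ne'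
  have hlow : ∀ t ∈ posOrthant n, c ≤ b (ex t) := fun t ht => by
    have e1 : Real.exp (-∑ j, (C.N j : ℝ) * t j) ≤ ∑ v ∈ V, Real.exp (-dn v (eu C.η t)) := by
      have e0 : dn C.v0 (eu C.η t) = ∑ j, (C.N j : ℝ) * t j := by
        rw [dn_eu]; exact Finset.sum_congr rfl fun j _ => by rw [C.N_eq]
      rw [← e0]
      exact Finset.single_le_sum (f := fun v => Real.exp (-dn v (eu C.η t)))
        (fun _ _ => (Real.exp_pos _).le) C.v0_mem
    have e2 : Real.exp (-(q * ∑ j, (C.N j : ℝ) * t j)) =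
        Real.exp (-∑ j, (C.N j : ℝ) * t j) ^ q := by
      rw [← Real.rpow_intCast, ← Real.exp_mul]; congr 1; ring
    have e3 := hB (eu C.η t)
    rw [h2 t ht] at e3
    have e4 : Real.exp (-(q * ∑ j, (C.N j : ℝ) * t j)) ≤
        (∑ v ∈ V, Real.exp (-dn v (eu C.η t))) ^ q := by
      rw [e2]; exact zpow_le_zpow_left₀ hq (Real.exp_pos _).le e1
    have e5 : Real.exp (-(q * ∑ j, (C.N j : ℝ) * t j)) * c ≤
        Real.exp (-(q * ∑ j, (C.N j : ℝ) * t j)) * b (ex t) := by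
      calc _ ≤ c * (∑ v ∈ V, Real.exp (-dn v (eu C.η t))) ^ q := by
            rw [mul_comm]; exact mul_le_mul_of_nonneg_left e4 hc.le
        _ ≤ _ := e3
    exact le_of_mul_le_mul_left e5 (Real.exp_pos _)
  have hlow' : ∀ y ∈ cube n, c ≤ b y := fun y hy => by
    have hcl : y ∈ closure (Set.univ.pi fun _ : Fin n => Set.Ioo (0 : ℝ) 1) := by
      rw [closure_pi_set]
      intro i _
      rw [closure_Ioo zero_ne_one]
      exact ⟨hy.1 i, hy.2 i⟩
    refine ContinuousWithinAt.closure_le hcl continuousWithinAt_const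
      (hb y hy).continuousAt.continuousWithinAt fun z hz => ?_
    have : z = ex fun i => -Real.log (z i) := by
      funext i; simp [ex, Real.exp_log (hz i trivial).1]
    rw [this]
    refine hlow _ fun i => ?_
    have := Real.log_neg (hz i trivial).1 (hz i trivial).2
    simpa using this
  refine ⟨h1.inv hB0, fun y => (b y)⁻¹, fun y hy => (hb y hy).inv
    (hc.trans_le (hlow' y hy)).ne', fun t ht => ?_⟩
  beta_reduce
  rw [h2 t ht, mul_inv, ← Real.exp_neg]
  congr 2; push_cast; ring

end Chart
end charts

/-! ### A lower bound for the logarithmic gradient -/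

section lower
variable {n : ℕ} {V : Finset (Fin n → ℕ)}

/-- The elements of `V` on which the weight `w` is minimal. -/
def minSet (V : Finset (Fin n → ℕ)) (w : Fin n → ℕ) : Finset (Fin n → ℕ) :=
  V.filter fun v => ∀ v' ∈ V, np v w ≤ np v' w

lemma xm_pow (η : Fin n → Fin n → ℕ) (v : Fin n → ℕ) (z : Fin n → ℝ) :
    ∏ k, xm η z k ^ v k = ∏ j, z j ^ np v (η j) := by
  simp only [xm, ← Finset.prod_pow]
  rw [Finset.prod_comm]
  refine Finset.prod_congr rfl fun j _ => ?_
  rw [np, ← Finset.prod_pow_eq_pow_sum]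
  exact Finset.prod_congr rfl fun k _ => by rw [← pow_mul, mul_comm]

/-- Non-degeneracy makes the logarithmic gradient nonzero at every boundary point of a chart lying
over the origin. -/
lemma Chart.tl_ne_zero (C : Chart V) {g : (Fin n → ℕ) → (Fin n → ℝ) → ℝ}
    (hnd : ∀ w : Fin n → ℕ, (∀ i, 0 < w i) → ∀ x : Fin n → ℝ, (∀ i, 0 < x i) →
      ∃ i, ∑ v ∈ minSet V w, (v i : ℝ) * g v 0 * ∏ k, x k ^ v k ≠ 0)
    {y : Fin n → ℝ} (hy : y ∈ cube n) (h0 : xm C.η y = 0) : ∃ i, C.tl (psd g i) y ≠ 0 := by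
  set w : Fin n → ℕ := fun i => ∑ j, if y j = 0 then C.η j i else 0 with hw
  have hw0 : ∀ i, 0 < w i := fun i => by
    have h1 : ∏ j, y j ^ C.η j i = 0 := congrFun h0 i
    obtain ⟨j, -, hj⟩ := Finset.prod_eq_zero_iff.1 h1
    have hyj : y j = 0 := eq_zero_of_pow_eq_zero hj
    have hη : C.η j i ≠ 0 := fun h => by rw [h, pow_zero] at hj; exact one_ne_zero hj
    have : (if y j = 0 then C.η j i else 0) ≤ w i :=
      Finset.single_le_sum (f := fun j => if y j = 0 then C.η j i else 0)
        (fun _ _ => Nat.zero_le _) (Finset.mem_univ j)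
    rw [if_pos hyj] at this
    omega
  have hnp : ∀ v : Fin n → ℕ, np v w = ∑ j, if y j = 0 then np v (C.η j) else 0 := fun v => by
    simp only [np, hw, Finset.mul_sum]
    rw [Finset.sum_comm]
    refine Finset.sum_congr rfl fun j _ => ?_
    split_ifs <;> simp
  have hmin : ∀ v ∈ V, v ∈ minSet V w ↔ ∀ j, y j = 0 → np v (C.η j) = C.N j := fun v hv => by
    rw [minSet, Finset.mem_filter]
    constructor
    · rintro ⟨-, h⟩ j hj
      by_contra hne
      have h1 := h C.v0 C.v0_mem
      rw [hnp, hnp] at h1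
      refine absurd h1 (not_le.2 (Finset.sum_lt_sum (fun k _ => ?_) ⟨j, Finset.mem_univ j, ?_⟩))
      · split_ifs
        · rw [C.N_eq]; exact C.N_le v hv k
        · exact le_rfl
      · rw [if_pos hj, if_pos hj, C.N_eq]
        exact lt_of_le_of_ne (C.N_le v hv j) (Ne.symm hne)
    · intro h
      refine ⟨hv, fun v' hv' => ?_⟩
      rw [hnp, hnp]
      refine Finset.sum_le_sum fun k _ => ?_
      split_ifs with hk
      · rw [h k hk]; exact C.N_le v' hv' k
      · exact le_rfl
  set z : Fin n → ℝ := fun j => if y j = 0 then 1 else y j with hz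
  have hz0 : ∀ j, 0 < z j := fun j => by
    simp only [hz]
    split_ifs with h
    · exact one_pos
    · exact lt_of_le_of_ne (hy.1 j) (Ne.symm h)
  obtain ⟨i, hi⟩ := hnd w hw0 (xm C.η z) fun i => Finset.prod_pos fun j _ => pow_pos (hz0 j) _
  refine ⟨i, fun h => hi ?_⟩
  have key : ∑ v ∈ minSet V w, (v i : ℝ) * g v 0 * ∏ k, xm C.η z k ^ v k =
      -(C.tl (psd g i) y * ∏ j, z j ^ C.N j) := by
    rw [Chart.tl, Finset.sum_mul, ← Finset.sum_neg_distrib, minSet, Finset.sum_filter]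
    refine Finset.sum_congr rfl fun v hv => ?_
    have hiff := hmin v hv
    rw [minSet, Finset.mem_filter, and_iff_right hv] at hiff
    rw [h0]
    split_ifs with hm
    · have e1 : (∏ j, y j ^ (np v (C.η j) - C.N j)) * ∏ j, z j ^ C.N j =
          ∏ k, xm C.η z k ^ v k := by
        rw [xm_pow, ← Finset.prod_mul_distrib]
        refine Finset.prod_congr rfl fun j _ => ?_
        by_cases hj : y j = 0
        · simp [hz, hj, hiff.1 hm j hj]
        · have : z j = y j := if_neg hj
          rw [this, ← pow_add, Nat.sub_add_cancel (C.N_le v hv j)]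
      rw [← e1]
      simp only [psd, Pi.zero_apply]
      ring
    · have h1 : ∃ j, y j = 0 ∧ np v (C.η j) ≠ C.N j := by
        by_contra! h2; exact hm (hiff.2 h2)
      obtain ⟨j, hj, hne⟩ := h1
      have h3 : ∏ j, y j ^ (np v (C.η j) - C.N j) = 0 := by
        refine Finset.prod_eq_zero (Finset.mem_univ j) ?_
        rw [hj, zero_pow]
        have := C.N_le v hv j
        omega
      rw [h3]; simp
  rw [key, h, zero_mul, neg_zero]

lemma ps_one (u : Fin n → ℝ) : ps V (fun _ _ => 1) u = ∑ v ∈ V, Real.exp (-dn v u) := by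
  simp [ps]

/-- The logarithmic gradient of a non-degenerate function is at least of the size of the sum of all
its monomials, near the origin and within one chart. -/
lemma Chart.lower (C : Chart V) {g : (Fin n → ℕ) → (Fin n → ℝ) → ℝ}
    (hg : ∀ v ∈ V, ContDiff ℝ (⊤ : ℕ∞) (g v))
    (hnd : ∀ w : Fin n → ℕ, (∀ i, 0 < w i) → ∀ x : Fin n → ℝ, (∀ i, 0 < x i) →
      ∃ i, ∑ v ∈ minSet V w, (v i : ℝ) * g v 0 * ∏ k, x k ^ v k ≠ 0) :
    ∃ δ > 0, ∃ c > 0, ∀ t : Fin n → ℝ, (∀ i, 0 ≤ t i) → (∀ i, ex (eu C.η t) i ≤ δ) →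
      c * (∑ v ∈ V, Real.exp (-dn v (eu C.η t))) ^ 2 ≤ ∑ i, (pd i (ps V g) (eu C.η t)) ^ 2 := by
  set D : (Fin n → ℝ) → ℝ := fun y => ∑ i, (C.tl (psd g i) y) ^ 2 with hD
  have hDc : Continuous D := continuous_finsetSum _ fun i _ =>
    ((C.tl_contDiff (psd_contDiff hg i)).continuous).pow 2
  have hxc : Continuous fun y => ∑ i, xm C.η y i := continuous_finsetSum _ fun i _ =>
    (continuous_apply (A := fun _ : Fin n => ℝ) i).comp (Chart.contDiff_xm C.η).continuous
  have hx0 : ∀ y ∈ cube n, ∀ i, 0 ≤ xm C.η y i := fun y hy i =>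
    Finset.prod_nonneg fun j _ => pow_nonneg (hy.1 j) _
  have hD0 : ∀ y, 0 ≤ D y := fun y => Finset.sum_nonneg fun i _ => sq_nonneg _
  have hpos : ∀ y ∈ cube n, 0 < D y + ∑ i, xm C.η y i := fun y hy => by
    by_cases h0 : xm C.η y = 0
    · obtain ⟨i, hi⟩ := C.tl_ne_zero hnd hy h0
      have h1 : 0 < D y := Finset.sum_pos' (fun i _ => sq_nonneg _)
        ⟨i, Finset.mem_univ i, by positivity⟩
      have h2 : 0 ≤ ∑ i, xm C.η y i := Finset.sum_nonneg fun i _ => hx0 y hy i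
      linarith
    · obtain ⟨i, hi⟩ := Function.ne_iff.1 h0
      have h2 : 0 < ∑ i, xm C.η y i := Finset.sum_pos' (fun i _ => hx0 y hy i)
        ⟨i, Finset.mem_univ i, lt_of_le_of_ne (hx0 y hy i) (Ne.symm hi)⟩
      linarith [hD0 y]
  obtain ⟨y0, hy0, hmin⟩ := isCompact_Icc.exists_isMinOn (s := cube n) ⟨0, le_rfl, zero_le_one⟩
    (hDc.add hxc).continuousOn
  set c := D y0 + ∑ i, xm C.η y0 i with hc
  have hc0 : 0 < c := hpos y0 hy0
  have hK : (0 : ℝ) < V.card := by exact_mod_cast Finset.card_pos.2 ⟨_, C.v0_mem⟩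
  refine ⟨c / (2 * (n + 1)), by positivity, c / 2 / (V.card : ℝ) ^ 2, by positivity,
    fun t ht hδ => ?_⟩
  have hy := ex_cube ht
  have h1 : c ≤ D (ex t) + ∑ i, xm C.η (ex t) i := hmin hy
  have h2 : ∑ i, xm C.η (ex t) i ≤ c / 2 := by
    calc ∑ i, xm C.η (ex t) i ≤ ∑ _i : Fin n, c / (2 * (n + 1)) :=
          Finset.sum_le_sum fun i _ => by rw [← ex_eu]; exact hδ i
      _ = n * c / (2 * (n + 1)) := by simp; ring
      _ ≤ c / 2 := by
          rw [div_le_div_iff₀ (by positivity) two_pos]; nlinarith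
  have h3 : c / 2 ≤ D (ex t) := by linarith
  have e1 : ∀ i, pd i (ps V g) (eu C.η t) =
      Real.exp (-∑ j, (C.N j : ℝ) * t j) * C.tl (psd g i) (ex t) := fun i => by
    rw [pd_ps hg, C.ps_eu]
  have e2 : ∑ v ∈ V, Real.exp (-dn v (eu C.η t)) ≤
      Real.exp (-∑ j, (C.N j : ℝ) * t j) * V.card := by
    rw [← ps_one, C.ps_eu]
    refine mul_le_mul_of_nonneg_left ?_ (Real.exp_pos _).le
    rw [Chart.tl, ← nsmul_one]
    refine Finset.sum_le_card_nsmul _ _ _ fun v _ => ?_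
    rw [mul_one]
    exact Finset.prod_le_one (fun j _ => pow_nonneg (hy.1 j) _)
      fun j _ => pow_le_one₀ (hy.1 j) (hy.2 j)
  have e3 : ∑ i, (pd i (ps V g) (eu C.η t)) ^ 2 =
      Real.exp (-∑ j, (C.N j : ℝ) * t j) ^ 2 * D (ex t) := by
    rw [hD, Finset.mul_sum]
    exact Finset.sum_congr rfl fun i _ => by rw [e1, mul_pow]
  have e4 : 0 ≤ ∑ v ∈ V, Real.exp (-dn v (eu C.η t)) :=
    Finset.sum_nonneg fun _ _ => (Real.exp_pos _).le
  rw [e3]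
  calc _ ≤ c / 2 / (V.card : ℝ) ^ 2 * (Real.exp (-∑ j, (C.N j : ℝ) * t j) * V.card) ^ 2 := by
        gcongr
    _ = Real.exp (-∑ j, (C.N j : ℝ) * t j) ^ 2 * (c / 2) := by field_simp
    _ ≤ _ := by gcongr

/-- The rows of the identity matrix; they span the positive orthant. -/
def idη (n : ℕ) : Fin n → Fin n → ℕ := fun j i => if j = i then 1 else 0

lemma det_idη : (rowM (idη n)).det ≠ 0 := by
  have : rowM (idη n) = 1 := by
    ext i j; simp [rowM, idη, Matrix.one_apply]
  rw [this, Matrix.det_one]; exact one_ne_zero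

lemma eu_idη (t : Fin n → ℝ) : eu (idη n) t = t := by
  funext i; simp [eu, idη]

/-- The logarithmic gradient of a non-degenerate function is at least of the size of the sum of all
its monomials, near the origin. -/
theorem lower_bound (hV : V.Nonempty) {g : (Fin n → ℕ) → (Fin n → ℝ) → ℝ}
    (hg : ∀ v ∈ V, ContDiff ℝ (⊤ : ℕ∞) (g v))
    (hnd : ∀ w : Fin n → ℕ, (∀ i, 0 < w i) → ∀ x : Fin n → ℝ, (∀ i, 0 < x i) →
      ∃ i, ∑ v ∈ minSet V w, (v i : ℝ) * g v 0 * ∏ k, x k ^ v k ≠ 0) :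
    ∃ δ > 0, ∃ c > 0, ∀ t : Fin n → ℝ, (∀ i, 0 ≤ t i) → (∀ i, ex t i ≤ δ) →
      c * (∑ v ∈ V, Real.exp (-dn v t)) ^ 2 ≤ ∑ i, (pd i (ps V g) t) ^ 2 := by
  have := cone_induction (diffs V) (fun η => ∃ δ > 0, ∃ c > 0, ∀ t : Fin n → ℝ, (∀ i, 0 ≤ t i) →
    (∀ i, ex (eu η t) i ≤ δ) →
      c * (∑ v ∈ V, Real.exp (-dn v (eu η t))) ^ 2 ≤ ∑ i, (pd i (ps V g) (eu η t)) ^ 2)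
    (fun η hη had => by
      obtain ⟨C, rfl⟩ := exists_chart hV hη had
      exact C.lower hg hnd)
    (fun η hη i j hij a b ha hb h1 h2 => by
      obtain ⟨δ1, hδ1, c1, hc1, H1⟩ := h1
      obtain ⟨δ2, hδ2, c2, hc2, H2⟩ := h2
      refine ⟨min δ1 δ2, lt_min hδ1 hδ2, min c1 c2, lt_min hc1 hc2, fun t ht hδ => ?_⟩
      rcases eu_split η hij ha hb ht with ⟨t', ht', h⟩ | ⟨t', ht', h⟩
      · rw [← h] at hδ ⊢
        refine (mul_le_mul_of_nonneg_right (min_le_left _ _) (sq_nonneg _)).trans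
          (H1 t' ht' fun i => (hδ i).trans (min_le_left _ _))
      · rw [← h] at hδ ⊢
        refine (mul_le_mul_of_nonneg_right (min_le_right _ _) (sq_nonneg _)).trans
          (H2 t' ht' fun i => (hδ i).trans (min_le_right _ _)))
    (idη n) det_idη
  simpa only [eu_idη] using this

end lower

/-! ### Meromorphic continuation of the raised integrals -/

section continuation
variable {n k : ℕ}

lemma exp_cpow (x : ℝ) (s : ℂ) : ((Real.exp x : ℝ) : ℂ) ^ s = cexp (x * s) := by
  rw [Complex.cpow_def_of_ne_zero (by exact_mod_cast (Real.exp_pos x).ne'),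
    ← Complex.ofReal_log (Real.exp_pos x).le, Real.log_exp]

namespace Chart
variable {V : Finset (Fin n → ℕ)} (C : Chart V)

lemma Jg_eu {g : (Fin n → ℕ) → (Fin n → ℝ) → ℝ} {m : ℕ} {Q Q' : (Fin n → ℝ) → ℝ} {t : Fin n → ℝ}
    (hQ : Q (eu C.η t) = Real.exp (-(((-(m : ℤ) : ℤ) : ℝ) * ∑ j, (C.N j : ℝ) * t j)) * Q' (ex t))
    (s : ℂ) :
    Jg (ps V g) (s + m) 1 Q (eu C.η t) = mint C.N C.ν (C.tl g) m Q' s t := by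
  rw [Jg, mint, hQ, C.ps_eu, pcp_mul (Real.exp_pos _), exp_cpow, C.sm_eu]
  push_cast
  rw [show -∑ i, ((C.N i : ℂ) * s + C.ν i) * (t i : ℂ) =
    -(∑ i, (C.N i : ℂ) * t i) * (s + m) + -(1 * ∑ i, (C.ν i : ℂ) * t i)
      + -(-(m : ℂ) * ∑ i, (C.N i : ℂ) * t i) by
    have : ∑ i, ((C.N i : ℂ) * s + C.ν i) * (t i : ℂ) =
        (∑ i, (C.N i : ℂ) * t i) * s + ∑ i, (C.ν i : ℂ) * t i := by
      rw [Finset.sum_mul, ← Finset.sum_add_distrib]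
      exact Finset.sum_congr rfl fun i _ => by ring
    rw [this]; ring, Complex.exp_add, Complex.exp_add]
  ring

lemma Ch.Lr {q : ℤ} {c : Fin n → (Fin n → ℝ) → ℝ} {Q : (Fin n → ℝ) → ℝ}
    (hc : ∀ i, C.Ch (-1) (c i)) (hQ : C.Ch q Q) : C.Ch (-1 + q) (_root_.Lr c Q) := by
  have h0 := (Ch.sum (C := C) Finset.univ (-1 + q)
    (fun i _ => ((hc i).mul hQ).pd i)).const_mul (-1)
  have h1 := Ch.sum (C := C) Finset.univ (-1 + q) (fun i _ => (hc i).mul hQ)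
  convert h0.add h1 using 2
  simp [_root_.Lr, _root_.L0, _root_.L1]

end Chart

variable {D : Setup n k} {X : Phase D} (Y : X.Test)

/-- The raised integrals continue meromorphically to any half-plane: the orthant is subdivided
into simplicial cones on which one monomial is minimal, and each piece becomes a multiple Mellin
integral with smooth data. -/
theorem Phase.Test.H_mero {g : (Fin n → ℕ) → (Fin n → ℝ) → ℝ}
    (hg : ∀ v ∈ D.V, ContDiff ℝ (⊤ : ℕ∞) (g v)) (hp : X.p = ps D.V g)
    (hc : ∀ C : Chart D.V, ∀ i, C.Ch (-1) (X.c i)) (hP : ∀ C : Chart D.V, C.Ch 0 Y.P0)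
    (hconv : ∀ u : Fin n → ℝ, (∀ i, 0 ≤ u i) → ∃ v ∈ D.V, dn v u ≤ D.t * sm u)
    (hS : ∀ u ∈ Y.S, ∀ i, 0 < u i) (R : ℝ) :
    ∃ m : ℕ, R ≤ m ∧ ∃ E : ℂ → ℂ, MeromorphicOn E {s | -R < s.re} ∧
      ∀ s : ℂ, -R < s.re → -1 / D.t < s.re → E s = Y.H m s := by
  have hPm : ∀ C : Chart D.V, ∀ m : ℕ, C.Ch (-(m : ℤ)) (Y.P m) := fun C m => by
    induction m with
    | zero => simpa [Test.P] using hP C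
    | succ m ih =>
      rw [Test.P_succ]
      have := Chart.Ch.Lr C (hc C) ih
      rwa [show -1 + -(m : ℤ) = -((m + 1 : ℕ) : ℤ) by push_cast; ring] at this
  have hInt : ∀ m : ℕ, R ≤ m → ∀ s : ℂ, -R < s.re → -1 / D.t < s.re →
      Integrable (Jg X.p (s + m) 1 (Y.P m)) := fun m hm s h1 h2 =>
    X.Jg_integrable Y.hb (Y.P_cl m) (Y.P_supp m) Y.hSb (by simp; linarith) (by simpa using h2)
  have main : ∀ η : Fin n → Fin n → ℕ, (rowM η).det ≠ 0 → ∃ m0 : ℕ, R ≤ m0 ∧ ∀ m, m0 ≤ m →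
      ∃ E : ℂ → ℂ, MeromorphicOn E {s | -R < s.re} ∧
      ∀ s : ℂ, -R < s.re → -1 / D.t < s.re →
        E s = ∫ u in ocone η, Jg X.p (s + m) 1 (Y.P m) u := by
    refine cone_induction (diffs D.V) _ (fun η hη had => ?_) (fun η hη i j hij a b ha hb h1 h2 => ?_)
    · obtain ⟨C, rfl⟩ := exists_chart D.V_ne hη had
      set K := ∑ i, (⌈(C.N i : ℝ) * R⌉₊ - C.ν i)
      refine ⟨⌈R + K⌉₊, ?_, fun m hm => ?_⟩
      · have := Nat.le_ceil (R + K); have : (0 : ℝ) ≤ K := Nat.cast_nonneg _; linarith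
      have hm' : R + K ≤ m := (Nat.le_ceil _).trans (by exact_mod_cast hm)
      obtain ⟨-, Q', hQ', hQeq⟩ := hPm C m
      obtain ⟨E, hE, hEeq⟩ := Mel_mero (CS.of_contDiff (C.tl_contDiff hg)) C.N K C.ν m Q' hQ'
        C.ν_pos hm' le_rfl
      refine ⟨fun s => ((|(rowM C.η).det| : ℝ) : ℂ) * E s,
        (MeromorphicOn.const _).mul hE, fun s hs hs2 => ?_⟩
      beta_reduce
      rw [integral_ocone hη, hEeq s hs, Complex.real_smul, Mel]
      · congr 1
        refine setIntegral_congr_fun (measurable_posOrthant n) fun t ht => ?_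
        rw [hp]
        exact (C.Jg_eu (hQeq t ht) s).symm
      · intro j
        -- convergence: `N_j ≤ t ν_j`, because the diagonal point `(t,…,t)` lies above `V`
        obtain ⟨v, hv, hle⟩ := hconv (eu C.η (Pi.single j 1)) fun i => by
          refine Finset.sum_nonneg fun l _ => mul_nonneg ?_ (Nat.cast_nonneg _)
          by_cases h : l = j
          · subst h; simp
          · simp [h]
        rw [dn_eu, C.sm_eu] at hle
        simp only [Pi.single_apply, mul_ite, mul_one, mul_zero, Finset.sum_ite_eq',
          Finset.mem_univ, if_true] at hle
        have h3 : (C.N j : ℝ) ≤ D.t * C.ν j :=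
          le_trans (by exact_mod_cast C.N_le v hv j) hle
        have h4 : (1 : ℝ) ≤ C.ν j := by exact_mod_cast C.ν_pos j
        have h5 : -1 < s.re * D.t := (div_lt_iff₀ D.t_pos).1 hs2
        have hN0 : (0 : ℝ) ≤ C.N j := Nat.cast_nonneg _
        rcases le_or_gt 0 s.re with h0 | h0
        · have := mul_nonneg hN0 h0; linarith
        · have := mul_le_mul_of_nonpos_right h3 h0.le
          nlinarith
    · obtain ⟨m1, hm1, H1⟩ := h1
      obtain ⟨m2, hm2, H2⟩ := h2
      refine ⟨max m1 m2, hm1.trans (by exact_mod_cast le_max_left _ _), fun m hm => ?_⟩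
      obtain ⟨E1, hE1, e1⟩ := H1 m ((le_max_left _ _).trans hm)
      obtain ⟨E2, hE2, e2⟩ := H2 m ((le_max_right _ _).trans hm)
      refine ⟨fun s => E1 s + E2 s, hE1.add hE2, fun s hs hs2 => ?_⟩
      beta_reduce
      rw [e1 s hs hs2, e2 s hs hs2]
      refine (integral_ocone_split hη hij ha hb (hInt m (hm1.trans ?_) s hs hs2)).symm
      exact_mod_cast (le_max_left _ _).trans hm
  obtain ⟨m, hm, h⟩ := main (idη n) det_idη
  obtain ⟨E, hE, e⟩ := h m le_rfl
  refine ⟨m, hm, E, hE, fun s hs hs2 => ?_⟩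
  have : ocone (idη n) = posOrthant n := by
    rw [ocone, show eu (idη n) = id from funext eu_idη, Set.image_id]
  rw [e s hs hs2, this, Test.H]
  refine setIntegral_eq_integral_of_forall_compl_eq_zero fun u hu => ?_
  have : Y.P m u = 0 := by
    by_contra h; exact hu (hS u (Y.P_supp m u h))
  simp [Jg, this]

end continuation

/-! ### Splitting a power series along finitely many monomials -/

section taylor
variable {n : ℕ} {κ : Type*}

/-- Absolute convergence of `∑ₖ bₖ x^{βₖ}` on every polydisc of radius less than `r`. Repetitions
among the exponents `βₖ` are allowed, so that termwise differentiation needs no reindexing. -/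
def ConvSum (r : ℝ) (b : κ → ℝ) (β : κ → Fin n → ℕ) : Prop :=
  ∀ q, 0 < q → q < r → Summable fun k => |b k| * q ^ (∑ i, β k i)

lemma pow_tangent {q q' : ℝ} (hq : 0 < q) (h : q < q') (d : ℕ) :
    d * q ^ (d - 1) * (q' - q) ≤ q' ^ d := by
  suffices H : q ^ d + d * q ^ (d - 1) * (q' - q) ≤ q' ^ d by
    have := pow_pos hq d; linarith
  induction d with
  | zero => simp
  | succ d ih =>
    have h1 := mul_le_mul_of_nonneg_left ih (hq.trans h).le
    have h2 : 0 ≤ d * q ^ (d - 1) * (q' - q) * (q' - q) := by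
      have := sub_pos.2 h; positivity
    have h3 : (d : ℝ) * q ^ (d - 1) * q = d * q ^ d := by
      rcases d with _ | d
      · simp
      · simp [pow_succ]; ring
    simp only [Nat.add_sub_cancel, pow_succ, Nat.cast_succ]
    nlinarith

lemma prod_abs_le {q : ℝ} {x : Fin n → ℝ} (hx : ∀ i, |x i| ≤ q) (β : Fin n → ℕ) :
    |∏ i, x i ^ β i| ≤ q ^ (∑ i, β i) := by
  rw [Finset.abs_prod, ← Finset.prod_pow_eq_pow_sum]
  exact Finset.prod_le_prod (fun i _ => abs_nonneg _) fun i _ => by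
    rw [abs_pow]; exact pow_le_pow_left₀ (abs_nonneg _) (hx i) _

/-- The exponent vector with its `i`-th entry lowered by one. -/
def dec (β : Fin n → ℕ) (i : Fin n) : Fin n → ℕ := Function.update β i (β i - 1)

lemma sum_dec {β : Fin n → ℕ} {i : Fin n} (h : β i ≠ 0) :
    ∑ j, dec β i j = ∑ j, β j - 1 := by
  have h1 := Finset.sum_update_of_mem (Finset.mem_univ i) β (β i - 1)
  have h2 := Finset.add_sum_erase Finset.univ β (Finset.mem_univ i)
  rw [Finset.sdiff_singleton_eq_erase] at h1
  rw [dec, h1]; omega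

lemma ConvSum.deriv {r : ℝ} {b : κ → ℝ} {β : κ → Fin n → ℕ} (h : ConvSum r b β) (i : Fin n) :
    ConvSum r (fun k => b k * β k i) (fun k => dec (β k) i) := by
  intro q hq hqr
  obtain ⟨q', h1, h2⟩ := exists_between hqr
  refine Summable.of_nonneg_of_le (fun k => by positivity) (fun k => ?_)
    ((h q' (hq.trans h1) h2).mul_right (q' - q)⁻¹)
  by_cases h0 : β k i = 0
  · simp only [h0, Nat.cast_zero, mul_zero, abs_zero, zero_mul]
    have := sub_pos.2 h1; have := hq.trans h1
    positivity
  rw [sum_dec h0, le_mul_inv_iff₀ (sub_pos.2 h1), abs_mul, Nat.abs_cast]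
  have h3 := pow_tangent hq h1 (∑ j, β k j)
  have h4 : (β k i : ℝ) ≤ (∑ j, β k j : ℕ) := by
    exact_mod_cast Finset.single_le_sum (f := β k) (fun _ _ => Nat.zero_le _) (Finset.mem_univ i)
  have h5 : (0 : ℝ) < q ^ (∑ j, β k j - 1) := pow_pos hq _
  have h6 := sub_pos.2 h1
  calc |b k| * β k i * q ^ (∑ j, β k j - 1) * (q' - q)
      = |b k| * (β k i * q ^ (∑ j, β k j - 1) * (q' - q)) := by ring
    _ ≤ |b k| * ((∑ j, β k j : ℕ) * q ^ (∑ j, β k j - 1) * (q' - q)) := by gcongr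
    _ ≤ _ := by gcongr

lemma mono_fderiv (β : Fin n → ℕ) (x : Fin n → ℝ) :
    HasFDerivAt (fun x : Fin n → ℝ => ∏ i, x i ^ β i)
      (∑ i, ((β i : ℝ) * ∏ j, x j ^ dec β i j) •
        ContinuousLinearMap.proj (R := ℝ) (φ := fun _ : Fin n => ℝ) i) x := by
  have h : ∀ i ∈ (Finset.univ : Finset (Fin n)), HasFDerivAt (fun x : Fin n → ℝ => x i ^ β i)
      (((β i : ℝ) * x i ^ (β i - 1)) •
        ContinuousLinearMap.proj (R := ℝ) (φ := fun _ : Fin n => ℝ) i) x := fun i _ => by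
    have := ((hasDerivAt_pow (β i) (x i)).hasFDerivAt.comp x
      (ContinuousLinearMap.proj (R := ℝ) (φ := fun _ : Fin n => ℝ) i).hasFDerivAt)
    refine this.congr_fderiv ?_
    ext v; simp; ring
  refine (HasFDerivAt.finsetProd h).congr_fderiv ?_
  refine Finset.sum_congr rfl fun i _ => ?_
  rw [smul_smul]
  congr 1
  have h2 : ∏ j, x j ^ dec β i j = x i ^ (β i - 1) * ∏ j ∈ Finset.univ.erase i, x j ^ β j := by
    rw [← Finset.mul_prod_erase Finset.univ _ (Finset.mem_univ i)]
    congr 1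
    · simp [dec]
    · exact Finset.prod_congr rfl fun j hj => by
        simp [dec, Function.update_of_ne (Finset.ne_of_mem_erase hj)]
  rw [h2]; ring

lemma ConvSum.summable {r : ℝ} {b : κ → ℝ} {β : κ → Fin n → ℕ} (h : ConvSum r b β) {x : Fin n → ℝ}
    (hx : ‖x‖ < r) : Summable fun k => b k * ∏ i, x i ^ β k i := by
  obtain ⟨q, h1, h2⟩ := exists_between hx
  refine Summable.of_norm_bounded (h q ((norm_nonneg x).trans_lt h1) h2) fun k => ?_
  rw [Real.norm_eq_abs, abs_mul]
  exact mul_le_mul_of_nonneg_left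
    (prod_abs_le (fun i => (norm_le_pi_norm x i).trans h1.le) _) (abs_nonneg _)

lemma ConvSum.hasFDerivAt {r : ℝ} {b : κ → ℝ} {β : κ → Fin n → ℕ} (h : ConvSum r b β) {x : Fin n → ℝ}
    (hx : ‖x‖ < r) : HasFDerivAt (fun x : Fin n → ℝ => ∑' k, b k * ∏ i, x i ^ β k i)
      (∑ i, (∑' k, (b k * β k i) * ∏ j, x j ^ dec (β k) i j) •
        ContinuousLinearMap.proj (R := ℝ) (φ := fun _ : Fin n => ℝ) i) x := by
  obtain ⟨q, h1, h2⟩ := exists_between hx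
  have hq := (norm_nonneg x).trans_lt h1
  let F' : κ → (Fin n → ℝ) → (Fin n → ℝ) →L[ℝ] ℝ := fun k y =>
    ∑ i, ((b k * β k i) * ∏ j, y j ^ dec (β k) i j) •
      ContinuousLinearMap.proj (R := ℝ) (φ := fun _ : Fin n => ℝ) i
  have hsum : Summable fun k => ∑ i : Fin n, |b k * β k i| * q ^ (∑ j, dec (β k) i j) :=
    summable_sum fun i _ => h.deriv i q hq h2
  have := hasFDerivAt_tsum_of_isPreconnected (f := fun k (y : Fin n → ℝ) => b k * ∏ i, y i ^ β k i)
    (f' := F') (s := Metric.ball 0 q) (x₀ := 0) (x := x) hsum Metric.isOpen_ball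
    (convex_ball _ _).isPreconnected (fun k y hy => ?_) (fun k y hy => ?_)
    (Metric.mem_ball_self hq) (h.summable (by simpa using hq.trans h2)) (by simpa using h1)
  · refine this.congr_fderiv ?_
    have hs : ∀ i ∈ (Finset.univ : Finset (Fin n)), Summable fun k =>
        ((b k * β k i) * ∏ j, x j ^ dec (β k) i j) •
          ContinuousLinearMap.proj (R := ℝ) (φ := fun _ : Fin n => ℝ) i := fun i _ =>
      ((h.deriv i).summable hx).smul_const _
    rw [Summable.tsum_finsetSum hs]
    exact Finset.sum_congr rfl fun i _ => ((h.deriv i).summable hx).tsum_smul_const _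
  · refine ((mono_fderiv (β k) y).const_mul (b k)).congr_fderiv ?_
    simp only [F', Finset.smul_sum, smul_smul, mul_assoc]
  · refine (norm_sum_le _ _).trans (Finset.sum_le_sum fun i _ => ?_)
    rw [norm_smul, Real.norm_eq_abs, abs_mul]
    have hy' : ∀ j, |y j| ≤ q := fun j =>
      (norm_le_pi_norm y j).trans (by simpa using (Metric.mem_ball.1 hy).le)
    have hp : ‖ContinuousLinearMap.proj (R := ℝ) (φ := fun _ : Fin n => ℝ) i‖ ≤ 1 :=
      ContinuousLinearMap.opNorm_le_bound _ zero_le_one fun v => by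
        simpa using norm_le_pi_norm v i
    calc _ ≤ |b k * β k i| * q ^ (∑ j, dec (β k) i j) * 1 := by
          gcongr
          exact prod_abs_le hy' _
      _ = _ := mul_one _

lemma ConvSum.contDiffOn {r : ℝ} (N : ℕ) : ∀ {b : κ → ℝ} {β : κ → Fin n → ℕ}, ConvSum r b β →
    ContDiffOn ℝ N (fun x : Fin n → ℝ => ∑' k, b k * ∏ i, x i ^ β k i) (Metric.ball 0 r) := by
  induction N with
  | zero =>
    intro b β h
    exact contDiffOn_zero.2 fun x hx =>
      (h.hasFDerivAt (by simpa using hx)).continuousAt.continuousWithinAt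
  | succ N ih =>
    intro b β h
    rw [Nat.cast_succ, contDiffOn_succ_iff_fderiv_of_isOpen Metric.isOpen_ball]
    refine ⟨fun x hx =>
      (h.hasFDerivAt (by simpa using hx)).differentiableAt.differentiableWithinAt,
      by simp, ?_⟩
    refine ContDiffOn.congr (f := fun x : Fin n → ℝ =>
      ∑ i, (∑' k, (b k * β k i) * ∏ j, x j ^ dec (β k) i j) •
        ContinuousLinearMap.proj (R := ℝ) (φ := fun _ : Fin n => ℝ) i)
      (ContDiffOn.sum fun i _ => (ih (h.deriv i)).smul contDiffOn_const) fun x hx =>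
        (h.hasFDerivAt (by simpa using hx)).fderiv

/-- Dickson's lemma. -/
lemma dickson (S : Set (Fin n → ℕ)) :
    ∃ V : Finset (Fin n → ℕ), (∀ v ∈ V, v ∈ S) ∧ ∀ α ∈ S, ∃ v ∈ V, v ≤ α := by
  have hfin : {v | Minimal (· ∈ S) v}.Finite := WellQuasiOrderedLE.finite_of_isAntichain (setOfPred_minimal_antichain _)
  refine ⟨hfin.toFinset, fun v hv => (hfin.mem_toFinset.1 hv).1, fun α hα => ?_⟩
  obtain ⟨v, hv, hm⟩ := exists_minimal_le_of_wellFoundedLT (· ∈ S) α hα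
  exact ⟨v, hfin.mem_toFinset.2 hm, hv⟩

/-- A convergent power series is a finite combination of monomials from its support, with
coefficients which are smooth, compactly supported and nonzero at the origin. -/
theorem taylor_split {f : (Fin n → ℝ) → ℝ} {a : (Fin n → ℕ) → ℝ}
    (hfa : ∀ᶠ x in 𝓝 (0 : Fin n → ℝ), HasSum (fun α => a α * ∏ i, x i ^ α i) (f x)) :
    ∃ (V : Finset (Fin n → ℕ)) (g : (Fin n → ℕ) → (Fin n → ℝ) → ℝ),
      (∀ v ∈ V, a v ≠ 0) ∧ (∀ α, a α ≠ 0 → ∃ v ∈ V, v ≤ α) ∧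
      (∀ v, ContDiff ℝ (⊤ : ℕ∞) (g v)) ∧ (∀ v, HasCompactSupport (g v)) ∧
      (∀ v ∈ V, g v 0 = a v) ∧
      ∀ᶠ x in 𝓝 (0 : Fin n → ℝ), f x = ∑ v ∈ V, (∏ i, x i ^ v i) * g v x := by
  obtain ⟨V, hV, hVle⟩ := dickson {α | a α ≠ 0}
  obtain ⟨r, hr, hball⟩ := Metric.eventually_nhds_iff_ball.1 hfa
  -- absolute convergence at the diagonal point `(r/2,…,r/2)`
  have hr2 : 0 < r / 2 := by linarith
  have hsum : Summable fun α : Fin n → ℕ => |a α| * (r / 2) ^ (∑ i, α i) := by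
    have := (hball (fun _ => r / 2) (by
      rw [mem_ball_zero_iff]
      refine (pi_norm_lt_iff hr).2 fun i => ?_
      rw [Real.norm_of_nonneg hr2.le]; linarith)).summable.abs
    refine this.congr fun α => ?_
    rw [abs_mul, Finset.abs_prod, ← Finset.prod_pow_eq_pow_sum]
    simp [abs_of_pos hr2]
  have hA : ∀ α : Fin n → ℕ, ∃ v, (α ∈ V → v = α) ∧ (a α ≠ 0 → v ∈ V ∧ v ≤ α) := fun α => by
    by_cases h : α ∈ V
    · exact ⟨α, fun _ => rfl, fun _ => ⟨h, le_rfl⟩⟩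
    · by_cases h2 : a α ≠ 0
      · obtain ⟨v, hv, hle⟩ := hVle α h2
        exact ⟨v, fun h' => absurd h' h, fun _ => ⟨hv, hle⟩⟩
      · exact ⟨α, fun _ => rfl, fun h' => absurd h' h2⟩
  choose A hA1 hA2 using hA
  let b : (Fin n → ℕ) → (Fin n → ℕ) → ℝ := fun v α => if A α = v then a α else 0
  have hb : ∀ v α, b v α ≠ 0 → A α = v ∧ a α ≠ 0 ∧ v ≤ α := fun v α h => by
    by_cases h1 : A α = v
    · have h2 : a α ≠ 0 := by simpa [b, h1] using h
      exact ⟨h1, h2, h1 ▸ (hA2 α h2).2⟩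
    · simp [b, h1] at h
  have hPS : ∀ v, ConvSum (r / 2) (b v) (fun α => α - v) := fun v q hq hqr => by
    refine Summable.of_nonneg_of_le (fun k => by positivity) (fun α => ?_)
      (hsum.mul_right ((q ^ (∑ i, v i))⁻¹))
    have hq' := pow_pos hq (∑ i, v i)
    by_cases h : b v α = 0
    · simp only [h, abs_zero, zero_mul]; positivity
    obtain ⟨h1, -, h3⟩ := hb v α h
    rw [le_mul_inv_iff₀ hq', mul_assoc, ← pow_add, ← Finset.sum_add_distrib]
    have : ∑ i, ((α - v) i + v i) = ∑ i, α i :=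
      Finset.sum_congr rfl fun i _ => Nat.sub_add_cancel (h3 i)
    rw [this]
    simp only [b, h1, if_true]
    gcongr
  let bump : ContDiffBump (0 : Fin n → ℝ) := ⟨r / 8, r / 4, by linarith, by linarith⟩
  let g0 : (Fin n → ℕ) → (Fin n → ℝ) → ℝ := fun v x => ∑' α, b v α * ∏ i, x i ^ (α - v) i
  have hg0 : ∀ v, ContDiffOn ℝ (⊤ : ℕ∞) (g0 v) (Metric.ball 0 (r / 2)) := fun v =>
    contDiffOn_infty.2 fun N => (hPS v).contDiffOn N
  refine ⟨V, fun v x => bump x * g0 v x, hV, hVle, fun v => ?_, fun v => ?_, fun v hv => ?_, ?_⟩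
  · rw [contDiff_iff_contDiffAt]
    intro x
    by_cases hx : x ∈ Metric.ball (0 : Fin n → ℝ) (r / 2)
    · exact bump.contDiffAt.mul ((hg0 v).contDiffAt (Metric.isOpen_ball.mem_nhds hx))
    · have hx' : x ∉ tsupport bump := by
        rw [bump.tsupport_eq]
        simp only [mem_closedBall_zero_iff, not_le, mem_ball_zero_iff, not_lt] at hx ⊢
        show r / 4 < _
        linarith
      refine (contDiffAt_const (c := (0 : ℝ))).congr_of_eventuallyEq ?_
      filter_upwards [(isClosed_tsupport (bump : (Fin n → ℝ) → ℝ)).isOpen_compl.mem_nhds hx']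
        with y hy
      rw [image_eq_zero_of_notMem_tsupport hy, zero_mul]
  · exact bump.hasCompactSupport.mul_right
  · have h1 : bump (0 : Fin n → ℝ) = 1 := bump.one_of_mem_closedBall (by
      rw [mem_closedBall_zero_iff, norm_zero]; exact (by linarith : (0 : ℝ) ≤ r / 8))
    have hAv : A v = v := hA1 v hv
    beta_reduce
    rw [h1, one_mul]
    simp only [g0]
    rw [tsum_eq_single v]
    · simp [b, hAv]
    · intro α hα
      by_cases h : b v α = 0
      · rw [h, zero_mul]
      obtain ⟨-, -, h3⟩ := hb v α h
      obtain ⟨i, hi⟩ : ∃ i, α i ≠ v i := by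
        by_contra! hne; exact hα (funext hne)
      have : α i - v i ≠ 0 := by 
        have : v i ≤ α i := h3 i
        omega
      rw [Finset.prod_eq_zero (Finset.mem_univ i), mul_zero]
      simp [this]
  · filter_upwards [Metric.ball_mem_nhds (0 : Fin n → ℝ) (show 0 < r / 8 by linarith)] with x hx
    rw [mem_ball_zero_iff] at hx
    have h1 : bump x = 1 := bump.one_of_mem_closedBall (by
      rw [mem_closedBall_zero_iff]; exact hx.le)
    have h2 := hball x (by rw [mem_ball_zero_iff]; linarith)
    have h3 : ∀ v ∈ V, Summable fun α => (∏ i, x i ^ v i) * (b v α * ∏ i, x i ^ (α - v) i) :=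
      fun v _ => ((hPS v).summable (by linarith)).mul_left _
    simp only [h1, one_mul, g0]
    rw [← h2.tsum_eq]
    simp_rw [← tsum_mul_left]
    rw [← Summable.tsum_finsetSum h3]
    refine tsum_congr fun α => ?_
    by_cases h : a α = 0
    · rw [h, zero_mul, Finset.sum_eq_zero]
      intro v _
      have : b v α = 0 := by simp [b, h]
      rw [this]; ring
    obtain ⟨hv, hle⟩ := hA2 α h
    rw [Finset.sum_eq_single_of_mem _ hv]
    · simp only [b, if_true]
      rw [mul_left_comm, ← Finset.prod_mul_distrib]
      congr 1
      refine Finset.prod_congr rfl fun i _ => ?_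
      rw [← pow_add, Pi.sub_apply, Nat.add_sub_cancel' (hle i)]
    · intro v _ hne
      have : b v α = 0 := by simp [b, hne.symm]
      rw [this]; ring

end taylor

/-! ### Faces of the Newton polyhedron -/

section polyhedron
variable {n : ℕ}

/-- An exponent vector as a point of `ℝⁿ`. -/
def rc (v : Fin n → ℕ) : Fin n → ℝ := fun i => (v i : ℝ)

lemma dotR_rc (u : Fin n → ℝ) (v : Fin n → ℕ) : dotR u (rc v) = dn v u := by
  simp only [dotR, rc, dn]; exact Finset.sum_congr rfl fun i _ => mul_comm _ _

lemma dotR_add (u y z : Fin n → ℝ) : dotR u (y + z) = dotR u y + dotR u z := by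
  simp [dotR, mul_add, Finset.sum_add_distrib]

lemma dotR_smul (u : Fin n → ℝ) (c : ℝ) (y : Fin n → ℝ) : dotR u (c • y) = c * dotR u y := by
  simp only [dotR, Finset.mul_sum, Pi.smul_apply, smul_eq_mul]
  exact Finset.sum_congr rfl fun i _ => by ring

lemma dotR_sub (u y z : Fin n → ℝ) : dotR u (y - z) = dotR u y - dotR u z := by
  simp [dotR, mul_sub, Finset.sum_sub_distrib]

lemma dotR_comm (u y : Fin n → ℝ) : dotR u y = dotR y u := by
  simp [dotR, mul_comm]

lemma dotR_sum {ι : Type*} (s : Finset ι) (u : Fin n → ℝ) (g : ι → Fin n → ℝ) :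
    dotR u (∑ k ∈ s, g k) = ∑ k ∈ s, dotR u (g k) := by
  simp only [dotR, Finset.sum_apply, Finset.mul_sum]
  exact Finset.sum_comm

lemma dotR_single (u : Fin n → ℝ) (i : Fin n) : dotR u (Pi.single i 1) = u i := by
  simp [dotR, Pi.single_apply]

lemma dotR_const (u : Fin n → ℝ) (t : ℝ) : dotR u (fun _ => t) = t * sm u := by
  simp [dotR, sm, Finset.mul_sum, mul_comm]

/-- The functional `⟨u, ·⟩`. -/
def dotL (u : Fin n → ℝ) : (Fin n → ℝ) →ₗ[ℝ] ℝ where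
  toFun := dotR u
  map_add' := dotR_add u
  map_smul' c y := by simp [dotR_smul]

/-- A convex region stable under adding vectors of the positive orthant, whose points lie above
the convex hull of a finite set `V` of exponents. -/
structure NPoly (Γ : Set (Fin n → ℝ)) (V : Finset (Fin n → ℕ)) : Prop where
  conv : Convex ℝ Γ
  add_mem : ∀ y ∈ Γ, ∀ p : Fin n → ℝ, (∀ i, 0 ≤ p i) → y + p ∈ Γ
  mem : ∀ v ∈ V, rc v ∈ Γ
  dec : ∀ y ∈ Γ, ∃ c ∈ convexHull ℝ (↑(V.image rc) : Set (Fin n → ℝ)), ∃ p : Fin n → ℝ,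
    (∀ i, 0 ≤ p i) ∧ y = c + p

lemma newton_NPoly {S : Set (Fin n → ℕ)} {V : Finset (Fin n → ℕ)} (hV : ∀ v ∈ V, v ∈ S)
    (hS : ∀ α ∈ S, ∃ v ∈ V, v ≤ α) : NPoly (newtonPolyhedron S) V where
  conv := convex_convexHull _ _
  add_mem := by
    intro y hy p hp
    have hc : Convex ℝ {y : Fin n → ℝ | y + p ∈ newtonPolyhedron S} := by
      intro y hy z hz c d hc hd hcd
      have : c • y + d • z + p = c • (y + p) + d • (z + p) := by
        rw [smul_add, smul_add, add_add_add_comm, ← add_smul, hcd, one_smul]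
      show c • y + d • z + p ∈ newtonPolyhedron S
      rw [this]
      exact convex_convexHull ℝ _ hy hz hc hd hcd
    refine convexHull_min ?_ hc hy
    rintro x ⟨α, hα, hx⟩
    exact subset_convexHull ℝ _ ⟨α, hα, fun i => (hx i).trans (by simp [hp i])⟩
  mem := fun v hv => subset_convexHull ℝ _ ⟨v, hV v hv, fun i => le_rfl⟩
  dec := by
    intro y hy
    have hc : Convex ℝ {y : Fin n → ℝ | ∃ c ∈ convexHull ℝ (↑(V.image rc) : Set (Fin n → ℝ)),
        ∃ p : Fin n → ℝ, (∀ i, 0 ≤ p i) ∧ y = c + p} := by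
      rintro _ ⟨c, hc, p, hp, rfl⟩ _ ⟨c', hc', p', hp', rfl⟩ x y hx hy hxy
      refine ⟨x • c + y • c', convex_convexHull ℝ _ hc hc' hx hy hxy, x • p + y • p', fun i => ?_,
        by rw [smul_add, smul_add, add_add_add_comm]⟩
      exact add_nonneg (mul_nonneg hx (hp i)) (mul_nonneg hy (hp' i))
    refine convexHull_min ?_ hc hy
    rintro x ⟨α, hα, hx⟩
    obtain ⟨v, hv, hle⟩ := hS α hα
    refine ⟨rc v, subset_convexHull ℝ _ (by simpa using ⟨v, hv, rfl⟩), x - rc v,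
      fun i => ?_, by abel⟩
    have : (v i : ℝ) ≤ α i := by exact_mod_cast hle i
    simp only [Pi.sub_apply, rc]
    linarith [hx i]

lemma dotR_nonneg {u p : Fin n → ℝ} (hu : ∀ i, 0 ≤ u i) (hp : ∀ i, 0 ≤ p i) : 0 ≤ dotR u p :=
  Finset.sum_nonneg fun i _ => mul_nonneg (hu i) (hp i)

namespace NPoly
variable {Γ : Set (Fin n → ℝ)} {V : Finset (Fin n → ℕ)} (P : NPoly Γ V)
include P

lemma hull_sub : convexHull ℝ (↑(V.image rc) : Set (Fin n → ℝ)) ⊆ Γ :=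
  convexHull_min (by
    intro x hx
    obtain ⟨v, hv, rfl⟩ := Finset.mem_image.1 (Finset.mem_coe.1 hx)
    exact P.mem v hv) P.conv

lemma exists_le {y u : Fin n → ℝ} (hy : y ∈ Γ) (hu : ∀ i, 0 ≤ u i) :
    ∃ v ∈ V, dn v u ≤ dotR u y := by
  obtain ⟨c, hc, p, hp, rfl⟩ := P.dec y hy
  by_contra! h
  have hh : Convex ℝ {z | dotR u (c + p) < dotR u z} := convex_halfSpace_gt (dotL u).isLinear _
  have : c ∈ {z | dotR u (c + p) < dotR u z} := convexHull_min (fun x hx => by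
    obtain ⟨v, hv, rfl⟩ := Finset.mem_image.1 (Finset.mem_coe.1 hx)
    show _ < dotR u (rc v)
    rw [dotR_rc]; exact h v hv) hh hc
  have h1 : dotR u (c + p) < dotR u c := this
  rw [dotR_add] at h1
  linarith [dotR_nonneg hu hp]

lemma mem_trace {y u : Fin n → ℝ} (hu : ∀ i, 0 ≤ u i) :
    y ∈ traceFace Γ u ↔ y ∈ Γ ∧ ∀ v ∈ V, dotR u y ≤ dn v u := by
  refine ⟨fun h => ⟨h.1, fun v hv => ?_⟩, fun h => ⟨h.1, fun z hz => ?_⟩⟩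
  · rw [← dotR_rc]; exact h.2 _ (P.mem v hv)
  · obtain ⟨v, hv, hle⟩ := P.exists_le hz hu
    exact (h.2 v hv).trans hle

lemma pos_of_compact {y u : Fin n → ℝ} (hu : ∀ i, 0 ≤ u i) (hc : IsCompact (traceFace Γ u))
    (hy : y ∈ traceFace Γ u) (i : Fin n) : 0 < u i := by
  refine lt_of_le_of_ne (hu i) fun h0 => ?_
  have hmem : ∀ c : ℝ, 0 ≤ c → y + c • (Pi.single i 1 : Fin n → ℝ) ∈ traceFace Γ u := fun c h => by
    refine ⟨P.add_mem y hy.1 _ fun j => ?_, fun z hz => ?_⟩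
    · by_cases hj : j = i
      · subst hj; simpa using h
      · simp [hj]
    · rw [dotR_add, dotR_smul, dotR_single, ← h0, mul_zero, add_zero]
      exact hy.2 z hz
  obtain ⟨R, hR⟩ := hc.isBounded.exists_norm_le
  have h1 := (norm_le_pi_norm (y + (|R| + |y i| + 1) • (Pi.single i 1 : Fin n → ℝ)) i).trans
    (hR _ (hmem _ (by positivity)))
  simp only [Pi.add_apply, Pi.smul_apply, Pi.single_eq_same, smul_eq_mul, mul_one,
    Real.norm_eq_abs] at h1
  have h2 := le_abs_self (y i + (|R| + |y i| + 1))
  have h3 := neg_abs_le (y i)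
  have h4 := le_abs_self R
  linarith

/-- A face with positive normal is the convex hull of the elements of `V` it contains. -/
lemma trace_eq {u : Fin n → ℝ} (hu : ∀ i, 0 < u i) :
    traceFace Γ u =
      convexHull ℝ (↑((V.filter fun v => rc v ∈ traceFace Γ u).image rc) : Set (Fin n → ℝ)) := by
  have hu' : ∀ i, 0 ≤ u i := fun i => (hu i).le
  apply Set.Subset.antisymm
  · intro y hy
    obtain ⟨c, hc, p, hp, rfl⟩ := P.dec y hy.1
    have hle := hy.2 c (P.hull_sub hc)
    rw [dotR_add] at hle
    have hp0 : p = 0 := by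
      have h0 : dotR u p = 0 := le_antisymm (by linarith) (dotR_nonneg hu' hp)
      funext i
      have := (Finset.sum_eq_zero_iff_of_nonneg
        fun i _ => mul_nonneg (hu' i) (hp i)).1 h0 i (Finset.mem_univ i)
      exact (mul_eq_zero.1 this).resolve_left (hu i).ne'
    subst hp0
    rw [add_zero] at hy ⊢
    obtain ⟨w, hw0, hw1, hwc⟩ := Finset.mem_convexHull'.1 hc
    have hmin : ∀ x ∈ V.image rc, dotR u c ≤ dotR u x := fun x hx => by
      obtain ⟨v, hv, rfl⟩ := Finset.mem_image.1 hx
      exact hy.2 _ (P.mem v hv)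
    have hz : ∑ x ∈ V.image rc, w x * (dotR u x - dotR u c) = 0 := by
      simp only [mul_sub, Finset.sum_sub_distrib, ← Finset.sum_mul, hw1, one_mul]
      rw [← hwc, dotR_sum]
      simp [dotR_smul]
    have hz' := (Finset.sum_eq_zero_iff_of_nonneg fun x hx =>
      mul_nonneg (hw0 x hx) (sub_nonneg.2 (hmin x hx))).1 hz
    refine Finset.mem_convexHull'.2 ⟨w, fun x hx => hw0 x ?_, ?_, ?_⟩
    · exact Finset.image_subset_image (Finset.filter_subset _ _) hx
    all_goals
      have hzero : ∀ x ∈ V.image rc,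
          x ∉ (V.filter fun v => rc v ∈ traceFace Γ u).image rc → w x = 0 := fun x hx hn => by
        by_contra hne
        have he := (mul_eq_zero.1 (hz' x hx)).resolve_left hne
        obtain ⟨v, hv, rfl⟩ := Finset.mem_image.1 hx
        refine hn (Finset.mem_image.2 ⟨v, Finset.mem_filter.2 ⟨hv, P.mem v hv, fun z hzz => ?_⟩, rfl⟩)
        have := hy.2 z hzz
        linarith
    · rw [← hw1]
      exact Finset.sum_subset (Finset.image_subset_image (Finset.filter_subset _ _)) hzero
    · rw [← hwc]
      exact Finset.sum_subset (Finset.image_subset_image (Finset.filter_subset _ _))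
        fun x hx hn => by rw [hzero x hx hn, zero_smul]
  · refine convexHull_min ?_ ?_
    · intro x hx
      obtain ⟨v, hv, rfl⟩ := Finset.mem_image.1 (Finset.mem_coe.1 hx)
      exact (Finset.mem_filter.1 hv).2
    · intro y hy z hz p q hp hq hpq
      refine ⟨P.conv hy.1 hz.1 hp hq hpq, fun x hx => ?_⟩
      rw [dotR_add, dotR_smul, dotR_smul]
      calc _ ≤ p * dotR u x + q * dotR u x := by
            gcongr
            exacts [hy.2 x hx, hz.2 x hx]
        _ = _ := by rw [← add_mul, hpq, one_mul]

lemma trace_compact {u : Fin n → ℝ} (hu : ∀ i, 0 < u i) : IsCompact (traceFace Γ u) := by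
  rw [P.trace_eq hu]
  exact (Finset.finite_toSet _).isCompact_convexHull ℝ

end NPoly

/-- The orthogonal complement of a set. -/
def orth (S : Set (Fin n → ℝ)) : Submodule ℝ (Fin n → ℝ) where
  carrier := {w | ∀ y ∈ S, dotR w y = 0}
  add_mem' := fun {a b} ha hb y hy => by
    rw [dotR_comm, dotR_add, dotR_comm, dotR_comm y, ha y hy, hb y hy, add_zero]
  zero_mem' := fun y _ => by simp [dotR]
  smul_mem' := fun c w hw y hy => by
    rw [dotR_comm, dotR_smul, dotR_comm, hw y hy, mul_zero]

lemma finrank_orth (S : Submodule ℝ (Fin n → ℝ)) :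
    Module.finrank ℝ S + Module.finrank ℝ (orth (S : Set (Fin n → ℝ))) = n := by
  have h := Subspace.finrank_add_finrank_dualAnnihilator_eq S
  rw [Module.finrank_fin_fun] at h
  have he : orth (S : Set (Fin n → ℝ)) =
      S.dualAnnihilator.comap (dotProductEquiv ℝ (Fin n)).toLinearMap := by
    ext w
    simp only [Submodule.mem_comap, Submodule.mem_dualAnnihilator]
    rfl
  have := LinearEquiv.finrank_eq ((dotProductEquiv ℝ (Fin n)).submoduleMap
    (S.dualAnnihilator.comap (dotProductEquiv ℝ (Fin n)).toLinearMap))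
  rw [Submodule.map_comap_eq_of_surjective (dotProductEquiv ℝ (Fin n)).surjective] at this
  rw [he, this, h]

/-- Vectors orthogonal to the direction of a set are those with constant pairing on it. -/
lemma mem_orth_vectorSpan {τ : Set (Fin n → ℝ)} {y : Fin n → ℝ} (hy : y ∈ τ) {w : Fin n → ℝ} :
    w ∈ orth (vectorSpan ℝ τ : Set (Fin n → ℝ)) ↔ ∀ z ∈ τ, dotR w z = dotR w y := by
  constructor
  · intro h z hz
    have := h (z - y) (vsub_mem_vectorSpan ℝ hz hy)
    rw [dotR_sub] at this; linarith
  · intro h x hx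
    rw [SetLike.mem_coe, vectorSpan] at hx
    induction hx using Submodule.span_induction with
    | mem x hx =>
      obtain ⟨z, hz, z', hz', rfl⟩ := Set.mem_vsub.1 hx
      rw [vsub_eq_sub, dotR_sub, h z hz, h z' hz', sub_self]
    | zero => simp [dotR]
    | add x x' _ _ h h' => rw [dotR_add, h, h', add_zero]
    | smul c x _ h => rw [dotR_smul, h, mul_zero]

end polyhedron

/-! ### The normal cone of the face `τ₀` -/

/-- The polyhedral data: `τ` is the smallest face of `Γ` through `(t,…,t)`, it is compact, and
`ξ` lists the normals of the facets containing it; the span of `ξ` has dimension `ρ` and is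
complementary to the span of the coordinate vectors with index at least `ρ`. -/
structure Geo {n r : ℕ} (ρ : ℕ) (Γ : Set (Fin n → ℝ)) (V : Finset (Fin n → ℕ)) (t : ℝ)
    (τ : Set (Fin n → ℝ)) (ξ : Fin r → Fin n → ℕ) : Prop where
  poly : NPoly Γ V
  ρ_le : ρ ≤ n
  t_pos : 0 < t
  face : IsFaceOf Γ τ
  mem : (fun _ => t) ∈ τ
  min : ∀ τ' : Set (Fin n → ℝ), IsFaceOf Γ τ' → (fun _ => t) ∈ τ' → τ ⊆ τ'
  comp : IsCompact τ
  dim : ρ = n - faceDim τ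
  ne : ∀ j, ξ j ≠ 0
  facet : ∀ j, faceDim (traceFace Γ (rc (ξ j))) = n - 1 ∧ τ ⊆ traceFace Γ (rc (ξ j))
  all : ∀ τ' : Set (Fin n → ℝ), IsFaceOf Γ τ' → faceDim τ' = n - 1 → τ ⊆ τ' →
      ∃ j, τ' = traceFace Γ (rc (ξ j))
  compl : IsCompl (Submodule.span ℝ (Set.range fun j => rc (ξ j)))
      (Submodule.span ℝ {x : Fin n → ℝ | ∃ i : Fin n, ρ ≤ (i : ℕ) ∧ x = Pi.single i 1})
  rank : Module.finrank ℝ (Submodule.span ℝ (Set.range fun j => rc (ξ j))) = ρ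

/-- Extension by zero on the first `ρ` coordinates. -/
def iota {n : ℕ} (ρ : ℕ) : (Fin (n - ρ) → ℝ) →ₗ[ℝ] (Fin n → ℝ) where
  toFun v i := if h : (i : ℕ) < ρ then 0 else v ⟨(i : ℕ) - ρ, by have := i.isLt; omega⟩
  map_add' v w := by ext i; by_cases h : (i : ℕ) < ρ <;> simp [h]
  map_smul' c v := by ext i; by_cases h : (i : ℕ) < ρ <;> simp [h]

/-- The last `n - ρ` coordinates. -/
def tailc {n : ℕ} (ρ : ℕ) (h : ρ ≤ n) : (Fin n → ℝ) →ₗ[ℝ] (Fin (n - ρ) → ℝ) where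
  toFun u i := u ⟨(i : ℕ) + ρ, by have := i.isLt; omega⟩
  map_add' v w := rfl
  map_smul' c v := rfl

namespace Geo
variable {n r ρ : ℕ} {Γ : Set (Fin n → ℝ)} {V : Finset (Fin n → ℕ)} {t : ℝ}
  {τ : Set (Fin n → ℝ)} {ξ : Fin r → Fin n → ℕ}

/-- The exponents of `V` on the face. -/
def T (_ : Geo ρ Γ V t τ ξ) : Finset (Fin n → ℕ) := V.filter fun v => rc v ∈ τ

/-- The span of the normals. -/
def W (_ : Geo ρ Γ V t τ ξ) : Submodule ℝ (Fin n → ℝ) :=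
  Submodule.span ℝ (Set.range fun j => rc (ξ j))

/-- The span of the remaining coordinate vectors. -/
def W' (_ : Geo ρ Γ V t τ ξ) : Submodule ℝ (Fin n → ℝ) :=
  Submodule.span ℝ {x : Fin n → ℝ | ∃ i : Fin n, ρ ≤ (i : ℕ) ∧ x = Pi.single i 1}

variable (P : Geo ρ Γ V t τ ξ)
include P

lemma exists_normal : ∃ u : Fin n → ℝ, (∀ i, 0 < u i) ∧ τ = traceFace Γ u := by
  obtain ⟨u, hu, he⟩ := P.face
  refine ⟨u, fun i => ?_, he⟩
  exact P.poly.pos_of_compact hu (he ▸ P.comp) (y := fun _ => t) (he ▸ P.mem) i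

/-- A positive normal of the face. -/
def u0 : Fin n → ℝ := P.exists_normal.choose
lemma u0_pos : ∀ i, 0 < P.u0 i := P.exists_normal.choose_spec.1
lemma u0_eq : τ = traceFace Γ P.u0 := P.exists_normal.choose_spec.2

lemma mem_T {v : Fin n → ℕ} : v ∈ P.T ↔ v ∈ V ∧ rc v ∈ τ := Finset.mem_filter

lemma hull : τ = convexHull ℝ (↑(P.T.image rc) : Set (Fin n → ℝ)) := by
  have h := P.poly.trace_eq P.u0_pos
  rw [← P.u0_eq] at h
  exact h

lemma T_ne : P.T.Nonempty := by
  by_contra h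
  rw [Finset.not_nonempty_iff_eq_empty] at h
  have := P.mem
  rw [P.hull, h] at this
  simp at this

lemma t_mem : (fun _ => t) ∈ Γ := by
  have := P.mem
  rw [P.u0_eq] at this
  exact this.1

/-- A vector has constant pairing with the face exactly when its pairing with the vertices on it
is `t` times its coordinate sum. -/
lemma mem_orth {w : Fin n → ℝ} :
    w ∈ orth (vectorSpan ℝ τ : Set (Fin n → ℝ)) ↔ ∀ v ∈ P.T, dn v w = t * sm w := by
  rw [mem_orth_vectorSpan P.mem]
  simp only [dotR_const]
  constructor
  · intro h v hv
    rw [← dotR_rc]; exact h _ (P.mem_T.1 hv).2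
  · intro h z hz
    rw [P.hull] at hz
    have hh : Convex ℝ {z | dotR w z = t * sm w} := convex_hyperplane (dotL w).isLinear _
    refine convexHull_min (fun x hx => ?_) hh hz
    obtain ⟨v, hv, rfl⟩ := Finset.mem_image.1 (Finset.mem_coe.1 hx)
    show dotR w (rc v) = _
    rw [dotR_rc]; exact h v hv

lemma W_eq : P.W = orth (vectorSpan ℝ τ : Set (Fin n → ℝ)) := by
  refine Submodule.eq_of_le_of_finrank_eq ?_ ?_
  · refine Submodule.span_le.2 ?_
    rintro _ ⟨j, rfl⟩
    rw [SetLike.mem_coe, mem_orth_vectorSpan P.mem]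
    intro z hz
    have h1 := (P.facet j).2 hz
    have h2 := (P.facet j).2 P.mem
    exact le_antisymm (h1.2 _ h2.1) (h2.2 _ h1.1)
  · have h1 := finrank_orth (vectorSpan ℝ τ)
    have h2 := P.dim
    have h3 := P.rank
    unfold faceDim at h2
    unfold W
    omega

lemma mem_W {w : Fin n → ℝ} : w ∈ P.W ↔ ∀ v ∈ P.T, dn v w = t * sm w := by
  rw [W_eq, mem_orth]

/-- Inner normals at `(t,…,t)`. -/
lemma t_trace {w : Fin n → ℝ} (hw : ∀ i, 0 ≤ w i) :
    (fun _ => t) ∈ traceFace Γ w ↔ ∀ v ∈ V, t * sm w ≤ dn v w := by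
  rw [P.poly.mem_trace hw, dotR_const]
  exact ⟨fun h => h.2, fun h => ⟨P.t_mem, h⟩⟩

lemma sub_of_K {w : Fin n → ℝ} (hw : ∀ i, 0 ≤ w i) (h : ∀ v ∈ V, t * sm w ≤ dn v w) :
    τ ⊆ traceFace Γ w := P.min _ ⟨w, hw, rfl⟩ ((P.t_trace hw).2 h)

lemma K_sub_W {w : Fin n → ℝ} (hw : ∀ i, 0 ≤ w i) (h : ∀ v ∈ V, t * sm w ≤ dn v w) : w ∈ P.W := by
  rw [P.mem_W]
  intro v hv
  have h1 := (P.sub_of_K hw h (P.mem_T.1 hv).2).2 _ P.t_mem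
  rw [dotR_rc, dotR_const] at h1
  exact le_antisymm h1 (h v (P.mem_T.1 hv).1)

lemma u0_le : ∀ v ∈ V, t * sm P.u0 ≤ dn v P.u0 :=
  (P.t_trace fun i => (P.u0_pos i).le).1 (P.u0_eq ▸ P.mem)

lemma u0_mem : P.u0 ∈ P.W := P.K_sub_W (fun i => (P.u0_pos i).le) P.u0_le

lemma u0_gap : ∀ v ∈ V, v ∉ P.T → t * sm P.u0 < dn v P.u0 := by
  intro v hv hvT
  refine lt_of_le_of_ne (P.u0_le v hv) fun he => hvT (P.mem_T.2 ⟨hv, ?_⟩)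
  rw [P.u0_eq, P.poly.mem_trace fun i => (P.u0_pos i).le, dotR_rc]
  exact ⟨P.poly.mem v hv, fun v' hv' => he ▸ P.u0_le v' hv'⟩

/-- Since `(t,…,t)` is in the relative interior of the face, a functional which is at least its
value at that point on all vertices of the face is constant on the face. -/
lemma relint {u : Fin n → ℝ} (h : ∀ v ∈ P.T, t * sm u ≤ dn v u) : u ∈ P.W := by
  have hev : ∀ᶠ e : ℝ in 𝓝[>] 0, (∀ i, 0 ≤ P.u0 i + e * u i) ∧
      ∀ v ∈ V, t * sm (P.u0 + e • u) ≤ dn v (P.u0 + e • u) := by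
    have h1 : ∀ i, ∀ᶠ e : ℝ in 𝓝[>] 0, 0 ≤ P.u0 i + e * u i := fun i => by
      have : Tendsto (fun e : ℝ => P.u0 i + e * u i) (𝓝[>] 0) (𝓝 (P.u0 i + 0 * u i)) :=
        ((continuous_const.add (continuous_id.mul continuous_const)).tendsto 0).mono_left
          nhdsWithin_le_nhds
      rw [zero_mul, add_zero] at this
      exact (this.eventually (lt_mem_nhds (P.u0_pos i))).mono fun _ h => h.le
    have h2 : ∀ v ∈ V, ∀ᶠ e : ℝ in 𝓝[>] 0, t * sm (P.u0 + e • u) ≤ dn v (P.u0 + e • u) := by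
      intro v hv
      by_cases hvT : v ∈ P.T
      · filter_upwards [self_mem_nhdsWithin] with e he
        rw [dn_add, sm_add, dn_smul, sm_smul, mul_add]
        have := mul_le_mul_of_nonneg_left (h v hvT) (le_of_lt he)
        linarith [P.u0_le v hv]
      · have : Tendsto (fun e : ℝ => (dn v P.u0 - t * sm P.u0) + e * (dn v u - t * sm u)) (𝓝[>] 0)
            (𝓝 ((dn v P.u0 - t * sm P.u0) + 0 * (dn v u - t * sm u))) :=
          ((continuous_const.add (continuous_id.mul continuous_const)).tendsto 0).mono_left
            nhdsWithin_le_nhds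
        rw [zero_mul, add_zero] at this
        filter_upwards [this.eventually (lt_mem_nhds (sub_pos.2 (P.u0_gap v hv hvT)))] with e he
        rw [dn_add, sm_add, dn_smul, sm_smul]
        linarith
    exact (eventually_all.2 h1).and ((Finset.eventually_all V).2 h2)
  obtain ⟨e, ⟨h1, h2⟩, he⟩ := (hev.and self_mem_nhdsWithin).exists
  have h3 := P.K_sub_W (w := P.u0 + e • u) h1 h2
  have h4 := P.W.sub_mem h3 P.u0_mem
  rw [add_sub_cancel_left] at h4
  exact (P.W.smul_mem_iff (ne_of_gt he)).1 h4

omit P in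
lemma iota_single (i : Fin (n - ρ)) : iota (n := n) ρ (Pi.single i 1) =
    (Pi.single (⟨(i : ℕ) + ρ, by have := i.isLt; omega⟩ : Fin n) 1 : Fin n → ℝ) := by
  ext j
  simp only [iota, LinearMap.coe_mk, AddHom.coe_mk]
  by_cases h : (j : ℕ) < ρ
  · rw [dif_pos h, Pi.single_eq_of_ne]
    intro h2; rw [h2] at h; simp at h
  · rw [dif_neg h, Pi.single_apply, Pi.single_apply]
    congr 1
    simp only [Fin.ext_iff, eq_iff_iff]
    omega

lemma iota_mem (v : Fin (n - ρ) → ℝ) : iota ρ v ∈ P.W' := by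
  have : v = ∑ i, v i • (Pi.single i 1 : Fin (n - ρ) → ℝ) := by
    ext j; simp [Pi.single_apply]
  rw [this, map_sum]
  refine Submodule.sum_mem _ fun i _ => ?_
  rw [map_smul, iota_single]
  exact Submodule.smul_mem _ _ (Submodule.subset_span ⟨_, by simp, rfl⟩)

lemma iota_tail {u : Fin n → ℝ} (hu : u ∈ P.W') : iota ρ (tailc ρ P.ρ_le u) = u := by
  have h0 : ∀ i : Fin n, (i : ℕ) < ρ → u i = 0 := by
    intro i hi
    unfold W' at hu
    induction hu using Submodule.span_induction with
    | mem x hx =>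
      obtain ⟨j, hj, rfl⟩ := hx
      rw [Pi.single_eq_of_ne]
      intro h; rw [h] at hi; omega
    | zero => rfl
    | add x y _ _ hx hy => rw [Pi.add_apply, hx, hy, add_zero]
    | smul c x _ hx => rw [Pi.smul_apply, hx, smul_zero]
  ext i
  simp only [iota, tailc, LinearMap.coe_mk, AddHom.coe_mk]
  split_ifs with h
  · exact (h0 i h).symm
  · congr 1; ext; simp only []; omega

lemma tail_iota (v : Fin (n - ρ) → ℝ) : tailc ρ P.ρ_le (iota ρ v) = v := by
  ext i
  simp only [iota, tailc, LinearMap.coe_mk, AddHom.coe_mk]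
  rw [dif_neg (by omega)]
  congr 1; ext; simp

lemma disj {u : Fin n → ℝ} (h : u ∈ P.W) (h' : u ∈ P.W') : u = 0 :=
  Submodule.disjoint_def.1 P.compl.disjoint u h h'

lemma exists_proj : ∃ q : (Fin n → ℝ) →ₗ[ℝ] (Fin n → ℝ),
    (∀ u, q u ∈ P.W') ∧ (∀ u, u - q u ∈ P.W) ∧ (∀ u ∈ P.W, q u = 0) ∧ ∀ u ∈ P.W', q u = u := by
  have h : IsCompl P.W' P.W := P.compl.symm
  exact ⟨P.W'.projection P.W h, fun u => Submodule.projection_apply_mem h u,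
    fun u => Submodule.sub_projection_mem h u,
    fun u hu => (Submodule.projection_apply_eq_zero_iff h).2 hu,
    fun u hu => Submodule.projection_apply_of_mem_left h hu⟩

lemma coercive : ∃ c > 0, ∀ v : Fin (n - ρ) → ℝ,
    ∃ α ∈ P.T, c * ‖v‖ ≤ t * sm (iota ρ v) - dn α (iota ρ v) := by
  set h : (Fin (n - ρ) → ℝ) → ℝ := fun v =>
    P.T.sup' P.T_ne fun α => t * sm (iota ρ v) - dn α (iota ρ v) with hh
  have hcont : Continuous h := by
    have hi : Continuous (iota (n := n) ρ) := LinearMap.continuous_of_finiteDimensional _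
    refine Continuous.finset_sup'_apply _ fun α _ => ?_
    exact (continuous_const.mul (continuous_sm.comp hi)).sub ((continuous_dn α).comp hi)
  obtain ⟨c, hc, hle⟩ := (isCompact_sphere (0 : Fin (n - ρ) → ℝ) 1).exists_forall_le'
    hcont.continuousOn (a := 0) (fun v hv => by
      by_contra! hneg
      have h1 : iota ρ v ∈ P.W := P.relint fun α hα => by
        have := (Finset.le_sup' (fun α => t * sm (iota ρ v) - dn α (iota ρ v)) hα).trans hneg
        linarith
      have h2 := P.disj h1 (P.iota_mem v)
      have h3 := P.tail_iota v
      rw [h2, map_zero] at h3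
      rw [← h3] at hv
      simp at hv)
  refine ⟨c, hc, fun v => ?_⟩
  by_cases hv : v = 0
  · obtain ⟨α, hα⟩ := P.T_ne
    exact ⟨α, hα, by simp [hv, sm, dn]⟩
  have hn : 0 < ‖v‖ := norm_pos_iff.2 hv
  obtain ⟨α, hα, he⟩ := Finset.exists_mem_eq_sup' P.T_ne
    fun α => t * sm (iota ρ (‖v‖⁻¹ • v)) - dn α (iota ρ (‖v‖⁻¹ • v))
  refine ⟨α, hα, ?_⟩
  have h1 := hle (‖v‖⁻¹ • v) (by simp [norm_smul, hn.ne'])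
  rw [hh] at h1
  beta_reduce at h1
  rw [he, map_smul, sm_smul, dn_smul] at h1
  have h2 := mul_le_mul_of_nonneg_left h1 hn.le
  have h3 : ‖v‖ * (t * (‖v‖⁻¹ * sm (iota ρ v)) - ‖v‖⁻¹ * dn α (iota ρ v)) =
      t * sm (iota ρ v) - dn α (iota ρ v) := by field_simp
  linarith

end Geo

/-! ### The splitting attached to `τ₀`, and generators of the normal cone -/

namespace Geo
variable {n r ρ : ℕ} {Γ : Set (Fin n → ℝ)} {V : Finset (Fin n → ℕ)} {t : ℝ}
  {τ : Set (Fin n → ℝ)} {ξ : Fin r → Fin n → ℕ} (P : Geo ρ Γ V t τ ξ)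

/-- The splitting of logarithmic space attached to the face. -/
def setup : Setup n (n - ρ) where
  V := V
  T := P.T
  t := t
  W := P.W
  w0 := P.u0
  T_sub := Finset.filter_subset _ _
  T_ne := P.T_ne
  t_pos := P.t_pos
  W_T := fun _ hw => P.mem_W.1 hw
  w0_mem := P.u0_mem
  w0_pos := P.u0_pos
  w0_gap := P.u0_gap
  ι := LinearMap.toContinuousLinearMap (iota ρ)
  pr := LinearMap.toContinuousLinearMap (tailc ρ P.ρ_le ∘ₗ P.exists_proj.choose)
  pr_ι := fun v => by
    have h := P.exists_proj.choose_spec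
    simp only [LinearMap.coe_toContinuousLinearMap', LinearMap.comp_apply]
    rw [h.2.2.2 _ (P.iota_mem v), P.tail_iota]
  pr_W := fun w hw => by
    have h := P.exists_proj.choose_spec
    simp only [LinearMap.coe_toContinuousLinearMap', LinearMap.comp_apply]
    rw [h.2.2.1 w hw, map_zero]
  sub_mem := fun u => by
    have h := P.exists_proj.choose_spec
    simp only [LinearMap.coe_toContinuousLinearMap', LinearMap.comp_apply]
    rw [P.iota_tail (h.1 u)]
    exact h.2.1 u
  cc := P.coercive.choose
  cc_pos := P.coercive.choose_spec.1
  coer := P.coercive.choose_spec.2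

lemma mem_K {w : Fin n → ℝ} : w ∈ P.setup.K ↔ (∀ i, 0 ≤ w i) ∧ ∀ v ∈ V, t * sm w ≤ dn v w := Iff.rfl

include P

lemma xi_sm (j : Fin r) : 0 < sm (rc (ξ j)) := by
  refine lt_of_le_of_ne (Finset.sum_nonneg fun i _ => Nat.cast_nonneg _) fun h => P.ne j ?_
  have := (Finset.sum_eq_zero_iff_of_nonneg fun i _ => Nat.cast_nonneg _).1 h.symm
  funext i
  exact_mod_cast this i (Finset.mem_univ i)

lemma xi_K (j : Fin r) : rc (ξ j) ∈ P.setup.K := by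
  have h0 : ∀ i, 0 ≤ rc (ξ j) i := fun i => Nat.cast_nonneg _
  exact P.mem_K.2 ⟨h0, (P.t_trace h0).1 ((P.facet j).2 P.mem)⟩

lemma sm_zero_K {w : Fin n → ℝ} (hw : w ∈ P.setup.K) (h : sm w = 0) : w = 0 := by
  have := (Finset.sum_eq_zero_iff_of_nonneg fun i _ => hw.1 i).1 h
  funext i; exact this i (Finset.mem_univ i)

/-- An extreme ray of the normal cone is spanned by a facet normal: the face it cuts out contains
`τ₀`, and were it not a facet, its normal could be moved in a second direction. -/
lemma extreme {w : Fin n → ℝ} (hw : w ∈ ({w | w ∈ P.setup.K ∧ sm w = 1} : Set _).extremePoints ℝ) :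
    ∃ j, w = (sm (rc (ξ j)))⁻¹ • rc (ξ j) := by
  rw [mem_extremePoints] at hw
  obtain ⟨⟨hK, h1⟩, hex⟩ := hw
  have hK' := P.mem_K.1 hK
  set F := traceFace Γ w with hF
  have hτF : τ ⊆ F := P.sub_of_K hK'.1 hK'.2
  have htF : (fun _ => t) ∈ F := hτF P.mem
  have horth : ∀ z ∈ orth (vectorSpan ℝ F : Set (Fin n → ℝ)), z = sm z • w := by
    intro z hz
    by_contra hne
    have hwo : w ∈ orth (vectorSpan ℝ F : Set (Fin n → ℝ)) := by
      rw [mem_orth_vectorSpan htF]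
      exact fun y hy => le_antisymm (hy.2 _ htF.1) (htF.2 _ hy.1)
    set d := z - sm z • w with hd
    have hdo : d ∈ orth (vectorSpan ℝ F : Set (Fin n → ℝ)) :=
      Submodule.sub_mem _ hz (Submodule.smul_mem _ _ hwo)
    have hd0 : d ≠ 0 := sub_ne_zero.2 hne
    have hsd : sm d = 0 := by
      rw [hd, sub_eq_add_neg, sm_add, sm_neg, sm_smul, h1]; ring
    have hdF := (mem_orth_vectorSpan htF).1 hdo
    have hcoord : ∀ i, w i = 0 → d i = 0 := by
      intro i hi
      have hm : (fun _ => t) + (Pi.single i 1 : Fin n → ℝ) ∈ F := by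
        refine ⟨P.poly.add_mem _ htF.1 _ fun j => ?_, fun y hy => ?_⟩
        · rw [Pi.single_apply]; split_ifs <;> norm_num
        · rw [dotR_add, dotR_single, hi, add_zero]; exact htF.2 y hy
      have := hdF _ hm
      rw [dotR_add, dotR_single] at this
      linarith
    have hvert : ∀ v ∈ V, dn v w = t * sm w → dn v d = 0 := by
      intro v hv he
      have hm : rc v ∈ F := by
        rw [hF, P.poly.mem_trace hK'.1, dotR_rc, he]
        exact ⟨P.poly.mem v hv, hK'.2⟩
      have := hdF _ hm
      rwa [dotR_rc, dotR_const, hsd, mul_zero] at this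
    have hlim : ∀ a b : ℝ, Tendsto (fun e : ℝ => a + e * b) (𝓝[>] 0) (𝓝 a) := fun a b => by
      have : Tendsto (fun e : ℝ => a + e * b) (𝓝[>] 0) (𝓝 (a + 0 * b)) :=
        ((continuous_const.add (continuous_id.mul continuous_const)).tendsto 0).mono_left
          nhdsWithin_le_nhds
      rwa [zero_mul, add_zero] at this
    have hmove : ∀ d' : Fin n → ℝ, sm d' = 0 → (∀ i, w i = 0 → d' i = 0) →
        (∀ v ∈ V, dn v w = t * sm w → dn v d' = 0) →
        ∀ᶠ e : ℝ in 𝓝[>] 0, w + e • d' ∈ ({w | w ∈ P.setup.K ∧ sm w = 1} : Set _) := by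
      intro d' hs hc hv
      have e1 : ∀ i, ∀ᶠ e : ℝ in 𝓝[>] 0, 0 ≤ (w + e • d') i := fun i => by
        rcases (hK'.1 i).eq_or_lt with h | h
        · exact Eventually.of_forall fun e => by simp [← h, hc i h.symm]
        · exact ((hlim (w i) (d' i)).eventually (lt_mem_nhds h)).mono fun _ h => h.le
      have e2 : ∀ v ∈ V, ∀ᶠ e : ℝ in 𝓝[>] 0, t * sm (w + e • d') ≤ dn v (w + e • d') := by
        intro v hvV
        rcases (hK'.2 v hvV).eq_or_lt with h | h
        · refine Eventually.of_forall fun e => ?_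
          rw [sm_add, sm_smul, hs, dn_add, dn_smul, hv v hvV h.symm, mul_zero, add_zero, add_zero]
          exact h.le
        · filter_upwards [(hlim (dn v w) (dn v d')).eventually (lt_mem_nhds h)] with e he
          rw [sm_add, sm_smul, hs, dn_add, dn_smul, mul_zero, add_zero]
          exact le_of_lt he
      filter_upwards [eventually_all.2 e1, (Finset.eventually_all V).2 e2] with e a b
      exact ⟨P.mem_K.2 ⟨a, b⟩, by rw [sm_add, sm_smul, hs, h1]; ring⟩
    obtain ⟨e, ⟨ha, hb⟩, he⟩ := (((hmove d hsd hcoord hvert).and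
      (hmove (-d) (by rw [sm_neg, hsd, neg_zero]) (fun i hi => by simp [hcoord i hi])
        (fun v hv h => by rw [dn_neg, hvert v hv h, neg_zero]))).and self_mem_nhdsWithin).exists
    have h2 := hex _ ha _ hb ⟨1/2, 1/2, by norm_num, by norm_num, by norm_num, by
      ext i; simp; ring⟩
    have h3 : e • d = 0 := by simpa using h2.1
    exact hd0 ((smul_eq_zero.1 h3).resolve_left (ne_of_gt he))
  have hw0 : w ≠ 0 := by rintro rfl; simp [sm] at h1
  have hwo : w ∈ orth (vectorSpan ℝ F : Set (Fin n → ℝ)) := by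
    rw [mem_orth_vectorSpan htF]
    exact fun y hy => le_antisymm (hy.2 _ htF.1) (htF.2 _ hy.1)
  have hrank : Module.finrank ℝ (orth (vectorSpan ℝ F : Set (Fin n → ℝ))) = 1 := by
    refine finrank_eq_one (⟨w, hwo⟩ : orth (vectorSpan ℝ F : Set (Fin n → ℝ))) ?_ fun z => ?_
    · exact fun h => hw0 (congrArg Subtype.val h)
    · exact ⟨sm z.1, Subtype.ext (horth z.1 z.2).symm⟩
  have hdim : faceDim F = n - 1 := by
    have := finrank_orth (vectorSpan ℝ F)
    unfold faceDim
    omega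
  obtain ⟨j, hj⟩ := P.all F ⟨w, hK'.1, rfl⟩ hdim hτF
  refine ⟨j, ?_⟩
  have hjo : rc (ξ j) ∈ orth (vectorSpan ℝ F : Set (Fin n → ℝ)) := by
    rw [hj] at htF ⊢
    rw [mem_orth_vectorSpan htF]
    exact fun y hy => le_antisymm (hy.2 _ htF.1) (htF.2 _ hy.1)
  have h3 := horth _ hjo
  have h4 := P.xi_sm j
  conv_rhs => rw [h3]
  rw [smul_smul, sm_smul, h1, mul_one, inv_mul_cancel₀ h4.ne', one_smul]

/-- The normal cone is generated by the facet normals. -/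
lemma cone_gen {w : Fin n → ℝ} (hw : w ∈ P.setup.K) :
    ∃ c : Fin r → ℝ, (∀ j, 0 ≤ c j) ∧ w = ∑ j, c j • rc (ξ j) := by
  by_cases h0 : sm w = 0
  · exact ⟨0, fun _ => le_rfl, by simp [P.sm_zero_K hw h0]⟩
  have hpos : 0 < sm w := lt_of_le_of_ne (Finset.sum_nonneg fun i _ => hw.1 i) (Ne.symm h0)
  set B : Set (Fin n → ℝ) := {w | w ∈ P.setup.K ∧ sm w = 1} with hB
  have hBconv : Convex ℝ B := by
    rintro x ⟨⟨hx1, hx2⟩, hx3⟩ y ⟨⟨hy1, hy2⟩, hy3⟩ p q hp hq hpq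
    refine ⟨P.mem_K.2 ⟨fun i => add_nonneg (mul_nonneg hp (hx1 i)) (mul_nonneg hq (hy1 i)),
      fun v hv => ?_⟩, by rw [sm_add, sm_smul, sm_smul, hx3, hy3]; linarith⟩
    rw [sm_add, sm_smul, sm_smul, dn_add, dn_smul, dn_smul]
    have h1 : p * (t * sm x) ≤ p * dn v x := mul_le_mul_of_nonneg_left (hx2 v hv) hp
    have h2 : q * (t * sm y) ≤ q * dn v y := mul_le_mul_of_nonneg_left (hy2 v hv) hq
    linarith
  have hBcomp : IsCompact B := by
    refine Metric.isCompact_of_isClosed_isBounded ?_ ?_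
    · have : B = ((⋂ i, {w : Fin n → ℝ | 0 ≤ w i}) ∩
        ⋂ v ∈ V, {w : Fin n → ℝ | t * sm w ≤ dn v w}) ∩ {w | sm w = 1} := by
        ext w; simp only [hB, Set.mem_ofPred_eq, P.mem_K]; simp
      rw [this]
      refine ((isClosed_iInter fun i => isClosed_le continuous_const
        (continuous_apply (A := fun _ : Fin n => ℝ) i)).inter
        (isClosed_biInter fun v _ => isClosed_le (continuous_const.mul continuous_sm)
          (continuous_dn v))).inter (isClosed_eq continuous_sm continuous_const)
    · refine isBounded_iff_forall_norm_le.2 ⟨1, fun w hw => ?_⟩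
      refine (pi_norm_le_iff_of_nonneg zero_le_one).2 fun i => ?_
      rw [Real.norm_eq_abs, abs_of_nonneg (hw.1.1 i), ← hw.2]
      exact Finset.single_le_sum (f := w) (fun i _ => hw.1.1 i) (Finset.mem_univ i)
  set E : Finset (Fin n → ℝ) := Finset.univ.image fun j => (sm (rc (ξ j)))⁻¹ • rc (ξ j) with hE
  have hsub : B ⊆ convexHull ℝ (E : Set (Fin n → ℝ)) := by
    rw [← closure_convexHull_extremePoints hBcomp hBconv]
    refine closure_minimal (convexHull_mono fun x hx => ?_)
      (E.finite_toSet.isCompact_convexHull ℝ).isClosed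
    obtain ⟨j, hj⟩ := P.extreme hx
    simp only [hE, Finset.coe_image, Set.mem_image]
    exact ⟨j, by simp, hj.symm⟩
  -- the vectors with a nonnegative representation form a convex set
  have hcv : Convex ℝ {w : Fin n → ℝ | ∃ c : Fin r → ℝ, (∀ j, 0 ≤ c j) ∧ w = ∑ j, c j • rc (ξ j)} := by
    rintro _ ⟨c, hc, rfl⟩ _ ⟨c', hc', rfl⟩ p q hp hq _
    refine ⟨fun j => p * c j + q * c' j, fun j => add_nonneg (mul_nonneg hp (hc j))
      (mul_nonneg hq (hc' j)), ?_⟩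
    simp only [Finset.smul_sum, add_smul, Finset.sum_add_distrib, mul_smul]
  have hmem : (sm w)⁻¹ • w ∈ B := by
    refine ⟨P.mem_K.2 ⟨fun i => mul_nonneg (inv_nonneg.2 hpos.le) (hw.1 i), fun v hv => ?_⟩, ?_⟩
    · rw [sm_smul, dn_smul, mul_left_comm]
      exact mul_le_mul_of_nonneg_left ((P.mem_K.1 hw).2 v hv) (inv_nonneg.2 hpos.le)
    · rw [sm_smul, inv_mul_cancel₀ h0]
  obtain ⟨c, hc, he⟩ := convexHull_min (fun x hx => by
    simp only [hE, Finset.coe_image, Set.mem_image] at hx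
    obtain ⟨j, -, rfl⟩ := hx
    exact ⟨Pi.single j (sm (rc (ξ j)))⁻¹, fun i => by
      rw [Pi.single_apply]; split_ifs
      · exact inv_nonneg.2 (P.xi_sm j).le
      · exact le_rfl, by
        rw [Finset.sum_eq_single j]
        · simp
        · intro i _ hi; simp [hi]
        · simp⟩) hcv (hsub hmem)
  refine ⟨fun j => sm w * c j, fun j => mul_nonneg hpos.le (hc j), ?_⟩
  simp only [mul_smul, ← Finset.smul_sum]
  rw [← he, smul_smul, mul_inv_cancel₀ h0, one_smul]

end Geo

/-! ### The volume of the simplex-like polytope `C` -/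

/-- `∫ e^{-∑ vᵢ} = 1` over the closed positive orthant. -/
lemma lintegral_exp_orthant (k : ℕ) : ∫⁻ v in {v : Fin k → ℝ | ∀ i, 0 ≤ v i},
    ENNReal.ofReal (Real.exp (-sm v)) = 1 := by
  have hm : MeasurableSet {v : Fin k → ℝ | ∀ i, 0 ≤ v i} := by
    have : {v : Fin k → ℝ | ∀ i, 0 ≤ v i} = ⋂ i, {v : Fin k → ℝ | 0 ≤ v i} := by ext; simp
    rw [this]
    exact (isClosed_iInter fun i => isClosed_le continuous_const
      (continuous_apply (A := fun _ : Fin k => ℝ) i)).measurableSet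
  set f : ℝ → ℝ := (Set.Ici (0 : ℝ)).indicator fun x => Real.exp (-x) with hf
  have hfi : Integrable f := by
    rw [hf, integrable_indicator_iff measurableSet_Ici, integrableOn_Ici_iff_integrableOn_Ioi]
    exact integrableOn_exp_neg_Ioi 0
  have hprod : ∀ v : Fin k → ℝ, ∏ i, f (v i) =
      ({v : Fin k → ℝ | ∀ i, 0 ≤ v i} : Set _).indicator (fun v => Real.exp (-sm v)) v := fun v => by
    by_cases h : ∀ i, 0 ≤ v i
    · rw [Set.indicator_of_mem (s := {v : Fin k → ℝ | ∀ i, 0 ≤ v i}) h]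
      have : ∀ i, f (v i) = Real.exp (-v i) := fun i => Set.indicator_of_mem (h i) _
      simp only [this, ← Real.exp_sum, Finset.sum_neg_distrib, sm]
    · rw [Set.indicator_of_notMem (s := {v : Fin k → ℝ | ∀ i, 0 ≤ v i}) h]
      push Not at h
      obtain ⟨i, hi⟩ := h
      exact Finset.prod_eq_zero (Finset.mem_univ i) (Set.indicator_of_notMem (by simpa using hi) _)
  have h1 : ∫ v : Fin k → ℝ, ∏ i, f (v i) = 1 := by
    rw [integral_fintype_prod_volume_eq_prod (fun _ => f)]
    refine Finset.prod_eq_one fun i _ => ?_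
    rw [hf, integral_indicator measurableSet_Ici, integral_Ici_eq_integral_Ioi,
      integral_exp_neg_Ioi_zero]
  have h2 : Integrable fun v : Fin k → ℝ => ∏ i, f (v i) := Integrable.fintype_prod fun _ => hfi
  have h3 := ofReal_integral_eq_lintegral_ofReal h2 (Eventually.of_forall fun v =>
    Finset.prod_nonneg fun i _ => Set.indicator_nonneg (fun _ _ => (Real.exp_pos _).le) _)
  rw [h1, ENNReal.ofReal_one] at h3
  rw [h3, ← lintegral_indicator hm]
  refine lintegral_congr fun v => ?_
  rw [hprod]
  by_cases h : v ∈ {v : Fin k → ℝ | ∀ i, 0 ≤ v i}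
  · rw [Set.indicator_of_mem h, Set.indicator_of_mem h]
  · rw [Set.indicator_of_notMem h, Set.indicator_of_notMem h, ENNReal.ofReal_zero]

open scoped Pointwise in
/-- Layer-cake formula: for a cone `Q` and a linear functional that is nonnegative on it, the
integral of `e^{-λ}` over `Q` is `n!` times the volume of `Q ∩ {λ ≤ 1}`. -/
lemma cone_volume {n : ℕ} {Q : Set (Fin n → ℝ)} (hQ : MeasurableSet Q)
    (hcone : ∀ s : ℝ, 0 < s → ∀ z, z ∈ Q → s • z ∈ Q) (lam : (Fin n → ℝ) →L[ℝ] ℝ)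
    (hpos : ∀ z ∈ Q, 0 ≤ lam z) :
    ∫⁻ z in Q, ENNReal.ofReal (Real.exp (-lam z)) = n.factorial * volume {z ∈ Q | lam z ≤ 1} := by
  have hexp : ∀ a : ℝ, 0 ≤ a → ENNReal.ofReal (Real.exp (-a)) =
      ∫⁻ s in Set.Ioi (0 : ℝ), if a ≤ s then ENNReal.ofReal (Real.exp (-s)) else 0 := fun a ha => by
    have h1 := ofReal_integral_eq_lintegral_ofReal (integrableOn_exp_neg_Ioi a)
      (Eventually.of_forall fun x => (Real.exp_pos (-x)).le)
    rw [integral_exp_neg_Ioi] at h1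
    rw [h1, ← lintegral_indicator measurableSet_Ioi, ← lintegral_indicator measurableSet_Ioi]
    have hae : ∀ᵐ s : ℝ, s ≠ a := by simp [ae_iff]
    refine lintegral_congr_ae ?_
    filter_upwards [hae] with s hs
    rcases lt_trichotomy s a with h | h | h
    · rw [Set.indicator_of_notMem (by simpa using h.le)]
      by_cases h0 : 0 < s
      · rw [Set.indicator_of_mem (show s ∈ Set.Ioi 0 from h0), if_neg (not_le.2 h)]
      · rw [Set.indicator_of_notMem (by simpa using h0)]
    · exact absurd h hs
    · rw [Set.indicator_of_mem (show s ∈ Set.Ioi a from h),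
        Set.indicator_of_mem (show s ∈ Set.Ioi 0 from ha.trans_lt h), if_pos h.le]
  have hmQ : ∀ s : ℝ, MeasurableSet {z ∈ Q | lam z ≤ s} := fun s =>
    hQ.inter (measurableSet_le lam.continuous.measurable measurable_const)
  calc _ = ∫⁻ z in Q, ∫⁻ s in Set.Ioi (0 : ℝ),
        if lam z ≤ s then ENNReal.ofReal (Real.exp (-s)) else 0 :=
        setLIntegral_congr_fun hQ fun z hz => hexp _ (hpos z hz)
    _ = ∫⁻ s in Set.Ioi (0 : ℝ), ∫⁻ z in Q,
        if lam z ≤ s then ENNReal.ofReal (Real.exp (-s)) else 0 := by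
        refine lintegral_lintegral_swap (Measurable.aemeasurable ?_)
        refine Measurable.ite (measurableSet_le (lam.continuous.measurable.comp measurable_fst)
          measurable_snd) ?_ measurable_const
        exact (Real.continuous_exp.measurable.comp measurable_snd.neg).ennreal_ofReal
    _ = ∫⁻ s in Set.Ioi (0 : ℝ), ENNReal.ofReal (Real.exp (-s) * s ^ ((n + 1 : ℝ) - 1)) *
          volume {z ∈ Q | lam z ≤ 1} := by
        refine setLIntegral_congr_fun measurableSet_Ioi fun s hs => ?_
        have hs : 0 < s := hs
        have e1 : ∫⁻ z in Q, (if lam z ≤ s then ENNReal.ofReal (Real.exp (-s)) else 0) =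
            ENNReal.ofReal (Real.exp (-s)) * volume {z ∈ Q | lam z ≤ s} := by
          rw [← setLIntegral_const, ← lintegral_indicator hQ, ← lintegral_indicator (hmQ s)]
          refine lintegral_congr fun z => ?_
          by_cases h1 : z ∈ Q <;> by_cases h2 : lam z ≤ s <;> simp [Set.indicator, h1, h2]
        have e2 : {z ∈ Q | lam z ≤ s} = s • {z ∈ Q | lam z ≤ 1} := by
          ext z
          rw [Set.mem_smul_set_iff_inv_smul_mem₀ hs.ne']
          constructor
          · rintro ⟨h1, h2⟩
            refine ⟨hcone _ (inv_pos.2 hs) _ h1, ?_⟩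
            rw [map_smul, smul_eq_mul, inv_mul_le_iff₀ hs, mul_one]; exact h2
          · rintro ⟨h1, h2⟩
            have := hcone _ hs _ h1
            rw [smul_smul, mul_inv_cancel₀ hs.ne', one_smul] at this
            rw [map_smul, smul_eq_mul, inv_mul_le_iff₀ hs, mul_one] at h2
            exact ⟨this, h2⟩
        rw [e1, e2, Measure.addHaar_smul_of_nonneg _ hs.le, Module.finrank_fin_fun, ← mul_assoc,
          ← ENNReal.ofReal_mul (Real.exp_pos _).le, add_sub_cancel_right, Real.rpow_natCast]
    _ = _ := by
        rw [lintegral_mul_const'' _ (by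
          refine Measurable.aemeasurable ?_
          exact ((Real.continuous_exp.measurable.comp measurable_neg).mul
            (measurable_id.pow_const _)).ennreal_ofReal)]
        congr 1
        have h1 := ofReal_integral_eq_lintegral_ofReal
          (Real.GammaIntegral_convergent (s := (n : ℝ) + 1) (by positivity))
          ((ae_restrict_iff' measurableSet_Ioi).2 (Eventually.of_forall fun x hx =>
            mul_nonneg (Real.exp_pos _).le (Real.rpow_nonneg (le_of_lt hx) _)))
        rw [← h1, ← Real.Gamma_eq_integral (by positivity), Real.Gamma_nat_eq_factorial]
        simp

namespace Geo
variable {n r ρ : ℕ} {Γ : Set (Fin n → ℝ)} {V : Finset (Fin n → ℕ)} {t : ℝ}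
  {τ : Set (Fin n → ℝ)} {ξ : Fin r → Fin n → ℕ} (P : Geo ρ Γ V t τ ξ)

/-- The cone over `C`: the sum of the normal cone and an orthant. -/
def Q : Set (Fin n → ℝ) :=
  {z | z - P.setup.ι (P.setup.pr z) ∈ P.setup.K ∧ ∀ i, 0 ≤ P.setup.pr z i}

/-- The linear functional equal to one on the nonzero vertices of `C`. -/
def lam : (Fin n → ℝ) →ₗ[ℝ] ℝ where
  toFun z := P.setup.ell (z - P.setup.ι (P.setup.pr z)) + sm (P.setup.pr z)
  map_add' x y := by
    rw [map_add, map_add, sm_add, add_sub_add_comm, P.setup.ell_add]; ring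
  map_smul' c x := by
    rw [map_smul, map_smul, sm_smul, ← smul_sub, P.setup.ell_smul]; simp; ring

/-- The polytope of the residue formula. -/
def Cset (N : Fin r → ℝ) : Set (Fin n → ℝ) :=
  convexHull ℝ (insert (0 : Fin n → ℝ) ((Set.range fun j => fun i => (ξ j i : ℝ) / N j) ∪
        {x : Fin n → ℝ | ∃ i : Fin n, ρ ≤ (i : ℕ) ∧ x = Pi.single i 1}))

lemma K_add {x y : Fin n → ℝ} (hx : x ∈ P.setup.K) (hy : y ∈ P.setup.K) : x + y ∈ P.setup.K := by
  rw [P.mem_K] at *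
  refine ⟨fun i => add_nonneg (hx.1 i) (hy.1 i), fun v hv => ?_⟩
  rw [sm_add, dn_add, mul_add]; exact add_le_add (hx.2 v hv) (hy.2 v hv)

lemma K_smul {x : Fin n → ℝ} {c : ℝ} (hc : 0 ≤ c) (hx : x ∈ P.setup.K) : c • x ∈ P.setup.K := by
  rw [P.mem_K] at *
  refine ⟨fun i => mul_nonneg hc (hx.1 i), fun v hv => ?_⟩
  rw [sm_smul, dn_smul, mul_left_comm]; exact mul_le_mul_of_nonneg_left (hx.2 v hv) hc

lemma Q_add {x y : Fin n → ℝ} (hx : x ∈ P.Q) (hy : y ∈ P.Q) : x + y ∈ P.Q := by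
  refine ⟨?_, fun i => ?_⟩
  · rw [map_add, map_add, add_sub_add_comm]; exact P.K_add hx.1 hy.1
  · rw [map_add]; exact add_nonneg (hx.2 i) (hy.2 i)

lemma Q_smul {x : Fin n → ℝ} {c : ℝ} (hc : 0 ≤ c) (hx : x ∈ P.Q) : c • x ∈ P.Q := by
  refine ⟨?_, fun i => ?_⟩
  · rw [map_smul, map_smul, ← smul_sub]; exact P.K_smul hc hx.1
  · rw [map_smul]; exact mul_nonneg hc (hx.2 i)

lemma lam_nonneg {z : Fin n → ℝ} (hz : z ∈ P.Q) : 0 ≤ P.lam z :=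
  add_nonneg (mul_nonneg P.t_pos.le (Finset.sum_nonneg fun i _ => hz.1.1 i))
    (Finset.sum_nonneg fun i _ => hz.2 i)

lemma iota_eq (v : Fin (n - ρ) → ℝ) : P.setup.ι v = iota ρ v := rfl

lemma of_W {w : Fin n → ℝ} (hw : w ∈ P.setup.K) : w ∈ P.Q ∧ P.lam w = t * sm w := by
  have h := P.setup.pr_W w (P.K_sub_W hw.1 hw.2)
  refine ⟨⟨by rw [h, map_zero, sub_zero]; exact hw, fun i => by rw [h]; rfl⟩, ?_⟩
  show P.setup.ell (w - P.setup.ι (P.setup.pr w)) + sm (P.setup.pr w) = _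
  rw [h, map_zero, sub_zero]
  simp [sm, Newt.ell, setup]

lemma of_iota {v : Fin (n - ρ) → ℝ} (hv : ∀ i, 0 ≤ v i) :
    iota ρ v ∈ P.Q ∧ P.lam (iota ρ v) = sm v := by
  have h := P.setup.pr_ι v
  rw [iota_eq] at h
  refine ⟨⟨?_, fun i => by rw [h]; exact hv i⟩, ?_⟩
  · rw [h, iota_eq, sub_self, P.mem_K]
    exact ⟨fun i => le_rfl, fun v _ => by simp [sm, dn]⟩
  · show P.setup.ell (iota ρ v - P.setup.ι (P.setup.pr (iota ρ v))) + sm (P.setup.pr (iota ρ v)) = _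
    rw [h, iota_eq, sub_self]
    simp [Newt.ell, sm]

lemma Cset_eq {N : Fin r → ℝ} (hN : ∀ j, N j = t * sm (rc (ξ j))) :
    Cset (ρ := ρ) (ξ := ξ) N = {z ∈ P.Q | P.lam z ≤ 1} := by
  have hNp : ∀ j, 0 < N j := fun j => by rw [hN]; exact mul_pos P.t_pos (P.xi_sm j)
  have hvec : ∀ j, (fun i => (ξ j i : ℝ) / N j) = (N j)⁻¹ • rc (ξ j) := fun j => by
    ext i; simp [rc, div_eq_inv_mul]
  apply Set.Subset.antisymm
  · refine convexHull_min ?_ ?_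
    · rintro x (rfl | ⟨j, rfl⟩ | ⟨i, hi, rfl⟩)
      · have h0 := P.of_iota (v := 0) fun _ => le_rfl
        rw [map_zero] at h0
        exact ⟨h0.1, by rw [map_zero]; norm_num⟩
      · beta_reduce
        rw [hvec]
        have h := P.of_W (P.K_smul (inv_nonneg.2 (hNp j).le) (P.xi_K j))
        refine ⟨h.1, ?_⟩
        rw [h.2, sm_smul, mul_left_comm, ← hN, inv_mul_cancel₀ (hNp j).ne']
      · have h := P.of_iota (v := Pi.single ⟨(i : ℕ) - ρ, by have := i.isLt; omega⟩ 1) fun k => by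
          rw [Pi.single_apply]; split_ifs <;> norm_num
        rw [iota_single, sm_single] at h
        have hi' : (⟨(i : ℕ) - ρ + ρ, by have := i.isLt; omega⟩ : Fin n) = i := by
          ext; simp only []; omega
        simp only [hi'] at h
        exact ⟨h.1, h.2.le⟩
    · rintro x ⟨hx, hx1⟩ y ⟨hy, hy1⟩ p q hp hq hpq
      refine ⟨P.Q_add (P.Q_smul hp hx) (P.Q_smul hq hy), ?_⟩
      rw [map_add, map_smul, map_smul, smul_eq_mul, smul_eq_mul]
      nlinarith
  · rintro z ⟨hz, hz1⟩
    obtain ⟨c, hc, he⟩ := P.cone_gen hz.1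
    set v := P.setup.pr z with hv
    set A : Fin r ⊕ Fin (n - ρ) → ℝ := Sum.elim (fun j => c j * N j) v with hA
    set B : Fin r ⊕ Fin (n - ρ) → Fin n → ℝ := Sum.elim (fun j => (N j)⁻¹ • rc (ξ j))
      (fun i => iota ρ (Pi.single i 1)) with hB
    have hA0 : ∀ x, 0 ≤ A x := by
      rintro (j | i)
      · exact mul_nonneg (hc j) (hNp j).le
      · exact hz.2 i
    have hzs : z = ∑ x, A x • B x := by
      rw [Fintype.sum_sum_type]
      simp only [hA, hB, Sum.elim_inl, Sum.elim_inr]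
      have e1 : ∀ j, (c j * N j) • (N j)⁻¹ • rc (ξ j) = c j • rc (ξ j) := fun j => by
        rw [smul_smul, mul_assoc, mul_inv_cancel₀ (hNp j).ne', mul_one]
      have e2 : ∑ i, v i • iota (n := n) ρ (Pi.single i 1) = iota ρ v := by
        simp_rw [← map_smul, ← map_sum]
        congr 1
        ext j; simp [Pi.single_apply]
      simp only [e1]
      rw [e2, ← he, ← iota_eq P, sub_add_cancel]
    have hAs : ∑ x, A x = P.lam z := by
      rw [Fintype.sum_sum_type]
      simp only [hA, Sum.elim_inl, Sum.elim_inr]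
      show _ = P.setup.ell (z - P.setup.ι v) + sm v
      rw [he]
      show _ = t * sm _ + _
      rw [sm_sum, Finset.mul_sum]
      congr 1
      exact Finset.sum_congr rfl fun j _ => by rw [sm_smul, hN]; ring
    have hBC : ∀ x, B x ∈ Cset (ρ := ρ) (ξ := ξ) N := by
      rintro (j | i)
      · refine subset_convexHull ℝ _ (Or.inr (Or.inl ⟨j, hvec j⟩))
      · exact subset_convexHull ℝ _ (Or.inr (Or.inr ⟨_, by simp, iota_single i⟩))
    have hconv : Convex ℝ (Cset (ρ := ρ) (ξ := ξ) N) := convex_convexHull ℝ _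
    have h0 : (0 : Fin n → ℝ) ∈ Cset (ρ := ρ) (ξ := ξ) N := subset_convexHull ℝ _ (Or.inl rfl)
    by_cases hS : ∑ x, A x = 0
    · have : ∀ x, A x = 0 := fun x =>
        (Finset.sum_eq_zero_iff_of_nonneg fun x _ => hA0 x).1 hS x (Finset.mem_univ x)
      rw [hzs]; simpa [this] using h0
    · have hSp : 0 < ∑ x, A x := lt_of_le_of_ne (Finset.sum_nonneg fun x _ => hA0 x) (Ne.symm hS)
      have h1 := hconv.centerMass_mem (t := Finset.univ) (w := A) (z := B) (fun x _ => hA0 x) hSp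
        fun x _ => hBC x
      have h2 := hconv.smul_mem_of_zero_mem h0 h1 (t := ∑ x, A x) ⟨hSp.le, by rw [hAs]; exact hz1⟩
      rw [Finset.centerMass, smul_smul, mul_inv_cancel₀ hS, one_smul, ← hzs] at h2
      exact h2

lemma isClosed_K : IsClosed P.setup.K := by
  have : P.setup.K = (⋂ i, {w : Fin n → ℝ | 0 ≤ w i}) ∩
      ⋂ v ∈ V, {w : Fin n → ℝ | t * sm w ≤ dn v w} := by
    ext w; rw [P.mem_K]; simp
  rw [this]
  exact (isClosed_iInter fun i => isClosed_le continuous_const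
    (continuous_apply (A := fun _ : Fin n => ℝ) i)).inter
    (isClosed_biInter fun v _ => isClosed_le (continuous_const.mul continuous_sm)
      (continuous_dn v))

/-- The volume of `C` in terms of the normal cone. -/
theorem volume_C {N : Fin r → ℝ} (hN : ∀ j, N j = t * sm (rc (ξ j))) (ν : Measure P.setup.W)
    [ν.IsAddHaarMeasure] (hmp : MeasurePreserving P.setup.L
      (ν.prod (volume : Measure (Fin (n - ρ) → ℝ))) volume) :
    ∫ w : P.setup.W in {w | (w : Fin n → ℝ) ∈ P.setup.K}, Real.exp (-P.setup.ell w) ∂ν =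
      n.factorial * (volume (Cset (ρ := ρ) (ξ := ξ) N)).toReal := by
  have hcl : Continuous fun z => P.setup.pr z := P.setup.pr.continuous
  have hQm : MeasurableSet P.Q := by
    have h1 : IsClosed {z : Fin n → ℝ | z - P.setup.ι (P.setup.pr z) ∈ P.setup.K} :=
      P.isClosed_K.preimage (continuous_id.sub (P.setup.ι.continuous.comp hcl))
    have h2 : IsClosed {z : Fin n → ℝ | ∀ i, 0 ≤ P.setup.pr z i} := by
      rw [Set.ofPred_forall]
      exact isClosed_iInter fun i => isClosed_le continuous_const
        ((continuous_apply (A := fun _ : Fin (n - ρ) => ℝ) i).comp hcl)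
    exact (h1.inter h2).measurableSet
  have hv := cone_volume hQm (fun s hs z hz => P.Q_smul hs.le hz)
    (LinearMap.toContinuousLinearMap P.lam) (fun z hz => P.lam_nonneg hz)
  simp only [LinearMap.coe_toContinuousLinearMap'] at hv
  rw [← P.Cset_eq hN] at hv
  have hKm : MeasurableSet {w : P.setup.W | (w : Fin n → ℝ) ∈ P.setup.K} :=
    (P.isClosed_K.preimage continuous_subtype_val).measurableSet
  have hlc : Continuous P.lam := LinearMap.continuous_of_finiteDimensional _
  have hec : Continuous fun w : P.setup.W => P.setup.ell w :=
    continuous_const.mul (continuous_sm.comp continuous_subtype_val)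
  have hsplit : ∫⁻ z in P.Q, ENNReal.ofReal (Real.exp (-P.lam z)) =
      ∫⁻ w : P.setup.W in {w | (w : Fin n → ℝ) ∈ P.setup.K},
        ENNReal.ofReal (Real.exp (-P.setup.ell w)) ∂ν := by
    rw [← lintegral_indicator hQm, ← hmp.lintegral_comp
      ((Measurable.indicator (by fun_prop) hQm))]
    have hpt : ∀ x : P.setup.W × (Fin (n - ρ) → ℝ),
        P.Q.indicator (fun z => ENNReal.ofReal (Real.exp (-P.lam z))) (P.setup.L x) =
        ({w : P.setup.W | (w : Fin n → ℝ) ∈ P.setup.K}.indicator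
          (fun w => ENNReal.ofReal (Real.exp (-P.setup.ell w))) x.1) *
        ({v : Fin (n - ρ) → ℝ | ∀ i, 0 ≤ v i}.indicator
          (fun v => ENNReal.ofReal (Real.exp (-sm v))) x.2) := by
      rintro ⟨w, v⟩
      have h1 : P.setup.pr (P.setup.L (w, v)) = v := by
        rw [Setup.L_apply, map_add, P.setup.pr_ι, P.setup.pr_W _ w.2, zero_add]
      have h2 : P.setup.L (w, v) - P.setup.ι (P.setup.pr (P.setup.L (w, v))) = w := by
        rw [h1, Setup.L_apply, add_sub_cancel_right]
      have h3 : P.lam (P.setup.L (w, v)) = P.setup.ell w + sm v := by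
        show P.setup.ell _ + _ = _
        rw [h2, h1]
      have h4 : P.setup.L (w, v) ∈ P.Q ↔ (w : Fin n → ℝ) ∈ P.setup.K ∧ ∀ i, 0 ≤ v i := by
        show _ ∧ _ ↔ _
        rw [h2, h1]
      by_cases hw : (w : Fin n → ℝ) ∈ P.setup.K <;> by_cases hvv : ∀ i, 0 ≤ v i
      · rw [Set.indicator_of_mem (h4.2 ⟨hw, hvv⟩), Set.indicator_of_mem (by exact hw),
          Set.indicator_of_mem (by exact hvv), ← ENNReal.ofReal_mul (Real.exp_pos _).le,
          ← Real.exp_add, h3]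
        congr 2; ring
      · rw [Set.indicator_of_notMem (fun h => hvv (h4.1 h).2),
          Set.indicator_of_notMem (s := {v : Fin (n - ρ) → ℝ | ∀ i, 0 ≤ v i}) hvv, mul_zero]
      all_goals
        rw [Set.indicator_of_notMem (fun h => hw (h4.1 h).1),
          Set.indicator_of_notMem (s := {w : P.setup.W | (w : Fin n → ℝ) ∈ P.setup.K}) hw, zero_mul]
    have hom : MeasurableSet {v : Fin (n - ρ) → ℝ | ∀ i, 0 ≤ v i} := by
      rw [Set.ofPred_forall]
      exact (isClosed_iInter fun i => isClosed_le continuous_const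
        (continuous_apply (A := fun _ : Fin (n - ρ) => ℝ) i)).measurableSet
    rw [lintegral_congr hpt, lintegral_prod_mul
      (f := {w : P.setup.W | (w : Fin n → ℝ) ∈ P.setup.K}.indicator
          (fun w => ENNReal.ofReal (Real.exp (-P.setup.ell w))))
      (g := {v : Fin (n - ρ) → ℝ | ∀ i, 0 ≤ v i}.indicator
          (fun v => ENNReal.ofReal (Real.exp (-sm v))))
      ((Measurable.indicator (Real.continuous_exp.comp hec.neg).measurable.ennreal_ofReal
        hKm).aemeasurable)
      ((Measurable.indicator (Real.continuous_exp.comp continuous_sm.neg).measurable.ennreal_ofReal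
        hom).aemeasurable), lintegral_indicator hKm, lintegral_indicator hom,
      lintegral_exp_orthant, mul_one]
  have hms : AEStronglyMeasurable (fun w : P.setup.W => Real.exp (-P.setup.ell w))
      (ν.restrict {w | (w : Fin n → ℝ) ∈ P.setup.K}) :=
    (Real.continuous_exp.comp hec.neg).aestronglyMeasurable
  rw [integral_eq_lintegral_of_nonneg_ae (Eventually.of_forall fun w => (Real.exp_pos _).le) hms, ← hsplit, hv, ENNReal.toReal_mul, ENNReal.toReal_natCast]

end Geo

/-! ### Construction of the raising data -/

/-- The first order operator raising the exponent of `p = ps V g`: near the origin the gradient of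
`p` in logarithmic coordinates is comparable with the size `M`, so that the coefficients may be
taken to be `∂ᵢp / |∇p|²`, modified away from the origin by a cutoff `χ` to be global symbols. -/
theorem exists_phase {n k : ℕ} (D : Setup n k) {g : (Fin n → ℕ) → (Fin n → ℝ) → ℝ}
    (hg : ∀ v, ContDiff ℝ (⊤ : ℕ∞) (g v)) (hgc : ∀ v, HasCompactSupport (g v))
    (hnd : ∀ w : Fin n → ℕ, (∀ i, 0 < w i) → ∀ x : Fin n → ℝ, (∀ i, 0 < x i) →
      ∃ i, ∑ v ∈ minSet D.V w, (v i : ℝ) * g v 0 * ∏ k, x k ^ v k ≠ 0) :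
    ∃ η : ℝ, 0 < η ∧ η < 1 ∧ ∃ X : Phase D, X.p = ps D.V g ∧
      (X.pt = fun u => ∑ v ∈ D.V, (if v ∈ D.T then 1 else 0) * Real.exp (-dn v u) * g v 0) ∧
      (∀ C : Chart D.V, ∀ i, C.Ch (-1) (X.c i)) ∧ {u | ∀ i, ex u i ≤ η} ⊆ X.A := by
  obtain ⟨δ, hδ, c, hc, hlb⟩ := lower_bound D.V_ne (fun v _ => hg v) hnd
  set χ : ContDiffBump (0 : Fin n → ℝ) :=
    ⟨min δ 1 / 2, min δ 1, by positivity, half_lt_self (by positivity)⟩ with hχ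
  have hχs : ContDiff ℝ (⊤ : ℕ∞) χ := χ.contDiff
  have hχ0 : χ 0 = 1 := χ.one_of_mem_closedBall (by simp [χ.rIn_pos.le])
  set p : (Fin n → ℝ) → ℝ := ps D.V g with hp
  set pt : (Fin n → ℝ) → ℝ :=
    fun u => ∑ v ∈ D.V, (if v ∈ D.T then 1 else 0) * Real.exp (-dn v u) * g v 0 with hpt
  have hpc : D.Cl 1 p pt := by
    refine Newt.Cl.sum D.V 1 (Newt.Cl.zero 1) fun v hv => ?_
    have := (Newt.Cl.exp_dn (D := D.toNewt) hv).mul (Newt.Cl.comp_ex (hg v) (hgc v))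
    rwa [add_zero] at this
  set cut : (Fin n → ℝ) → ℝ := fun u => 1 + -1 * χ (ex u) with hcut
  set Q : (Fin n → ℝ) → ℝ := fun u => ∑ i, pd i p u * pd i p u + cut u * (D.M u * D.M u) with hQ
  set Qt : (Fin n → ℝ) → ℝ := fun u =>
    ∑ i, pd i pt u * pd i pt u + (1 + -1 * χ 0) * (D.Mt u * D.Mt u) with hQt
  have hQc : D.Cl 2 Q Qt := by
    have h1 : D.Cl 2 (fun u => ∑ i, pd i p u * pd i p u) (fun u => ∑ i, pd i pt u * pd i pt u) :=
      Newt.Cl.sum Finset.univ 2 (Newt.Cl.zero 2) fun i _ => by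
        have := (hpc.pd i).mul (hpc.pd i)
        rwa [one_add_one_eq_two] at this
    have h2 := ((Newt.Cl.const (D := D.toNewt) 1).add ((Newt.Cl.comp_ex (D := D.toNewt) hχs
      χ.hasCompactSupport).const_mul (-1))).mul (Newt.Cl.M_cl.mul Newt.Cl.M_cl)
    exact h1.add h2
  have hcpos : 0 < min c 1 := by positivity
  have hcut0 : ∀ u, 0 ≤ cut u := fun u => by
    have := χ.le_one (x := ex u)
    simp only [hcut]; linarith
  have hQlb : ∀ u, min c 1 * D.M u ^ (2 : ℤ) ≤ Q u := fun u => by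
    rw [show D.M u ^ (2 : ℤ) = D.M u ^ 2 from zpow_natCast _ 2]
    have hM : 0 ≤ D.M u ^ 2 := sq_nonneg _
    by_cases h : χ (ex u) = 0
    · have h1 : 0 ≤ ∑ i, pd i p u * pd i p u := Finset.sum_nonneg fun i _ => mul_self_nonneg _
      have h2 : min c 1 * D.M u ^ 2 ≤ 1 * D.M u ^ 2 :=
        mul_le_mul_of_nonneg_right (min_le_right _ _) hM
      simp only [hQ, hcut, h]
      nlinarith
    · have hm : ex u ∈ Function.support χ := h
      rw [χ.support_eq, Metric.mem_ball, dist_zero_right] at hm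
      have hex : ∀ i, ex u i < min δ 1 := fun i =>
        (le_abs_self _).trans_lt ((norm_le_pi_norm (ex u) i).trans_lt hm)
      have h1 := hlb u (fun i => by
        have := (hex i).trans_le (min_le_right _ _)
        rw [ex, Real.exp_lt_one_iff] at this
        linarith) (fun i => (hex i).le.trans (min_le_left _ _))
      have h2 : min c 1 * D.M u ^ 2 ≤ c * D.M u ^ 2 :=
        mul_le_mul_of_nonneg_right (min_le_left _ _) hM
      have h3 : c * D.M u ^ 2 ≤ ∑ i, pd i p u * pd i p u := by
        simp only [← sq]; exact h1
      have h4 : 0 ≤ cut u * (D.M u * D.M u) := mul_nonneg (hcut0 u) (mul_self_nonneg _)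
      simp only [hQ]; linarith
  have hQt0 : ∀ u, Qt u ≠ 0 := fun u => by
    have h1 := hQc.base.2.1 _ D.w0_Ki u
    have h2 := ((Newt.M_lim D.w0_Ki u).pow 2).const_mul (min c 1)
    have h3 : min c 1 * D.Mt u ^ 2 ≤ Qt u := by
      refine le_of_tendsto_of_tendsto' h2 h1 fun R => ?_
      have h4 := hQlb (R • D.w0 + u)
      rw [show D.M (R • D.w0 + u) ^ (2 : ℤ) = D.M (R • D.w0 + u) ^ 2 from zpow_natCast _ 2] at h4
      rw [show ((2 : ℤ) : ℝ) * (R * D.ell D.w0) = R * D.ell D.w0 + R * D.ell D.w0 by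
        push_cast; ring, Real.exp_add]
      have h5 := mul_le_mul_of_nonneg_left h4
        (mul_self_nonneg (Real.exp (R * D.ell D.w0)))
      refine le_trans (le_of_eq ?_) h5
      ring
    exact ((mul_pos hcpos (pow_pos (D.Mt_pos u) 2)).trans_le h3).ne'
  have hQ0 : ∀ u, Q u ≠ 0 := fun u =>
    ((mul_pos hcpos (zpow_pos (D.M_pos u) 2)).trans_le (hQlb u)).ne'
  have hinv := hQc.inv hcpos hQlb hQt0
  refine ⟨min δ 1 / 2, by positivity, by
    have := min_le_right δ 1; linarith, ⟨p, pt, fun i u => pd i p u * (Q u)⁻¹,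
    fun i u => pd i pt u * (Qt u)⁻¹, {u | χ (ex u) = 1}, hpc, fun i => ?_, fun u hu => ?_,
    fun u => ?_⟩, rfl, rfl, fun C i => ?_, fun u hu => ?_⟩
  · have := (hpc.pd i).mul hinv
    rwa [show (1 : ℤ) + -2 = -1 by norm_num] at this
  · have h1 : Q u = ∑ i, pd i p u * pd i p u := by
      simp only [hQ, hcut]; rw [show χ (ex u) = 1 from hu]; ring
    have h2 : ∑ i, pd i p u * (Q u)⁻¹ * pd i p u = Q u * (Q u)⁻¹ := by
      conv_rhs => rw [h1, Finset.sum_mul, ← h1]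
      exact Finset.sum_congr rfl fun i _ => by ring
    rw [h2, mul_inv_cancel₀ (hQ0 u)]
  · have h1 : Qt u = ∑ i, pd i pt u * pd i pt u := by
      simp only [hQt, hχ0]; ring
    have h2 : ∑ i, pd i pt u * (Qt u)⁻¹ * pd i pt u = Qt u * (Qt u)⁻¹ := by
      conv_rhs => rw [h1, Finset.sum_mul, ← h1]
      exact Finset.sum_congr rfl fun i _ => by ring
    rw [h2, mul_inv_cancel₀ (hQt0 u)]
  · have hpC : C.Ch 1 p := Chart.Ch.ps fun v _ => hg v
    have hMC : C.Ch 1 D.M := by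
      have := Chart.Ch.ps (C := C) (h := fun _ _ => 1) fun v _ => contDiff_const
      have e : ps D.V (fun _ _ => (1 : ℝ)) = D.M := by
        funext u; simp [ps, Newt.M]
      rwa [e] at this
    have hQC : C.Ch 2 Q := by
      have h1 : C.Ch 2 (fun u => ∑ i, pd i p u * pd i p u) :=
        Chart.Ch.sum Finset.univ 2 fun i _ => by
          have := (hpC.pd i).mul (hpC.pd i)
          rwa [one_add_one_eq_two] at this
      have h2 := ((Chart.Ch.const (C := C) 1).add ((Chart.Ch.comp_ex (C := C) hχs).const_mul
        (-1))).mul (hMC.mul hMC)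
      exact h1.add h2
    have := (hpC.pd i).mul (hQC.inv hcpos (by norm_num) hQlb)
    rwa [show (1 : ℤ) + -2 = -1 by norm_num] at this
  · refine χ.one_of_mem_closedBall ?_
    rw [mem_closedBall_zero_iff]
    refine (pi_norm_le_iff_of_nonneg χ.rIn_pos.le).2 fun i => ?_
    rw [Real.norm_eq_abs, abs_of_pos (show 0 < ex u i from Real.exp_pos _)]
    exact hu i

/-! ### Logarithmic coordinates -/

section logcoord
variable {m : ℕ} {E : Type*} [NormedAddCommGroup E] [NormedSpace ℝ E]

lemma ex_hasFDeriv (u : Fin m → ℝ) : HasFDerivAt (ex (n := m)) (ContinuousLinearMap.pi fun j =>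
    (Real.exp (-u j) • -ContinuousLinearMap.id ℝ ℝ).comp
      (ContinuousLinearMap.proj (R := ℝ) (φ := fun _ : Fin m => ℝ) j)) u := by
  refine hasFDerivAt_pi.2 fun j => ?_
  have h : HasFDerivAt (fun y : Fin m → ℝ => Real.exp (-y j)) (Real.exp (-u j) •
      -(ContinuousLinearMap.proj (R := ℝ) (φ := fun _ : Fin m => ℝ) j)) u :=
    ((hasFDerivAt_apply (𝕜 := ℝ) j u).neg).exp
  exact h

lemma ex_inj : Function.Injective (ex (n := m)) := fun u v h => by
  funext i
  have := congrFun h i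
  simp only [ex, Real.exp_eq_exp] at this
  linarith

lemma ex_log {x : Fin m → ℝ} (hx : ∀ i, 0 < x i) : ex (fun i => -Real.log (x i)) = x := by
  funext i; simp only [ex, neg_neg, Real.exp_log (hx i)]

lemma ex_image : ex '' (Set.univ : Set (Fin m → ℝ)) = posOrthant m := by
  ext x
  constructor
  · rintro ⟨u, -, rfl⟩ i; exact Real.exp_pos _
  · intro hx; exact ⟨_, trivial, ex_log hx⟩

lemma ex_det (u : Fin m → ℝ) : |(ContinuousLinearMap.pi fun j =>
    (Real.exp (-u j) • -ContinuousLinearMap.id ℝ ℝ).comp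
      (ContinuousLinearMap.proj (R := ℝ) (φ := fun _ : Fin m => ℝ) j)).det| =
    Real.exp (-sm u) := by
  rw [ContinuousLinearMap.det_pi, Finset.abs_prod]
  have : ∀ i, |(Real.exp (-u i) • -ContinuousLinearMap.id ℝ ℝ).det| = Real.exp (-u i) := fun i => by
    have e : (Real.exp (-u i) • -ContinuousLinearMap.id ℝ ℝ) =
        (-Real.exp (-u i)) • ContinuousLinearMap.id ℝ ℝ := by
      ext; simp
    rw [e, ContinuousLinearMap.det, ContinuousLinearMap.toLinearMap_smul, LinearMap.det_smul]
    simp [abs_of_pos (Real.exp_pos _)]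
  simp only [this, ← Real.exp_sum, sm, Finset.sum_neg_distrib]

/-- Change of variables `x = e^{-u}`: integrability. -/
lemma ex_integrable (F : (Fin m → ℝ) → E) :
    IntegrableOn F (posOrthant m) ↔ Integrable fun u => Real.exp (-sm u) • F (ex u) := by
  rw [← ex_image, integrableOn_image_iff_integrableOn_abs_det_fderiv_smul volume
    MeasurableSet.univ (fun u _ => (ex_hasFDeriv u).hasFDerivWithinAt) ex_inj.injOn,
    integrableOn_univ]
  simp only [ex_det]

/-- Change of variables `x = e^{-u}`: the integral. -/
lemma ex_integral (F : (Fin m → ℝ) → E) :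
    ∫ x in posOrthant m, F x = ∫ u, Real.exp (-sm u) • F (ex u) := by
  rw [← ex_image, integral_image_eq_integral_abs_det_fderiv_smul volume
    MeasurableSet.univ (fun u _ => (ex_hasFDeriv u).hasFDerivWithinAt) ex_inj.injOn,
    setIntegral_univ]
  simp only [ex_det]

lemma exp_dn_ex (v : Fin m → ℕ) (u : Fin m → ℝ) : Real.exp (-dn v u) = ∏ i, ex u i ^ v i :=
  exp_neg_sum v u

end logcoord

/-! ### Face polynomials -/

section face
variable {n : ℕ} {Γ : Set (Fin n → ℝ)} {V : Finset (Fin n → ℕ)} {a : (Fin n → ℕ) → ℝ}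

/-- Only exponents of `V` contribute to the polynomial of a compact face. -/
lemma facePoly_eq (P : NPoly Γ V) (hS : ∀ α, a α ≠ 0 → ∃ v ∈ V, v ≤ α) {u : Fin n → ℝ}
    (hu : ∀ i, 0 < u i) : facePoly a (traceFace Γ u) =
      fun x => ∑ v ∈ V.filter (fun v => rc v ∈ traceFace Γ u), a v * ∏ i, x i ^ v i := by
  funext x
  rw [facePoly, tsum_eq_sum (s := V.filter (fun v => rc v ∈ traceFace Γ u))]
  · exact Finset.sum_congr rfl fun v hv => if_pos (Finset.mem_filter.1 hv).2
  · intro α hα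
    by_cases h : (fun i => (α i : ℝ)) ∈ traceFace Γ u
    · rw [if_pos h]
      by_cases ha : a α = 0
      · rw [ha, zero_mul]
      · exfalso
        obtain ⟨v, hv, hle⟩ := hS α ha
        have h1 := h.2 _ (P.mem v hv)
        have h2 : ∑ i, u i * ((α i : ℝ) - v i) = 0 := by
          refine le_antisymm ?_ (Finset.sum_nonneg fun i _ => mul_nonneg (hu i).le
            (sub_nonneg.2 (by exact_mod_cast hle i)))
          simp only [mul_sub, Finset.sum_sub_distrib]
          simp only [dotR, rc] at h1
          linarith
        have h3 := (Finset.sum_eq_zero_iff_of_nonneg fun i _ => mul_nonneg (hu i).le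
            (sub_nonneg.2 (show (v i : ℝ) ≤ α i by exact_mod_cast hle i))).1 h2
        have h4 : α = v := by
          funext i
          have := (mul_eq_zero.1 (h3 i (Finset.mem_univ i))).resolve_left (hu i).ne'
          exact_mod_cast sub_eq_zero.1 this
        subst h4
        exact hα (Finset.mem_filter.2 ⟨hv, h⟩)
    · rw [if_neg h]

/-- Non-degeneracy in logarithmic coordinates. -/
lemma nondeg_log (P : NPoly Γ V) (hS : ∀ α, a α ≠ 0 → ∃ v ∈ V, v ≤ α) (hnd : NonDegenerateR a Γ)
    {σ : ℝ} (hσ : σ ≠ 0) {b : (Fin n → ℕ) → ℝ} (hb : ∀ v ∈ V, b v = σ * a v)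
    (w : Fin n → ℕ) (hw : ∀ i, 0 < w i) (x : Fin n → ℝ) (hx : ∀ i, 0 < x i) :
    ∃ i, ∑ v ∈ minSet V w, (v i : ℝ) * b v * ∏ k, x k ^ v k ≠ 0 := by
  have hw' : ∀ i, 0 < rc w i := fun i => Nat.cast_pos.2 (hw i)
  have hmin : minSet V w = V.filter (fun v => rc v ∈ traceFace Γ (rc w)) := by
    refine Finset.filter_congr fun v hv => ?_
    have e : ∀ v : Fin n → ℕ, dn v (rc w) = (np v w : ℝ) := fun v => by
      simp [dn, rc, np]
    rw [P.mem_trace fun i => (hw' i).le, dotR_rc, e]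
    simp only [e, Nat.cast_le]
    exact ⟨fun h => ⟨P.mem v hv, h⟩, fun h => h.2⟩
  have h1 := hnd _ ⟨rc w, fun i => (hw' i).le, rfl⟩ (P.trace_compact hw') x fun i => (hx i).ne'
  rw [facePoly_eq P hS hw', ← hmin] at h1
  by_contra! h
  apply h1
  set G : (Fin n → ℝ) → ℝ := fun x => ∑ v ∈ minSet V w, a v * ∏ i, x i ^ v i with hG
  have hGd : Differentiable ℝ G := by
    have : ContDiff ℝ (⊤ : ℕ∞) G := ContDiff.sum fun v _ => contDiff_const.mul
      (contDiff_prod fun i _ => (contDiff_apply ℝ ℝ i).pow _)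
    exact this.differentiable (by simp)
  have hlog : (fun u => G (ex u)) = ps (minSet V w) fun v _ => a v := by
    funext u
    simp only [hG, ps, exp_dn_ex]
    exact Finset.sum_congr rfl fun v _ => mul_comm _ _
  have hz : ∀ i, fderiv ℝ G x (Pi.single i 1 : Fin n → ℝ) = 0 := fun i => by
    have h2 := pd_comp_ex hGd i
    rw [hlog, pd_ps fun v _ => contDiff_const] at h2
    have h3 := congrFun h2 (fun i => -Real.log (x i))
    simp only [ex_log hx] at h3
    have h4 : ps (minSet V w) (psd (fun v _ => a v) i) (fun i => -Real.log (x i)) = 0 := by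
      simp only [ps, exp_dn_ex, ex_log hx, psd, pd_const, mul_zero, add_zero]
      have h5 := h i
      have h6 : ∑ v ∈ minSet V w, (v i : ℝ) * b v * ∏ k, x k ^ v k =
          -σ * ∑ v ∈ minSet V w, (∏ k, x k ^ v k) * -(v i * a v) := by
        rw [Finset.mul_sum]
        refine Finset.sum_congr rfl fun v hv => ?_
        rw [hb v (Finset.mem_filter.1 hv).1]; ring
      rw [h6] at h5
      exact (mul_eq_zero.1 h5).resolve_left (neg_ne_zero.2 hσ)
    rw [h4] at h3
    exact (mul_eq_zero.1 h3.symm).resolve_left (neg_ne_zero.2 (hx i).ne')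
  refine ContinuousLinearMap.coe_injective (LinearMap.pi_ext' fun i => LinearMap.ext_ring ?_)
  simpa using hz i

end face

namespace Geo
variable {n r ρ : ℕ} {Γ : Set (Fin n → ℝ)} {V : Finset (Fin n → ℕ)} {t : ℝ}
  {τ : Set (Fin n → ℝ)} {ξ : Fin r → Fin n → ℕ} (P : Geo ρ Γ V t τ ξ)
include P

omit P in
lemma ex_iota (v : Fin (n - ρ) → ℝ) : ex (iota (n := n) ρ v) = padR ρ (ex v) := by
  funext i
  simp only [ex, iota, padR, LinearMap.coe_mk, AddHom.coe_mk]
  by_cases h : (i : ℕ) < ρ <;> simp [h]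

/-- The leading part of the phase on the slice is the face polynomial. -/
lemma facePoly_slice {a : (Fin n → ℕ) → ℝ} (hS : ∀ α, a α ≠ 0 → ∃ v ∈ V, v ≤ α) {σ : ℝ}
    {b : (Fin n → ℕ) → ℝ} (hb : ∀ v ∈ V, b v = σ * a v) (v : Fin (n - ρ) → ℝ) :
    ∑ α ∈ P.setup.V, (if α ∈ P.setup.T then 1 else 0) * Real.exp (-dn α (P.setup.ι v)) * b α =
      σ * facePoly a τ (padR ρ (ex v)) := by
  have h1 : facePoly a τ = fun x => ∑ α ∈ P.T, a α * ∏ i, x i ^ α i := by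
    have := facePoly_eq P.poly hS P.u0_pos
    rw [← P.u0_eq] at this
    exact this
  rw [h1, ← ex_iota]
  show ∑ α ∈ V, (if α ∈ P.T then (1 : ℝ) else 0) * Real.exp (-dn α (iota ρ v)) * b α = _
  simp only [ite_mul, one_mul, zero_mul]
  rw [← Finset.sum_filter, Finset.filter_mem_eq_inter,
    Finset.inter_eq_right.2 (show P.T ⊆ V from Finset.filter_subset _ _), Finset.mul_sum]
  refine Finset.sum_congr rfl fun α hα => ?_
  rw [exp_dn_ex, hb α (P.mem_T.1 hα).1]; ring

end Geo

lemma pPow_sgnPart (σ x s : ℝ) : pPow (sgnPart σ x) s = pPow (σ * x) s := by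
  unfold pPow sgnPart
  by_cases h : 0 < σ * x
  · rw [max_eq_left h.le]
  · rw [if_neg h, if_neg]
    rw [max_eq_right (not_lt.1 h)]; exact lt_irrefl 0

/-- The Jacobian of the logarithmic substitution in the Mellin-type integral. -/
lemma mellin_ex {m : ℕ} (l : ℝ) (v : Fin m → ℝ) :
    Real.exp (-sm v) * ∏ i, ex v i ^ (l - 1) = Real.exp (-(l * sm v)) := by
  have : ∀ i, ex v i ^ (l - 1) = Real.exp (-((l - 1) * v i)) := fun i => by
    rw [ex, ← Real.exp_mul]; congr 1; ring
  simp only [this]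
  rw [← Real.exp_sum, ← Real.exp_add]
  congr 1
  simp only [sm, Finset.sum_neg_distrib, ← Finset.mul_sum]
  ring

/-! ### Arbitrary meromorphic continuations -/

/-- Two meromorphic functions on a connected open set which agree near a point of it agree near
every point of it. -/
lemma mero_identity {G Z : ℂ → ℂ} {U : Set ℂ} (hUc : IsConnected U)
    (hG : MeromorphicOn G U) (hZ : MeromorphicOn Z U) {a b : ℂ} (ha : a ∈ U) (hb : b ∈ U)
    (h : ∀ᶠ z in 𝓝 a, G z = Z z) : ∀ᶠ z in 𝓝[≠] b, G z = Z z := by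
  have hm : MeromorphicOn (fun z => G z - Z z) U := fun z hz => (hG z hz).sub (hZ z hz)
  have hat : meromorphicOrderAt (fun z => G z - Z z) a = ⊤ := by
    rw [meromorphicOrderAt_eq_top_iff]
    filter_upwards [h.filter_mono nhdsWithin_le_nhds] with z hz
    simp [hz]
  have hbt : meromorphicOrderAt (fun z => G z - Z z) b = ⊤ := by
    by_contra hne
    exact (hm.exists_meromorphicOrderAt_ne_top_iff_forall_mem hUc).1 ⟨b, hb, hne⟩ a ha hat
  rw [meromorphicOrderAt_eq_top_iff] at hbt
  filter_upwards [hbt] with z hz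
  exact sub_eq_zero.1 hz

/-- A meromorphic function which has a finite limit along a ray has that limit. -/
lemma mero_limit {g : ℂ → ℂ} {z : ℝ} {l : ℂ} (hg : MeromorphicAt g (z : ℂ))
    (h : Tendsto (fun ε : ℝ => g ((z + ε : ℝ) : ℂ)) (𝓝[>] 0) (𝓝 l)) :
    Tendsto g (𝓝[≠] (z : ℂ)) (𝓝 l) := by
  have hr : Tendsto (fun ε : ℝ => ((z + ε : ℝ) : ℂ)) (𝓝[>] 0) (𝓝[≠] (z : ℂ)) := by
    refine tendsto_nhdsWithin_iff.2 ⟨?_, ?_⟩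
    · have : Continuous fun ε : ℝ => ((z + ε : ℝ) : ℂ) := by fun_prop
      have h2 := this.tendsto 0
      simp only [add_zero] at h2
      exact h2.mono_left nhdsWithin_le_nhds
    · filter_upwards [self_mem_nhdsWithin] with ε hε
      have : (0 : ℝ) < ε := hε
      simp [this.ne']
  rcases lt_or_ge (meromorphicOrderAt g (z : ℂ)) 0 with ho | ho
  · exact absurd h (((tendsto_cobounded_of_meromorphicOrderAt_neg ho).comp hr).not_tendsto
      (Metric.disjoint_cobounded_nhds l))
  · obtain ⟨c, hc⟩ := tendsto_nhds_of_meromorphicOrderAt_nonneg hg ho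
    rwa [tendsto_nhds_unique h (hc.comp hr)]

/-- A meromorphic continuation need not be unique, since its domain may wind around the poles, but
a path from `1` to `z` inside the domain stays in a half-plane to which a continuation of the
integral is known to exist; the two agree along the path. -/
lemma mero_transfer {G : ℂ → ℂ} {U : Set ℂ} (hU : IsOpen U) (hUc : IsConnected U)
    {z : ℝ} (hsub : {s : ℂ | 0 < s.re} ∪ {(z : ℂ)} ⊆ U) (hG : MeromorphicOn G U) {ρ : ℕ} {l : ℂ}
    (hZ : ∀ R : ℝ, -R < z → ∃ Z : ℂ → ℂ, MeromorphicOn Z {s | -R < s.re} ∧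
      (∀ s : ℂ, -R < s.re → 0 < s.re → G s = Z s) ∧
      Tendsto (fun ε : ℝ => (ε : ℂ) ^ ρ * Z ((z + ε : ℝ) : ℂ)) (𝓝[>] 0) (𝓝 l)) :
    Tendsto (fun s : ℂ => (s - (z : ℂ)) ^ ρ * G s) (𝓝[≠] (z : ℂ)) (𝓝 l) := by
  have h1U : (1 : ℂ) ∈ U := hsub (Or.inl (by simp))
  have hzU : (z : ℂ) ∈ U := hsub (Or.inr rfl)
  obtain ⟨γ, hγ⟩ := (hU.isConnected_iff_isPathConnected.1 hUc).joinedIn 1 h1U z hzU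
  obtain ⟨R, hR⟩ : ∃ R : ℝ, ∀ x, -R < (γ x).re := by
    have hc : IsCompact (Set.range fun x => -(γ x).re) :=
      isCompact_range (Complex.continuous_re.comp γ.continuous).neg
    obtain ⟨R, hR⟩ := hc.bddAbove
    refine ⟨R + 1, fun x => ?_⟩
    have := hR ⟨x, rfl⟩
    simp only at this
    linarith
  have hRz : -R < z := by simpa using hR 1
  obtain ⟨Z, hZm, hZG, hZl⟩ := hZ R hRz
  have hO : IsOpen (U ∩ {s : ℂ | -R < s.re}) :=
    hU.inter (isOpen_lt continuous_const Complex.continuous_re)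
  have h1 : (1 : ℂ) ∈ U ∩ {s : ℂ | -R < s.re} := ⟨h1U, by simpa using hR 0⟩
  set O := connectedComponentIn (U ∩ {s : ℂ | -R < s.re}) 1
  have hOs : O ⊆ U ∩ {s : ℂ | -R < s.re} := connectedComponentIn_subset _ _
  have hrange : Set.range γ ⊆ O := by
    refine IsPreconnected.subset_connectedComponentIn (isPreconnected_range γ.continuous)
      ⟨0, γ.source⟩ ?_
    rintro _ ⟨x, rfl⟩
    exact ⟨hγ x, hR x⟩
  have hzO : (z : ℂ) ∈ O := hrange ⟨1, γ.target⟩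
  have heq : ∀ᶠ s in 𝓝[≠] (z : ℂ), G s = Z s := by
    refine mero_identity (isConnected_connectedComponentIn_iff.2 h1)
      (fun s hs => hG s (hOs hs).1) (fun s hs => hZm s (hOs hs).2)
      (mem_connectedComponentIn h1) hzO ?_
    have : IsOpen ({s : ℂ | -R < s.re} ∩ {s : ℂ | 0 < s.re}) :=
      (isOpen_lt continuous_const Complex.continuous_re).inter
        (isOpen_lt continuous_const Complex.continuous_re)
    filter_upwards [this.mem_nhds ⟨h1.2, by simp⟩] with s hs
    exact hZG s hs.1 hs.2
  have hl : Tendsto (fun s : ℂ => (s - (z : ℂ)) ^ ρ * Z s) (𝓝[≠] (z : ℂ)) (𝓝 l) := by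
    refine mero_limit (((MeromorphicAt.id _).sub (MeromorphicAt.const _ _)).pow ρ |>.mul
      (hZm z (by simpa using hRz))) ?_
    simpa using hZl
  refine hl.congr' ?_
  filter_upwards [heq] with s hs
  rw [hs]

namespace Phase.Test
variable {n k : ℕ} {D : Setup n k} {X : Phase D} (Y : X.Test)

/-- The leading coefficient at `-1/t` of an arbitrary meromorphic continuation of `Y.H 0`. -/
theorem residue {g : (Fin n → ℕ) → (Fin n → ℝ) → ℝ}
    (hg : ∀ v ∈ D.V, ContDiff ℝ (⊤ : ℕ∞) (g v)) (hp : X.p = ps D.V g)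
    (hc : ∀ C : Chart D.V, ∀ i, C.Ch (-1) (X.c i)) (hP : ∀ C : Chart D.V, C.Ch 0 Y.P0)
    (hconv : ∀ u : Fin n → ℝ, (∀ i, 0 ≤ u i) → ∃ v ∈ D.V, dn v u ≤ D.t * sm u)
    (hS : ∀ u ∈ Y.S, ∀ i, 0 < u i)
    (ν : Measure D.W) [ν.IsAddHaarMeasure]
    (hmp : MeasurePreserving D.L (ν.prod (volume : Measure (Fin k → ℝ))) volume)
    (hZ : ∀ m : ℤ, -1 / D.t ≠ m)
    {G : ℂ → ℂ} (hG : IsMeroCont (Y.H 0) ((-1 / D.t : ℝ) : ℂ) G) :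
    Tendsto (fun s : ℂ => (s - ((-1 / D.t : ℝ) : ℂ)) ^ Module.finrank ℝ D.W * G s)
      (𝓝[≠] ((-1 / D.t : ℝ) : ℂ))
      (𝓝 (((∫ w : D.W in {w : D.W | (w : Fin n → ℝ) ∈ D.K}, Real.exp (-D.ell w) ∂ν : ℝ) : ℂ) *
        (Y.a * X.Fc 1))) := by
  obtain ⟨U, hU, hUc, hsub, hGm, hGe⟩ := hG
  refine mero_transfer hU hUc hsub hGm fun R hR => ?_
  obtain ⟨m, hm, E, hE, hEH⟩ := Y.H_mero hg hp hc hP hconv hS R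
  have hm0 : 0 < -1 / D.t + m := by linarith
  have h0 : ∀ j : ℕ, X.z0 + j + 1 ≠ 0 := fun j h => by
    have h2 : ((-1 / D.t + j + 1 : ℝ) : ℂ) = 0 := by simpa [Phase.z0] using h
    have h3 : (-1 / D.t + j + 1 : ℝ) = 0 := by exact_mod_cast h2
    refine hZ (-(j + 1)) ?_
    push_cast; linarith
  set p : ℂ → ℂ := fun s => ∏ j ∈ Finset.range m, (s + j + 1) with hpdef
  have hpc : Differentiable ℂ p := by
    simp only [hpdef]; fun_prop
  have hp0 : p X.z0 ≠ 0 := Finset.prod_ne_zero_iff.2 fun j _ => h0 j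
  refine ⟨fun s => E s * (p s)⁻¹, fun s hs => (hE s hs).mul
    (hpc.analyticAt s).meromorphicAt.inv, fun s hs hs0 => ?_, ?_⟩
  · have hps : p s ≠ 0 := Finset.prod_ne_zero_iff.2 fun j _ h => by
      have := congrArg Complex.re h
      simp at this
      have hj : (0 : ℝ) ≤ j := j.cast_nonneg
      linarith
    have ht : -1 / D.t < s.re :=
      (div_neg_of_neg_of_pos (by norm_num) D.t_pos).trans hs0
    simp only
    rw [hGe s hs0, hEH s hs ht, ← Y.H_zero hs0 m]
    field_simp
    rfl
  · have h1 := Y.H_limit ν hmp hm0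
    rw [J_Pt Y hm0 h0] at h1
    have hr : Tendsto (fun ε : ℝ => (p ((-1 / D.t + ε : ℝ) : ℂ))⁻¹) (𝓝[>] 0) (𝓝 (p X.z0)⁻¹) := by
      have hc : Continuous fun ε : ℝ => p ((-1 / D.t + ε : ℝ) : ℂ) :=
        hpc.continuous.comp (by fun_prop)
      have h2 := hc.tendsto 0
      rw [add_zero] at h2
      exact (h2.mono_left nhdsWithin_le_nhds).inv₀ hp0
    have h3 := h1.mul hr
    have e : ∀ c : ℂ, c * (p X.z0 * (Y.a * X.Fc 1)) * (p X.z0)⁻¹ = c * (Y.a * X.Fc 1) := fun c => by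
      field_simp
    rw [show (∏ j ∈ Finset.range m, (X.z0 + j + 1)) = p X.z0 from rfl, e] at h3
    refine h3.congr' ?_
    filter_upwards [self_mem_nhdsWithin] with ε hε
    have hε : (0 : ℝ) < ε := hε
    rw [hEH _ (by rw [ofReal_re]; linarith) (by rw [ofReal_re]; linarith)]
    ring

end Phase.Test

/-! ### The residue formula for one sign -/

lemma sm_iota {n ρ : ℕ} (v : Fin (n - ρ) → ℝ) : sm (iota (n := n) ρ v) = sm v := by
  have h : sm (iota (n := n) ρ v) = ∑ i, v i * sm (iota (n := n) ρ (Pi.single i 1)) := by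
    have hl : ∀ w : Fin n → ℝ, sm w = (∑ i, LinearMap.proj (R := ℝ) (φ := fun _ : Fin n => ℝ) i) w :=
      fun w => by simp [sm]
    conv_lhs => rw [show v = ∑ i, v i • (Pi.single i 1 : Fin (n - ρ) → ℝ) by
      simpa using (pi_eq_sum_univ' v)]
    simp only [hl, map_sum, map_smul, smul_eq_mul]
  rw [h]
  refine Finset.sum_congr rfl fun i _ => ?_
  rw [Geo.iota_single, sm_single, mul_one]

/-- The power of a positive part as a function of the phase. -/
lemma sgnPart_cpow (σ x : ℝ) (s : ℂ) : ((sgnPart σ x : ℝ) : ℂ) ^ s = pcp (σ * x) s := rfl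

namespace Geo
variable {n r ρ : ℕ} {Γ : Set (Fin n → ℝ)} {V : Finset (Fin n → ℕ)} {t : ℝ}
  {τ : Set (Fin n → ℝ)} {ξ : Fin r → Fin n → ℕ} (P : Geo ρ Γ V t τ ξ)
include P

/-- The residue formula for a fixed sign, with the factorization of `f` near zero through the
vertices of the Newton polyhedron as a hypothesis on the support of the test function. The
function `F` depends on the phase alone. -/
theorem core {a : (Fin n → ℕ) → ℝ} {f : (Fin n → ℝ) → ℝ} {g : (Fin n → ℕ) → (Fin n → ℝ) → ℝ}
    (hS : ∀ α, a α ≠ 0 → ∃ v ∈ V, v ≤ α) (hg : ∀ v, ContDiff ℝ (⊤ : ℕ∞) (g v))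
    (hgc : ∀ v, HasCompactSupport (g v)) (hga : ∀ v ∈ V, g v 0 = a v)
    (hnd : NonDegenerateR a Γ) {σ : ℝ} (hσ : σ ≠ 0) (hZ : ∀ m : ℤ, -1 / t ≠ m)
    {N : Fin r → ℝ} (hN : ∀ j, N j = t * sm (rc (ξ j))) :
    ∃ η : ℝ, 0 < η ∧ ∃ F : ℂ → ℂ,
      AnalyticOnNhd ℂ F {l : ℂ | 0 < l.re ∧ ∀ m : ℤ, l * ((-1 / t : ℝ) : ℂ) ≠ (m : ℂ)} ∧
      (∀ l : ℝ, 0 < l → l < t →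
        IntegrableOn (fun y : Fin (n - ρ) → ℝ =>
          pPow (sgnPart σ (facePoly a τ (padR ρ y))) (-1 / t * l) * ∏ i, y i ^ (l - 1))
          (posOrthant (n - ρ)) ∧
        F (l : ℂ) = ((∫ y in posOrthant (n - ρ),
          pPow (sgnPart σ (facePoly a τ (padR ρ y))) (-1 / t * l) * ∏ i, y i ^ (l - 1) : ℝ) : ℂ)) ∧
      ∀ φ : (Fin n → ℝ) → ℝ, ContDiff ℝ (⊤ : ℕ∞) φ → HasCompactSupport φ →
        (∀ x ∈ tsupport φ, (∀ i, x i < η) ∧ f x = ∑ v ∈ V, (∏ i, x i ^ v i) * g v x) →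
        ∀ G : ℂ → ℂ, IsMeroCont (fun s => ∫ x in posOrthant n,
            ((sgnPart σ (f x) : ℝ) : ℂ) ^ s * (φ x : ℂ)) ((-1 / t : ℝ) : ℂ) G →
          Tendsto (fun s : ℂ => (s - ((-1 / t : ℝ) : ℂ)) ^ ρ * G s) (𝓝[≠] ((-1 / t : ℝ) : ℂ))
            (𝓝 ((n.factorial : ℂ) * ((volume (Cset (ρ := ρ) (ξ := ξ) N)).toReal : ℂ) *
              (φ 0 : ℂ) * F 1)) := by
  have hgs : ∀ v, ContDiff ℝ (⊤ : ℕ∞) (fun x => σ * g v x) := fun v => contDiff_const.mul (hg v)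
  obtain ⟨η, hη, hη1, X, hXp, hXpt, hXc, hXA⟩ := exists_phase P.setup
    (g := fun v x => σ * g v x) hgs (fun v => (hgc v).mul_left)
    (nondeg_log P.poly hS hnd hσ (b := fun v => σ * g v 0) fun v hv => by rw [hga v hv])
  have hslice : ∀ v, X.pt (P.setup.ι v) = σ * facePoly a τ (padR ρ (ex v)) := fun v => by
    rw [hXpt]
    exact P.facePoly_slice hS (b := fun v => σ * g v 0) (fun v hv => by rw [hga v hv]) v
  refine ⟨η, hη, X.Fc, X.Fc_analytic, fun l hl hlt => ?_, fun φ hφ hφc hsupp G hG => ?_⟩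
  · obtain ⟨h1, h2⟩ := X.K_formula hl hlt
    have e : (fun v => Real.exp (-sm v) • (pPow (sgnPart σ (facePoly a τ (padR ρ (ex v))))
        (-1 / t * l) * ∏ i, ex v i ^ (l - 1))) =
        fun v => pPow (X.pt (P.setup.ι v)) (-l / t) * Real.exp (-(l * sm (P.setup.ι v))) := by
      funext v
      rw [hslice, pPow_sgnPart, show sm (P.setup.ι v) = sm v from sm_iota v, ← mellin_ex,
        smul_eq_mul, show -1 / t * l = -l / t by ring]
      ring
    constructor
    · rw [ex_integrable, e]; exact h1
    · rw [ex_integral, e]; exact h2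
  · let Y : X.Test :=
      { P0 := fun u => φ (ex u)
        a := φ 0
        S := ex ⁻¹' tsupport φ
        b := 0
        hb := le_rfl
        hS := (isClosed_tsupport φ).preimage contDiff_ex.continuous
        hSA := fun u hu => hXA fun i => ((hsupp _ hu).1 i).le
        hSb := fun u hu i => by
          have := ((hsupp _ hu).1 i).trans hη1
          rw [ex, Real.exp_lt_one_iff] at this
          linarith
        hP0 := Newt.Cl.comp_ex hφ hφc
        hsupp := fun u hu => subset_tsupport φ hu }
    have hH : ∀ s : ℂ, (∫ x in posOrthant n, ((sgnPart σ (f x) : ℝ) : ℂ) ^ s * (φ x : ℂ)) =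
        Y.H 0 s := fun s => by
      rw [ex_integral]
      refine integral_congr_ae (Eventually.of_forall fun u => ?_)
      by_cases hu : φ (ex u) = 0
      · simp [Jg, hu, Phase.Test.P, Y]
      · have h1 := (hsupp _ (subset_tsupport φ hu)).2
        have h2 : σ * f (ex u) = X.p u := by
          rw [hXp, h1, Finset.mul_sum]
          refine Finset.sum_congr rfl fun v _ => ?_
          rw [exp_dn_ex]; ring
        simp only [sgnPart_cpow, h2, Jg, Phase.Test.P, Y, Nat.cast_zero, add_zero, one_mul]
        rw [real_smul, ofReal_exp, ofReal_neg]
        show _ = _ * ((φ (ex u) : ℝ) : ℂ)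
        ring
    have hG' : IsMeroCont (Y.H 0) ((-1 / P.setup.t : ℝ) : ℂ) G := by
      have : Y.H 0 = fun s => ∫ x in posOrthant n,
          ((sgnPart σ (f x) : ℝ) : ℂ) ^ s * (φ x : ℂ) := funext fun s => (hH s).symm
      rw [this]; exact hG
    have hconv : ∀ u : Fin n → ℝ, (∀ i, 0 ≤ u i) →
        ∃ v ∈ P.setup.V, dn v u ≤ P.setup.t * sm u := fun u hu => by
      obtain ⟨v, hv, h⟩ := P.poly.exists_le P.t_mem hu
      rw [dotR_const] at h
      exact ⟨v, hv, h⟩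
    obtain ⟨ν, hν, hmp⟩ := P.setup.exists_haar
    have key := Y.residue (fun v _ => hgs v) hXp hXc (fun C => Chart.Ch.comp_ex hφ) hconv
      (fun u hu i => by
        have := ((hsupp _ hu).1 i).trans hη1
        rw [ex, Real.exp_lt_one_iff] at this
        linarith) ν hmp hZ hG'
    rw [P.volume_C hN ν hmp] at key
    have hr : Module.finrank ℝ P.setup.W = ρ := P.rank
    rw [hr] at key
    have e : (((n.factorial : ℝ) * (volume (Cset (ρ := ρ) (ξ := ξ) N)).toReal : ℝ) : ℂ) *
        ((Y.a : ℂ) * X.Fc 1) = (n.factorial : ℂ) *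
          ((volume (Cset (ρ := ρ) (ξ := ξ) N)).toReal : ℂ) * (φ 0 : ℂ) * X.Fc 1 := by
      rw [ofReal_mul, ofReal_natCast]; ring
    rw [e] at key
    exact key

end Geo

/-! ### The theorem -/

/-- **Theorem 1 (real residue formula).** If `f` is non-degenerate over ℝ, `τ₀` is compact
and `s₀ ∉ ℤ`, then for every test function `φ` supported near `0` and each sign:
(i) the principal-value integrals `K_±(λ)` converge for `0 < λ < -1/s₀`;
(ii) they extend analytically to `Ω = {Re λ > 0, λ s₀ ∉ ℤ}`;
(iii) `lim_{s→s₀} (s-s₀)^ρ Z̄_±(s) = n! ⬝ Vol(C) ⬝ φ(0) ⬝ F_±(1)`. -/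
theorem real_residue_formula
    {n ρ r : ℕ} (hn : 1 ≤ n) (hρn : ρ ≤ n)
    (f : (Fin n → ℝ) → ℝ) (a : (Fin n → ℕ) → ℝ)
    (hfa : ∀ᶠ x in 𝓝 (0 : Fin n → ℝ), HasSum (fun α => a α * ∏ i, x i ^ α i) (f x))
    (hf0 : f 0 = 0) (hcrit : fderiv ℝ f 0 = 0)
    (hnc : ∃ α : Fin n → ℕ, α ≠ 0 ∧ a α ≠ 0)
    (Γ : Set (Fin n → ℝ)) (hΓ : Γ = newtonPolyhedron {α | a α ≠ 0})
    (hnd : NonDegenerateR a Γ)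
    (t₀ s₀ : ℝ) (ht₀pos : 0 < t₀)
    (ht₀mem : (fun _ => t₀) ∈ Γ)
    (ht₀min : ∀ t : ℝ, 0 < t → (fun _ => t) ∈ Γ → t₀ ≤ t)
    (hs₀ : s₀ = -1 / t₀) (hs₀Z : ∀ m : ℤ, s₀ ≠ (m : ℝ))
    (τ₀ : Set (Fin n → ℝ)) (hτface : IsFaceOf Γ τ₀)
    (hτmem : (fun _ => t₀) ∈ τ₀)
    (hτmin : ∀ τ : Set (Fin n → ℝ), IsFaceOf Γ τ → (fun _ => t₀) ∈ τ → τ₀ ⊆ τ)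
    (hτcomp : IsCompact τ₀)
    (hρ : ρ = n - faceDim τ₀)
    (ξ : Fin r → Fin n → ℕ) (hξinj : Function.Injective ξ)
    (hξprim : ∀ j, Finset.univ.gcd (ξ j) = 1)
    (hξfacet : ∀ j, faceDim (traceFace Γ (fun i => (ξ j i : ℝ))) = n - 1 ∧
      τ₀ ⊆ traceFace Γ (fun i => (ξ j i : ℝ)))
    (hξall : ∀ τ : Set (Fin n → ℝ), IsFaceOf Γ τ → faceDim τ = n - 1 → τ₀ ⊆ τ →
      ∃ j, τ = traceFace Γ (fun i => (ξ j i : ℝ)))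
    (N : Fin r → ℝ)
    (hN : ∀ j, IsLeast {v : ℝ | ∃ z ∈ Γ, v = dotR (fun i => (ξ j i : ℝ)) z} (N j))
    (hcompl : IsCompl (Submodule.span ℝ (Set.range fun j => fun i => (ξ j i : ℝ)))
      (Submodule.span ℝ {x : Fin n → ℝ | ∃ i : Fin n, ρ ≤ (i : ℕ) ∧ x = Pi.single i 1}))
    (hrank : Module.finrank ℝ (Submodule.span ℝ (Set.range fun j => fun i => (ξ j i : ℝ))) = ρ)
    (C : Set (Fin n → ℝ))
    (hC : C = convexHull ℝ (insert (0 : Fin n → ℝ)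
      ((Set.range fun j => fun i => (ξ j i : ℝ) / N j) ∪
        {x : Fin n → ℝ | ∃ i : Fin n, ρ ≤ (i : ℕ) ∧ x = Pi.single i 1}))) :
    ∃ U : Set (Fin n → ℝ), IsOpen U ∧ (0 : Fin n → ℝ) ∈ U ∧
      ∀ φ : (Fin n → ℝ) → ℝ, ContDiff ℝ (⊤ : ℕ∞) φ → HasCompactSupport φ → tsupport φ ⊆ U →
      ∀ σ : ℝ, σ = 1 ∨ σ = -1 →
        ((∀ l : ℝ, 0 < l → l < -1 / s₀ →
          IntegrableOn (fun y : Fin (n - ρ) → ℝ =>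
            pPow (sgnPart σ (facePoly a τ₀ (padR ρ y))) (s₀ * l) * ∏ i, y i ^ (l - 1))
            (posOrthant (n - ρ))) ∧
        ∃ F : ℂ → ℂ,
          AnalyticOnNhd ℂ F {l : ℂ | 0 < l.re ∧ ∀ m : ℤ, l * (s₀ : ℂ) ≠ (m : ℂ)} ∧
          (∀ l : ℝ, 0 < l → l < min 1 (-1 / s₀) →
            F (l : ℂ) = ((∫ y in posOrthant (n - ρ),
              pPow (sgnPart σ (facePoly a τ₀ (padR ρ y))) (s₀ * l) * ∏ i, y i ^ (l - 1) : ℝ) : ℂ)) ∧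
          ∀ G : ℂ → ℂ,
            IsMeroCont (fun s => ∫ x in posOrthant n,
              ((sgnPart σ (f x) : ℝ) : ℂ) ^ s * (φ x : ℂ)) (s₀ : ℂ) G →
            Tendsto (fun s : ℂ => (s - (s₀ : ℂ)) ^ ρ * G s) (𝓝[≠] (s₀ : ℂ))
              (𝓝 ((n.factorial : ℂ) * ((volume C).toReal : ℂ) * (φ 0 : ℂ) * F 1))) := by
  subst hs₀
  obtain ⟨V, g, hVa, hVle, hg, hgc, hga, hfg⟩ := taylor_split hfa
  have poly : NPoly Γ V := hΓ ▸ newton_NPoly (fun v hv => hVa v hv) hVle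
  have P : Geo ρ Γ V t₀ τ₀ ξ :=
    { poly := poly
      ρ_le := hρn
      t_pos := ht₀pos
      face := hτface
      mem := hτmem
      min := hτmin
      comp := hτcomp
      dim := hρ
      ne := fun j h => by
        have := hξprim j
        rw [h, show Finset.univ.gcd (0 : Fin n → ℕ) = 0 from
          Finset.gcd_eq_zero_iff.2 fun i _ => rfl] at this
        exact zero_ne_one this
      facet := hξfacet
      all := hξall
      compl := hcompl
      rank := hrank }
  -- the diagonal point lies on every facet containing `τ₀`
  have hN' : ∀ j, N j = t₀ * sm (rc (ξ j)) := fun j => by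
    obtain ⟨⟨z, hz, hzN⟩, hlb⟩ := hN j
    have hmem := (hξfacet j).2 hτmem
    rw [← dotR_const (rc (ξ j)) t₀]
    exact le_antisymm (hlb ⟨_, hmem.1, rfl⟩) (hzN ▸ hmem.2 z hz)
  have hCset : C = Geo.Cset (ρ := ρ) (ξ := ξ) N := hC
  have hinv : -1 / (-1 / t₀) = t₀ := by field_simp
  choose η hη F hFa hFK hFG using fun σ : {σ : ℝ // σ = 1 ∨ σ = -1} =>
    P.core (f := f) hVle hg hgc hga hnd (σ := σ.1)
      (by rcases σ.2 with h | h <;> rw [h] <;> norm_num) hs₀Z hN'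
  set η₁ := η ⟨1, Or.inl rfl⟩
  set η₂ := η ⟨-1, Or.inr rfl⟩
  have hηle : ∀ σ, min η₁ η₂ ≤ η σ := by
    rintro ⟨σ, rfl | rfl⟩
    exacts [min_le_left _ _, min_le_right _ _]
  have hη0 : 0 < min η₁ η₂ := lt_min (hη _) (hη _)
  obtain ⟨U, hUs, hUo, hU0⟩ := eventually_nhds_iff.1
    (hfg.and ((eventually_all.2 fun i => (continuous_apply i).continuousAt.eventually
      (eventually_lt_nhds hη0) :
      ∀ᶠ x in 𝓝 (0 : Fin n → ℝ), ∀ i, x i < min η₁ η₂)))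
  refine ⟨U, hUo, hU0, fun φ hφ hφc hφU σ hσ => ⟨fun l hl hlt => ?_, F ⟨σ, hσ⟩, ?_,
    fun l hl hlt => ?_, fun G hG => ?_⟩⟩
  · rw [hinv] at hlt
    exact (hFK ⟨σ, hσ⟩ l hl hlt).1
  · exact hFa ⟨σ, hσ⟩
  · rw [hinv] at hlt
    exact (hFK ⟨σ, hσ⟩ l hl (hlt.trans_le (min_le_right _ _))).2
  · rw [hCset]
    exact hFG ⟨σ, hσ⟩ φ hφ hφc (fun x hx => ⟨fun i =>
      ((hUs x (hφU hx)).2 i).trans_le (hηle _), (hUs x (hφU hx)).1⟩) G hG
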